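/- Let d ≥ 3, n ≥ 1 and r ≥ 1 be integers with r·(n+1) < C(n+d,d) (i.e., r is of subgeneric rank) and with (d,n,r) not equal to any of (6,2,9), (4,3,8), (3,5,9). Then for a generic choice of vectors a₁,…,a_r ∈ ℂ^{n+1}, the homogeneous polynomial f = Σᵢ ℓ_{aᵢ}^d ∈ ℂ[x₀,…,xₙ] satisfies: (1) f is not a sum of fewer than r d-th powers of linear forms; and (2) for any vectors b₁,…,b_r ∈ ℂ^{n+1} with f = Σᵢ ℓ_{bᵢ}^d, the multiset {ℓ_{b₁}^d, …, ℓ_{b_r}^d} equals the multiset {ℓ_{a₁}^d, …, ℓ_{a_r}^d}. In other words, the general symmetric tensor in S^dℂ^{n+1} of subgeneric rank r has a unique Waring decomposition (unique up to permutation of summands and scaling of the linear forms by d-th roots of unity). -/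

import Mathlib

/-!
The proof shows that a general sum of `r` powers is not tangentially weakly defective and deduces identifiability from that.

*Identifiability from tangency* (`stepA`). Suppose that at one configuration `a` the tangent spaces
`ℓ_{aᵢ}^(d-1) · ⟨x₀, …, xₙ⟩` are independent (`TInd`) and that, at one of the points, the only direction keeping the tangent
space inside the sum of all tangent spaces, to first order, is the point itself (`TStar`). Both conditions pass to the generic
configuration `t`, whose coordinates are independent variables, and there the second holds at every point by symmetry. If other
decompositions existed for a Zariski dense set of `t`, the Nullstellensatz (`exists_point_or_certificate`) would give
one, `∑ tᵢ^d = ∑ bⱼ^d`, over a finite extension of the field of rational functions in `t`. The derivations `∂/∂t_{ik}` extend to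
it (`exists_derivation_extend`). Differentiating the decomposition once identifies the sums of tangent spaces at the `tᵢ` and at
the `bⱼ`; differentiating again and applying the second order condition makes every `bⱼ^d` a combination of the `tᵢ^d`, and
then one of them (`rigid`). So the two decompositions agree.

*Reduction to nodes* (`HasF.hasG`). Such a configuration exists as soon as there are points with independent tangent spaces and
a hypersurface of degree `d` singular at all of them, with a nondegenerate node at one of them (`HasF true`).

*Degeneration* (`horace`). These are built by the differential Horace method: `P` points stay outside a hyperplane, `s`
lie on it, and `e` move to it along tangent directions. The trace on the hyperplane is a statement of degree `d` in one variable less,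
the residue is a statement of degree `d - 1`, and the residual node gives the node. The points on the hyperplane impose
general conditions on the residual system because the tangent spaces at the `P` points span enough of degree `d - 2`.

*Base cases.* For binary forms the configurations are explicit (`binary_node`). Cubics do not follow from the degeneration. There the
points are taken on pairs of blocks of three coordinates (with a last block of `2`, `3` or `4`), and the linear systems
decouple into local conditions involving at most three blocks (`Glob`), whose generic validity is witnessed by integer
matrices of full rank modulo `97` (`hasF_cubic`, `hasG_cubic`). Quartics in six variables are checked modulo `7`
(`full_quartic`), and a few more cases of low degree and few variables are instances of the degeneration. The induction itself
is `good`, with steps `Good.step`, `plane_step` and `quartic_step`.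

*Exceptions.* In the cases `(d, n) = (6, 2), (4, 3), (3, 5)` a configuration with the second order condition is produced only for one
point less than the largest subgeneric number, which is why `r = 9, 8, 9` has to be excluded (`hasG_all`).
-/

open MvPolynomial

noncomputable section

/-- The linear form `a₀x₀ + ⋯ + aₙxₙ` with coefficient vector `a`. -/
def linForm {n : ℕ} (a : Fin (n + 1) → ℂ) : MvPolynomial (Fin (n + 1)) ℂ :=
  ∑ i, C (a i) * X i

/-- Evaluation at the point `v`, as a linear map. -/
def evalAt {n : ℕ} (v : Fin (n + 1) → ℂ) : MvPolynomial (Fin (n + 1)) ℂ →ₗ[ℂ] ℂ :=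
  (aeval v).toLinearMap

/-- The linear map `f ↦ (∂f/∂xᵢ)(p)`. -/
def evalPDeriv {n : ℕ} (p : Fin (n + 1) → ℂ) (i : Fin (n + 1)) :
    MvPolynomial (Fin (n + 1)) ℂ →ₗ[ℂ] ℂ :=
  evalAt p ∘ₗ (pderiv i).toLinearMap

/-- `f` is singular at `p`: all partial derivatives of `f` vanish at `p`. -/
def SingularAt {n : ℕ} (f : MvPolynomial (Fin (n + 1)) ℂ) (p : Fin (n + 1) → ℂ) : Prop :=
  ∀ i, evalPDeriv p i f = 0

/-- The space of homogeneous degree-`d` polynomials in `n+1` variables that vanish at every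
point of `V` and are singular at every point of `S`. -/
def SingSpace (n : ℕ) (d : ℕ) (S V : Set (Fin (n + 1) → ℂ)) :
    Submodule ℂ (MvPolynomial (Fin (n + 1)) ℂ) :=
  homogeneousSubmodule (Fin (n + 1)) ℂ d ⊓ (⨅ v ∈ V, LinearMap.ker (evalAt v)) ⊓
    ⨅ p ∈ S, ⨅ i, LinearMap.ker (evalPDeriv p i)

/-- A property of parameters `t : ι → ℂ` holds for a generic choice of `t` if there is a
nonzero polynomial `F` in the variables `ι` such that the property holds whenever
`F(t) ≠ 0`. -/
def Generic {ι : Type} [Fintype ι] (P : (ι → ℂ) → Prop) : Prop :=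
  ∃ F : MvPolynomial ι ℂ, F ≠ 0 ∧ ∀ t : ι → ℂ, eval t F ≠ 0 → P t

end

/-! ### Extending derivations, and points over the function field -/

open scoped TensorProduct

/-- Derivations of a domain extend to every finite extension of its fraction field: in characteristic zero such an
extension is formally étale over the domain, so its differentials are obtained by base change. -/
theorem exists_derivation_extend {R L : Type} [CommRing R] [IsDomain R] [Algebra ℂ R] [Field L]
    [Algebra ℂ L] [Algebra R L] [IsScalarTower ℂ R L] [Algebra (FractionRing R) L]
    [IsScalarTower R (FractionRing R) L] [FiniteDimensional (FractionRing R) L]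
    (δ : Derivation ℂ R R) :
    ∃ D : Derivation ℂ L L, ∀ a : R, D (algebraMap R L a) = algebraMap R L (δ a) := by
  let K := FractionRing R
  have : CharZero R := charZero_of_injective_algebraMap (algebraMap ℂ R).injective
  have : CharZero K := charZero_of_injective_algebraMap (IsFractionRing.injective R K)
  have : Algebra.FormallyEtale R K := Algebra.FormallyEtale.of_isLocalization (nonZeroDivisors R)
  have : Algebra.FormallyEtale K L := Algebra.FormallyEtale.of_isSeparable K L
  have : Algebra.FormallyEtale R L := Algebra.FormallyEtale.comp R K L
  let e := KaehlerDifferential.tensorKaehlerEquivOfFormallyEtale ℂ R L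
  let g : L ⊗[R] (Ω[R⁄ℂ]) →ₗ[L] L :=
    LinearMap.liftBaseChange L ((Algebra.linearMap R L) ∘ₗ δ.liftKaehlerDifferential)
  refine ⟨(g ∘ₗ e.symm.toLinearMap).compDer (KaehlerDifferential.D ℂ L), fun a => ?_⟩
  have h := KaehlerDifferential.tensorKaehlerEquivOfFormallyEtale_symm_D_algebraMap ℂ R L a
  exact (congrArg g h).trans (by simp [g])

/-- Nullstellensatz over the fraction field of `R`: a system of equations either has a solution in a finite extension, or
a nonzero constant `F ∈ R` lies in the ideal it generates. -/
theorem exists_point_or_certificate {R : Type} [CommRing R] [IsDomain R] {σ : Type} [Finite σ]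
    (S : Set (MvPolynomial σ R)) :
    (∃ F : R, F ≠ 0 ∧ (C F : MvPolynomial σ R) ∈ Ideal.span S) ∨
    ∃ (L : Type) (_ : Field L) (_ : Algebra (FractionRing R) L),
      FiniteDimensional (FractionRing R) L ∧ ∃ y : σ → L, ∀ p ∈ S,
        eval₂ ((algebraMap (FractionRing R) L).comp (algebraMap R (FractionRing R))) y p = 0 := by
  let K := FractionRing R
  letI : Algebra (MvPolynomial σ R) (MvPolynomial σ K) := MvPolynomial.algebraMvPolynomial
  by_cases h : Ideal.map (algebraMap (MvPolynomial σ R) (MvPolynomial σ K)) (Ideal.span S) = ⊤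
  · left
    rw [Ideal.eq_top_iff_one, ← map_one (algebraMap (MvPolynomial σ R) (MvPolynomial σ K)),
      IsLocalization.algebraMap_mem_map_algebraMap_iff ((nonZeroDivisors R).map <| C (σ := σ))] at h
    obtain ⟨m, ⟨F, hF, rfl⟩, h⟩ := h
    exact ⟨F, nonZeroDivisors.ne_zero hF, by simpa using h⟩
  · right
    obtain ⟨M, hM, hle⟩ := Ideal.exists_le_maximal _ h
    let _ := Ideal.Quotient.field M
    refine ⟨MvPolynomial σ K ⧸ M, inferInstance, inferInstance,
      finite_of_finite_type_of_isJacobsonRing _ _, fun i => Ideal.Quotient.mk M (X i), ?_⟩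
    intro p hp
    have h1 : algebraMap (MvPolynomial σ R) (MvPolynomial σ K) p ∈ M :=
      hle (Ideal.mem_map_of_mem _ (Ideal.subset_span hp))
    rw [← Ideal.Quotient.eq_zero_iff_mem] at h1
    rw [← h1]
    have h2 : (eval₂Hom ((algebraMap K (MvPolynomial σ K ⧸ M)).comp (algebraMap R K))
        (fun i => Ideal.Quotient.mk M (X i))) =
        (Ideal.Quotient.mk M).comp (algebraMap (MvPolynomial σ R) (MvPolynomial σ K)) := by
      apply MvPolynomial.ringHom_ext
      · intro r
        have e1 : algebraMap (MvPolynomial σ R) (MvPolynomial σ K) (C r) = C (algebraMap R K r) :=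
          MvPolynomial.map_C _ _
        rw [RingHom.comp_apply, e1, coe_eval₂Hom, eval₂_C]
        rfl
      · intro i
        have e1 : algebraMap (MvPolynomial σ R) (MvPolynomial σ K) (X i) = X i :=
          MvPolynomial.map_X _ _
        rw [RingHom.comp_apply, e1, coe_eval₂Hom, eval₂_X]
    exact congrArg (fun f => f p) h2

/-! ### Rigidity of decompositions under differentiation -/

/-- The linear form with coefficient vector `a` over a commutative ring `L`, as a function on integer points. -/
def ev {n : ℕ} (L : Type) [CommRing L] : (Fin (n+1) → L) →ₗ[L] ((Fin (n+1) → ℤ) → L) where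
  toFun a := fun x => ∑ i, a i * (x i : L)
  map_add' a b := by ext x; simp [add_mul, Finset.sum_add_distrib]
  map_smul' c a := by ext x; simp [Finset.mul_sum, mul_assoc]

/-- The map `m ↦ ∑ i, t_i^c m_i`, whose range is the sum of the tangent spaces at the points `t_i` in degree `c+1`. -/
def Phi {n r : ℕ} (L : Type) [Field L] (c : ℕ) (t : Fin r → Fin (n+1) → L) :
    (Fin r → Fin (n+1) → L) →ₗ[L] ((Fin (n+1) → ℤ) → L) where
  toFun m := ∑ i, ev L (t i) ^ c * ev L (m i)
  map_add' a b := by simp [mul_add, Finset.sum_add_distrib]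
  map_smul' c a := by simp [Finset.smul_sum]

/-- Rigidity: suppose that the coordinates of the `t_i` admit dual derivations `D i k = ∂/∂t_{ik}`, that the tangent spaces
at the `t_i` are independent (`ind`) and that the tangential contact locus at each `t_i` is that point (`star`). Then any
decomposition `∑ t_i^d = ∑ b_j^d` with at most `r` summands has exactly `r`, and each `b_j^d` is one of the `t_i^d`.
Differentiating the decomposition once shows that the two sums of tangent spaces agree; differentiating
`b_j^d = ∑ t_i^(d-1) v_i` shows by `star` that `b_j^d` is a combination of the `t_i^d`; a dimension count excludes two nonzero
coefficients. -/
theorem rigid {n r s d : ℕ} {L : Type} [Field L] [CharZero L] [Algebra ℂ L] (hd : 3 ≤ d) (hn : 1 ≤ n)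
    (t : Fin r → Fin (n+1) → L) (D : Fin r → Fin (n+1) → Derivation ℂ L L)
    (hD : ∀ i k j l, D i k (t j l) = if i = j ∧ k = l then 1 else 0)
    (ind : ∀ m, Phi L (d-1) t m = 0 → m = 0)
    (star : ∀ i v, (∀ k : Fin (n+1), ∃ w, ev L (t i) ^ (d-2) * ev L v * ev L (Pi.single k 1) = Phi L (d-1) t w) →
      ∃ c : L, v = c • t i)
    (b : Fin s → Fin (n+1) → L) (hsr : s ≤ r)
    (hb : ∑ i, ev L (t i) ^ d = ∑ j, ev L (b j) ^ d) :
    s = r ∧ ∀ j, ∃ i, ev L (b j) ^ d = ev L (t i) ^ d := by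
  obtain ⟨d, rfl⟩ : ∃ e, d = e + 3 := ⟨d - 3, by omega⟩
  simp only [show d + 3 - 1 = d + 2 by omega, show d + 3 - 2 = d + 1 by omega] at ind star
  have hd0 : ((d : L) + 3) ≠ 0 := by exact_mod_cast (by omega : d + 3 ≠ 0)
  have hd1 : ((d : L) + 2) ≠ 0 := by exact_mod_cast (by omega : d + 2 ≠ 0)
  -- coefficientwise action of the derivations
  have Dev : ∀ i k (a : Fin (n+1) → L) x, D i k (ev L a x) = ev L (fun l => D i k (a l)) x := by
    intro i k a x
    simp [ev, Derivation.leibniz]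
    refine Finset.sum_congr rfl fun j _ => ?_
    ring
  have Devp : ∀ i k (a : Fin (n+1) → L) (e : ℕ) x, D i k (ev L a x ^ (e+1)) =
      ((e:L)+1) * (ev L a x ^ e * ev L (fun l => D i k (a l)) x) := by
    intro i k a e x
    rw [Derivation.leibniz_pow, Dev]; simp
  have hDt : ∀ i k j, (fun l => D i k (t j l)) = if i = j then Pi.single k (1:L) else 0 := by
    intro i k j; ext l; rw [hD]
    by_cases h : i = j
    · simp [h, Pi.single_apply, eq_comm]
    · simp [h]
  have Dsum : ∀ {q} i k (a : Fin q → Fin (n+1) → L) (c : Fin q → Fin (n+1) → L) (e : ℕ) x,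
      D i k (∑ j, ev L (a j) x ^ (e+1) * ev L (c j) x) =
      ∑ j, (((e:L)+1) * (ev L (a j) x ^ e * ev L (fun l => D i k (a j l)) x * ev L (c j) x) +
        ev L (a j) x ^ (e+1) * ev L (fun l => D i k (c j l)) x) := by
    intro q i k a c e x
    rw [map_sum]
    refine Finset.sum_congr rfl fun j _ => ?_
    rw [Derivation.leibniz, Devp, Dev]; simp; ring
  have PhiEq : ∀ {q} (a : Fin q → Fin (n+1) → L) m x, Phi L (d+2) a m x = ∑ j, ev L (a j) x ^ (d+2) * ev L (m j) x := by
    intro q a m x; simp [Phi]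
  -- tangent spaces
  have h1 : LinearMap.range (Phi L (d+2) t) ≤ LinearMap.range (Phi L (d+2) b) := by
    have key : ∀ i k, ev L (t i) ^ (d+2) * ev L (Pi.single k 1) ∈ LinearMap.range (Phi L (d+2) b) := by
      intro i k
      refine ⟨fun j l => D i k (b j l), ?_⟩
      ext x
      have h := congrArg (D i k) (congrFun hb x)
      simp only [Finset.sum_apply, Pi.pow_apply, map_sum, Devp, hDt] at h
      rw [← Finset.mul_sum, ← Finset.mul_sum] at h
      have h := mul_left_cancel₀ (by push_cast; convert hd0 using 1; ring) h
      rw [PhiEq, ← h, Finset.sum_eq_single i]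
      · simp
      · intro j _ hj; simp [hj.symm]
      · simp
    rintro _ ⟨m, rfl⟩
    have : Phi L (d+2) t m = ∑ i, ∑ k, m i k • (ev L (t i) ^ (d+2) * ev L (Pi.single k 1)) := by
      ext x
      rw [PhiEq]
      simp only [Finset.sum_apply, Pi.smul_apply, Pi.mul_apply, Pi.pow_apply, smul_eq_mul]
      refine Finset.sum_congr rfl fun i _ => ?_
      simp only [ev, LinearMap.coe_mk, AddHom.coe_mk, Pi.single_apply, ite_mul, one_mul, zero_mul, Finset.sum_ite_eq', Finset.mem_univ, if_true]
      rw [Finset.mul_sum]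
      exact Finset.sum_congr rfl fun k _ => by ring
    rw [this]
    exact Submodule.sum_mem _ fun i _ => Submodule.sum_mem _ fun k _ => Submodule.smul_mem _ _ (key i k)
  have ht_inj : Function.Injective (Phi L (d+2) t) := by
    rw [← LinearMap.ker_eq_bot, LinearMap.ker_eq_bot']; exact ind
  have f1 : Module.finrank L (LinearMap.range (Phi L (d+2) t)) = r * (n+1) := by
    rw [LinearMap.finrank_range_of_inj ht_inj, Module.finrank_pi_fintype]; simp
  have f2 : Module.finrank L (LinearMap.range (Phi L (d+2) b)) ≤ s * (n+1) := by
    refine (LinearMap.finrank_range_le _).trans ?_; rw [Module.finrank_pi_fintype]; simp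
  have f3 := Submodule.finrank_mono h1
  have hs : s = r := by
    refine le_antisymm hsr ?_
    have : r * (n+1) ≤ s * (n+1) := by omega
    exact Nat.le_of_mul_le_mul_right this (by omega)
  subst hs
  refine ⟨rfl, ?_⟩
  have hT : LinearMap.range (Phi L (d+2) t) = LinearMap.range (Phi L (d+2) b) :=
    Submodule.eq_of_le_of_finrank_le h1 (by omega)
  have memb : ∀ j v, ev L (b j) ^ (d+2) * ev L v ∈ LinearMap.range (Phi L (d+2) t) := by
    intro j v
    rw [hT]
    refine ⟨Pi.single j v, ?_⟩
    ext x
    rw [PhiEq, Finset.sum_eq_single j]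
    · simp
    · intro l _ hl; simp [hl]
    · simp
  -- each summand is a combination of the powers `t_i^d`
  have h2 : ∀ j, ∃ c : Fin s → L, ev L (b j) ^ (d+3) = ∑ i, c i • ev L (t i) ^ (d+3) := by
    intro j
    obtain ⟨v, hv⟩ := memb j (b j)
    have : ∀ i, ∃ c : L, v i = c • t i := by
      intro i
      apply star
      intro k
      have m1 : ev L (b j) ^ (d+2) * ev L (fun l => D i k (b j l)) ∈ _ := memb j _
      obtain ⟨w, hw⟩ := m1
      refine ⟨((d:L)+2)⁻¹ • (((d:L)+3) • w - fun l q => D i k (v l q)), ?_⟩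
      rw [map_smul, map_sub, map_smul, hw, eq_inv_smul_iff₀ hd1]
      ext x
      have h := congrArg (D i k) (congrFun hv x)
      rw [PhiEq, Dsum] at h
      simp only [Pi.mul_apply, Pi.pow_apply, ← pow_succ, Devp, hDt] at h
      rw [Finset.sum_add_distrib, Finset.sum_eq_single i] at h
      · simp only [Pi.smul_apply, Pi.sub_apply, PhiEq, Pi.mul_apply, Pi.pow_apply, smul_eq_mul]
        rw [if_pos rfl] at h
        push_cast at h
        linear_combination h
      · intro l _ hl; simp [hl.symm]
      · simp
    choose c hc using this
    refine ⟨c, ?_⟩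
    rw [pow_succ, ← hv]
    ext x
    rw [PhiEq]
    simp only [Finset.sum_apply, Pi.smul_apply, Pi.pow_apply, hc, map_smul, smul_eq_mul]
    exact Finset.sum_congr rfl fun i _ => by ring
  -- the powers are independent
  have powind : ∀ c : Fin s → L, ∑ i, c i • ev L (t i) ^ (d+3) = 0 → c = 0 := by
    intro c hc
    have : Phi L (d+2) t (fun i => c i • t i) = 0 := by
      rw [← hc]; ext x; rw [PhiEq]
      simp only [Finset.sum_apply, Pi.smul_apply, Pi.pow_apply, map_smul, smul_eq_mul]
      exact Finset.sum_congr rfl fun i _ => by ring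
    have := ind _ this
    ext i
    have h := congrFun (congrFun this i) 
    by_contra hci
    have h0 : t i = 0 := by
      ext k; have := h k; simp only [Pi.smul_apply, smul_eq_mul, Pi.zero_apply, mul_eq_zero] at this; tauto
    have := hD i 0 i 0
    rw [h0] at this; simp at this
  have bpow : ∀ (j : Fin s) (v : Fin (n+1) → L) i k (c : Fin s → L),
      ev L (b j) ^ (d+3) = ∑ i, c i • ev L (t i) ^ (d+3) →
      ∃ u, ∃ c' : Fin s → L, c i • (ev L (t i) ^ (d+2) * ev L (Pi.single k 1)) =
        ∑ l, c' l • ev L (t l) ^ (d+3) + ev L (b j) ^ (d+2) * ev L u := by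
    intro j v i k c hc
    refine ⟨fun l => D i k (b j l), fun l => -((d:L)+3)⁻¹ * D i k (c l), ?_⟩
    have hd0' := mul_inv_cancel₀ hd0
    ext x
    have h := congrArg (D i k) (congrFun hc x)
    simp only [Finset.sum_apply, Pi.smul_apply, Pi.pow_apply, smul_eq_mul, map_sum, Derivation.leibniz,
      Devp, hDt, Finset.sum_add_distrib] at h
    rw [Finset.sum_eq_single i] at h
    · simp only [Pi.add_apply, Pi.smul_apply, Pi.mul_apply, Finset.sum_apply, Pi.pow_apply, smul_eq_mul,
        mul_assoc, ← Finset.mul_sum]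
      rw [if_pos rfl] at h
      push_cast at h
      have e1 : ∑ l, D i k (c l) * ev L (t l) x ^ (d+3) = ∑ l, ev L (t l) x ^ (d+3) * D i k (c l) :=
        Finset.sum_congr rfl fun _ _ => mul_comm _ _
      rw [e1]
      linear_combination (-((d:L)+3)⁻¹) * h + (ev L (b j) x ^ (d+2) * ev L (fun l => D i k (b j l)) x
        - c i * (ev L (t i) x ^ (d+2) * ev L (Pi.single k 1) x)) * hd0'
    · intro l _ hl; simp [hl.symm]
    · simp
  have h3 : ∀ j, ∃ i, ∃ c : L, ev L (b j) ^ (d+3) = c • ev L (t i) ^ (d+3) := by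
    intro j
    obtain ⟨c, hc⟩ := h2 j
    by_cases hex : ∃ i₁ i₂, i₁ ≠ i₂ ∧ c i₁ ≠ 0 ∧ c i₂ ≠ 0
    · exfalso
      obtain ⟨i₁, i₂, h12, hc1, hc2⟩ := hex
      -- the span of the powers `t_l^d` together with `b_j^{d-1} V`
      let Θ : ((Fin s → L) × (Fin (n+1) → L)) →ₗ[L] ((Fin (n+1) → ℤ) → L) :=
        { toFun := fun p => ∑ l, p.1 l • ev L (t l) ^ (d+3) + ev L (b j) ^ (d+2) * ev L p.2
          map_add' := by
            intro p q; simp only [Prod.fst_add, Prod.snd_add, Pi.add_apply, add_smul, map_add, mul_add, Finset.sum_add_distrib]; abel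
          map_smul' := by intro c p; simp [Finset.smul_sum, mul_smul] }
      have hΘ : ∀ p, Θ p = ∑ l, p.1 l • ev L (t l) ^ (d+3) + ev L (b j) ^ (d+2) * ev L p.2 := fun _ => rfl
      have hker : (-c, b j) ∈ LinearMap.ker Θ := by
        rw [LinearMap.mem_ker, hΘ, ← pow_succ, hc]; simp
      have hkd : 1 ≤ Module.finrank L (LinearMap.ker Θ) := by
        rw [Nat.one_le_iff_ne_zero, Ne, Submodule.finrank_eq_zero]
        intro hbot
        rw [hbot, Submodule.mem_bot] at hker
        have := congrFun (congrArg Prod.fst hker) i₁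
        exact hc1 (by simpa using this)
      have hrn := LinearMap.finrank_range_add_finrank_ker Θ
      simp only [Module.finrank_prod, Module.finrank_fintype_fun_eq_card, Fintype.card_fin] at hrn
      let Ψ : ((Fin s → L) × (Fin (n+1) → L) × (Fin (n+1) → L)) →ₗ[L] (Fin s → Fin (n+1) → L) :=
        { toFun := fun p l => p.1 l • t l + (if l = i₁ then p.2.1 else 0) + (if l = i₂ then p.2.2 else 0)
          map_add' := by
            intro p q; ext l k
            simp only [Prod.fst_add, Prod.snd_add, Prod.smul_fst, Prod.smul_snd, Pi.add_apply, Pi.smul_apply, smul_eq_mul, RingHom.id_apply]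
            split_ifs <;> simp <;> ring
          map_smul' := by
            intro c p; ext l k
            simp only [Prod.fst_add, Prod.snd_add, Prod.smul_fst, Prod.smul_snd, Pi.add_apply, Pi.smul_apply, smul_eq_mul, RingHom.id_apply]
            split_ifs <;> simp <;> ring }
      have hΨ : ∀ p l, Ψ p l = p.1 l • t l + (if l = i₁ then p.2.1 else 0) + (if l = i₂ then p.2.2 else 0) :=
        fun _ _ => rfl
      have htne : ∀ i, t i ≠ 0 := by
        intro i h0
        have := hD i 0 i 0
        rw [h0] at this; simp at this
      have hΨker : Module.finrank L (LinearMap.ker Ψ) ≤ 2 := by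
        let g : LinearMap.ker Ψ →ₗ[L] (L × L) :=
          ((LinearMap.proj i₁).prod (LinearMap.proj i₂)) ∘ₗ (LinearMap.fst L (Fin s → L) _) ∘ₗ (LinearMap.ker Ψ).subtype
        have hg : Function.Injective g := by
          rw [← LinearMap.ker_eq_bot, LinearMap.ker_eq_bot']
          rintro ⟨⟨p, u₁, u₂⟩, hp⟩ h0
          have e1 : p i₁ = 0 := congrArg Prod.fst h0
          have e2 : p i₂ = 0 := congrArg Prod.snd h0
          rw [LinearMap.mem_ker] at hp
          have hp' : ∀ l, p l • t l + (if l = i₁ then u₁ else 0) + (if l = i₂ then u₂ else 0) = 0 :=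
            fun l => congrFun hp l
          have e3 : u₁ = 0 := by simpa [e1, h12] using hp' i₁
          have e4 : u₂ = 0 := by simpa [e2, h12.symm] using hp' i₂
          have e5 : p = 0 := by
            ext l
            have := hp' l
            rw [e3, e4] at this
            simpa [htne l] using this
          simp [e3, e4, e5]
        have := LinearMap.finrank_le_finrank_of_injective hg
        simpa using this
      have hrn2 := LinearMap.finrank_range_add_finrank_ker Ψ
      simp only [Module.finrank_prod, Module.finrank_fintype_fun_eq_card, Fintype.card_fin] at hrn2
      have one : ∀ i, c i ≠ 0 → ∀ u, ev L (t i) ^ (d+2) * ev L u ∈ LinearMap.range Θ := by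
        intro i hi u
        have e : ev L (t i) ^ (d+2) * ev L u = ∑ k, u k • (ev L (t i) ^ (d+2) * ev L (Pi.single k 1)) := by
          conv_lhs => rw [pi_eq_sum_univ' u]
          simp [Finset.mul_sum]
        rw [e]
        refine Submodule.sum_mem _ fun k _ => Submodule.smul_mem _ _ ?_
        obtain ⟨u', c', h⟩ := bpow j (b j) i k c hc
        rw [← Submodule.smul_mem_iff _ hi, h]
        exact ⟨(c', u'), rfl⟩
      have hle : LinearMap.range (Phi L (d+2) t ∘ₗ Ψ) ≤ LinearMap.range Θ := by
        rintro _ ⟨p, rfl⟩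
        have : (Phi L (d+2) t ∘ₗ Ψ) p = Θ (p.1, 0) + ev L (t i₁) ^ (d+2) * ev L p.2.1 + ev L (t i₂) ^ (d+2) * ev L p.2.2 := by
          rw [LinearMap.comp_apply, hΘ]
          change ∑ i, ev L (t i) ^ (d+2) * ev L (Ψ p i) = _
          simp only [hΨ, map_add, mul_add, Finset.sum_add_distrib, map_smul, map_zero, mul_zero, add_zero]
          congr 1
          · congr 1
            · refine Finset.sum_congr rfl fun l _ => ?_
              rw [mul_smul_comm, ← pow_succ]
            · rw [Finset.sum_eq_single i₁]
              · simp
              · intro l _ hl; simp [hl]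
              · simp
          · rw [Finset.sum_eq_single i₂]
            · simp
            · intro l _ hl; simp [hl]
            · simp
        rw [this]
        exact Submodule.add_mem _ (Submodule.add_mem _ ⟨_, rfl⟩ (one _ hc1 _)) (one _ hc2 _)
      have hle' := Submodule.finrank_mono hle
      rw [LinearMap.range_comp, ← (Submodule.equivMapOfInjective _ ht_inj _).finrank_eq] at hle'
      omega
    · push Not at hex
      by_cases hne : ∃ i, c i ≠ 0
      · obtain ⟨i, hi⟩ := hne
        refine ⟨i, c i, ?_⟩
        rw [hc, Finset.sum_eq_single i]
        · intro l _ hl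
          rw [hex i l hl.symm hi, zero_smul]
        · simp
      · push Not at hne
        exact ⟨j, 0, by rw [hc]; simp [hne]⟩
  choose π c hc using h3
  have h4 : ∀ i, ∑ j, (if π j = i then c j else 0) = 1 := by
    have : (fun i => ∑ j, (if π j = i then c j else 0) - 1) = 0 := by
      apply powind
      simp only [sub_smul, Finset.sum_sub_distrib, one_smul, hb, hc, Finset.sum_smul]
      rw [Finset.sum_comm, sub_eq_zero]
      exact Finset.sum_congr rfl fun j _ => by simp [ite_smul]
    intro i
    exact sub_eq_zero.1 (congrFun this i)
  have hsurj : Function.Surjective π := by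
    intro i
    by_contra hno
    push Not at hno
    have := h4 i
    simp [hno] at this
  have hinj : Function.Injective π := Finite.injective_iff_surjective.2 hsurj
  intro j
  refine ⟨π j, ?_⟩
  have := h4 (π j)
  simp only [hinj.eq_iff, Finset.sum_ite_eq', Finset.mem_univ, if_true] at this
  rw [hc, this, one_smul]

/-! ### Transfer of linear independence between specialisations -/

theorem exists_minor {K J Y : Type} [Field K] [Fintype J] [DecidableEq J] (V : J → Y → K)
    (h : LinearIndependent K V) : ∃ y : J → Y, (Matrix.of fun j j' => V j (y j')).det ≠ 0 := by
  classical
  have hspan : ⊤ ≤ Submodule.span K (Set.range fun (y : Y) (j : J) => V j y) := by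
    by_contra hne
    obtain ⟨f, hf0, hf⟩ := Submodule.exists_le_ker_of_lt_top _ (lt_top_iff_ne_top.2 fun h => hne h.ge)
    apply hf0
    have h2 : ∀ c : J → K, f c = ∑ j, c j * f (Pi.single j 1) := by
      intro c
      conv_lhs => rw [pi_eq_sum_univ' c]
      simp
    have h3 : ∑ j, f (Pi.single j 1) • V j = 0 := by
      ext y
      have := hf (Submodule.subset_span ⟨y, rfl⟩)
      rw [LinearMap.mem_ker, h2] at this
      simpa [mul_comm] using this
    have h4 := Fintype.linearIndependent_iff.1 h _ h3
    ext j
    simpa using h4 j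
  let B := Module.Basis.ofSpan hspan
  have hB : ∀ i, ∃ y : Y, B i = fun j => V j y := by
    intro i
    obtain ⟨y, hy⟩ := Module.Basis.ofSpan_subset hspan ⟨i, rfl⟩
    exact ⟨y, hy.symm⟩
  choose y hy using hB
  have : Fintype ((linearIndepOn_empty K id).extend (Set.empty_subset (Set.range fun (y : Y) (j : J) => V j y))) :=
    FiniteDimensional.fintypeBasisIndex B
  have hc := Module.finrank_eq_card_basis B
  rw [Module.finrank_fintype_fun_eq_card] at hc
  let e := Fintype.equivOfCardEq hc
  refine ⟨fun j => y (e j), ?_⟩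
  have h5 := (B.reindex e.symm).linearIndependent
  have h6 : (fun j => (Matrix.of fun j j' => V j (y (e j'))).transpose j) = (B.reindex e.symm) := by
    ext j j'
    simp [Matrix.transpose, hy]
  rw [← Matrix.det_transpose]
  have h7 : LinearIndependent K (Matrix.of fun j j' => V j (y (e j'))).transpose.row := by
    change LinearIndependent K (fun j => (Matrix.of fun j j' => V j (y (e j'))).transpose j)
    rw [h6]; exact h5
  rw [Matrix.linearIndependent_rows_iff_isUnit, Matrix.isUnit_iff_isUnit_det] at h7
  exact h7.ne_zero

theorem li_of_minor {K J Y : Type} [Field K] [Fintype J] [DecidableEq J] (V : J → Y → K) (y : J → Y)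
    (h : (Matrix.of fun j j' => V j (y j')).det ≠ 0) : LinearIndependent K V := by
  have h7 : LinearIndependent K (Matrix.of fun j j' => V j (y j')).row := by
    rw [Matrix.linearIndependent_rows_iff_isUnit, Matrix.isUnit_iff_isUnit_det]; exact h.isUnit
  exact LinearIndependent.of_comp (LinearMap.funLeft K K y) h7

/-- Linear independence of finitely many families of ring elements passes from one specialisation of the ring to every
specialisation at which a suitable minor `F` does not vanish. -/
theorem transfer {R K : Type} [CommRing R] [Field K] (φ : R →+* K) {J Y : Type} [Finite J]
    (V : J → Y → R) (h : LinearIndependent K (fun j y => φ (V j y))) :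
    ∃ F : R, φ F ≠ 0 ∧ ∀ (L : Type) [Field L] (ψ : R →+* L), ψ F ≠ 0 →
      LinearIndependent L (fun j y => ψ (V j y)) := by
  classical
  have := Fintype.ofFinite J
  obtain ⟨y, hy⟩ := exists_minor _ h
  refine ⟨(Matrix.of fun j j' => V j (y j')).det, ?_, ?_⟩
  · rw [RingHom.map_det]; exact hy
  · intro L _ ψ hψ
    rw [RingHom.map_det] at hψ
    exact li_of_minor _ y hψ

section
variable {n r : ℕ}
/-- The vectors whose independence encodes both injectivity of the tangent map and triviality of the
second-order system at index `i`. -/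
def Wfam (A : Type) [CommRing A] (d : ℕ) (i : Fin r) (k₀ : Fin (n+1)) (t : Fin r → Fin (n+1) → A) :
    (Fin (n+1) × Fin r × Fin (n+1)) ⊕ Fin (n+1) → (Fin (n+1) × (Fin (n+1) → ℤ)) ⊕ Unit → A
  | .inl (k, l, m), .inl (k', x) => if k = k' then ev A (t l) x ^ (d-1) * (x m : A) else 0
  | .inl _, .inr _ => 0
  | .inr m, .inl (k', x) => ev A (t i) x ^ (d-2) * (x m : A) * (x k' : A)
  | .inr m, .inr _ => if m = k₀ then 1 else 0

theorem ev_map {A B : Type} [CommRing A] [CommRing B] (φ : A →+* B) (a : Fin (n+1) → A) (x : Fin (n+1) → ℤ) :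
    φ (ev A a x) = ev B (fun k => φ (a k)) x := by
  simp [ev]

theorem Wfam_map {A B : Type} [CommRing A] [CommRing B] (φ : A →+* B) (d : ℕ) (i : Fin r) (k₀ : Fin (n+1))
    (t : Fin r → Fin (n+1) → A) (j y) :
    φ (Wfam A d i k₀ t j y) = Wfam B d i k₀ (fun l k => φ (t l k)) j y := by
  rcases j with ⟨k, l, m⟩ | m <;> rcases y with ⟨k', x⟩ | u <;> simp [Wfam, ev_map, apply_ite φ]

theorem ev_single {L : Type} [CommRing L] (k : Fin (n+1)) (x : Fin (n+1) → ℤ) :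
    ev L (Pi.single k 1) x = (x k : L) := by
  simp [ev, Pi.single_apply]

theorem Wfam_sum {L : Type} [Field L] (d : ℕ) (i : Fin r) (k₀ : Fin (n+1)) (t : Fin r → Fin (n+1) → L)
    (g : (Fin (n+1) × Fin r × Fin (n+1)) ⊕ Fin (n+1) → L) :
    ∑ j, g j • Wfam L d i k₀ t j = fun y => match y with
      | .inl (k, x) => Phi L (d-1) t (fun l m => g (.inl (k, l, m))) x +
          ev L (t i) x ^ (d-2) * ev L (fun m => g (.inr m)) x * (x k : L)
      | .inr _ => g (.inr k₀) := by
  ext y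
  rcases y with ⟨k, x⟩ | u
  · simp only [Fintype.sum_sum_type, Fintype.sum_prod_type, Pi.add_apply, Finset.sum_apply, Pi.smul_apply, Wfam, smul_eq_mul]
    congr 1
    · rw [Finset.sum_eq_single k]
      · simp only [if_true, Phi, ev, LinearMap.coe_mk, AddHom.coe_mk, Finset.sum_apply, Pi.mul_apply, Pi.pow_apply, Finset.mul_sum]
        exact Finset.sum_congr rfl fun _ _ => Finset.sum_congr rfl fun _ _ => by ring
      · intro b _ hb; simp [hb]
      · simp
    · simp only [ev, LinearMap.coe_mk, AddHom.coe_mk]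
      rw [Finset.mul_sum, Finset.sum_mul]
      exact Finset.sum_congr rfl fun _ _ => by ring
  · simp [Wfam, Fintype.sum_sum_type]

theorem ind_of_Wfam {L : Type} [Field L] {d : ℕ} {i : Fin r} {k₀ : Fin (n+1)} {t : Fin r → Fin (n+1) → L}
    (h : LinearIndependent L (Wfam L d i k₀ t)) (m) (hm : Phi L (d-1) t m = 0) : m = 0 := by
  have := Fintype.linearIndependent_iff.1 h (Sum.elim (fun p => if p.1 = k₀ then m p.2.1 p.2.2 else 0) 0) ?_
  · ext l q
    simpa using this (.inl (k₀, l, q))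
  · rw [Wfam_sum]
    ext y
    rcases y with ⟨k, x⟩ | u
    · by_cases hk : k = k₀
      · simp only [Sum.elim_inl, Sum.elim_inr, hk, if_true]
        rw [show (fun l q => m l q) = m from rfl, hm]
        simp [ev]
      · simp only [Sum.elim_inl, Sum.elim_inr, hk, if_false]
        simp [Phi, ev]
    · simp

theorem star_of_Wfam {L : Type} [Field L] {d : ℕ} (hd : 3 ≤ d) {i : Fin r} {k₀ : Fin (n+1)} {t : Fin r → Fin (n+1) → L}
    (h : LinearIndependent L (Wfam L d i k₀ t)) (ht : t i k₀ ≠ 0) (v : Fin (n+1) → L)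
    (hv : ∀ k : Fin (n+1), ∃ w, ev L (t i) ^ (d-2) * ev L v * ev L (Pi.single k 1) = Phi L (d-1) t w) :
    ∃ c : L, v = c • t i := by
  choose w hw using hv
  refine ⟨v k₀ / t i k₀, ?_⟩
  set c := v k₀ / t i k₀ with hc
  have key := Fintype.linearIndependent_iff.1 h
    (Sum.elim (fun p => c * (if p.2.1 = i then (Pi.single p.1 1 : Fin (n+1) → L) p.2.2 else 0) - w p.1 p.2.1 p.2.2) (v - c • t i)) ?_
  · ext k
    have := key (.inr k)
    simpa [sub_eq_zero] using this
  · rw [Wfam_sum]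
    ext y
    rcases y with ⟨k, x⟩ | u
    · have h1 := congrFun (hw k) x
      simp only [Pi.mul_apply, Pi.pow_apply, ev_single] at h1
      have h2 : Phi L (d-1) t (fun l q => c * (if l = i then (Pi.single k 1 : Fin (n+1) → L) q else 0) - w k l q) =
        c • Phi L (d-1) t (fun l => if l = i then (Pi.single k 1 : Fin (n+1) → L) else 0) - Phi L (d-1) t (w k) := by
        rw [← map_smul, ← map_sub]; congr 1; ext l q; by_cases hl : l = i <;> simp [hl]
      have h3 : Phi L (d-1) t (fun l => if l = i then (Pi.single k 1 : Fin (n+1) → L) else 0) x =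
          ev L (t i) x ^ (d-1) * (x k : L) := by
        simp only [Phi, LinearMap.coe_mk, AddHom.coe_mk, Finset.sum_apply, Pi.mul_apply, Pi.pow_apply]
        rw [Finset.sum_eq_single i]
        · simp [ev_single]
        · intro l _ hl; simp [hl]
        · simp
      have h4 : ev L (fun m => (v - c • t i) m) x = ev L v x - c * ev L (t i) x := by
        have : (fun m => (v - c • t i) m) = v - c • t i := rfl
        rw [this, map_sub, map_smul]; rfl
      simp only [Sum.elim_inl, Sum.elim_inr]
      rw [h2, h4, Pi.sub_apply, Pi.smul_apply, h3, ← h1]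
      obtain ⟨e, rfl⟩ : ∃ e, d = e + 3 := ⟨d - 3, by omega⟩
      simp only [show e + 3 - 1 = e + 2 by omega, show e + 3 - 2 = e + 1 by omega]
      simp
      ring
    · simp [hc, ht]

theorem Wfam_of {L : Type} [Field L] [CharZero L] {d : ℕ} {i : Fin r} {k₀ : Fin (n+1)} {t : Fin r → Fin (n+1) → L}
    (ht : t i k₀ ≠ 0) (ind : ∀ m, Phi L (d-1) t m = 0 → m = 0)
    (star : ∀ v, (∀ k : Fin (n+1), ∃ w, ev L (t i) ^ (d-2) * ev L v * ev L (Pi.single k 1) = Phi L (d-1) t w) →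
      ∃ c : L, v = c • t i) : LinearIndependent L (Wfam L d i k₀ t) := by
  rw [Fintype.linearIndependent_iff]
  intro g hg
  rw [Wfam_sum] at hg
  have h0 : g (.inr k₀) = 0 := congrFun hg (.inr ())
  have h1 : (fun m => g (.inr m)) = 0 := by
    obtain ⟨c, hc⟩ := star (fun m => g (.inr m)) (by
      intro k
      refine ⟨-fun l m => g (.inl (k, l, m)), ?_⟩
      ext x
      have := congrFun hg (.inl (k, x))
      simp only [Pi.zero_apply] at this
      rw [map_neg]
      simp only [Pi.mul_apply, Pi.pow_apply, ev_single, Pi.neg_apply]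
      linear_combination this)
    have : c = 0 := by
      have := congrFun hc k₀
      rw [h0] at this
      simpa [ht] using this.symm
    rw [hc, this, zero_smul]
  have h2 : ∀ k, (fun l m => g (.inl (k, l, m))) = 0 := by
    intro k
    apply ind
    ext x
    have := congrFun hg (.inl (k, x))
    simp only [h1] at this
    simpa using this
  rintro (⟨k, l, m⟩ | m)
  · exact congrFun (congrFun (h2 k) l) m
  · exact congrFun h1 m
end

/-! ### Generic identifiability from one configuration -/

theorem eval_linForm {n : ℕ} (a : Fin (n+1) → ℂ) (x : Fin (n+1) → ℂ) : eval x (linForm a) = ∑ i, a i * x i := by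
  simp [linForm]

theorem poly_ext_int {n : ℕ} {L : Type} [Field L] [CharZero L] {p q : MvPolynomial (Fin (n+1)) L}
    (h : ∀ x : Fin (n+1) → ℤ, eval (fun i => (x i : L)) p = eval (fun i => (x i : L)) q) : p = q := by
  refine funext_set (fun _ => Set.range (fun z : ℤ => (z : L)))
    (fun _ => Set.infinite_range_of_injective Int.cast_injective) fun y hy => ?_
  have : ∀ i, ∃ z : ℤ, (z : L) = y i := fun i => hy i (Set.mem_univ i)
  choose x hx using this
  have := h x
  rwa [funext hx] at this

theorem eval_int_linForm {n : ℕ} (a : Fin (n+1) → ℂ) (x : Fin (n+1) → ℤ) :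
    eval (fun i => (x i : ℂ)) (linForm a) = ev ℂ a x := by
  simp [eval_linForm, ev]

theorem linForm_iff {n : ℕ} (p q : MvPolynomial (Fin (n+1)) ℂ) :
    p = q ↔ (fun x : Fin (n+1) → ℤ => eval (fun i => (x i : ℂ)) p) = fun x => eval (fun i => (x i : ℂ)) q :=
  ⟨fun h => by rw [h], fun h => poly_ext_int fun x => congrFun h x⟩

/-- Independence of the tangent spaces at the points `a i`. -/
def TInd {n r : ℕ} (d : ℕ) (a : Fin r → Fin (n+1) → ℂ) : Prop :=
  ∀ m : Fin r → Fin (n+1) → ℂ, ∑ i, linForm (a i) ^ (d-1) * linForm (m i) = 0 → m = 0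

/-- Second order condition at the point `a i`: a direction `v` that keeps, to first order, the tangent space at `a i` inside the
sum of all the tangent spaces is a multiple of `a i`. Thus the tangential contact locus at `a i` is, to first order, a point. -/
def TStar {n r : ℕ} (d : ℕ) (a : Fin r → Fin (n+1) → ℂ) (i : Fin r) : Prop :=
  ∀ v : Fin (n+1) → ℂ, (∀ k : Fin (n+1), ∃ w : Fin r → Fin (n+1) → ℂ,
    linForm (a i) ^ (d-2) * linForm v * X k = ∑ l, linForm (a l) ^ (d-1) * linForm (w l)) →
    ∃ c : ℂ, v = c • a i

theorem sum_eq_Phi {n r c : ℕ} (a m : Fin r → Fin (n+1) → ℂ) :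
    (fun x : Fin (n+1) → ℤ => eval (fun i => (x i : ℂ)) (∑ i, linForm (a i) ^ c * linForm (m i))) = Phi ℂ c a m := by
  ext x; simp [Phi, eval_int_linForm]

theorem TInd.phi {n r d : ℕ} {a : Fin r → Fin (n+1) → ℂ} : TInd d a ↔ ∀ m, Phi ℂ (d-1) a m = 0 → m = 0 := by
  refine forall_congr' fun m => ?_
  rw [linForm_iff, sum_eq_Phi]
  simp; rfl

theorem TStar.phi {n r d : ℕ} {a : Fin r → Fin (n+1) → ℂ} {i : Fin r} : TStar d a i ↔
    ∀ v, (∀ k : Fin (n+1), ∃ w, ev ℂ (a i) ^ (d-2) * ev ℂ v * ev ℂ (Pi.single k 1) = Phi ℂ (d-1) a w) →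
      ∃ c : ℂ, v = c • a i := by
  refine forall_congr' fun v => imp_congr_left (forall_congr' fun k => exists_congr fun w => ?_)
  rw [linForm_iff, sum_eq_Phi]
  have : (fun x : Fin (n+1) → ℤ => eval (fun i => (x i : ℂ)) (linForm (a i) ^ (d - 2) * linForm v * X k)) =
    ev ℂ (a i) ^ (d-2) * ev ℂ v * ev ℂ (Pi.single k 1) := by
    ext x; simp [eval_int_linForm, ev_single]
  rw [this]

theorem TInd.comp {n r s d : ℕ} {a : Fin r → Fin (n+1) → ℂ} (h : TInd d a) (σ : Fin s → Fin r)
    (hσ : Function.Injective σ) : TInd d (a ∘ σ) := by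
  intro m hm
  have key : ∀ j, (fun i => if h : ∃ j, σ j = i then m h.choose else 0) (σ j) = m j := by
    intro j
    have hex : ∃ j', σ j' = σ j := ⟨j, rfl⟩
    simp only [hex, dif_pos]
    rw [hσ hex.choose_spec]
  have := h (fun i => if h : ∃ j, σ j = i then m h.choose else 0) (by
    rw [← Finset.sum_subset (Finset.subset_univ (Finset.univ.map ⟨σ, hσ⟩)), Finset.sum_map]
    · rw [← hm]
      refine Finset.sum_congr rfl fun j _ => ?_
      have := key j
      simp only [Function.Embedding.coeFn_mk, Function.comp] at *
      rw [this]
    · intro i _ hi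
      have : ¬ ∃ j, σ j = i := by simpa using hi
      simp [this, linForm])
  ext1 j
  rw [← key j, this]; rfl

theorem TStar.perm {n r d : ℕ} {a : Fin r → Fin (n+1) → ℂ} {i : Fin r} (h : TStar d a i) (σ : Equiv.Perm (Fin r)) :
    TStar d (a ∘ σ) (σ.symm i) := by
  intro v hv
  simp only [Function.comp, Equiv.apply_symm_apply] at hv ⊢
  refine h v fun k => ?_
  obtain ⟨w, hw⟩ := hv k
  refine ⟨w ∘ σ.symm, ?_⟩
  rw [hw, ← Equiv.sum_comp σ (fun l => linForm (a l) ^ (d-1) * linForm ((w ∘ σ.symm) l))]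
  simp

/-- If a polynomial system with coefficients depending on parameters `t` has no solution over any field containing the
function field to which all derivations extend, then it has no complex solution for generic `t`. -/
theorem generic_unsolvable {ι σ : Type} [Finite σ] (S : Set (MvPolynomial σ (MvPolynomial ι ℂ)))
    (h : ∀ (L : Type) [Field L] [CharZero L] [Algebra ℂ L] (ψ : MvPolynomial ι ℂ →+* L), Function.Injective ψ →
      (∀ δ : Derivation ℂ (MvPolynomial ι ℂ) (MvPolynomial ι ℂ), ∃ D : Derivation ℂ L L, ∀ a, D (ψ a) = ψ (δ a)) →
      ∀ y : σ → L, (∀ p ∈ S, eval₂ ψ y p = 0) → False) :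
    ∃ F : MvPolynomial ι ℂ, F ≠ 0 ∧ ∀ t : ι → ℂ, eval t F ≠ 0 → ∀ y : σ → ℂ,
      ¬ ∀ p ∈ S, eval₂ (eval t) y p = 0 := by
  rcases exists_point_or_certificate S with ⟨F, hF, hmem⟩ | ⟨L, _, _, hfin, y, hy⟩
  · refine ⟨F, hF, fun t ht y hy => ht ?_⟩
    have : Ideal.span S ≤ RingHom.ker (eval₂Hom (eval t) y) := Ideal.span_le.2 fun p hp => hy p hp
    simpa [RingHom.mem_ker] using this hmem
  · exfalso
    let R := MvPolynomial ι ℂ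
    let ψ : R →+* L := (algebraMap (FractionRing R) L).comp (algebraMap R (FractionRing R))
    letI : Algebra R L := ψ.toAlgebra
    letI : Algebra ℂ L := (ψ.comp (algebraMap ℂ R)).toAlgebra
    have : IsScalarTower ℂ R L := IsScalarTower.of_algebraMap_eq fun _ => rfl
    have : IsScalarTower R (FractionRing R) L := IsScalarTower.of_algebraMap_eq fun _ => rfl
    have : CharZero L := charZero_of_injective_algebraMap (algebraMap ℂ L).injective
    exact h L ψ ((algebraMap (FractionRing R) L).injective.comp (IsFractionRing.injective R (FractionRing R)))
      (fun δ => exists_derivation_extend δ) y hy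

theorem Generic.all {ι κ : Type} [Fintype ι] [Fintype κ] {P : κ → (ι → ℂ) → Prop} (h : ∀ k, Generic (P k)) :
    Generic fun t => ∀ k, P k t := by
  choose F hF hP using h
  refine ⟨∏ k, F k, Finset.prod_ne_zero_iff.2 fun k _ => hF k, fun t ht k => hP k t ?_⟩
  rw [map_prod] at ht
  exact (Finset.prod_ne_zero_iff.1 ht) k (Finset.mem_univ _)

theorem Generic.mono {ι : Type} [Fintype ι] {P Q : (ι → ℂ) → Prop} (h : Generic P) (hPQ : ∀ t, P t → Q t) : Generic Q := by
  obtain ⟨F, hF, hP⟩ := h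
  exact ⟨F, hF, fun t ht => hPQ t (hP t ht)⟩

theorem Generic.and {ι : Type} [Fintype ι] {P Q : (ι → ℂ) → Prop} (h : Generic P) (h' : Generic Q) :
    Generic fun t => P t ∧ Q t := by
  obtain ⟨F, hF, hP⟩ := h
  obtain ⟨G, hG, hQ⟩ := h'
  refine ⟨F * G, mul_ne_zero hF hG, fun t ht => ?_⟩
  rw [map_mul] at ht
  exact ⟨hP t (left_ne_zero_of_mul ht), hQ t (right_ne_zero_of_mul ht)⟩

/-- `TInd` and `TStar` at one index of one configuration imply both conditions at the generic point, at any given index: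
a permutation of the points moves the index. -/
theorem generic_Wfam {n r d : ℕ} (hd : 3 ≤ d) (hn : 1 ≤ n) {a : Fin r → Fin (n+1) → ℂ} (h : TInd d a)
    {i₀ : Fin r} (h' : TStar d a i₀) (i : Fin r) :
    ∃ F : MvPolynomial (Fin r × Fin (n+1)) ℂ, F ≠ 0 ∧ ∀ (L : Type) [Field L]
      (ψ : MvPolynomial (Fin r × Fin (n+1)) ℂ →+* L), ψ F ≠ 0 →
        (∀ m, Phi L (d-1) (fun l k => ψ (X (l, k))) m = 0 → m = 0) ∧
        ∀ v, (∀ k : Fin (n+1), ∃ w, ev L (fun k => ψ (X (i, k))) ^ (d-2) * ev L v * ev L (Pi.single k 1) =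
          Phi L (d-1) (fun l k => ψ (X (l, k))) w) → ∃ c : L, v = c • (fun k => ψ (X (i, k))) := by
  let τ := Equiv.swap i i₀
  have hi : τ.symm i₀ = i := by simp [τ]
  have H := h.comp τ τ.injective
  have H' := hi ▸ h'.perm τ
  set b := a ∘ τ with hb
  have hne : ∃ k₀, b i k₀ ≠ 0 := by
    by_contra hcon
    push Not at hcon
    have h0 : b i = 0 := funext hcon
    have := H (Pi.single i 1) (by
      refine Finset.sum_eq_zero fun j _ => ?_
      by_cases hj : j = i
      · rw [hj, h0]; simp [linForm, show d - 1 ≠ 0 by omega]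
      · simp [hj, linForm])
    have := congrFun (congrFun this i) 0
    simp at this
  obtain ⟨k₀, hk₀⟩ := hne
  have hW := Wfam_of (L := ℂ) hk₀ (TInd.phi.1 H) (TStar.phi.1 H')
  let t : Fin r → Fin (n+1) → MvPolynomial (Fin r × Fin (n+1)) ℂ := fun l k => X (l, k)
  obtain ⟨F, hF, hT⟩ := transfer (eval fun p : Fin r × Fin (n+1) => b p.1 p.2) (Wfam _ d i k₀ t) (by
    simp only [Wfam_map]
    simpa [t] using hW)
  refine ⟨F * X (i, k₀), ?_, ?_⟩
  · intro h0
    have := congrArg (eval fun p : Fin r × Fin (n+1) => b p.1 p.2) h0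
    simp [hk₀, hF] at this
  · intro L _ ψ hψ
    rw [map_mul] at hψ
    have := hT L ψ (left_ne_zero_of_mul hψ)
    simp only [Wfam_map] at this
    exact ⟨ind_of_Wfam this, star_of_Wfam hd this (right_ne_zero_of_mul hψ)⟩

/-- The equations of a Waring decomposition with `s` summands. -/
def Weqs (n r s d : ℕ) (τ : Type) : Set (MvPolynomial ((Fin s × Fin (n+1)) ⊕ τ) (MvPolynomial (Fin r × Fin (n+1)) ℂ)) :=
  Set.range fun x : Fin (n+1) → ℤ =>
    ∑ i : Fin r, C ((ev _ (fun k => X (i, k)) x) ^ d) - ∑ j : Fin s, ev _ (fun k => X (.inl (j, k))) x ^ d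

theorem eval_Weqs {n r s d : ℕ} {τ : Type} {L : Type} [CommRing L]
    (ψ : MvPolynomial (Fin r × Fin (n+1)) ℂ →+* L) (y : (Fin s × Fin (n+1)) ⊕ τ → L) :
    (∀ p ∈ Weqs n r s d τ, eval₂ ψ y p = 0) ↔
      ∑ i : Fin r, ev L (fun k => ψ (X (i, k))) ^ d = ∑ j : Fin s, ev L (fun k => y (.inl (j, k))) ^ d := by
  rw [Weqs, Set.forall_mem_range, funext_iff]
  refine forall_congr' fun x => ?_
  rw [← coe_eval₂Hom]
  simp only [map_sub, map_sum, coe_eval₂Hom, eval₂_C, map_pow, ev_map, Finset.sum_apply, Pi.pow_apply, sub_eq_zero]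
  simp only [← coe_eval₂Hom, map_pow, ev_map]
  simp

theorem hD_of {n r : ℕ} {L : Type} [Field L] [Algebra ℂ L] (ψ : MvPolynomial (Fin r × Fin (n+1)) ℂ →+* L)
    (hder : ∀ δ : Derivation ℂ (MvPolynomial (Fin r × Fin (n+1)) ℂ) (MvPolynomial (Fin r × Fin (n+1)) ℂ),
      ∃ D : Derivation ℂ L L, ∀ a, D (ψ a) = ψ (δ a)) :
    ∃ D : Fin r → Fin (n+1) → Derivation ℂ L L, ∀ i k j l, D i k (ψ (X (j, l))) = if i = j ∧ k = l then 1 else 0 := by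
  choose D hD using fun p : Fin r × Fin (n+1) => hder (pderiv p)
  refine ⟨fun i k => D (i, k), fun i k j l => ?_⟩
  rw [hD]
  by_cases h : i = j ∧ k = l
  · simp [h.1, h.2]
  · rw [pderiv_X, if_neg h, Pi.single_eq_of_ne, map_zero]
    intro h'; exact h ⟨(congrArg Prod.fst h').symm, (congrArg Prod.snd h').symm⟩

/-- A single configuration with independent tangent spaces and a second order condition at one of
its points gives generic identifiability. -/
theorem stepA {n r d : ℕ} (hd : 3 ≤ d) (hn : 1 ≤ n) (hr : 1 ≤ r) {a : Fin r → Fin (n+1) → ℂ} (h : TInd d a)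
    {i₀ : Fin r} (h' : TStar d a i₀) :
    Generic (ι := Fin r × Fin (n + 1)) fun t =>
      let a : Fin r → Fin (n + 1) → ℂ := fun i j => t (i, j)
      let f : MvPolynomial (Fin (n + 1)) ℂ := ∑ i, linForm (a i) ^ d
      (∀ s : ℕ, s < r → ∀ b : Fin s → Fin (n + 1) → ℂ, f ≠ ∑ i, linForm (b i) ^ d) ∧
      ∀ b : Fin r → Fin (n + 1) → ℂ, f = ∑ i, linForm (b i) ^ d →
        (Finset.univ.val.map fun i => linForm (b i) ^ d) =
          (Finset.univ.val.map fun i => linForm (a i) ^ d) := by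
  choose F hF0 hF using generic_Wfam hd hn h h'
  have evsum : ∀ {q : ℕ} (a : Fin q → Fin (n+1) → ℂ),
      (fun x : Fin (n+1) → ℤ => eval (fun i => (x i : ℂ)) (∑ i, linForm (a i) ^ d)) = ∑ i, ev ℂ (a i) ^ d := by
    intro q a; ext x; simp [eval_int_linForm]
  -- fewer summands
  have P1 : ∀ s : Fin r, Generic (ι := Fin r × Fin (n+1)) fun t => ∀ b : Fin s → Fin (n+1) → ℂ,
      (∑ i, linForm (fun j => t (i, j)) ^ d) ≠ ∑ i, linForm (b i) ^ d := by
    intro s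
    obtain ⟨G, hG, hG'⟩ := generic_unsolvable (Weqs n r s d Empty) (by
      intro L _ _ _ ψ hψ hder y hy
      rw [eval_Weqs] at hy
      obtain ⟨D, hD⟩ := hD_of ψ hder
      have hF' : ∀ i, ψ (F i) ≠ 0 := fun i => (map_ne_zero_iff ψ hψ).2 (hF0 i)
      have := (rigid hd hn (fun l k => ψ (X (l, k))) D hD (hF i₀ L ψ (hF' i₀)).1
        (fun i => (hF i L ψ (hF' i)).2) _ s.2.le hy).1
      omega)
    refine ⟨G, hG, fun t ht b hb => hG' t ht (Sum.elim (fun p => b p.1 p.2) Empty.elim) ?_⟩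
    rw [eval_Weqs]
    rw [linForm_iff, evsum, evsum] at hb
    simpa using hb
  -- a summand different from all the given ones
  have P2 : ∀ j : Fin r, Generic (ι := Fin r × Fin (n+1)) fun t => ∀ b : Fin r → Fin (n+1) → ℂ,
      (∑ i, linForm (fun j => t (i, j)) ^ d) = ∑ i, linForm (b i) ^ d →
      ∃ i, linForm (b j) ^ d = linForm (fun j => t (i, j)) ^ d := by
    intro j
    let q : MvPolynomial ((Fin r × Fin (n+1)) ⊕ ((Fin r × Fin (n+1)) ⊕ Unit)) (MvPolynomial (Fin r × Fin (n+1)) ℂ) :=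
      X (.inr (.inr ())) * ∏ i : Fin r, ((∑ k, X (.inl (j, k)) * X (.inr (.inl (i, k)))) ^ d
        - (∑ k, C (X (i, k)) * X (.inr (.inl (i, k)))) ^ d) - 1
    have evq : ∀ {L : Type} [CommRing L] (ψ : MvPolynomial (Fin r × Fin (n+1)) ℂ →+* L) (y),
        eval₂ ψ y q = y (.inr (.inr ())) * ∏ i : Fin r, ((∑ k, y (.inl (j, k)) * y (.inr (.inl (i, k)))) ^ d
        - (∑ k, ψ (X (i, k)) * y (.inr (.inl (i, k)))) ^ d) - 1 := by
      intro L _ ψ y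
      rw [← coe_eval₂Hom]
      simp [q]
    obtain ⟨G, hG, hG'⟩ := generic_unsolvable (insert q (Weqs n r r d _)) (by
      intro L _ _ _ ψ hψ hder y hy
      rw [Set.forall_mem_insert, eval_Weqs, evq] at hy
      obtain ⟨hy1, hy⟩ := hy
      obtain ⟨D, hD⟩ := hD_of ψ hder
      have hF' : ∀ i, ψ (F i) ≠ 0 := fun i => (map_ne_zero_iff ψ hψ).2 (hF0 i)
      obtain ⟨i, hi⟩ := (rigid hd hn (fun l k => ψ (X (l, k))) D hD (hF i₀ L ψ (hF' i₀)).1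
        (fun i => (hF i L ψ (hF' i)).2) _ le_rfl hy).2 j
      have hpoly : (∑ k, C (y (.inl (j, k))) * X k : MvPolynomial (Fin (n+1)) L) ^ d =
          (∑ k, C (ψ (X (i, k))) * X k) ^ d := by
        apply poly_ext_int
        intro x
        simpa [ev] using congrFun hi x
      have := congrArg (eval fun k => y (.inr (.inl (i, k)))) hpoly
      simp only [map_pow, map_sum, map_mul, eval_C, eval_X] at this
      rw [Finset.prod_eq_zero (Finset.mem_univ i) (sub_eq_zero.2 this)] at hy1
      simp at hy1)
    refine ⟨G, hG, fun t ht b hb => ?_⟩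
    by_contra hcon
    push Not at hcon
    have : ∀ i, ∃ x : Fin (n+1) → ℂ, eval x (linForm (b j) ^ d) ≠ eval x (linForm (fun j => t (i, j)) ^ d) := by
      intro i
      by_contra hc; push Not at hc
      exact hcon i (MvPolynomial.funext hc)
    choose p hp using this
    simp only [map_pow, eval_linForm] at hp
    refine hG' t ht (Sum.elim (fun p => b p.1 p.2) (Sum.elim (fun q => p q.1 q.2)
      (fun _ => (∏ i : Fin r, ((∑ k, b j k * p i k) ^ d - (∑ k, t (i, k) * p i k) ^ d))⁻¹))) ?_
    rw [Set.forall_mem_insert, eval_Weqs, evq]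
    constructor
    · simp only [Sum.elim_inl, Sum.elim_inr, eval_X]
      rw [inv_mul_cancel₀, sub_self]
      exact Finset.prod_ne_zero_iff.2 fun i _ => sub_ne_zero.2 (hp i)
    · rw [linForm_iff, evsum, evsum] at hb
      simpa using hb
  have P3 : Generic (ι := Fin r × Fin (n+1)) fun t => TInd d (fun (i : Fin r) (j : Fin (n+1)) => t (i, j)) := by
    refine ⟨F i₀, hF0 i₀, fun t ht => ?_⟩
    refine TInd.phi.2 ?_
    simpa using (hF i₀ ℂ (eval t) ht).1
  refine ((Generic.all P1).and ((Generic.all P2).and P3)).mono ?_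
  rintro t ⟨h1, h2, h3⟩
  refine ⟨fun s hs => h1 ⟨s, hs⟩, fun b hb => ?_⟩
  choose π hπ using fun j => h2 j b hb
  set a : Fin r → Fin (n+1) → ℂ := fun i j => t (i, j) with ha
  have hsum : ∑ i, linForm (a i) ^ d = ∑ j, linForm (a (π j)) ^ d := by
    rw [hb]; exact Finset.sum_congr rfl fun j _ => hπ j
  have hmul : ∀ (c : ℂ) (v : Fin (n+1) → ℂ), linForm (c • v) = C c * linForm v := by
    intro c v; simp [linForm, Finset.mul_sum, mul_assoc]
  have hcoef : ∀ i, ((Finset.univ.filter fun j => π j = i).card : ℂ) = 1 := by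
    have := h3 (fun i => (((Finset.univ.filter fun j => π j = i).card : ℂ) - 1) • a i) (by
      have e : ∀ i, linForm (a i) ^ (d-1) * linForm ((((Finset.univ.filter fun j => π j = i).card : ℂ) - 1) • a i) =
          ∑ j, (if π j = i then linForm (a i) ^ d else 0) - linForm (a i) ^ d := by
        intro i
        have hp : linForm (a i) ^ d = linForm (a i) ^ (d-1) * linForm (a i) := by
          rw [← pow_succ]; congr 1; omega
        rw [hmul, ← Finset.sum_filter, Finset.sum_const, hp]
        simp only [map_sub, map_natCast, map_one, nsmul_eq_mul]
        ring
      change ∑ i, linForm (a i) ^ (d-1) * _ = 0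
      simp only [e, Finset.sum_sub_distrib]
      rw [Finset.sum_comm, sub_eq_zero, hsum]
      exact Finset.sum_congr rfl fun j _ => by simp)
    intro i
    have h4 := congrFun this i
    have hai : a i ≠ 0 := by
      intro h0
      have := h3 (Pi.single i 1) (by
        refine Finset.sum_eq_zero fun j _ => ?_
        by_cases hj : j = i
        · change linForm (a j) ^ (d-1) * _ = 0
          rw [hj, h0]; simp [linForm, show d - 1 ≠ 0 by omega]
        · simp [hj, linForm])
      simpa using congrFun (congrFun this i) 0
    simp only [Pi.zero_apply, smul_eq_zero, hai, or_false] at h4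
    exact sub_eq_zero.1 h4
  have hsurj : Function.Surjective π := by
    intro i
    by_contra hno
    push Not at hno
    have := hcoef i
    simp [hno] at this
  have hbij : Function.Bijective π := ⟨Finite.injective_iff_surjective.2 hsurj, hsurj⟩
  simp only [hπ]
  change Multiset.map (fun i => linForm (a (π i)) ^ d) _ = _
  rw [show (fun i => linForm (a (π i)) ^ d) = (fun i => linForm (a i) ^ d) ∘ π from rfl, ← Multiset.map_map]
  congr 1
  exact congrArg Finset.val (Finset.map_univ_equiv (Equiv.ofBijective π hbij))

/-! ### Conditions open along lines -/

section framework
variable {E M A B : Type} [AddCommGroup E] [Module ℂ E] [AddCommGroup M] [Module ℂ M]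

/-- Polynomial curves in `M`. -/
def PC (M : Type) [AddCommGroup M] [Module ℂ M] : Submodule ℂ (ℂ → M) :=
  Submodule.span ℂ {f | ∃ (e : ℕ) (c : M), f = fun t => t ^ e • c}

theorem PC.const (c : M) : (fun _ => c) ∈ PC M :=
  Submodule.subset_span ⟨0, c, by ext; simp⟩

theorem PC.lin (c : M) : (fun t => t • c) ∈ PC M :=
  Submodule.subset_span ⟨1, c, by ext; simp⟩

theorem PC.map {N : Type} [AddCommGroup N] [Module ℂ N] (g : M →ₗ[ℂ] N) {f : ℂ → M} (hf : f ∈ PC M) :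
    (fun t => g (f t)) ∈ PC N := by
  induction hf using Submodule.span_induction with
  | mem x hx => obtain ⟨e, c, rfl⟩ := hx; exact Submodule.subset_span ⟨e, g c, by ext; simp⟩
  | zero => simpa using PC.const (0 : N)
  | add x y _ _ hx hy => convert (PC N).add_mem hx hy using 1; ext; simp
  | smul a x _ hx => convert (PC N).smul_mem a hx using 1; ext; simp

theorem PC.bilin {N Q : Type} [AddCommGroup N] [Module ℂ N] [AddCommGroup Q] [Module ℂ Q]
    (g : M →ₗ[ℂ] N →ₗ[ℂ] Q) {f : ℂ → M} (hf : f ∈ PC M) {f' : ℂ → N} (hf' : f' ∈ PC N) :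
    (fun t => g (f t) (f' t)) ∈ PC Q := by
  induction hf using Submodule.span_induction with
  | mem x hx =>
    obtain ⟨e, c, rfl⟩ := hx
    induction hf' using Submodule.span_induction with
    | mem x hx => obtain ⟨e', c', rfl⟩ := hx; exact Submodule.subset_span ⟨e + e', g c c', by
        ext t; simp [pow_add, mul_smul]; exact smul_comm _ _ _⟩
    | zero => simpa using PC.const (0 : Q)
    | add x y _ _ hx hy => convert (PC Q).add_mem hx hy using 1; ext; simp
    | smul a x _ hx => convert (PC Q).smul_mem a hx using 1; ext; simp [smul_comm a]
  | zero => simpa using PC.const (0 : Q)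
  | add x y _ _ hx hy => convert (PC Q).add_mem hx hy using 1; ext; simp
  | smul a x _ hx => convert (PC Q).smul_mem a hx using 1; ext; simp [smul_comm a]

variable [CommRing A] [Algebra ℂ A]

theorem PC.mul {f g : ℂ → A} (hf : f ∈ PC A) (hg : g ∈ PC A) : (fun t => f t * g t) ∈ PC A :=
  PC.bilin (LinearMap.mul ℂ A) hf hg

theorem PC.pow {f : ℂ → A} (hf : f ∈ PC A) (k : ℕ) : (fun t => f t ^ k) ∈ PC A := by
  induction k with
  | zero => simpa using PC.const (1 : A)
  | succ k ih => simpa [pow_succ] using PC.mul ih hf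

theorem PC.sum {ι : Type} (s : Finset ι) {f : ι → ℂ → M} (hf : ∀ i, f i ∈ PC M) :
    (fun t => ∑ i ∈ s, f i t) ∈ PC M := by
  have := Submodule.sum_mem (PC M) (t := s) (fun i _ => hf i)
  convert this using 1
  ext t; simp

theorem PC.prod {ι : Type} (s : Finset ι) {f : ι → ℂ → A} (hf : ∀ i, f i ∈ PC A) :
    (fun t => ∏ i ∈ s, f i t) ∈ PC A := by
  classical
  induction s using Finset.induction_on with
  | empty => simpa using PC.const (1 : A)
  | insert a s ha ih => simpa [Finset.prod_insert ha] using PC.mul (hf a) ih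

theorem PC.add {f g : ℂ → M} (hf : f ∈ PC M) (hg : g ∈ PC M) : (fun t => f t + g t) ∈ PC M :=
  (PC M).add_mem hf hg

theorem PC.sub {f g : ℂ → M} (hf : f ∈ PC M) (hg : g ∈ PC M) : (fun t => f t - g t) ∈ PC M :=
  (PC M).sub_mem hf hg

theorem PC.pair {N : Type} [AddCommGroup N] [Module ℂ N] {f : ℂ → M} {g : ℂ → N} (hf : f ∈ PC M) (hg : g ∈ PC N) :
    (fun t => (f t, g t)) ∈ PC (M × N) := by
  have := PC.add (PC.map (LinearMap.inl ℂ M N) hf) (PC.map (LinearMap.inr ℂ M N) hg)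
  simpa using this

theorem PC.det {ι : Type} [Fintype ι] [DecidableEq ι] {G : ℂ → Matrix ι ι A} (hG : ∀ i j, (fun t => G t i j) ∈ PC A) :
    (fun t => (G t).det) ∈ PC A := by
  simp only [Matrix.det_apply']
  exact PC.sum _ fun σ => PC.mul (PC.const _) (PC.prod _ fun i => hG _ _)

theorem PC.adjugate {ι : Type} [Fintype ι] [DecidableEq ι] {G : ℂ → Matrix ι ι A} (hG : ∀ i j, (fun t => G t i j) ∈ PC A)
    (i j : ι) : (fun t => (G t).adjugate i j) ∈ PC A := by
  simp only [Matrix.adjugate_apply]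
  refine PC.det fun k l => ?_
  by_cases h : k = j
  · subst h; simpa using PC.const _
  · simpa [Matrix.updateRow_ne h] using hG k l

theorem PC.exists_poly {f : ℂ → ℂ} (hf : f ∈ PC ℂ) : ∃ p : Polynomial ℂ, ∀ t, f t = p.eval t := by
  induction hf using Submodule.span_induction with
  | mem x hx => obtain ⟨e, c, rfl⟩ := hx; exact ⟨Polynomial.X ^ e * Polynomial.C c, fun t => by simp; exact mul_comm _ _⟩
  | zero => exact ⟨0, by simp⟩
  | add x y _ _ hx hy =>
    obtain ⟨p, hp⟩ := hx; obtain ⟨q, hq⟩ := hy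
    exact ⟨p + q, fun t => by simp [hp, hq]⟩
  | smul a x _ hx => obtain ⟨p, hp⟩ := hx; exact ⟨Polynomial.C a * p, fun t => by simp [hp]⟩

theorem PC.finite_zeros {f : ℂ → ℂ} (hf : f ∈ PC ℂ) {t₀ : ℂ} (h0 : f t₀ ≠ 0) : {t | f t = 0}.Finite := by
  obtain ⟨p, hp⟩ := PC.exists_poly hf
  have hp0 : p ≠ 0 := by rintro rfl; exact h0 (by simp [hp])
  refine (p.roots.toFinset.finite_toSet).subset fun t ht => ?_
  simp [hp0, ← hp]; exact ht

/-- Maps that are polynomial along every affine line. -/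
def PF (f : E → M) : Prop := ∀ x z, (fun t : ℂ => f (x + t • z)) ∈ PC M

/-- Properties that hold, on a line through a point with the property, outside finitely many points. -/
def LO (P : E → Prop) : Prop := ∀ x z, P x → {t : ℂ | ¬ P (x + t • z)}.Finite

theorem LO.ne_zero {f : E → ℂ} (hf : PF f) : LO fun x => f x ≠ 0 := by
  intro x z h
  have := PC.finite_zeros (hf x z) (t₀ := 0) (by simpa using h)
  simpa using this

theorem LO.and {P Q : E → Prop} (hP : LO P) (hQ : LO Q) : LO fun x => P x ∧ Q x := by
  intro x z h
  refine ((hP x z h.1).union (hQ x z h.2)).subset fun t ht => ?_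
  simp only [Set.mem_setOf_eq, Set.mem_union] at *
  tauto

theorem LO.comp {F : Type} [AddCommGroup F] [Module ℂ F] {P : F → Prop} (hP : LO P) (g : E →ₗ[ℂ] F) : LO fun x => P (g x) := by
  intro x z h
  simpa using hP (g x) (g z) h

theorem LO.exists {P Q : E → Prop} (hP : LO P) (hQ : LO Q) {x y : E} (hx : P x) (hy : Q y) : ∃ z, P z ∧ Q z := by
  have h1 := hP x (y - x) hx
  have h2 := hQ y (x - y) hy
  have h3 : {t : ℂ | ¬ Q (x + t • (y - x))}.Finite := by
    refine (h2.image (fun t => 1 - t)).subset fun t ht => ?_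
    refine ⟨1 - t, ?_, by simp⟩
    have : y + (1 - t) • (x - y) = x + t • (y - x) := by
      simp only [sub_smul, smul_sub, one_smul]; abel
    simpa [this] using ht
  obtain ⟨t, ht⟩ := (h1.union h3).infinite_compl.nonempty
  simp only [Set.mem_compl_iff, Set.mem_union, Set.mem_setOf_eq, not_or, not_not] at ht
  exact ⟨_, ht⟩

theorem LO.all {ι : Type} [Finite ι] {P : ι → E → Prop} (hP : ∀ i, LO (P i)) : LO fun x => ∀ i, P i x := by
  intro x z h
  have : {t : ℂ | ¬ ∀ i, P i (x + t • z)} = ⋃ i, {t | ¬ P i (x + t • z)} := by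
    ext t; simp
  rw [this]
  exact Set.finite_iUnion fun i => hP i x z (h i)

theorem PF.linear (g : E →ₗ[ℂ] M) : PF g := by
  intro x z
  simpa using PC.add (PC.const (g x)) (PC.lin (g z))

theorem PF.const (c : M) : PF (fun _ : E => c) := fun _ _ => PC.const c

theorem PF.mul {f g : E → A} (hf : PF f) (hg : PF g) : PF (fun x => f x * g x) := fun x z => PC.mul (hf x z) (hg x z)

theorem PF.pow {f : E → A} (hf : PF f) (k : ℕ) : PF (fun x => f x ^ k) := fun x z => PC.pow (hf x z) k

theorem PF.add {f g : E → M} (hf : PF f) (hg : PF g) : PF (fun x => f x + g x) := fun x z => PC.add (hf x z) (hg x z)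

theorem PF.sum {ι : Type} (s : Finset ι) {f : ι → E → M} (hf : ∀ i, PF (f i)) : PF (fun x => ∑ i ∈ s, f i x) :=
  fun x z => PC.sum s fun i => hf i x z

theorem PF.map {N : Type} [AddCommGroup N] [Module ℂ N] (g : M →ₗ[ℂ] N) {f : E → M} (hf : PF f) :
    PF (fun x => g (f x)) := fun x z => PC.map g (hf x z)

theorem PF.pair {N : Type} [AddCommGroup N] [Module ℂ N] {f : E → M} {g : E → N} (hf : PF f) (hg : PF g) :
    PF (fun x => (f x, g x)) := fun x z => PC.pair (hf x z) (hg x z)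

theorem PF.comp {F : Type} [AddCommGroup F] [Module ℂ F] {f : E → M} (hf : PF f) (g : F →ₗ[ℂ] E) : PF (fun x => f (g x)) := by
  intro x z
  simpa using hf (g x) (g z)

/-- Independent vectors have dual functionals. -/
theorem exists_dual {I : Type} [DecidableEq I] {v : I → M} (h : LinearIndependent ℂ v) :
    ∃ φ : I → M →ₗ[ℂ] ℂ, ∀ i j, φ i (v j) = if i = j then 1 else 0 := by
  obtain ⟨g, hg⟩ := LinearMap.exists_leftInverse_of_injective (Finsupp.linearCombination ℂ v)
    (LinearMap.ker_eq_bot.2 h)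
  refine ⟨fun i => Finsupp.lapply i ∘ₗ g, fun i j => ?_⟩
  have : g (v j) = Finsupp.single j 1 := by
    have := LinearMap.congr_fun hg (Finsupp.single j 1)
    simpa using this
  simp [this, Finsupp.single_apply, eq_comm]

theorem li_of_gram {I : Type} [Fintype I] [DecidableEq I] {v : I → M} (φ : I → M →ₗ[ℂ] ℂ)
    (h : (Matrix.of fun i j => φ i (v j)).det ≠ 0) : LinearIndependent ℂ v := by
  rw [Fintype.linearIndependent_iff]
  intro g hg
  have : (Matrix.of fun i j => φ i (v j)).mulVec g = 0 := by
    ext i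
    have := congrArg (φ i) hg
    simpa [Matrix.mulVec, dotProduct, mul_comm] using this
  exact congrFun (Matrix.eq_zero_of_mulVec_eq_zero h this)

theorem LO.li {I : Type} [Finite I] {v : E → I → M} (hv : ∀ i, PF fun x => v x i) :
    LO fun x => LinearIndependent ℂ (v x) := by
  classical
  have := Fintype.ofFinite I
  intro x z h
  obtain ⟨φ, hφ⟩ := exists_dual h
  have hdet : PF (fun y => (Matrix.of fun i j => φ i (v y j)).det) :=
    fun x z => PC.det fun i j => PC.map (φ i) (hv j x z)
  refine (LO.ne_zero hdet x z ?_).subset fun t ht hc => ht (li_of_gram φ hc)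
  have : (Matrix.of fun i j => φ i (v x j)) = 1 := by
    ext i j; simp [hφ, Matrix.one_apply]
  simp only [this]; simp

/-- `v` is independent and some functional vanishing on it is, up to a rank one correction, nondegenerate on `β`. -/
def Nod {I κ : Type} [Fintype κ] [DecidableEq κ] (v : I → M) (β : κ → κ → M) : Prop :=
  LinearIndependent ℂ v ∧ ∃ h : M →ₗ[ℂ] ℂ, (∀ i, h (v i) = 0) ∧ ∃ ξ η : κ → ℂ,
    (Matrix.of fun k l => h (β k l) + ξ k * η l).det ≠ 0

theorem LO.nod {I κ : Type} [Finite I] [Fintype κ] [DecidableEq κ] {v : E → I → M} {β : E → κ → κ → M}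
    (hv : ∀ i, PF fun x => v x i) (hβ : ∀ k l, PF fun x => β x k l) : LO fun x => Nod (v x) (β x) := by
  classical
  have := Fintype.ofFinite I
  intro x z ⟨hli, h0, hh0, ξ, η, hdet⟩
  obtain ⟨φ, hφ⟩ := exists_dual hli
  let G : E → Matrix I I ℂ := fun y => Matrix.of fun i j => φ i (v y j)
  have hG1 : G x = 1 := by ext i j; simp [G, hφ, Matrix.one_apply]
  have hGp : ∀ x z i j, (fun t : ℂ => G (x + t • z) i j) ∈ PC ℂ := fun x z i j => PC.map (φ i) (hv j x z)
  let H : E → M →ₗ[ℂ] ℂ := fun y => (G y).det • h0 - ∑ i, ∑ j, (h0 (v y i) * (G y).adjugate i j) • φ j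
  have hHk : ∀ y i, H y (v y i) = 0 := by
    intro y k
    have e : ∀ i, ∑ j, (G y).adjugate i j * φ j (v y k) = (G y).det * (if i = k then 1 else 0) := by
      intro i
      have := congrFun (congrFun (Matrix.adjugate_mul (G y)) i) k
      simpa [Matrix.mul_apply, G, Matrix.one_apply] using this
    simp only [H, LinearMap.sub_apply, LinearMap.smul_apply, LinearMap.sum_apply, smul_eq_mul, mul_assoc, ← Finset.mul_sum, e]
    simp; ring
  have hHx : H x = h0 := by
    simp [H, hG1, hh0]
  have hHp : ∀ k l, PF fun y => H y (β y k l) := by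
    intro k l x z
    simp only [H, LinearMap.sub_apply, LinearMap.smul_apply, LinearMap.sum_apply, smul_eq_mul]
    refine PC.sub (PC.mul (PC.det (hGp x z)) (PC.map h0 (hβ k l x z))) (PC.sum _ fun i => PC.sum _ fun j => ?_)
    exact PC.mul (PC.mul (PC.map h0 (hv i x z)) (PC.adjugate (hGp x z) i j)) (PC.map (φ j) (hβ k l x z))
  have hd2 : PF fun y => (Matrix.of fun k l => H y (β y k l) + ξ k * η l).det := by
    intro x z
    exact PC.det fun k l => PC.add (hHp k l x z) (PC.const _)
  have f1 := LO.ne_zero hd2 x z (by simpa only [hHx] using hdet)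
  refine (f1.union (LO.li hv x z hli)).subset fun t ht => ?_
  by_contra hc
  simp only [Set.mem_union, Set.mem_setOf_eq, not_or, not_not] at hc
  exact ht ⟨hc.2, H _, hHk _, ξ, η, hc.1⟩

theorem Nod.of_map {N I κ : Type} [AddCommGroup N] [Module ℂ N] [Fintype κ] [DecidableEq κ] {v : I → M} {β : κ → κ → M}
    (Ψ : M →ₗ[ℂ] N) (c : I → ℂ) {v' : I → N} {β' : κ → κ → N} (hv' : ∀ i, Ψ (v i) = c i • v' i) (hc : ∀ i, c i ≠ 0)
    (hβ : ∀ k l, β' k l = Ψ (β k l))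
    (h : Nod v' β') : Nod v β := by
  obtain ⟨hli, f, hf, ξ, η, hd⟩ := h
  refine ⟨?_, f ∘ₗ Ψ, fun i => by simp [hv', hf], ξ, η, by simpa [hβ] using hd⟩
  have : LinearIndependent ℂ (fun i => Ψ (v i)) := by
    simp only [hv']
    exact hli.units_smul (fun i => Units.mk0 (c i) (hc i))
  exact LinearIndependent.of_comp Ψ this

theorem Nod.sub {I J κ : Type} [Fintype κ] [DecidableEq κ] {v : I → M} {β : κ → κ → M} (h : Nod v β) (g : J → I)
    (hg : Function.Injective g) : Nod (v ∘ g) β :=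
  ⟨h.1.comp g hg, h.2.choose, fun _ => h.2.choose_spec.1 _, h.2.choose_spec.2⟩

theorem nod_iff_of_isEmpty {I κ : Type} [Fintype κ] [DecidableEq κ] [IsEmpty κ] {v : I → M} {β : κ → κ → M} :
    Nod v β ↔ LinearIndependent ℂ v :=
  ⟨fun h => h.1, fun h => ⟨h, 0, by simp, 0, 0, by simp⟩⟩
end framework

/-! ### Adding general vectors -/

section simple
variable {E M : Type} [AddCommGroup E] [Module ℂ E] [AddCommGroup M] [Module ℂ M]

theorem li_sum_unit {I : Type} {v : I → M} (h : LinearIndependent ℂ v) {y : M}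
    (hy : y ∉ Submodule.span ℂ (Set.range v)) : LinearIndependent ℂ (Sum.elim v fun _ : Unit => y) := by
  have hy0 : y ≠ 0 := by rintro rfl; exact hy (Submodule.zero_mem _)
  refine h.sum_type (LinearIndependent.of_subsingleton (i := ()) hy0) ?_
  rw [Set.range_const]
  exact (Submodule.disjoint_span_singleton' hy0).2 hy

/-- Adding one further vector of a polynomial family to a nodal system (`δ = 1`) or to an independent one. If the functional
`h` exhibiting the node does not vanish on the family, it is corrected by a multiple of a functional `g` that kills `v` and
one vector `x u1` with `h (x u1) ≠ 0`; at a general point of a line through `u1` that multiple avoids the finitely many values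
which would make the form degenerate. -/
theorem simple_step {I κ : Type} [Fintype I] [Fintype κ] [DecidableEq κ] {v : I → M} {β : κ → κ → M} (h : Nod v β)
    {x : E → M} (hx : PF x) (δ : ℕ) (hδ : δ = 1 ∨ IsEmpty κ)
    (hyp : ∀ T : Submodule ℂ M, FiniteDimensional ℂ T → Module.finrank ℂ T ≤ Fintype.card I + δ → (∀ i, v i ∈ T) →
      ∃ u, x u ∉ T) : ∃ u, Nod (Sum.elim v fun _ : Unit => x u) β := by
  classical
  obtain ⟨hli, h, hh, ξ, η, hd⟩ := h
  let S := Submodule.span ℂ (Set.range v)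
  have hSf : FiniteDimensional ℂ S := FiniteDimensional.span_of_finite ℂ (Set.finite_range v)
  have hSr : Module.finrank ℂ S ≤ Fintype.card I := finrank_range_le_card v
  have hvS : ∀ i, v i ∈ S := fun i => Submodule.subset_span ⟨i, rfl⟩
  have hS0 : ∀ g : M →ₗ[ℂ] ℂ, (∀ i, g (v i) = 0) → ∀ y ∈ S, g y = 0 := by
    intro g hg y hy
    have : S ≤ LinearMap.ker g := Submodule.span_le.2 (by rintro _ ⟨i, rfl⟩; exact hg i)
    exact this hy
  obtain ⟨u, hu⟩ := hyp S hSf (by omega) hvS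
  rcases hδ with rfl | hκ
  swap
  · exact ⟨u, nod_iff_of_isEmpty.2 (li_sum_unit hli hu)⟩
  by_cases hall : ∀ u, h (x u) = 0
  · exact ⟨u, li_sum_unit hli hu, h, by rintro (i | i) <;> simp [hh, hall], ξ, η, hd⟩
  push Not at hall
  obtain ⟨u1, hu1⟩ := hall
  let T := S ⊔ Submodule.span ℂ {x u1}
  have hTf : FiniteDimensional ℂ T := inferInstance
  have hTr : Module.finrank ℂ T ≤ Fintype.card I + 1 := by
    have h1 := Submodule.finrank_add_le_finrank_add_finrank S (Submodule.span ℂ {x u1})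
    have h2 := finrank_span_le_card (R := ℂ) ({x u1} : Set M)
    simp at h2
    have : Module.finrank ℂ T ≤ _ := h1
    omega
  obtain ⟨u2, hu2⟩ := hyp T hTf hTr fun i => Submodule.mem_sup_left (hvS i)
  obtain ⟨g, hg2, hgT⟩ := Submodule.exists_le_ker_of_notMem hu2
  have hgv : ∀ i, g (v i) = 0 := fun i => hgT (Submodule.mem_sup_left (hvS i))
  have hg1 : g (x u1) = 0 := hgT (Submodule.mem_sup_right (Submodule.mem_span_singleton_self _))
  have hD : PF fun c : ℂ => (Matrix.of fun k l => (h + c • g) (β k l) + ξ k * η l).det := by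
    intro a b
    refine PC.det fun k l => ?_
    have := PC.add (PC.const (h (β k l) + a * g (β k l) + ξ k * η l)) (PC.lin (b * g (β k l)))
    convert this using 1
    ext t; simp; ring
  have hbad := LO.ne_zero hD 0 1 (by simpa using hd)
  simp only [zero_add, smul_eq_mul, mul_one, not_not] at hbad
  have hφ : PF fun u => h (x u) := PF.map h hx
  have hγ : PF fun u => g (x u) := PF.map g hx
  have e0 : u1 + (0:ℂ) • (u2 - u1) = u1 := by simp
  have e1 : u1 + (1:ℂ) • (u2 - u1) = u2 := by simp
  have f1 : {τ : ℂ | g (x (u1 + τ • (u2 - u1))) = 0}.Finite :=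
    PC.finite_zeros (hγ u1 (u2 - u1)) (t₀ := 1) (by rw [e1]; exact hg2)
  have f2 : ∀ c : ℂ, {τ : ℂ | h (x (u1 + τ • (u2 - u1))) + c * g (x (u1 + τ • (u2 - u1))) = 0}.Finite := fun c =>
    PC.finite_zeros (PC.add (hφ u1 (u2 - u1)) (PC.mul (PC.const c) (hγ u1 (u2 - u1)))) (t₀ := 0) (by
      rw [e0, hg1]; simpa using hu1)
  have f3 := f1.union (hbad.biUnion fun c _ => f2 c)
  obtain ⟨τ, hτ⟩ := f3.infinite_compl.nonempty
  simp only [Set.mem_compl_iff, Set.mem_union, Set.mem_setOf_eq, not_or, Set.mem_iUnion, not_exists] at hτ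
  obtain ⟨hτ1, hτ2⟩ := hτ
  refine ⟨u1 + τ • (u2 - u1), li_sum_unit hli fun hm => hτ1 (hS0 g hgv _ hm), ?_⟩
  set y := x (u1 + τ • (u2 - u1)) with hy
  refine ⟨h + (-(h y) / g y) • g, ?_, ξ, η, ?_⟩
  · rintro (i | i)
    · simp [hh, hgv]
    · simp; field_simp; simp
  · intro hc
    refine hτ2 (-(h y) / g y) hc ?_
    field_simp; simp

/-- Adding `s` further vectors from a polynomial family `x` that is not contained in any small subspace containing `v`. -/
theorem simple_points {κ : Type} [Fintype κ] [DecidableEq κ] {β : κ → κ → M}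
    {x : E → M} (hx : PF x) (δ : ℕ) (hδ : δ = 1 ∨ IsEmpty κ) {I : Type} [Fintype I] {v : I → M} (h : Nod v β) (s : ℕ)
    (hyp : ∀ T : Submodule ℂ M, FiniteDimensional ℂ T → Module.finrank ℂ T + 1 ≤ Fintype.card I + s + δ → (∀ i, v i ∈ T) →
      ∃ u, x u ∉ T) : ∃ u : Fin s → E, Nod (Sum.elim v fun i => x (u i)) β := by
  induction s with
  | zero =>
    refine ⟨0, ?_⟩
    convert h.sub (Sum.elim id finZeroElim : I ⊕ Fin 0 → I) ?_ using 1
    · ext (i | i)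
      · rfl
      · exact i.elim0
    · rintro (i | i) (j | j) hij
      · simpa using hij
      · exact j.elim0
      · exact i.elim0
      · exact i.elim0
  | succ s ih =>
    obtain ⟨u, hu⟩ := ih fun T hT hr hv => hyp T hT (by omega) hv
    obtain ⟨u0, hu0⟩ := simple_step hu hx δ hδ fun T hT hr hv =>
      hyp T hT (by simp at hr; omega) fun i => hv (Sum.inl i)
    refine ⟨Fin.snoc u u0, ?_⟩
    convert hu0.sub (Sum.elim (fun i => Sum.inl (Sum.inl i))
      (fun j => Fin.lastCases (motive := fun _ => (I ⊕ Fin s) ⊕ Unit) (Sum.inr ()) (fun j => Sum.inl (Sum.inr j)) j)) ?_ using 1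
    · ext (i | i)
      · rfl
      · refine Fin.lastCases ?_ (fun j => ?_) i <;> simp
    · rintro (i | i) (j | j) hij
      · simpa using hij
      · revert hij
        refine Fin.lastCases ?_ (fun j => ?_) j <;> simp
      · revert hij
        refine Fin.lastCases ?_ (fun j => ?_) i <;> simp
      · revert hij
        refine Fin.lastCases ?_ (fun j => ?_) j <;> refine Fin.lastCases ?_ (fun j => ?_) i <;> simp
end simple

/-! ### Powers of linear forms, tangent spaces, second fundamental form -/

/-- Coefficient vectors of linear forms in `n+1` variables. -/
abbrev Pt (n : ℕ) := Fin (n+1) → ℂ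
/-- Complex polynomials in `n+1` variables. -/
abbrev Pol (n : ℕ) := MvPolynomial (Fin (n+1)) ℂ

theorem linForm_pow {n : ℕ} (u : Pt n) (c : ℕ) : linForm u ^ c =
    ∑ k ∈ Finset.piAntidiag Finset.univ c, ((Nat.multinomial Finset.univ k : ℂ) * ∏ i, u i ^ k i) •
      monomial (Finsupp.equivFunOnFinite.symm k) (1:ℂ) := by
  rw [linForm, Finset.sum_pow_eq_sum_piAntidiag]
  refine Finset.sum_congr rfl fun k _ => ?_
  rw [smul_monomial, smul_eq_mul, mul_one, monomial_eq]
  simp [mul_pow, Finset.prod_mul_distrib, Finsupp.prod_fintype, mul_assoc]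

/-- A subspace containing the image of all `c`-th powers contains the image of all monomials of degree `c`. -/
theorem mono_mem_of_pow {n c : ℕ} {M : Type} [AddCommGroup M] [Module ℂ M] (g : Pol n →ₗ[ℂ] M) (T : Submodule ℂ M)
    (h : ∀ u : Pt n, g (linForm u ^ c) ∈ T) (k : Fin (n+1) →₀ ℕ) (hk : ∑ i, k i = c) : g (monomial k 1) ∈ T := by
  by_contra hc
  obtain ⟨φ, hφ, hT⟩ := Submodule.exists_le_ker_of_notMem hc
  let G : Pol n := ∑ k ∈ Finset.piAntidiag Finset.univ c,
    monomial (Finsupp.equivFunOnFinite.symm k) ((Nat.multinomial Finset.univ k : ℂ) * φ (g (monomial (Finsupp.equivFunOnFinite.symm k) 1)))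
  have hG : G = 0 := by
    refine MvPolynomial.funext fun u => ?_
    have := hT (h u)
    rw [LinearMap.mem_ker, linForm_pow] at this
    simp only [map_sum, map_smul, smul_eq_mul] at this
    rw [map_zero, ← this]
    simp only [G, map_sum, eval_monomial]
    refine Finset.sum_congr rfl fun k _ => ?_
    simp [Finsupp.prod_fintype]; ring
  have hco : coeff k G = 0 := by rw [hG]; simp
  have hkm : (k : Fin (n+1) → ℕ) ∈ Finset.piAntidiag Finset.univ c := by simp [hk]
  simp only [G, coeff_sum, coeff_monomial] at hco
  rw [Finset.sum_eq_single (k : Fin (n+1) → ℕ)] at hco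
  · have e : Finsupp.equivFunOnFinite.symm (k : Fin (n+1) → ℕ) = k := by ext; simp
    rw [e, if_pos rfl] at hco
    rcases mul_eq_zero.1 hco with h1 | h1
    · exact (Nat.multinomial_pos _ _).ne' (by exact_mod_cast h1)
    · exact hφ h1
  · intro b _ hb
    rw [if_neg]
    rintro rfl
    exact hb (by ext; simp)
  · intro hne; exact absurd hkm hne

/-- Exponents of the monomials of degree `c`. -/
abbrev Mon (n c : ℕ) := {k : Fin (n+1) →₀ ℕ // k ∈ Finset.finsuppAntidiag Finset.univ c}

theorem card_Mon (n c : ℕ) : Fintype.card (Mon n c) = (n + c).choose c := by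
  rw [Fintype.card_coe, Finset.card_finsuppAntidiag_nat_eq_choose]
  simp

theorem Mon.sum {n c : ℕ} (k : Mon n c) : ∑ i, k.1 i = c := by
  have := k.2
  rw [Finset.mem_finsuppAntidiag] at this; exact this.1

theorem li_mon (n c : ℕ) : LinearIndependent ℂ fun k : Mon n c => (monomial k.1 (1:ℂ) : Pol n) := by
  have := (basisMonomials (Fin (n+1)) ℂ).linearIndependent
  rw [coe_basisMonomials] at this
  exact this.comp _ Subtype.val_injective

theorem finrank_ge_of_pow {n c : ℕ} {M : Type} [AddCommGroup M] [Module ℂ M] {g : Pol n →ₗ[ℂ] M} (hg : Function.Injective g)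
    {T : Submodule ℂ M} [FiniteDimensional ℂ T] 
    (h : ∀ u : Pt n, g (linForm u ^ c) ∈ T) : (n + c).choose c ≤ Module.finrank ℂ T := by
  rw [← card_Mon]
  have hm : ∀ k : Mon n c, g (monomial k.1 1) ∈ T := fun k => mono_mem_of_pow g T h k.1 k.sum
  have h1 : LinearIndependent ℂ fun k : Mon n c => (⟨g (monomial k.1 1), hm k⟩ : T) := by
    refine LinearIndependent.of_comp T.subtype ?_
    exact (li_mon n c).map' g (LinearMap.ker_eq_bot.2 hg)
  exact h1.fintype_card_le_finrank

/-- A subspace containing all monomials of degree `c` contains all `c`-th powers of linear forms. -/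
theorem pow_mem_of_mono {n c : ℕ} {T : Submodule ℂ (Pol n)} (h : ∀ k : Fin (n+1) →₀ ℕ, ∑ i, k i = c → monomial k 1 ∈ T)
    (u : Pt n) : linForm u ^ c ∈ T := by
  rw [linForm_pow]
  refine Submodule.sum_mem _ fun k hk => Submodule.smul_mem _ _ (h _ ?_)
  simpa using hk

theorem PF.lf {n : ℕ} : PF (fun u : Pt n => linForm u) := by
  have : ∀ u : Pt n, linForm u = (∑ i, (LinearMap.toSpanSingleton ℂ (Pol n) (X i)) ∘ₗ LinearMap.proj i) u := by
    intro u; simp [linForm, C_mul']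
  simp only [this]
  exact PF.linear _

/-- The linear map `a ↦ ℓ_a`. -/
noncomputable def linL (n : ℕ) : Pt n →ₗ[ℂ] Pol n := ∑ i, (LinearMap.toSpanSingleton ℂ (Pol n) (X i)) ∘ₗ LinearMap.proj i

theorem linL_apply {n : ℕ} (u : Pt n) : linL n u = linForm u := by simp [linL, linForm, C_mul']

theorem linForm_add {n : ℕ} (u v : Pt n) : linForm (u + v) = linForm u + linForm v := by simp [← linL_apply]
theorem linForm_smul {n : ℕ} (c : ℂ) (u : Pt n) : linForm (c • u) = c • linForm u := by simp [← linL_apply]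
theorem linForm_single {n : ℕ} (k : Fin (n+1)) : linForm (Pi.single k 1) = X k := by
  simp [linForm, Pi.single_apply]
theorem linForm_sum {n : ℕ} {ι : Type} (s : Finset ι) (u : ι → Pt n) : linForm (∑ i ∈ s, u i) = ∑ i ∈ s, linForm (u i) := by
  simp [← linL_apply]
theorem linForm_eq {n : ℕ} (u : Pt n) : linForm u = ∑ k, u k • X k := by simp [C_mul', linForm]

/-- Generators of the tangent spaces at the points `a j`. -/
noncomputable def tan {n : ℕ} {J : Type} (d : ℕ) (a : J → Pt n) (v : J × Fin (n+1)) : Pol n := linForm (a v.1) ^ (d-1) * X v.2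

/-- The second fundamental form at `a`, on all coordinates if `b` holds and on the zero space otherwise. -/
noncomputable def sff {n : ℕ} (b : Bool) (d : ℕ) (a : Pt n) (k l : {_k : Fin (n+1) // b = true}) : Pol n := linForm a ^ (d-2) * (X k.1 * X l.1)

/-- `Nod` for the tangent spaces at `a` and the second fundamental form at `a i`. -/
def TNod {n : ℕ} {J : Type} (b : Bool) (d : ℕ) (a : J → Pt n) (i : J) : Prop := Nod (tan d a) (sff b d (a i))

theorem PF.tan {n : ℕ} {J : Type} (d : ℕ) (v : J × Fin (n+1)) : PF fun a : J → Pt n => tan d a v := by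
  have h1 : PF fun a : J → Pt n => linForm (a v.1) :=
    PF.comp PF.lf (LinearMap.proj (φ := fun _ : J => Pt n) v.1)
  exact PF.mul (PF.pow h1 _) (PF.const _)

theorem PF.sff {n : ℕ} {J : Type} (b : Bool) (d : ℕ) (i : J) (k l : {_k : Fin (n+1) // b = true}) :
    PF fun a : J → Pt n => sff b d (a i) k l := by
  have h1 : PF fun a : J → Pt n => linForm (a i) :=
    PF.comp PF.lf (LinearMap.proj (φ := fun _ : J => Pt n) i)
  exact PF.mul (PF.pow h1 _) (PF.const _)

theorem sum_true {n : ℕ} {R : Type} [AddCommMonoid R] (f : {_k : Fin (n+1) // true = true} → R) :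
    ∑ k, f k = ∑ k, f ⟨k, rfl⟩ :=
  ((Equiv.subtypeUnivEquiv (p := fun _ : Fin (n+1) => true = true) fun _ => rfl).symm.sum_comp f).symm

theorem sum_tan {n : ℕ} {J : Type} [Fintype J] (d : ℕ) (a : J → Pt n) (m : J × Fin (n+1) → ℂ) :
    ∑ v, m v • tan d a v = ∑ j, linForm (a j) ^ (d-1) * linForm fun k => m (j, k) := by
  rw [Fintype.sum_prod_type]
  refine Finset.sum_congr rfl fun j _ => ?_
  rw [linForm_eq fun k => m (j, k), Finset.mul_sum]
  refine Finset.sum_congr rfl fun k _ => ?_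
  simp [tan]

theorem li_tan_iff {n : ℕ} {J : Type} [Fintype J] {d : ℕ} {a : J → Pt n} : LinearIndependent ℂ (tan d a) ↔
    ∀ m : J → Pt n, ∑ i, linForm (a i) ^ (d-1) * linForm (m i) = 0 → m = 0 := by
  rw [Fintype.linearIndependent_iff]
  constructor
  · intro h m hm
    ext j k
    exact h (fun v => m v.1 v.2) (by rw [sum_tan]; exact hm) (j, k)
  · intro h m hm v
    rw [sum_tan] at hm
    exact congrFun (congrFun (h _ hm) v.1) v.2

/-- Coordinate-free form of `TNod`. -/
theorem tnod_iff {n : ℕ} {J : Type} [Fintype J] {b : Bool} {d : ℕ} {a : J → Pt n} {i : J} : TNod b d a i ↔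
    (∀ m : J → Pt n, ∑ i, linForm (a i) ^ (d-1) * linForm (m i) = 0 → m = 0) ∧
    (b = true → ∃ h : Pol n →ₗ[ℂ] ℂ, (∀ j m, h (linForm (a j) ^ (d-1) * linForm m) = 0) ∧
      ∃ ξ η : Pt n →ₗ[ℂ] ℂ, ∀ w, (∀ m, h (linForm (a i) ^ (d-2) * (linForm w * linForm m)) + ξ w * η m = 0) → w = 0) := by
  unfold TNod Nod
  rw [li_tan_iff]
  refine and_congr_right fun _ => ?_
  cases b with
  | false =>
    have : IsEmpty {_k : Fin (n+1) // false = true} := ⟨fun k => by simpa using k.2⟩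
    simp only [Bool.false_eq_true, false_imp_iff, iff_true]
    exact ⟨0, by simp, 0, 0, by rw [Matrix.det_isEmpty]; exact one_ne_zero⟩
  | true =>
    simp only [forall_const]
    refine exists_congr fun h => and_congr ?_ ?_
    · constructor
      · intro hh j m
        rw [linForm_eq m, Finset.mul_sum, map_sum]
        refine Finset.sum_eq_zero fun k _ => ?_
        have := hh (j, k)
        simp only [tan] at this
        simp [this]
      · intro hh v
        have := hh v.1 (Pi.single v.2 1)
        rw [linForm_single] at this; exact this
    · have ex : ∀ (w m : Pt n), h (linForm (a i) ^ (d-2) * (linForm w * linForm m)) =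
          ∑ k, ∑ l, w k * m l * h (linForm (a i) ^ (d-2) * (X k * X l)) := by
        intro w m
        rw [linForm_eq w, linForm_eq m, Finset.sum_mul_sum, Finset.mul_sum, map_sum]
        refine Finset.sum_congr rfl fun k _ => ?_
        rw [Finset.mul_sum, map_sum]
        refine Finset.sum_congr rfl fun l _ => ?_
        simp [mul_assoc, mul_left_comm]
      constructor
      · rintro ⟨ξ, η, hd⟩
        refine ⟨∑ k, ξ ⟨k, rfl⟩ • LinearMap.proj k, ∑ k, η ⟨k, rfl⟩ • LinearMap.proj k, fun w hw => ?_⟩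
        have hz := Matrix.eq_zero_of_vecMul_eq_zero hd (v := fun k => w k.1) (by
          ext l
          have := hw (Pi.single l.1 1)
          rw [ex] at this
          simp only [Matrix.vecMul, dotProduct, Matrix.of_apply, sff, Pi.zero_apply]
          rw [← this]
          rw [sum_true]
          simp [Pi.single_apply, mul_add, Finset.sum_add_distrib, Finset.sum_mul, Finset.mul_sum, mul_assoc, mul_left_comm, mul_comm])
        ext k
        exact congrFun hz ⟨k, rfl⟩
      · rintro ⟨ξ, η, hd⟩
        refine ⟨fun k => ξ (Pi.single k.1 1), fun k => η (Pi.single k.1 1), fun hc => ?_⟩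
        obtain ⟨w, hw0, hw⟩ := Matrix.exists_vecMul_eq_zero_iff.2 hc
        have ew : ∀ (f : Pt n →ₗ[ℂ] ℂ) (m : Pt n), f m = ∑ k, m k * f (Pi.single k 1) := by
          intro f m
          conv_lhs => rw [← Finset.univ_sum_single m, map_sum]
          refine Finset.sum_congr rfl fun k _ => ?_
          rw [← smul_eq_mul, ← map_smul]; congr 1; ext l; simp [Pi.single_apply]
        have hz := hd (fun k => w ⟨k, rfl⟩) (by
          intro m
          rw [ex, ew ξ, ew η]
          rw [Finset.sum_comm, Finset.mul_sum, ← Finset.sum_add_distrib]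
          refine Finset.sum_eq_zero fun l _ => ?_
          have := congrFun hw ⟨l, rfl⟩
          simp only [Matrix.vecMul, dotProduct, Matrix.of_apply, sff, Pi.zero_apply] at this
          rw [sum_true] at this
          have h2 := congrArg (m l * ·) this
          simp only [mul_zero, Finset.mul_sum] at h2
          rw [Finset.sum_mul, ← Finset.sum_add_distrib, ← h2]
          refine Finset.sum_congr rfl fun k _ => ?_
          ring)
        apply hw0
        ext k
        exact congrFun hz k.1

/-! ### Configurations of points -/

theorem TNod.sub {n : ℕ} {J J' : Type} {b : Bool} {d : ℕ} {a : J → Pt n} {i : J'} (σ : J' → J) (hσ : Function.Injective σ)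
    (h : TNod b d a (σ i)) : TNod b d (a ∘ σ) i := by
  have e : tan d (a ∘ σ) = tan d a ∘ fun v => (σ v.1, v.2) := by ext1 v; rfl
  unfold TNod at *
  rw [e]
  exact Nod.sub h _ fun x y hxy => by
    simp only [Prod.mk.injEq] at hxy
    exact Prod.ext (hσ hxy.1) hxy.2

/-- There are `r` points with independent tangent spaces and, if `b` holds, a hypersurface singular at them with a
nondegenerate node at one of them. -/
def HasF (b : Bool) (n d r : ℕ) : Prop := ∃ (a : Fin r → Pt n) (i : Fin r), TNod b d a i

theorem HasF.of {n : ℕ} {J : Type} [Fintype J] {b : Bool} {d : ℕ} {a : J → Pt n} {i : J} (h : TNod b d a i) {r : ℕ}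
    (hr : Fintype.card J = r) : HasF b n d r := by
  let σ := (Fintype.equivFinOfCardEq hr).symm
  refine ⟨a ∘ σ, σ.symm i, TNod.sub σ σ.injective (by simpa using h)⟩

theorem HasF.mono {b : Bool} {n d r s : ℕ} (h : HasF b n d r) (hs : 1 ≤ s) (hsr : s ≤ r) : HasF b n d s := by
  obtain ⟨a, i, h⟩ := h
  let σ : Fin s → Fin r := fun j => Equiv.swap (Fin.castLE hsr ⟨0, hs⟩) i (Fin.castLE hsr j)
  have : Function.Injective σ := (Equiv.injective _).comp (Fin.castLE_injective hsr)
  refine ⟨a ∘ σ, ⟨0, hs⟩, TNod.sub σ this ?_⟩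
  simpa [σ] using h

theorem TNod.weaken {n : ℕ} {J : Type} {b : Bool} {d : ℕ} {a : J → Pt n} {i j : J} (h : TNod b d a i) : TNod false d a j :=
  have : IsEmpty {_k : Fin (n+1) // false = true} := ⟨fun k => by simpa using k.2⟩
  nod_iff_of_isEmpty.2 h.1

theorem HasF.weaken {b : Bool} {n d r : ℕ} (h : HasF b n d r) : HasF false n d r :=
  let ⟨a, i, h⟩ := h
  ⟨a, i, h.weaken⟩

/-- The algebra endomorphism induced by a linear change of coordinates. -/
noncomputable def hat {n : ℕ} (g : Pt n →ₗ[ℂ] Pt n) : Pol n →ₐ[ℂ] Pol n := aeval fun k => linForm (g (Pi.single k 1))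

theorem hat_linForm {n : ℕ} (g : Pt n →ₗ[ℂ] Pt n) (a : Pt n) : hat g (linForm a) = linForm (g a) := by
  rw [linForm_eq, map_sum]
  conv_rhs => rw [← Finset.univ_sum_single a, map_sum, linForm_sum]
  refine Finset.sum_congr rfl fun k _ => ?_
  have : Pi.single k (a k) = a k • (Pi.single k 1 : Pt n) := by ext l; simp [Pi.single_apply]
  rw [this, map_smul g, linForm_smul]
  simp [hat]

theorem TNod.move {n : ℕ} {J : Type} [Fintype J] {b : Bool} {d : ℕ} {a : J → Pt n} {i : J} (h : TNod b d a i)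
    (g : Pt n ≃ₗ[ℂ] Pt n) : TNod b d (fun j => g (a j)) i := by
  rw [tnod_iff] at h ⊢
  obtain ⟨h1, h2⟩ := h
  have hs : ∀ v, hat g.symm.toLinearMap (linForm (g v)) = linForm v := fun v => by simp [hat_linForm]
  have hs' : ∀ v, hat g.symm.toLinearMap (linForm v) = linForm (g.symm v) := fun v => by simp [hat_linForm]
  constructor
  · intro m hm
    have := congrArg (hat g.symm.toLinearMap) hm
    simp only [map_sum, map_mul, map_pow, hs, hs', map_zero] at this
    have := h1 _ this
    ext j : 1
    have := congrFun this j
    simpa using this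
  · intro hb
    obtain ⟨h, hh, ξ, η, hn⟩ := h2 hb
    refine ⟨h ∘ₗ (hat g.symm.toLinearMap).toLinearMap, ?_, ξ ∘ₗ g.symm.toLinearMap, η ∘ₗ g.symm.toLinearMap, ?_⟩
    · intro j m
      simp [hs, hs', hh]
    · intro w hw
      have := hn (g.symm w) fun m => by
        have := hw (g m)
        simpa [hs, hs'] using this
      simpa using this

theorem exists_move {n e : ℕ} (q : Fin e → Pt n) (he : e ≤ n) : ∃ g : Pt n ≃ₗ[ℂ] Pt n, ∀ j, g (q j) 0 = 0 := by
  have hlt : Submodule.span ℂ (Set.range q) < ⊤ := by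
    refine Submodule.lt_top_of_finrank_lt_finrank ?_
    have := finrank_range_le_card (R := ℂ) q
    simp [Set.finrank] at this ⊢
    omega
  obtain ⟨ξ, hξ0, hξ⟩ := Submodule.exists_le_ker_of_lt_top _ hlt
  have : ∃ k, ξ (Pi.single k 1) ≠ 0 := by
    by_contra! hc
    refine hξ0 (LinearMap.pi_ext' fun k => LinearMap.ext_ring ?_)
    simpa using hc k
  obtain ⟨k, hk⟩ := this
  let g : Pt n →ₗ[ℂ] Pt n := LinearMap.pi fun i => if i = 0 then ξ else LinearMap.proj (Equiv.swap 0 k i)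
  have hg : Function.Injective g := by
    rw [injective_iff_map_eq_zero]
    intro v hv
    have hj : ∀ j, j ≠ k → v j = 0 := by
      intro j hj
      have := congrFun hv (Equiv.swap 0 k j)
      have h0 : Equiv.swap 0 k j ≠ 0 := by
        intro h
        rw [Equiv.swap_apply_eq_iff] at h
        simp at h; exact hj h
      simpa [g, h0] using this
    have hvk : v = v k • (Pi.single k 1 : Pt n) := by
      ext l
      by_cases hl : l = k
      · subst hl; simp
      · simp [hl, hj l hl]
    have h0 := congrFun hv 0
    simp only [g, LinearMap.pi_apply, if_true, Pi.zero_apply] at h0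
    rw [hvk, map_smul, smul_eq_mul] at h0
    rw [hvk, (mul_eq_zero.1 h0).resolve_right hk, zero_smul]
  refine ⟨LinearEquiv.ofInjectiveEndo g hg, fun j => ?_⟩
  have : ξ (q j) = 0 := hξ (Submodule.subset_span ⟨j, rfl⟩)
  simpa [g] using this

/-- The embedding of the hyperplane `x₀ = 0`. -/
def hyp {m : ℕ} (u : Pt m) : Pt (m+1) := Fin.cons 0 u

/-- The linear map underlying `hyp`. -/
def hypL (m : ℕ) : Pt m →ₗ[ℂ] Pt (m+1) where
  toFun := hyp
  map_add' u v := by ext i; refine Fin.cases ?_ (fun i => ?_) i <;> simp [hyp]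
  map_smul' c u := by ext i; refine Fin.cases ?_ (fun i => ?_) i <;> simp [hyp]

/-- Some `P` points whose tangent spaces span a space of dimension at least `K`. -/
def HasSp (n c P K : ℕ) : Prop := ∃ (p : Fin P → Pt n) (g : Fin K → Fin P × Fin (n+1)), LinearIndependent ℂ (tan c p ∘ g)

theorem residual_point {b : Bool} {m c c' P e K : ℕ} (hF : HasF b (m+1) c (P+e)) (hS : HasSp (m+1) c' P K) (he : e ≤ m+1)
    (hP : 1 ≤ P) : ∃ (p : Fin P → Pt (m+1)) (q : Fin e → Pt m) (i : Fin P) (g : Fin K → Fin P × Fin (m+1+1)),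
      TNod b c (Sum.elim p (hyp ∘ q)) (Sum.inl i) ∧ (∀ j, p j 0 ≠ 0) ∧ LinearIndependent ℂ (tan c' p ∘ g) := by
  obtain ⟨a, i₀, ha⟩ := hF
  let i : Fin P := ⟨0, hP⟩
  let σ : Fin P ⊕ Fin e → Fin (P+e) := fun j => Equiv.swap (finSumFinEquiv (Sum.inl i)) i₀ (finSumFinEquiv j)
  have hσ : Function.Injective σ := (Equiv.injective _).comp (Equiv.injective _)
  have h1 : TNod b c (a ∘ σ) (Sum.inl i) := TNod.sub σ hσ (by simp only [σ, Equiv.swap_apply_left]; exact ha)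
  obtain ⟨φ, hφ⟩ := exists_move (fun j : Fin e => a (σ (Sum.inr j))) he
  have h2 := h1.move φ
  let q : Fin e → Pt m := fun j l => φ (a (σ (Sum.inr j))) l.succ
  have hq : ∀ j, φ (a (σ (Sum.inr j))) = hyp (q j) := by
    intro j
    ext l
    refine Fin.cases ?_ (fun l => ?_) l
    · simpa [hyp] using hφ j
    · simp [hyp, q]
  obtain ⟨p', g, hp'⟩ := hS
  let A : (Fin P → Pt (m+1)) → Prop := fun p => TNod b c (Sum.elim p (hyp ∘ q)) (Sum.inl i)
  have hA : LO A := by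
    refine LO.nod (v := fun p => tan c (Sum.elim p (hyp ∘ q))) ?_ ?_
    · rintro ⟨j | j, k⟩
      · exact PF.tan c (j, k)
      · exact fun x z => PC.const (linForm (hyp (q j)) ^ (c-1) * X k)
    · exact PF.sff b c i
  let B : (Fin P → Pt (m+1)) → Prop := fun p => LinearIndependent ℂ (tan c' p ∘ g)
  have hB : LO B := by
    exact LO.li (M := Pol (m+1)) (E := Fin P → Pt (m+1)) (v := fun p => tan c' p ∘ g) fun k => PF.tan c' (g k)
  let D : (Fin P → Pt (m+1)) → Prop := fun p => ∀ j, p j 0 ≠ 0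
  have hD : LO D := by
    refine LO.all (ι := Fin P) (E := Fin P → Pt (m+1)) (P := fun j p => p j 0 ≠ 0) fun j => LO.ne_zero (E := Fin P → Pt (m+1)) (f := fun p => p j 0) ?_
    exact PF.linear (LinearMap.proj (R := ℂ) (φ := fun _ : Fin (m+1+1) => ℂ) 0 ∘ₗ LinearMap.proj (φ := fun _ : Fin P => Pt (m+1)) j)
  have hA0 : A (fun j => φ (a (σ (Sum.inl j)))) := by
    have : (Sum.elim (fun j => φ (a (σ (Sum.inl j)))) (hyp ∘ q) : Fin P ⊕ Fin e → Pt (m+1)) = fun j => φ ((a ∘ σ) j) := by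
      ext (j | j) : 1
      · rfl
      · simp [hq]
    simp only [A, this]; exact h2
  have hD0 : D (fun _ _ => (1:ℂ)) := fun j => one_ne_zero (α := ℂ)
  obtain ⟨p1, hp1⟩ := LO.exists hA hB hA0 hp'
  have hAB : LO fun p => A p ∧ B p := LO.and hA hB
  obtain ⟨p2, ⟨hp2, hp3⟩, hp4⟩ := LO.exists (P := fun p => A p ∧ B p) (Q := D) hAB hD (y := fun _ _ => (1:ℂ)) hp1 hD0
  exact ⟨p2, q, i, g, hp2, hp4, hp3⟩

/-! ### Residual and trace of the degeneration -/

section horace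
variable {m : ℕ}

theorem rename_linForm (u : Pt m) : rename Fin.succ (linForm u) = linForm (hyp u) := by
  simp [linForm_eq, hyp, Fin.sum_univ_succ (n := m+1)]

/-- Restriction of forms to the hyperplane `x₀ = 0`. -/
noncomputable def rho (m : ℕ) : Pol (m+1) →ₐ[ℂ] Pol m := aeval (Fin.cases 0 X)

theorem rho_linForm (a : Pt (m+1)) : rho m (linForm a) = linForm fun l => a l.succ := by
  simp [linForm_eq, rho, Fin.sum_univ_succ (n := m+1)]

theorem rho_X_zero : rho m (X 0) = 0 := by simp [rho]
theorem rho_X_succ (l : Fin (m+1)) : rho m (X l.succ) = X l := by simp [rho]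

/-- The derivative in the direction `x₀`; its kernel consists of the forms in the remaining variables. -/
noncomputable def D0 (m : ℕ) : Pol (m+1) →ₗ[ℂ] Pol (m+1) := (pderiv (R := ℂ) (0 : Fin (m+1+1))).toLinearMap

theorem D0_mul (f g : Pol (m+1)) : D0 m (f * g) = D0 m f * g + f * D0 m g := by
  simp [D0]; ring

theorem D0_X (k : Fin (m+1+1)) : D0 m (X k) = if k = 0 then 1 else 0 := by
  simp [D0, pderiv_X, Pi.single_apply]

theorem D0_linForm (a : Pt (m+1)) : D0 m (linForm a) = C (a 0) := by
  simp [linForm_eq, D0_X, C_eq_smul_one]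

theorem D0_pow (a : Pt (m+1)) (c : ℕ) : D0 m (linForm a ^ c) = (c * a 0 : ℂ) • linForm a ^ (c-1) := by
  have : D0 m (linForm a ^ c) = (c : Pol (m+1)) * linForm a ^ (c-1) * D0 m (linForm a) := by
    simp [D0, Derivation.leibniz_pow, mul_assoc]
  rw [this, D0_linForm, smul_eq_C_mul, map_mul]
  simp; ring

/-- The residual system in degree `c`: the tangent spaces at the points `p`, the tangent spaces at the points `q` of the hyperplane
in the directions of the hyperplane, and the powers `ℓ^c` at the points `u` of the hyperplane. -/
noncomputable def resV {P s e : ℕ} (c : ℕ) (p : Fin P → Pt (m+1)) (u : Fin s → Pt m) (q : Fin e → Pt m) :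
    ((Fin P × Fin (m+1+1)) ⊕ (Fin e × Fin (m+1))) ⊕ Fin s → Pol (m+1) :=
  Sum.elim (Sum.elim (tan c p) fun v => linForm (hyp (q v.1)) ^ (c-1) * X v.2.succ) fun j => linForm (hyp (u j)) ^ c

theorem PF.hyp_pow {E : Type} [AddCommGroup E] [Module ℂ E] (g : E →ₗ[ℂ] Pt m) (c : ℕ) :
    PF fun u : E => linForm (hyp (g u)) ^ c := by
  have h1 : PF fun u : E => linForm (hyp (g u)) := PF.comp PF.lf (hypL m ∘ₗ g)
  exact PF.pow h1 c

/-- General points `u` of the hyperplane keep the residual system independent and nodal. A subspace containing it and all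
`ℓ_u^c` would contain all the forms in the last variables, and its image under `D0` would contain the tangent spaces at `p`
one degree lower; the dimension bound forbids that. -/
theorem residual_nod {b : Bool} {P s e K c : ℕ} {p : Fin P → Pt (m+1)} {q : Fin e → Pt m} {i : Fin P}
    {g : Fin K → Fin P × Fin (m+1+1)} (hc : 2 ≤ c)
    (h : TNod b c (Sum.elim p (hyp ∘ q)) (Sum.inl i)) (hp : ∀ j, p j 0 ≠ 0) (hg : LinearIndependent ℂ (tan (c-1) p ∘ g))
    (hn : P * (m+2) + e * (m+1) + s + b.toNat ≤ (m+c).choose c + K) :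
    ∃ u : Fin s → Pt m, Nod (resV c p u q) (sff b c (p i)) := by
  have h0 : Nod (Sum.elim (tan c p) fun v : Fin e × Fin (m+1) => linForm (hyp (q v.1)) ^ (c-1) * X v.2.succ)
      (sff b c (p i)) := by
    let σ : (Fin P × Fin (m+1+1)) ⊕ (Fin e × Fin (m+1)) → (Fin P ⊕ Fin e) × Fin (m+1+1) :=
      Sum.elim (fun v => (Sum.inl v.1, v.2)) fun v => (Sum.inr v.1, v.2.succ)
    have hσ : Function.Injective σ := by
      rintro (⟨x1, x2⟩ | ⟨x1, x2⟩) (⟨y1, y2⟩ | ⟨y1, y2⟩) hxy <;> simp [σ] at hxy ⊢ <;> exact hxy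
    have e1 : (Sum.elim (tan c p) fun v : Fin e × Fin (m+1) => linForm (hyp (q v.1)) ^ (c-1) * X v.2.succ) =
        tan c (Sum.elim p (hyp ∘ q)) ∘ σ := by
      ext1 (v | v) <;> rfl
    rw [e1]
    exact Nod.sub h σ hσ
  refine simple_points (x := fun u : Pt m => linForm (hyp u) ^ c) (PF.hyp_pow LinearMap.id c) b.toNat ?_ h0 s ?_
  · cases b
    · right; exact ⟨fun k => by simpa using k.2⟩
    · left; rfl
  intro T hT hr hv
  by_contra! hall
  have hpT : ∀ v, tan c p v ∈ T := fun v => hv (Sum.inl v)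
  have hpc : ∀ j, linForm (p j) ^ c ∈ T := by
    intro j
    have : linForm (p j) ^ c = ∑ k, p j k • tan c p (j, k) := by
      obtain ⟨c, rfl⟩ : ∃ c', c = c' + 1 := ⟨c - 1, by omega⟩
      rw [pow_succ]
      conv_lhs => rw [linForm_eq (p j)]
      rw [← linForm_eq (p j)]
      simp only [tan, Nat.add_sub_cancel]
      conv_lhs => arg 2; rw [linForm_eq (p j)]
      rw [Finset.mul_sum]
      simp
    rw [this]
    exact Submodule.sum_mem _ fun k _ => Submodule.smul_mem _ _ (hpT _)
  let R := T.map (D0 m)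
  have hpR : ∀ j, linForm (p j) ^ (c-1) ∈ R := by
    intro j
    have := Submodule.mem_map_of_mem (f := D0 m) (hpc j)
    rw [D0_pow] at this
    refine (Submodule.smul_mem_iff _ ?_).1 this
    exact mul_ne_zero (by simp; omega) (hp j)
  have hR : ∀ v, tan (c-1) p v ∈ R := by
    intro v
    have := Submodule.mem_map_of_mem (f := D0 m) (hpT v)
    simp only [tan, D0_mul, D0_pow, D0_X] at this
    rw [← Submodule.smul_mem_iff (s := ((c-1 : ℕ) * p v.1 0 : ℂ)) _ (mul_ne_zero (by simp; omega) (hp v.1))]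
    have h2 := Submodule.sub_mem _ this (Submodule.smul_mem _ (if v.2 = 0 then (1:ℂ) else 0) (hpR v.1))
    convert h2 using 1
    simp only [tan]
    split_ifs <;> simp
  have hRf : FiniteDimensional ℂ R := inferInstance
  have hK : K ≤ Module.finrank ℂ R := by
    have h1 : LinearIndependent ℂ fun k : Fin K => (⟨tan (c-1) p (g k), hR _⟩ : R) := LinearIndependent.of_comp R.subtype hg
    simpa using h1.fintype_card_le_finrank
  have hker : (m+c).choose c ≤ Module.finrank ℂ (T ⊓ LinearMap.ker (D0 m) : Submodule ℂ (Pol (m+1))) := by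
    refine finrank_ge_of_pow (g := (rename (R := ℂ) (Fin.succ : Fin (m+1) → Fin (m+1+1))).toLinearMap)
      (rename_injective _ (Fin.succ_injective _)) fun u => ?_
    simp only [AlgHom.toLinearMap_apply, map_pow, rename_linForm]
    refine ⟨hall u, ?_⟩
    simp [D0_pow, hyp]
  have hrn := LinearMap.finrank_range_add_finrank_ker ((D0 m).domRestrict T)
  have e1 : LinearMap.range ((D0 m).domRestrict T) = R := by
    simp [R, LinearMap.range_domRestrict]
  have e2 : Module.finrank ℂ (LinearMap.ker ((D0 m).domRestrict T)) =
      Module.finrank ℂ (T ⊓ LinearMap.ker (D0 m) : Submodule ℂ (Pol (m+1))) := by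
    rw [← Submodule.map_comap_subtype, ← Submodule.finrank_map_subtype_eq]
    rw [LinearMap.ker_domRestrict]
  rw [e1, e2] at hrn
  have h2 : Module.finrank ℂ T + 1 ≤ P * (m+2) + e * (m+1) + s + b.toNat := by simpa using hr
  have h3 : Module.finrank ℂ R + Module.finrank ℂ (T ⊓ LinearMap.ker (D0 m) : Submodule ℂ (Pol (m+1))) =
    Module.finrank ℂ T := hrn
  have h4 := h2.trans (hn.trans ((Nat.add_le_add hker hK).trans (le_of_eq ((Nat.add_comm _ _).trans h3))))
  exact absurd h4 (by simp)

/-- The trace on the hyperplane: the tangent spaces at `s` points together with the powers at `e` further general points. -/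
theorem trace_li {d s e : ℕ} (h : HasF false m d s) (hn : s * (m+1) + e ≤ (m+d).choose d) :
    ∃ (u : Fin s → Pt m) (q : Fin e → Pt m), LinearIndependent ℂ (Sum.elim (tan d u) fun j => linForm (q j) ^ d) := by
  obtain ⟨u, i, h⟩ := h
  have hem : IsEmpty {_k : Fin (m+1) // false = true} := ⟨fun k => by simpa using k.2⟩
  obtain ⟨q, hq⟩ := simple_points (x := fun u : Pt m => linForm u ^ d) (PF.pow PF.lf d) 0 (Or.inr hem) h e (by
    intro T hT hr hv
    by_contra! hall
    have h1 : (m+d).choose d ≤ Module.finrank ℂ T := finrank_ge_of_pow (g := LinearMap.id) Function.injective_id (T := T) hall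
    have h2 : Module.finrank ℂ T + 1 ≤ s * (m+1) + e := by simpa using hr
    exact absurd (h1.trans (Nat.le_of_succ_le (h2.trans hn))) (fun _ => absurd (h2.trans (hn.trans h1)) (by simp)))
  exact ⟨u, q, hq.1⟩
end horace

/-! ### The differential Horace degeneration -/

section degeneration
variable {m P s e c : ℕ} {p : Fin P → Pt (m+1)} {u : Fin s → Pt m} {q : Fin e → Pt m}

theorem sum_tan_one {n : ℕ} (f : Pol n) (v : Pt n) : ∑ k, v k • (f * X k) = f * linForm v := by
  rw [linForm_eq, Finset.mul_sum]
  exact Finset.sum_congr rfl fun k _ => by simp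

theorem hyp_eq_sum (v : Pt m) : linForm (hyp v) = ∑ l : Fin (m+1), v l • (X l.succ : Pol (m+1)) := by
  rw [linForm_eq, Fin.sum_univ_succ]
  simp [hyp]

theorem sum_hyp_one (f : Pol (m+1)) (v : Pt m) : ∑ l : Fin (m+1), v l • (f * X l.succ) = f * linForm (hyp v) := by
  rw [hyp_eq_sum, Finset.mul_sum]
  exact Finset.sum_congr rfl fun k _ => by simp

theorem resV_li (h : LinearIndependent ℂ (resV c p u q)) (A : Fin P → Pt (m+1)) (B : Fin e → Pt m) (μ : Fin s → ℂ)
    (h0 : ∑ j, linForm (p j) ^ (c-1) * linForm (A j) + ∑ j, linForm (hyp (q j)) ^ (c-1) * linForm (hyp (B j)) +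
      ∑ j, μ j • linForm (hyp (u j)) ^ c = 0) : A = 0 ∧ B = 0 ∧ μ = 0 := by
  rw [Fintype.linearIndependent_iff] at h
  have := h (Sum.elim (Sum.elim (fun v => A v.1 v.2) fun v => B v.1 v.2) μ) (by
    rw [← h0]
    simp only [Fintype.sum_sum_type, Sum.elim_inl, Sum.elim_inr, resV, Fintype.sum_prod_type, tan]
    simp only [sum_tan_one, sum_hyp_one])
  refine ⟨?_, ?_, ?_⟩
  · ext j k; exact this (Sum.inl (Sum.inl (j, k)))
  · ext j k; exact this (Sum.inl (Sum.inr (j, k)))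
  · ext j; exact this (Sum.inr j)

theorem resV_ker {h : Pol (m+1) →ₗ[ℂ] ℂ} (hh : ∀ i, h (resV c p u q i) = 0) :
    (∀ j v, h (linForm (p j) ^ (c-1) * linForm v) = 0) ∧ (∀ j v, h (linForm (hyp (q j)) ^ (c-1) * linForm (hyp v)) = 0) ∧
    ∀ j, h (linForm (hyp (u j)) ^ c) = 0 := by
  refine ⟨fun j v => ?_, fun j v => ?_, fun j => hh (Sum.inr j)⟩
  · rw [← sum_tan_one, map_sum]
    refine Finset.sum_eq_zero fun k _ => ?_
    rw [map_smul]
    have := hh (Sum.inl (Sum.inl (j, k)))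
    simp only [resV, Sum.elim_inl, tan] at this
    rw [this, smul_zero]
  · rw [← sum_hyp_one, map_sum]
    refine Finset.sum_eq_zero fun k _ => ?_
    rw [map_smul]
    have := hh (Sum.inl (Sum.inr (j, k)))
    simp only [resV, Sum.elim_inl, Sum.elim_inr] at this
    rw [this, smul_zero]

/-- The points of the Horace degeneration: `p` outside the hyperplane, `u` on it, and `q` moving to it. -/
noncomputable def degP (p : Fin P → Pt (m+1)) (u : Fin s → Pt m) (q : Fin e → Pt m) (t : ℂ) : (Fin P ⊕ Fin s) ⊕ Fin e → Pt (m+1) :=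
  Sum.elim (Sum.elim p fun j => hyp (u j)) fun j => hyp (q j) + t • Pi.single 0 1

/-- The tangent generators at `degP`, rescaled so as to stay independent in the limit. -/
noncomputable def degV (c : ℕ) (p : Fin P → Pt (m+1)) (u : Fin s → Pt m) (q : Fin e → Pt m) (t : ℂ) :
    ((Fin P ⊕ Fin s) ⊕ Fin e) × Fin (m+1+1) → Pol (m+1) × Pol m
  | (Sum.inl (Sum.inl j), k) => (D0 m (linForm (p j) ^ c * X k), t • rho m (linForm (p j) ^ c * X k))
  | (Sum.inl (Sum.inr j), k) => Fin.cases (linForm (hyp (u j)) ^ c, 0) (fun l => (0, linForm (u j) ^ c * X l)) k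
  | (Sum.inr j, k) => Fin.cases
      ((c * t : ℂ) • (linForm (hyp (q j) + t • Pi.single 0 1) ^ (c-1) * X 0) + linForm (hyp (q j) + t • Pi.single 0 1) ^ c, 0)
      (fun l => ((c : ℂ) • (linForm (hyp (q j) + t • Pi.single 0 1) ^ (c-1) * X l.succ), linForm (q j) ^ c * X l)) k

theorem hyp_zero (v : Pt m) : hyp v 0 = 0 := rfl
theorem hyp_succ (v : Pt m) : (fun l : Fin (m+1) => hyp v l.succ) = v := rfl

theorem PF_q (v : Pt m) : PF fun t : ℂ => linForm (hyp v + t • Pi.single 0 1) := by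
  refine PF.comp (f := fun w : Pt (m+1) => linForm (hyp v + w)) ?_ (LinearMap.toSpanSingleton ℂ (Pt (m+1)) (Pi.single 0 1))
  simp only [linForm_add]
  exact PF.add (PF.const _) PF.lf

theorem PF_degV (i) : PF fun t : ℂ => degV c p u q t i := by
  have hid : PF fun t : ℂ => t := PF.linear (LinearMap.id)
  have hsm : ∀ {M : Type} [AddCommGroup M] [Module ℂ M] (f : M), PF fun t : ℂ => t • f := fun f =>
    PF.linear (LinearMap.toSpanSingleton ℂ _ f)
  obtain ⟨(j | j) | j, k⟩ := i
  · exact PF.pair (PF.const _) (hsm _)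
  · refine PF.const (degV c p u q 0 (Sum.inl (Sum.inr j), k))
  · refine Fin.cases ?_ (fun l => ?_) k
    · refine PF.pair (M := Pol (m+1)) (N := Pol m) (f := fun t : ℂ => (c * t : ℂ) • (linForm (hyp (q j) + t • Pi.single 0 1) ^ (c-1) * X 0) + linForm (hyp (q j) + t • Pi.single 0 1) ^ c) (g := fun _ => 0) ?_ (PF.const _)
      refine PF.add ?_ (PF.pow (PF_q _) _)
      have : (fun t : ℂ => (c * t : ℂ) • (linForm (hyp (q j) + t • Pi.single 0 1) ^ (c-1) * X 0 : Pol (m+1))) =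
        fun t : ℂ => (t • (C (c:ℂ) : Pol (m+1))) * ((linForm (hyp (q j) + t • Pi.single 0 1) ^ (c-1)) * X 0) := by
        ext1 t; simp only [smul_eq_C_mul, map_mul]; ring
      rw [this]
      exact PF.mul (hsm _) (PF.mul (PF.pow (PF_q _) _) (PF.const _))
    · refine PF.pair (M := Pol (m+1)) (N := Pol m) (f := fun t : ℂ => (c : ℂ) • (linForm (hyp (q j) + t • Pi.single 0 1) ^ (c-1) * X l.succ)) (g := fun _ => linForm (q j) ^ c * X l) ?_ (PF.const _)
      exact PF.map (LinearMap.lsmul ℂ _ (c:ℂ)) (PF.mul (PF.pow (PF_q _) _) (PF.const _))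

theorem degV_zero (hc : 1 ≤ c) (hp : ∀ j, p j 0 ≠ 0) (hres : LinearIndependent ℂ (resV c p u q))
    (htr : LinearIndependent ℂ (Sum.elim (tan (c+1) u) fun j => linForm (q j) ^ (c+1))) :
    LinearIndependent ℂ (degV c p u q 0) := by
  rw [Fintype.linearIndependent_iff]
  intro g hg
  let α : Fin P → Pt (m+1) := fun j k => g (Sum.inl (Sum.inl j), k)
  let μ : Fin s → ℂ := fun j => g (Sum.inl (Sum.inr j), 0)
  let ν : Fin s → Pt m := fun j l => g (Sum.inl (Sum.inr j), l.succ)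
  let σ : Fin e → ℂ := fun j => g (Sum.inr j, 0)
  let τ : Fin e → Pt m := fun j l => g (Sum.inr j, l.succ)
  rw [Fintype.sum_prod_type] at hg
  have e1 : ∀ j, ∑ k, g (Sum.inl (Sum.inl j), k) • degV c p u q 0 (Sum.inl (Sum.inl j), k) =
      (linForm (p j) ^ (c-1) * linForm ((c * p j 0 : ℂ) • α j + α j 0 • p j), 0) := by
    intro j
    ext1
    · simp only [degV, Prod.fst_sum, Prod.smul_fst]
      have : ∑ k, g (Sum.inl (Sum.inl j), k) • D0 m (linForm (p j) ^ c * X k) = D0 m (linForm (p j) ^ c * linForm (α j)) := by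
        rw [← sum_tan_one, map_sum]; simp [α]
      rw [this, D0_mul, D0_pow, D0_linForm, linForm_add, linForm_smul, linForm_smul]
      obtain ⟨c, rfl⟩ : ∃ c', c = c' + 1 := ⟨c - 1, by omega⟩
      simp only [Nat.add_sub_cancel, pow_succ, smul_eq_C_mul]
      ring
    · simp [degV, Prod.snd_sum]
  have e2 : ∀ j, ∑ k, g (Sum.inl (Sum.inr j), k) • degV c p u q 0 (Sum.inl (Sum.inr j), k) =
      (μ j • linForm (hyp (u j)) ^ c, linForm (u j) ^ c * linForm (ν j)) := by
    intro j
    rw [Fin.sum_univ_succ]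
    ext1
    · simp [degV, Prod.fst_sum, μ]
    · simp only [degV, Prod.snd_add, Prod.snd_sum, Prod.smul_snd, Fin.cases_zero, Fin.cases_succ]
      rw [← sum_tan_one]; simp [ν]
  have e3 : ∀ j, ∑ k, g (Sum.inr j, k) • degV c p u q 0 (Sum.inr j, k) =
      (linForm (hyp (q j)) ^ (c-1) * linForm (hyp ((c:ℂ) • τ j + σ j • q j)), linForm (q j) ^ c * linForm (τ j)) := by
    intro j
    rw [Fin.sum_univ_succ]
    ext1
    · simp only [degV, Prod.fst_add, Prod.fst_sum, Prod.smul_fst, Fin.cases_zero, Fin.cases_succ]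
      have : hyp ((c:ℂ) • τ j + σ j • q j) = (c:ℂ) • hyp (τ j) + σ j • hyp (q j) := by
        simp [← show ∀ v, hypL m v = hyp v from fun _ => rfl]
      rw [this, linForm_add (_ • _), linForm_smul, linForm_smul, mul_add, hyp_eq_sum (τ j), Finset.smul_sum, Finset.mul_sum]
      obtain ⟨c, rfl⟩ : ∃ c', c = c' + 1 := ⟨c - 1, by omega⟩
      refine (add_comm _ _).trans ?_
      congr 1
      · refine Finset.sum_congr rfl fun l _ => ?_
        simp only [Nat.add_sub_cancel, zero_smul, add_zero, smul_eq_C_mul, τ]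
        ring
      · simp [pow_succ, σ]
    · simp only [degV, Prod.snd_add, Prod.snd_sum, Prod.smul_snd, Fin.cases_zero, Fin.cases_succ]
      rw [← sum_tan_one]; simp [τ]
  rw [Fintype.sum_sum_type, Fintype.sum_sum_type] at hg
  simp only [e1, e2, e3] at hg
  have hg1 := congrArg Prod.fst hg
  have hg2 := congrArg Prod.snd hg
  simp only [Prod.fst_add, Prod.fst_sum, Prod.snd_add, Prod.snd_sum, Prod.fst_zero, Prod.snd_zero, Finset.sum_const_zero, zero_add] at hg1 hg2
  obtain ⟨hA, hB, hμ⟩ := resV_li hres _ (fun j => (c:ℂ) • τ j + σ j • q j) _ ((add_right_comm _ _ _).trans hg1)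
  have hc0 : (c:ℂ) ≠ 0 := by simp; omega
  have hτ : ∀ j, τ j = (-σ j / c) • q j := by
    intro j
    have := congrFun hB j
    ext l
    have := congrFun this l
    simp at this ⊢
    field_simp
    linear_combination this
  have hα : ∀ j, α j = 0 := by
    intro j
    have h1 := congrFun hA j
    have h0 : α j 0 = 0 := by
      have := congrFun h1 0
      simp at this
      have h2 : ((c:ℂ)+1) * (p j 0 * α j 0) = 0 := by linear_combination this
      have h3 : ((c:ℂ)+1) ≠ 0 := by norm_cast
      simpa [h3, hp j] using h2
    simp only [h0, zero_smul, add_zero, Pi.zero_apply] at h1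
    exact (smul_eq_zero.1 h1).resolve_left (mul_ne_zero hc0 (hp j))
  rw [Fintype.linearIndependent_iff] at htr
  have htr := htr (Sum.elim (fun v => ν v.1 v.2) fun j => -σ j / c) (by
    rw [← hg2]
    simp only [Fintype.sum_sum_type, Sum.elim_inl, Sum.elim_inr, Fintype.sum_prod_type, tan, sum_tan_one, Nat.add_sub_cancel, hτ,
      linForm_smul]
    congr 1
    refine Finset.sum_congr rfl fun j _ => ?_
    rw [pow_succ, mul_smul_comm])
  have hν : ∀ j l, ν j l = 0 := fun j l => htr (Sum.inl (j, l))
  have hσ : ∀ j, σ j = 0 := fun j => by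
    have := htr (Sum.inr j)
    simpa [hc0] using this
  rintro ⟨(j | j) | j, k⟩
  · exact congrFun (hα j) k
  · refine Fin.cases ?_ (fun l => ?_) k
    · exact congrFun hμ j
    · exact hν j l
  · refine Fin.cases ?_ (fun l => ?_) k
    · exact hσ j
    · have := congrFun (hτ j) l
      simpa [hσ] using this

/-- Independence of the residual system and of the trace imply independence near the limit. The tangent generators are
mapped by `f ↦ (∂f/∂x₀, t f|_{x₀=0})`, rescaled, and at `t = 0` they split into the two systems. -/
theorem degenerate {b : Bool} {i : Fin P} (hc : 2 ≤ c) (hp : ∀ j, p j 0 ≠ 0) (hres : Nod (resV c p u q) (sff b c (p i)))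
    (htr : LinearIndependent ℂ (Sum.elim (tan (c+1) u) fun j => linForm (q j) ^ (c+1))) :
    ∃ t, TNod b (c+1) (degP p u q t) (Sum.inl (Sum.inl i)) := by
  let Ψ : ℂ → Pol (m+1) →ₗ[ℂ] Pol (m+1) × Pol m := fun t => (D0 m).prod (t • (rho m).toLinearMap)
  let β : ℂ → {_k : Fin (m+1+1) // b = true} → {_k : Fin (m+1+1) // b = true} → Pol (m+1) × Pol m :=
    fun t k l => Ψ t (sff b (c+1) (p i) k l)
  have hΨ : ∀ t f, Ψ t f = (D0 m f, t • rho m f) := fun _ _ => rfl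
  have hLO : LO fun t : ℂ => Nod (degV c p u q t) (β t) := by
    refine LO.nod (fun i => PF_degV i) fun k l => ?_
    exact PF.pair (PF.const _) (PF.linear (LinearMap.toSpanSingleton ℂ _ (rho m (sff b (c+1) (p i) k l))))
  have h0 : Nod (degV c p u q 0) (β 0) := by
    refine ⟨degV_zero (by omega) hp hres.1 htr, ?_⟩
    obtain ⟨-, h, hh, ξ, η, hd⟩ := hres
    obtain ⟨h1, h2, h3⟩ := resV_ker hh
    refine ⟨h ∘ₗ LinearMap.fst ℂ _ _, ?_, ((c-1 : ℕ) * p i 0 : ℂ) • ξ, η, ?_⟩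
    · have hpc : ∀ j, h (linForm (p j) ^ c) = 0 := fun j => by
        have := h1 j (p j)
        rwa [← pow_succ, show c-1+1 = c by omega] at this
      rintro ⟨(j | j) | j, k⟩
      · simp only [degV, LinearMap.comp_apply, LinearMap.fst_apply, D0_mul, D0_pow, D0_X, map_add, smul_mul_assoc, map_smul]
        have := h1 j (Pi.single k 1)
        rw [linForm_single] at this
        rw [this]
        split_ifs <;> simp [hpc]
      · refine Fin.cases ?_ (fun l => ?_) k
        · exact h3 j
        · simp [degV]
      · refine Fin.cases ?_ (fun l => ?_) k
        · have := h2 j (q j)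
          rw [← pow_succ, show c-1+1 = c by omega] at this
          simp [degV, this]
        · have := h2 j (Pi.single l 1)
          rw [← rename_linForm (Pi.single l 1), linForm_single, rename_X] at this
          simp [degV, this]
    · have e1 : (Matrix.of fun k l => (h ∘ₗ LinearMap.fst ℂ _ _) (β 0 k l) + (((c-1 : ℕ) * p i 0 : ℂ) • ξ) k * η l) =
          ((c-1 : ℕ) * p i 0 : ℂ) • Matrix.of fun k l => h (sff b c (p i) k l) + ξ k * η l := by
        ext k l
        simp only [β, hΨ, LinearMap.comp_apply, LinearMap.fst_apply, sff, D0_mul, D0_pow, D0_X,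
          Matrix.of_apply, Matrix.smul_apply, Pi.smul_apply, smul_eq_mul, map_add, smul_mul_assoc, map_smul]
        have hX : ∀ k, h (linForm (p i) ^ (c+1-2) * X k) = 0 := by
          intro k
          have := h1 i (Pi.single k 1)
          rwa [linForm_single, ← show c+1-2 = c-1 by omega] at this
        have : h (linForm (p i) ^ (c+1-2) * ((if k.1 = 0 then 1 else 0) * X l.1 + X k.1 * if l.1 = 0 then 1 else 0)) = 0 := by
          split_ifs <;> simp only [mul_add, map_add, mul_one, one_mul, mul_zero, zero_mul, hX, map_zero, add_zero]
        rw [this, show c+1-2-1 = c-2 by omega, show c+1-2 = c-1 by omega]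
        ring
      rw [e1, Matrix.det_smul]
      refine mul_ne_zero (pow_ne_zero _ (mul_ne_zero ?_ (hp i))) hd
      simp; omega
  have hfin := hLO 0 1 h0
  obtain ⟨t, ht⟩ := (hfin.union (Set.finite_singleton (0:ℂ))).infinite_compl.nonempty
  simp only [Set.mem_compl_iff, Set.mem_union, Set.mem_setOf_eq, Set.mem_singleton_iff, not_or, not_not, zero_add, smul_eq_mul, mul_one] at ht
  obtain ⟨ht1, ht0⟩ := ht
  refine ⟨t, ?_⟩
  refine Nod.of_map (Ψ t) (fun v => Sum.elim (Sum.elim (fun _ => 1) fun _ => Fin.cases 1 (fun _ => t) v.2)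
    (fun _ => Fin.cases 1 (fun _ => t) v.2) v.1) (v' := degV c p u q t) (β' := β t) ?_ ?_ (fun _ _ => rfl) ht1
  · rintro ⟨(j | j) | j, k⟩
    · simp [tan, degP, degV, Ψ]
    · refine Fin.cases ?_ (fun l => ?_) k
      · simp [tan, degP, degV, Ψ, D0_mul, D0_pow, D0_X, hyp_zero, rho_X_zero]
      · simp [tan, degP, degV, Ψ, D0_mul, D0_pow, D0_X, hyp_zero, rho_X_succ, rho_linForm, hyp_succ]
    · have h4 : (hyp (q j) + t • Pi.single 0 1 : Pt (m+1)) 0 = t := by simp [hyp_zero]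
      have h5 : (fun l : Fin (m+1) => (hyp (q j) + t • Pi.single 0 1 : Pt (m+1)) l.succ) = q j := by
        ext l; simp [hyp]
      refine Fin.cases ?_ (fun l => ?_) k
      · rw [hΨ]
        ext1
        · change D0 m (linForm (hyp (q j) + t • Pi.single 0 1) ^ c * X 0) = (1:ℂ) • ((c * t : ℂ) • _ + _)
          rw [D0_mul, D0_pow, D0_X, h4, one_smul, if_pos rfl, mul_one, smul_mul_assoc]
        · change t • rho m (linForm (hyp (q j) + t • Pi.single 0 1) ^ c * X 0) = (1:ℂ) • (0 : Pol m)
          rw [map_mul, rho_X_zero, mul_zero, smul_zero, smul_zero]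
      · rw [hΨ]
        ext1
        · change D0 m (linForm (hyp (q j) + t • Pi.single 0 1) ^ c * X l.succ) = t • ((c : ℂ) • _)
          rw [D0_mul, D0_pow, D0_X, h4, if_neg (Fin.succ_ne_zero l), mul_zero, add_zero, smul_mul_assoc, smul_smul, mul_comm (c:ℂ)]
        · change t • rho m (linForm (hyp (q j) + t • Pi.single 0 1) ^ c * X l.succ) = t • (linForm (q j) ^ c * X l)
          rw [map_mul, map_pow, rho_linForm, rho_X_succ, h5]
  · rintro ⟨(j | j) | j, k⟩
    · simp
    · refine Fin.cases ?_ (fun l => ?_) k <;> simp [ht0]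
    · refine Fin.cases ?_ (fun l => ?_) k <;> simp [ht0]

theorem PF_fst (j : Fin s) : PF fun x : (Fin s → Pt m) × (Fin e → Pt m) => linForm (x.1 j) := by
  have := PF.linear (linL m ∘ₗ LinearMap.proj (φ := fun _ : Fin s => Pt m) j ∘ₗ LinearMap.fst ℂ (Fin s → Pt m) (Fin e → Pt m))
  simpa only [LinearMap.coe_comp, Function.comp_def, linL_apply, LinearMap.proj_apply, LinearMap.fst_apply] using this

theorem PF_snd (j : Fin e) : PF fun x : (Fin s → Pt m) × (Fin e → Pt m) => linForm (x.2 j) := by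
  have := PF.linear (linL m ∘ₗ LinearMap.proj (φ := fun _ : Fin e => Pt m) j ∘ₗ LinearMap.snd ℂ (Fin s → Pt m) (Fin e → Pt m))
  simpa only [LinearMap.coe_comp, Function.comp_def, linL_apply, LinearMap.proj_apply, LinearMap.snd_apply] using this

theorem PF_fst' (j : Fin s) : PF fun x : (Fin s → Pt m) × (Fin e → Pt m) => linForm (hyp (x.1 j)) := by
  simp only [← rename_linForm]
  exact PF.map (rename Fin.succ : Pol m →ₐ[ℂ] Pol (m+1)).toLinearMap (PF_fst j)

theorem PF_snd' (j : Fin e) : PF fun x : (Fin s → Pt m) × (Fin e → Pt m) => linForm (hyp (x.2 j)) := by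
  simp only [← rename_linForm]
  exact PF.map (rename Fin.succ : Pol m →ₐ[ℂ] Pol (m+1)).toLinearMap (PF_snd j)

theorem LO_resV (b : Bool) (c : ℕ) (p : Fin P → Pt (m+1)) (i : Fin P) :
    LO fun x : (Fin s → Pt m) × (Fin e → Pt m) => Nod (resV c p x.1 x.2) (sff b c (p i)) := by
  refine LO.nod (M := Pol (m+1)) (v := fun x : (Fin s → Pt m) × (Fin e → Pt m) => resV c p x.1 x.2)
    (β := fun _ => sff b c (p i)) ?_ fun k l => fun x z => PC.const (sff b c (p i) k l)
  rintro ((⟨j, k⟩ | ⟨j, k⟩) | j)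
  · exact fun x z => PC.const (tan c p (j, k))
  · exact PF.mul (PF.pow (PF_snd' j) _) (PF.const _)
  · exact PF.pow (PF_fst' j) _

theorem LO_trace (d : ℕ) :
    LO fun x : (Fin s → Pt m) × (Fin e → Pt m) => LinearIndependent ℂ (Sum.elim (tan d x.1) fun j => linForm (x.2 j) ^ d) := by
  refine LO.li (M := Pol m) (v := fun x : (Fin s → Pt m) × (Fin e → Pt m) => Sum.elim (tan d x.1) fun j => linForm (x.2 j) ^ d) ?_
  rintro (⟨j, k⟩ | j)
  · exact PF.mul (PF.pow (PF_fst j) _) (PF.const _)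
  · exact PF.pow (PF_snd j) _

/-- The differential Horace method: `P` points outside a hyperplane, `s` on it and `e` moving to it. The residual system lives
in degree `c` (`hF`, `hS`, `hn`), the trace in one variable less (`hT`, `hs`). -/
theorem horace {b : Bool} {K : ℕ} (hc : 2 ≤ c) (hP : 1 ≤ P) (he : e ≤ m+1) (hF : HasF b (m+1) c (P+e))
    (hT : HasF false m (c+1) s) (hs : s * (m+1) + e ≤ (m+(c+1)).choose (c+1)) (hS : HasSp (m+1) (c-1) P K)
    (hn : P * (m+2) + e * (m+1) + s + b.toNat ≤ (m+c).choose c + K) : HasF b (m+1) (c+1) (P+s+e) := by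
  obtain ⟨p, q0, i, g, h1, h2, h3⟩ := residual_point hF hS he hP
  obtain ⟨u0, h4⟩ := residual_nod (s := s) hc h1 h2 h3 hn
  obtain ⟨u1, q1, h5⟩ := trace_li hT hs
  obtain ⟨⟨u, q⟩, h6, h7⟩ := LO.exists (LO_resV b c p i) (LO_trace (m := m) (s := s) (e := e) (c+1)) (x := (u0, q0)) (y := (u1, q1)) h4 h5
  obtain ⟨t, ht⟩ := degenerate hc h2 h6 h7
  exact HasF.of ht (by simp)
end degeneration

/-! ### Spans of tangent spaces -/

theorem HasSp.mono {n c P K P' K' : ℕ} (h : HasSp n c P K) (hP : P ≤ P') (hK : K' ≤ K) : HasSp n c P' K' := by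
  obtain ⟨p, g, h⟩ := h
  refine ⟨fun j => if hj : j.1 < P then p ⟨j, hj⟩ else 0, fun k => (Fin.castLE hP (g (Fin.castLE hK k)).1, (g (Fin.castLE hK k)).2), ?_⟩
  have := h.comp (Fin.castLE hK) (Fin.castLE_injective hK)
  convert this using 1
  ext1 k
  simp [tan]

theorem HasF.hasSp {n c P : ℕ} {b : Bool} (h : HasF b n c P) : HasSp n c P (P * (n+1)) := by
  obtain ⟨a, i, h⟩ := h
  exact ⟨a, finProdFinEquiv.symm, h.1.comp _ (Equiv.injective _)⟩

/-- A further general point raises the dimension of the span of the tangent spaces, unless that span is everything. -/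
theorem HasSp.succ {n c P K : ℕ} (hc : 1 ≤ c) (h : HasSp n c P K) (hK : K + 1 ≤ (n+c).choose c) : HasSp n c (P+1) (K+1) := by
  obtain ⟨p, g, h⟩ := h
  let T := Submodule.span ℂ (Set.range (tan c p ∘ g))
  have hT : Module.finrank ℂ T = K := by simpa using finrank_span_eq_card h
  have hfin : FiniteDimensional ℂ T := FiniteDimensional.span_of_finite ℂ (Set.finite_range _)
  have : ∃ u : Pt n, linForm u ^ c ∉ T := by
    by_contra! hall
    have h2 : (n+c).choose c ≤ Module.finrank ℂ T := finrank_ge_of_pow (g := LinearMap.id) Function.injective_id hall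
    exact absurd (hK.trans (h2.trans hT.le)) (by simp)
  obtain ⟨u, hu⟩ := this
  have : ∃ k, linForm u ^ (c-1) * X k ∉ T := by
    by_contra! hall
    refine hu ?_
    have e : linForm u ^ c = ∑ k, u k • (linForm u ^ (c-1) * X k) := by
      rw [sum_tan_one, ← pow_succ, show c-1+1 = c by omega]
    rw [e]
    exact Submodule.sum_mem _ fun k _ => Submodule.smul_mem _ _ (hall k)
  obtain ⟨k, hk⟩ := this
  refine ⟨Fin.snoc p u, Fin.snoc (fun l => (Fin.castSucc (g l).1, (g l).2)) (Fin.last P, k), ?_⟩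
  have e : tan c (Fin.snoc p u : Fin (P+1) → Pt n) ∘ (Fin.snoc (fun l => (Fin.castSucc (g l).1, (g l).2)) (Fin.last P, k) : Fin (K+1) → _) =
      Fin.snoc (tan c p ∘ g) (linForm u ^ (c-1) * X k) := by
    ext1 l
    refine Fin.lastCases ?_ (fun l => ?_) l <;> simp [tan]
  rw [e, linearIndependent_finSnoc]
  exact ⟨h, hk⟩

theorem HasSp.add {n c P K : ℕ} (hc : 1 ≤ c) (h : HasSp n c P K) (j : ℕ) (hK : K + j ≤ (n+c).choose c) : HasSp n c (P+j) (K+j) := by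
  induction j with
  | zero => exact h
  | succ j ih => exact (ih (by omega)).succ hc (by omega)

theorem HasSp.of_finrank {n c P K : ℕ} (p : Fin P → Pt n) (h : K ≤ Module.finrank ℂ (Submodule.span ℂ (Set.range (tan c p)))) :
    HasSp n c P K := by
  have hfin : FiniteDimensional ℂ (Submodule.span ℂ (Set.range (tan c p))) :=
    FiniteDimensional.span_of_finite ℂ (Set.finite_range _)
  obtain ⟨f, hf, -, hl⟩ := Submodule.exists_fun_fin_finrank_span_eq ℂ (Set.range (tan c p))
  choose g hg using hf
  refine HasSp.mono (K := Module.finrank ℂ (Submodule.span ℂ (Set.range (tan c p)))) ⟨p, g, ?_⟩ le_rfl h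
  rwa [show tan c p ∘ g = f from funext hg]

theorem hasSp_two (n : ℕ) : HasSp n 2 (n+1) ((n+2).choose 2) := by
  refine HasSp.of_finrank (fun i => Pi.single i 1) ?_
  have : FiniteDimensional ℂ (Submodule.span ℂ (Set.range (tan 2 fun i : Fin (n+1) => (Pi.single i 1 : Pt n)))) :=
    FiniteDimensional.span_of_finite ℂ (Set.finite_range _)
  refine finrank_ge_of_pow (g := LinearMap.id) Function.injective_id fun u => ?_
  rw [LinearMap.id_apply, pow_two]
  conv => arg 2; arg 1; rw [linForm_eq]
  rw [Finset.sum_mul]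
  refine Submodule.sum_mem _ fun k _ => ?_
  rw [smul_mul_assoc]
  refine Submodule.smul_mem _ _ ?_
  rw [← sum_tan_one]
  refine Submodule.sum_mem _ fun l _ => Submodule.smul_mem _ _ (Submodule.subset_span ⟨(k, l), ?_⟩)
  simp [tan, linForm_single]

/-- The largest `r` with `r (n+1) < C(n+d,d)`. -/
def rm (n d : ℕ) : ℕ := ((n+d).choose d - 1) / (n+1)

theorem rm_le {n d r : ℕ} : r ≤ rm n d ↔ r * (n+1) < (n+d).choose d := by
  have : 0 < (n+d).choose d := Nat.choose_pos (by omega)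
  rw [rm, Nat.le_div_iff_mul_le (by omega)]; omega

theorem HasF.li_pos {n d r : ℕ} {b : Bool} (h : HasF b n d r) : 1 ≤ r := by
  obtain ⟨a, i, h⟩ := h
  have := i.2; omega

/-! ### Binary forms -/

section binary

/-- The derivation of binary forms that kills `linForm a`. -/
noncomputable def theta (a : Pt 1) : Derivation ℂ (Pol 1) (Pol 1) := a 1 • pderiv 0 - a 0 • pderiv 1

/-- The bracket (determinant) of two points of the projective line. -/
def dt (a b : Pt 1) : ℂ := a 1 * b 0 - a 0 * b 1

theorem theta_linForm (a b : Pt 1) : theta a (linForm b) = C (dt a b) := by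
  simp [theta, linForm_eq, Fin.sum_univ_two, dt, pderiv_X, Pi.single_apply, smul_eq_C_mul]

theorem theta_comm (a b : Pt 1) (f : Pol 1) : theta a (theta b f) = theta b (theta a f) := by
  have : ⁅theta a, theta b⁆ = 0 := by
    refine MvPolynomial.derivation_ext fun i => ?_
    rw [Derivation.commutator_apply]
    rw [← linForm_single, theta_linForm, theta_linForm, ← algebraMap_eq, Derivation.map_algebraMap, Derivation.map_algebraMap]
    simp
  have := DFunLike.congr_fun this f
  rw [Derivation.commutator_apply] at this
  exact sub_eq_zero.1 this

/-- The composition of the derivations `theta a` for `a` in a list. -/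
noncomputable def Theta : List (Pt 1) → (Pol 1 →ₗ[ℂ] Pol 1)
  | [] => LinearMap.id
  | a :: l => Theta l ∘ₗ (theta a : Pol 1 →ₗ[ℂ] Pol 1)

theorem Theta_cons (a : Pt 1) (l : List (Pt 1)) (f : Pol 1) : Theta (a :: l) f = Theta l (theta a f) := rfl

theorem Theta_perm {l l' : List (Pt 1)} (h : l.Perm l') (f : Pol 1) : Theta l f = Theta l' f := by
  induction h generalizing f with
  | nil => rfl
  | cons a h ih => rw [Theta_cons, Theta_cons, ih]
  | swap a b l => simp only [Theta_cons]; rw [theta_comm]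
  | trans h1 h2 ih1 ih2 => rw [ih1, ih2]

theorem theta_tangent (a m : Pt 1) (k : ℕ) : theta a (linForm a ^ k * linForm m) = dt a m • linForm a ^ k := by
  rw [Derivation.leibniz, Derivation.leibniz_pow, theta_linForm, theta_linForm]
  simp [dt, mul_comm, smul_eq_C_mul]

theorem theta_pow (a b : Pt 1) (k : ℕ) : theta a (linForm b ^ (k+1)) = ((k+1 : ℕ) * dt a b : ℂ) • linForm b ^ k := by
  rw [Derivation.leibniz_pow, theta_linForm]
  simp [smul_eq_C_mul]; ring

theorem dt_self (a : Pt 1) : dt a a = 0 := by simp [dt]; ring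

theorem theta_self (a : Pt 1) (k : ℕ) : theta a (linForm a ^ k) = 0 := by
  cases k with
  | zero => simp
  | succ k => rw [theta_pow, dt_self]; simp

/-- Derivations not killing `linForm b` map its powers to nonzero multiples of lower powers. -/
theorem Theta_pow (b : Pt 1) (l : List (Pt 1)) (h : ∀ a ∈ l, dt a b ≠ 0) :
    ∃ c : ℂ, c ≠ 0 ∧ Theta l (linForm b ^ l.length) = C c := by
  induction l with
  | nil => exact ⟨1, one_ne_zero, by simp [Theta]⟩
  | cons a l ih =>
    obtain ⟨c, hc, h1⟩ := ih fun a ha => h a (List.mem_cons_of_mem _ ha)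
    refine ⟨(l.length+1 : ℕ) * dt a b * c, mul_ne_zero (mul_ne_zero (by norm_cast) (h a List.mem_cons_self)) hc, ?_⟩
    rw [Theta_cons, List.length_cons, theta_pow, map_smul, h1, smul_eq_C_mul]
    simp only [map_mul]

variable {s : ℕ}

/-- Distinct points of the projective line. -/
def bp (j : Fin s) : Pt 1 := ![1, (j.1 : ℂ)]

/-- Every point other than `bp i` twice, followed by `k` copies of a point different from all of these. -/
noncomputable def bl (i : Fin s) (k : ℕ) : List (Pt 1) :=
  ((Finset.univ.erase i).toList.flatMap fun j => [bp j, bp j]) ++ List.replicate k ![0, 1]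

theorem bl_length (i : Fin s) (k : ℕ) : (bl i k).length = 2 * (s-1) + k := by
  have : ∀ l : List (Fin s), (l.flatMap fun j => [bp j, bp j]).length = 2 * l.length := by
    intro l; induction l with
    | nil => rfl
    | cons a l ih => simp [ih]; ring
  rw [bl, List.length_append, this, Finset.length_toList, List.length_replicate, Finset.card_erase_of_mem (Finset.mem_univ _)]
  simp

theorem bl_dt (i : Fin s) (k : ℕ) : ∀ a ∈ bl i k, dt a (bp i) ≠ 0 := by
  intro a ha
  rw [bl, List.mem_append, List.mem_flatMap] at ha
  rcases ha with ⟨j, hj, ha⟩ | ha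
  · have hji : j ≠ i := Finset.ne_of_mem_erase (Finset.mem_toList.1 hj)
    have : a = bp j := by simpa using ha
    subst this
    simp only [dt, bp, Matrix.cons_val_zero, Matrix.cons_val_one, mul_one, one_mul]
    rw [sub_ne_zero]
    exact fun h => hji (Fin.ext (by exact_mod_cast h))
  · rw [List.eq_of_mem_replicate ha]; simp [dt, bp]

theorem bl_perm {i j : Fin s} (h : j ≠ i) (k : ℕ) : ∃ l, (bl i k).Perm (bp j :: bp j :: l) := by
  have hm : j ∈ (Finset.univ.erase i).toList := Finset.mem_toList.2 (Finset.mem_erase.2 ⟨h, Finset.mem_univ _⟩)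
  have := (List.perm_cons_erase hm).flatMap_right fun j : Fin s => [bp j, bp j]
  exact ⟨_, by simpa [bl] using List.Perm.append_right (List.replicate k ![0, 1]) this⟩

theorem Theta_bl {i j : Fin s} (h : j ≠ i) (k e : ℕ) (m : Pt 1) : Theta (bl i k) (linForm (bp j) ^ e * linForm m) = 0 := by
  obtain ⟨l, hl⟩ := bl_perm h k
  rw [Theta_perm hl, Theta_cons, Theta_cons, theta_tangent, Derivation.map_smul, theta_self]
  simp

theorem binary_li {d : ℕ} (hs : 2 * s ≤ d + 1) (m : Fin s → Pt 1) (h : ∑ i, linForm (bp i) ^ (d-1) * linForm (m i) = 0) :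
    m = 0 := by
  ext1 i
  have hs1 : 1 ≤ s := by have := i.2; omega
  have h1 : ∀ k, Theta (bl i k) (linForm (bp i) ^ (d-1) * linForm (m i)) = 0 := by
    intro k
    have := congrArg (Theta (bl i k)) h
    rwa [map_sum, Finset.sum_eq_single i (fun j _ hj => Theta_bl hj _ _ _) (by simp), map_zero] at this
  have h2 := h1 (d + 1 - 2 * s)
  have h3 : dt (bp i) (m i) = 0 := by
    have h4 := congrArg (theta (bp i)) h2
    have e : theta (bp i) (Theta (bl i (d+1-2*s)) (linForm (bp i) ^ (d-1) * linForm (m i))) =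
        Theta (bl i (d+1-2*s)) (theta (bp i) (linForm (bp i) ^ (d-1) * linForm (m i))) := by
      rw [← Theta_cons, Theta_perm (List.perm_append_singleton (bp i) (bl i (d+1-2*s))).symm]
      have : ∀ (l : List (Pt 1)) (a : Pt 1) f, Theta (l ++ [a]) f = theta a (Theta l f) := by
        intro l a
        induction l with
        | nil => intro f; rfl
        | cons b l ih => intro f; rw [List.cons_append, Theta_cons, ih, Theta_cons]
      rw [this]
    rw [e, theta_tangent, map_smul, map_zero] at h4
    obtain ⟨c, hc, h5⟩ := Theta_pow (bp i) _ (bl_dt i (d+1-2*s))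
    rw [bl_length, show 2 * (s-1) + (d+1-2*s) = d - 1 by omega] at h5
    rw [h5, smul_eq_C_mul, ← map_mul, C_eq_zero] at h4
    exact (mul_eq_zero.1 h4).resolve_right hc
  have h4 : m i = m i 0 • bp i := by
    ext k
    fin_cases k
    · simp [bp]
    · simp [dt, bp] at h3 ⊢; linear_combination -h3
  have h5 := h1 (d + 2 - 2 * s)
  have hd : 1 ≤ d := by omega
  rw [h4, linForm_smul, mul_smul_comm, ← pow_succ, map_smul] at h5
  obtain ⟨c, hc, h6⟩ := Theta_pow (bp i) _ (bl_dt i (d+2-2*s))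
  rw [bl_length, show 2 * (s-1) + (d+2-2*s) = d-1+1 by omega] at h6
  rw [h6, smul_eq_C_mul, ← map_mul, C_eq_zero] at h5
  rw [h4, (mul_eq_zero.1 h5).resolve_right hc]; simp

theorem binary_ind {d s : ℕ} (hs : 1 ≤ s) (h : 2 * s ≤ d + 1) : HasF false 1 d s :=
  ⟨bp, ⟨0, hs⟩, tnod_iff.2 ⟨binary_li h, by simp⟩⟩

theorem binary_node {d s : ℕ} (hs : 1 ≤ s) (h : 2 * s ≤ d) : HasF true 1 d s := by
  let i : Fin s := ⟨0, hs⟩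
  refine ⟨bp, i, tnod_iff.2 ⟨binary_li (by omega), fun _ => ?_⟩⟩
  obtain ⟨c, hc, h5⟩ := Theta_pow (bp i) _ (bl_dt i (d-2*s))
  rw [bl_length, show 2 * (s-1) + (d-2*s) = d - 2 by omega] at h5
  refine ⟨lcoeff ℂ 0 ∘ₗ Theta (bp i :: bp i :: bl i (d-2*s)), ?_, LinearMap.proj 0, LinearMap.proj 0, fun w hw => ?_⟩
  · intro j m
    have : Theta (bp i :: bp i :: bl i (d-2*s)) (linForm (bp j) ^ (d-1) * linForm m) = 0 := by
      by_cases hj : j = i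
      · subst hj
        rw [Theta_cons, Theta_cons, theta_tangent, Derivation.map_smul, theta_self]; simp
      · obtain ⟨l, hl⟩ := bl_perm hj (d-2*s)
        have : (bp i :: bp i :: bl i (d-2*s)).Perm (bp j :: bp j :: bp i :: bp i :: l) :=
          ((hl.cons _).cons _).trans (List.perm_append_comm (l₁ := [bp i, bp i]) (l₂ := [bp j, bp j]) |>.append_right l)
        rw [Theta_perm this, Theta_cons, Theta_cons, theta_tangent, Derivation.map_smul, theta_self]; simp
    rw [LinearMap.comp_apply, this, map_zero]
  · have hq : ∀ w m, theta (bp i) (theta (bp i) (linForm (bp i) ^ (d-2) * (linForm w * linForm m))) = (2 * dt (bp i) w * dt (bp i) m) • linForm (bp i) ^ (d-2) := by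
      intro w m
      have : theta (bp i) (linForm (bp i) ^ (d-2) * (linForm w * linForm m)) =
          dt (bp i) m • (linForm (bp i) ^ (d-2) * linForm w) + dt (bp i) w • (linForm (bp i) ^ (d-2) * linForm m) := by
        rw [Derivation.leibniz, theta_self, Derivation.leibniz, theta_linForm, theta_linForm]
        simp [smul_eq_C_mul]; ring
      rw [this, map_add, Derivation.map_smul, Derivation.map_smul, theta_tangent, theta_tangent, smul_smul, smul_smul, ← add_smul]
      congr 1; ring
    have hw' : ∀ m : Pt 1, 2 * dt (bp i) w * dt (bp i) m * c + w 0 * m 0 = 0 := by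
      intro m
      have := hw m
      rw [LinearMap.comp_apply, Theta_cons, Theta_cons, hq, map_smul, h5] at this
      simpa using this
    have h1 := hw' ![0, 1]
    have h2 := hw' ![1, 0]
    simp [dt, bp, i] at h1 h2
    ext k
    fin_cases k
    · simpa using h2
    · simpa [hc] using h1
end binary

/-! ### Nondegenerate nodes and contact loci -/

/-- There are `r` points with independent tangent spaces, at one of which the contact locus of the hyperplanes tangent
at all `r` points is a single point, to first order. -/
def HasG (n d r : ℕ) : Prop := ∃ (a : Fin r → Pt n) (i : Fin r), TInd d a ∧ TStar d a i

theorem HasF.ind {b : Bool} {n d r : ℕ} (h : HasF b n d r) : ∃ a : Fin r → Pt n, TInd d a :=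
  let ⟨a, _, h⟩ := h
  ⟨a, (tnod_iff.1 h).1⟩

/-- A nondegenerate node makes the tangential contact locus a point. -/
theorem HasF.hasG {n d r : ℕ} (hd : 2 ≤ d) (H : HasF true n d r) : HasG n d r := by
  obtain ⟨a, i, h⟩ := H
  obtain ⟨h1, h2⟩ := tnod_iff.1 h
  obtain ⟨φ, hφ, ξ, η, hn⟩ := h2 rfl
  refine ⟨a, i, h1, fun v hv => ?_⟩
  have key : ∀ w : Pt n, (∀ m, φ (linForm (a i) ^ (d-2) * (linForm w * linForm m)) = 0) → ξ w = 0 → w = 0 :=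
    fun w hw hξ => hn w fun m => by rw [hw, hξ]; simp
  have ha : ∀ m, φ (linForm (a i) ^ (d-2) * (linForm (a i) * linForm m)) = 0 := fun m => by
    rw [← mul_assoc, ← pow_succ, show d-2+1 = d-1 by omega]; exact hφ i m
  have hξ : ξ (a i) ≠ 0 := by
    intro h0
    have h3 := key _ ha h0
    have hpos : d - 1 ≠ 0 := by omega
    have := h1 (Pi.single i (Pi.single 0 1)) (by
      rw [Finset.sum_eq_single i]
      · rw [h3]; simp [linForm, hpos]
      · intro j _ hj; rw [Pi.single_eq_of_ne hj]; simp [linForm]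
      · simp)
    have := congrFun (congrFun this i) 0
    simp at this
  have hvφ : ∀ m, φ (linForm (a i) ^ (d-2) * (linForm v * linForm m)) = 0 := by
    intro m
    rw [linForm_eq m]
    simp only [Finset.mul_sum, map_sum, mul_smul_comm, map_smul]
    refine Finset.sum_eq_zero fun k _ => ?_
    obtain ⟨w, hw⟩ := hv k
    rw [← mul_assoc, hw, map_sum, Finset.sum_eq_zero fun l _ => hφ l _, smul_zero]
  refine ⟨ξ v / ξ (a i), ?_⟩
  rw [← sub_eq_zero]
  refine key _ (fun m => ?_) ?_
  · rw [sub_eq_add_neg, ← neg_smul, linForm_add, linForm_smul, add_mul, mul_add, map_add, hvφ, smul_mul_assoc, mul_smul_comm, map_smul, ha]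
    simp
  · rw [map_sub, map_smul, smul_eq_mul, div_mul_cancel₀ _ hξ, sub_self]

theorem TStar.comp {n r s d : ℕ} {a : Fin r → Pt n} {i : Fin s} (σ : Fin s → Fin r) (hσ : Function.Injective σ)
    (h : TStar d a (σ i)) : TStar d (a ∘ σ) i := by
  intro v hv
  refine h v fun k => ?_
  obtain ⟨w, hw⟩ := hv k
  refine ⟨fun j => if hj : ∃ l, σ l = j then w hj.choose else 0, ?_⟩
  have e : ∀ l, (if hj : ∃ l', σ l' = σ l then w hj.choose else 0) = w l := fun l => by
    have hj : ∃ l', σ l' = σ l := ⟨l, rfl⟩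
    rw [dif_pos hj, hσ hj.choose_spec]
  refine hw.trans ?_
  symm
  rw [← Finset.sum_subset (Finset.subset_univ (Finset.univ.map ⟨σ, hσ⟩))]
  · rw [Finset.sum_map]
    exact Finset.sum_congr rfl fun l _ => by simp only [Function.Embedding.coeFn_mk]; rw [e]; rfl
  · intro j _ hj
    beta_reduce; rw [dif_neg fun ⟨l, hl⟩ => hj (Finset.mem_map.2 ⟨l, Finset.mem_univ _, hl⟩)]
    simp [linForm]

theorem HasG.mono {n d r s : ℕ} (h : HasG n d r) (hs : 1 ≤ s) (hsr : s ≤ r) : HasG n d s := by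
  obtain ⟨a, i, h, h'⟩ := h
  let σ : Fin s → Fin r := fun j => Equiv.swap (Fin.castLE hsr ⟨0, hs⟩) i (Fin.castLE hsr j)
  have hσ : Function.Injective σ := (Equiv.injective _).comp (Fin.castLE_injective hsr)
  refine ⟨a ∘ σ, ⟨0, hs⟩, h.comp σ hσ, TStar.comp σ hσ ?_⟩
  simpa [σ] using h'

theorem HasG.hasF {n d r : ℕ} (h : HasG n d r) : HasF false n d r := by
  obtain ⟨a, i, h, -⟩ := h
  exact ⟨a, i, tnod_iff.2 ⟨h, by simp⟩⟩

/-! ### Rank certificates modulo a prime -/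

/-- Dot product of two lists; the recursors make its evaluation by the kernel fast. -/
noncomputable def dotL (A B : List ℕ) : ℕ :=
  List.rec (motive := fun _ => List ℕ → ℕ) (fun _ => 0)
    (fun a _ ih B => List.rec (motive := fun _ => ℕ) 0 (fun b B _ => Nat.add (Nat.mul a b) (ih B)) B) A B

theorem dotL_nil (B : List ℕ) : dotL [] B = 0 := rfl
theorem dotL_cons_nil (a : ℕ) (A : List ℕ) : dotL (a :: A) [] = 0 := rfl
theorem dotL_cons (a b : ℕ) (A B : List ℕ) : dotL (a :: A) (b :: B) = Nat.add (Nat.mul a b) (dotL A B) := rfl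

/-- `N` is a left inverse modulo `p` of the matrix with columns `cols`. -/
noncomputable def chkL (p : ℕ) (N cols : List (List ℕ)) : Bool :=
  (N.map fun A => cols.map fun B => dotL A B % p) ==
    (List.range cols.length).map fun i => (List.range cols.length).map fun j => if i = j then 1 else 0

section
variable {R K : Type}

/-- Dot product of a list with the column `c` of the integer matrix `M`, the rows being enumerated by a list. -/
def dotZ (M : R → K → ℤ) (c : K) : List ℕ → List R → ℤ
  | [], _ => 0
  | _ :: _, [] => 0
  | a :: A, r :: rl => a * M r c + dotZ M c A rl

theorem dotZ_cast (M : R → K → ℤ) (c : K) (p : ℕ) [NeZero p] : ∀ (A : List ℕ) (rl : List R),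
    ((dotZ M c A rl : ℤ) : ZMod p) = (dotL A (rl.map fun r => (M r c % p).toNat) : ℕ)
  | [], _ => by simp [dotZ, dotL_nil, dotL_cons_nil]
  | _ :: _, [] => by simp [dotZ, dotL_nil, dotL_cons_nil]
  | a :: A, r :: rl => by
    have h0 : (0 : ℤ) ≤ M r c % p := Int.emod_nonneg _ (by exact_mod_cast NeZero.ne p)
    have h1 : (((M r c % p).toNat : ℕ) : ZMod p) = (M r c : ZMod p) := by
      have : (((M r c % p).toNat : ℤ) : ZMod p) = ((M r c % p : ℤ) : ZMod p) := by rw [Int.toNat_of_nonneg h0]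
      rw [← ZMod.intCast_mod (M r c) p]
      exact_mod_cast this
    simp only [dotZ, List.map_cons, dotL_cons, Int.cast_add, Int.cast_mul, Int.cast_natCast, dotZ_cast M c p A rl]
    rw [show ∀ x y : ℕ, Nat.add x y = x + y from fun _ _ => rfl, show ∀ x y : ℕ, Nat.mul x y = x * y from fun _ _ => rfl]
    push_cast
    rw [h1]

theorem dotZ_sum [Fintype K] (M : R → K → ℤ) (u : K → ℂ) : ∀ (A : List ℕ) (rl : List R),
    (∀ r ∈ rl, ∑ c, (M r c : ℂ) * u c = 0) → ∑ c, (dotZ M c A rl : ℂ) * u c = 0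
  | [], _, _ => by simp [dotZ]
  | _ :: _, [], _ => by simp [dotZ]
  | a :: A, r :: rl, h => by
    have h1 := h r (by simp)
    have h2 := dotZ_sum M u A rl fun r hr => h r (by simp [hr])
    simp only [dotZ, Int.cast_add, Int.cast_mul, add_mul, Finset.sum_add_distrib, h2, mul_assoc, ← Finset.mul_sum, h1]
    simp

/-- An integer matrix with a left inverse modulo `p` is injective over `ℂ`. -/
theorem cert [Fintype K] [DecidableEq K] (p : ℕ) [Fact p.Prime] (M : R → K → ℤ) (rl : List R) (kl : List K) (hk : kl.Nodup)
    (hk' : ∀ c, c ∈ kl) (N : List (List ℕ))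
    (h : chkL p N (kl.map fun c => rl.map fun r => (M r c % p).toNat) = true) (u : K → ℂ)
    (hu : ∀ r ∈ rl, ∑ c, (M r c : ℂ) * u c = 0) : u = 0 := by
  let e := hk.getEquivOfForallMemList kl hk'
  have h' := eq_of_beq h
  set cols := kl.map fun c => rl.map fun r => (M r c % p).toNat with hc
  have hlen : cols.length = kl.length := by simp [hc]
  have hN : N.length = kl.length := by
    have := congrArg List.length h'
    simpa [hlen] using this
  let Q : Matrix (Fin kl.length) (Fin kl.length) ℤ := fun i j => dotZ M (e j) (N[i]'(by rw [hN]; exact i.2)) rl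
  have hQ : Q.map (Int.castRingHom (ZMod p)) = 1 := by
    ext i j
    have h2 := congrArg (fun L : List (List ℕ) => (L[(i : ℕ)]?.getD [])[(j : ℕ)]?.getD 5) h'
    have hi : (i : ℕ) < N.length := by rw [hN]; exact i.2
    have hj : (j : ℕ) < cols.length := by rw [hlen]; exact j.2
    have hi' : (i : ℕ) < cols.length := by rw [hlen]; exact i.2
    simp only [List.getElem?_map, List.getElem?_eq_getElem hi, List.getElem?_eq_getElem hj, Option.map_some,
      Option.getD_some, List.getElem?_range hi', List.getElem?_range hj] at h2
    change ((dotZ M (e j) (N[(i : ℕ)]'hi) rl : ℤ) : ZMod p) = _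
    rw [dotZ_cast]
    have h3 : cols[(j : ℕ)] = rl.map fun r => (M r (e j) % p).toNat := by
      simp [hc, e]
    rw [← h3, ← ZMod.natCast_mod, h2, Matrix.one_apply]
    simp only [Fin.ext_iff]
    split_ifs <;> simp
  have hdet : Q.det ≠ 0 := by
    intro h0
    have := (RingHom.map_det (Int.castRingHom (ZMod p)) Q)
    rw [h0, map_zero, RingHom.mapMatrix_apply, hQ, Matrix.det_one] at this
    exact one_ne_zero this.symm
  have hdet' : (Q.map (Int.castRingHom ℂ)).det ≠ 0 := by
    have := (RingHom.map_det (Int.castRingHom ℂ) Q)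
    rw [RingHom.mapMatrix_apply] at this
    rw [← this]
    simpa using hdet
  have hz : (Q.map (Int.castRingHom ℂ)).mulVec (fun j => u (e j)) = 0 := by
    funext i
    change ∑ j, ((dotZ M (e j) (N[(i : ℕ)]'(by rw [hN]; exact i.2)) rl : ℤ) : ℂ) * u (e j) = 0
    refine (e.sum_comp (fun c => ((dotZ M c (N[(i : ℕ)]'(by rw [hN]; exact i.2)) rl : ℤ) : ℂ) * u c)).trans ?_
    exact dotZ_sum M u _ rl hu
  have := Matrix.eq_zero_of_mulVec_eq_zero hdet' hz
  funext c
  have := congrFun this (e.symm c)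
  simpa using this

end

/-! ### Generic conditions -/

section
variable {E : Type} [AddCommGroup E] [Module ℂ E]

/-- Injectivity of a linear system whose coefficients depend polynomially on `x` is an open
condition along lines. -/
theorem LO.inj {U R : Type} [AddCommGroup U] [Module ℂ U] [Module.Finite ℂ U] [Fintype R] [DecidableEq R]
    {f : E → R → U → ℂ} (hl : ∀ x r, IsLinearMap ℂ (f x r)) (hp : ∀ r u, PF (M := ℂ) fun x => f x r u) :
    LO fun x => ∀ u, (∀ r, f x r u = 0) → u = 0 := by
  let b := Module.finBasis ℂ U
  let v : E → Fin (Module.finrank ℂ U) → (R → ℂ) := fun x i r => f x r (b i)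
  have hv : ∀ i, PF (M := R → ℂ) fun x => v x i := by
    intro i
    have e : (fun x => v x i) = fun x => ∑ r : R,
        LinearMap.toSpanSingleton ℂ (R → ℂ) (Pi.single r 1) (f x r (b i)) := by
      funext x
      ext r
      simp [v, Finset.sum_apply, Pi.single_apply]
    rw [e]
    exact PF.sum _ fun r => PF.map _ (hp r (b i))
  have := LO.li (E := E) (v := v) hv
  convert this using 2 with x
  rw [Fintype.linearIndependent_iff]
  have key : ∀ g : Fin (Module.finrank ℂ U) → ℂ, ∀ r,
      (∑ i, g i • v x i) r = f x r (∑ i, g i • b i) := by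
    intro g r
    let F := (hl x r).mk' (f x r)
    have : ∀ u, F u = f x r u := fun u => rfl
    simp only [← this, map_sum, map_smul, v, Finset.sum_apply, Pi.smul_apply]
  constructor
  · intro h g hg
    have h2 : ∑ i, g i • b i = 0 := h _ fun r => by rw [← key, hg]; rfl
    exact Fintype.linearIndependent_iff.1 b.linearIndependent g h2
  · intro h u hu
    have h2 := h (fun i => b.repr u i) (by
      funext r
      rw [key, b.sum_repr, hu]; rfl)
    rw [← b.sum_repr u]
    simp [h2]

/-- A condition that holds somewhere and is open along lines. -/
def Gen (P : E → Prop) : Prop := LO P ∧ ∃ x, P x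

theorem Gen.comp {F : Type} [AddCommGroup F] [Module ℂ F] {P : F → Prop} (hP : Gen P) (g : E →ₗ[ℂ] F)
    (hg : Function.Surjective g) : Gen fun x => P (g x) := by
  obtain ⟨x, hx⟩ := hP.2
  obtain ⟨y, rfl⟩ := hg x
  exact ⟨hP.1.comp g, y, hx⟩

theorem Gen.and {P Q : E → Prop} (hP : Gen P) (hQ : Gen Q) : Gen fun x => P x ∧ Q x := by
  obtain ⟨x, hx⟩ := hP.2
  obtain ⟨y, hy⟩ := hQ.2
  exact ⟨hP.1.and hQ.1, LO.exists hP.1 hQ.1 hx hy⟩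

theorem Gen.all {ι : Type} [Finite ι] {P : ι → E → Prop} (hP : ∀ i, Gen (P i)) :
    Gen fun x => ∀ i, P i x := by
  refine ⟨LO.all fun i => (hP i).1, ?_⟩
  cases nonempty_fintype ι
  classical
  have : ∀ s : Finset ι, Gen fun x => ∀ i ∈ s, P i x := by
    intro s
    induction s using Finset.induction_on with
    | empty => exact ⟨fun x z _ => by simp, 0, by simp⟩
    | insert a s _ ih => simpa [Finset.forall_mem_insert] using (hP a).and ih
  obtain ⟨x, hx⟩ := (this Finset.univ).2
  exact ⟨x, fun i => hx i (Finset.mem_univ i)⟩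

theorem Gen.imp {p : Prop} {P : E → Prop} (hP : p → Gen P) : Gen fun x => p → P x := by
  by_cases h : p
  · simpa [h] using hP h
  · exact ⟨fun x z _ => by simp [h], 0, fun h' => absurd h' h⟩

end

/-! ### Local equations for cubics -/

/-- A family of `w` points supported on two coordinate blocks: the components in either block. -/
abbrev Fam (w β γ : ℕ) := (Fin w → Fin β → ℂ) × (Fin w → Fin γ → ℂ)

/-- The equation of multidegree `(1,1,1)` on three coordinate blocks. -/
def triE {p q s α β γ : ℕ} (a : Fam p α β) (b : Fam q α γ) (c : Fam s β γ)
    (X : Fin p → Fin γ → ℂ) (Y : Fin q → Fin β → ℂ) (Z : Fin s → Fin α → ℂ)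
    (x : Fin α) (y : Fin β) (z : Fin γ) : ℂ :=
  ∑ i, a.1 i x * a.2 i y * X i z + ∑ i, b.1 i x * b.2 i z * Y i y + ∑ i, c.1 i y * c.2 i z * Z i x

/-- The equation of multidegree `(2,1)` on two coordinate blocks. -/
def parE {p α β : ℕ} (a : Fam p α β) (U : Fin p → Fin α → ℂ) (V : Fin p → Fin β → ℂ)
    (x y : Fin α) (z : Fin β) : ℂ :=
  ∑ i, (a.1 i x * a.1 i y * V i z + a.1 i y * a.2 i z * U i x + a.1 i x * a.2 i z * U i y)

/-- The contribution to an equation in `(x, x')` of unknown components `W`. -/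
def addE {p α β : ℕ} (a : Fin p → Fin α → ℂ) (W : Fin p → Fin β → ℂ) (x x' : Fin α) (y : Fin β) : ℂ :=
  ∑ i, a i x * a i x' * W i y

/-- Local condition for three blocks: the equations of multidegree `(1,1,1)` determine the unknowns. -/
def TriC {p q s α β γ : ℕ} (a : Fam p α β) (b : Fam q α γ) (c : Fam s β γ) : Prop :=
  ∀ X Y Z, (∀ x y z, triE a b c X Y Z x y z = 0) → X = 0 ∧ Y = 0 ∧ Z = 0

/-- Local condition for two blocks: the equations of multidegrees `(2,1)` and `(1,2)` determine the unknowns. Equations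
involving a square of a coordinate are dropped, except in the second block at coordinates outside `S`, whose coordinate
points are not among the chosen points. -/
def PairC {p α β : ℕ} (S : Fin β → Prop) (a : Fam p α β) : Prop :=
  ∀ U V, (∀ x x' z, x ≠ x' → parE a U V x x' z = 0) →
    (∀ z z' x, (z = z' → ¬ S z) → parE a.swap V U z z' x = 0) → U = 0 ∧ V = 0

/-- The local equations seen by two blocks of three coordinates and the last block, for the product of the coordinate `z₀`,
a linear form `v` on the first block and the coordinate `k` of the second block. -/
def LocE {w : ℕ} (S : Fin w → Prop) (z₀ : Fin w) (a : Fam 3 3 3) (b c : Fam w 3 w) (v : Fin 3 → ℂ) (k : Fin 3)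
    (X : Fin 3 → Fin w → ℂ) (Y Z : Fin w → Fin 3 → ℂ) (U V : Fin 3 → Fin 3 → ℂ)
    (G : Fin w → Fin 3 → ℂ) (H : Fin w → Fin w → ℂ) : Prop :=
  (∀ x y z, triE a b c X Y Z x y z = if y = k ∧ z = z₀ then v x else 0) ∧
  (∀ x x' y, x ≠ x' → parE a U V x x' y + addE b.1 Y x x' y = 0) ∧
  (∀ y y' x, y ≠ y' → parE a.swap V U y y' x + addE c.1 Z y y' x = 0) ∧
  (∀ x x' z, x ≠ x' → parE b G H x x' z + addE a.1 X x x' z = 0) ∧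
  (∀ z z' x, (z = z' → ¬ S z) → parE b.swap H G z z' x + addE c.2 Z z z' x = 0) ∧
  addE a.1 U 0 1 2 + addE a.1 U 1 2 0 + addE a.1 U 2 0 1 +
    (addE b.1 G 0 1 2 + addE b.1 G 1 2 0 + addE b.1 G 2 0 1) = 0

/-- Local condition for the contact locus: the equations `LocE` for all `k` force `v` and the unknowns to vanish. -/
def LocC {w : ℕ} (S : Fin w → Prop) (z₀ : Fin w) (a : Fam 3 3 3) (b c : Fam w 3 w) : Prop :=
  ∀ (v : Fin 3 → ℂ) (X : Fin 3 → Fin 3 → Fin w → ℂ) (Y Z : Fin 3 → Fin w → Fin 3 → ℂ)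
    (U V : Fin 3 → Fin 3 → Fin 3 → ℂ) (G : Fin 3 → Fin w → Fin 3 → ℂ) (H : Fin 3 → Fin w → Fin w → ℂ),
    (∀ k, LocE S z₀ a b c v k (X k) (Y k) (Z k) (U k) (V k) (G k) (H k)) →
    v = 0 ∧ X = 0 ∧ Y = 0 ∧ Z = 0 ∧ U = 0 ∧ V = 0 ∧ G = 0 ∧ H = 0

section
variable {E : Type} [AddCommGroup E] [Module ℂ E]

theorem PF.entry {p β : ℕ} (g : E →ₗ[ℂ] (Fin p → Fin β → ℂ)) (i : Fin p) (x : Fin β) :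
    PF (M := ℂ) fun e => g e i x :=
  PF.linear (((LinearMap.proj x).comp (LinearMap.proj (R := ℂ) (φ := fun _ : Fin p => Fin β → ℂ) i)).comp g)

theorem PF.triE {p q s α β γ : ℕ} (a : E →ₗ[ℂ] Fam p α β) (b : E →ₗ[ℂ] Fam q α γ) (c : E →ₗ[ℂ] Fam s β γ)
    (X : Fin p → Fin γ → ℂ) (Y : Fin q → Fin β → ℂ) (Z : Fin s → Fin α → ℂ)
    (x : Fin α) (y : Fin β) (z : Fin γ) : PF (M := ℂ) fun e => triE (a e) (b e) (c e) X Y Z x y z := by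
  refine PF.add (PF.add ?_ ?_) ?_ <;> refine PF.sum _ fun i => PF.mul (PF.mul ?_ ?_) (PF.const _)
  · exact PF.entry ((LinearMap.fst ℂ _ _).comp a) i x
  · exact PF.entry ((LinearMap.snd ℂ _ _).comp a) i y
  · exact PF.entry ((LinearMap.fst ℂ _ _).comp b) i x
  · exact PF.entry ((LinearMap.snd ℂ _ _).comp b) i z
  · exact PF.entry ((LinearMap.fst ℂ _ _).comp c) i y
  · exact PF.entry ((LinearMap.snd ℂ _ _).comp c) i z

theorem PF.parE {p α β : ℕ} (a : E →ₗ[ℂ] Fam p α β) (U : Fin p → Fin α → ℂ) (V : Fin p → Fin β → ℂ)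
    (x x' : Fin α) (z : Fin β) : PF (M := ℂ) fun e => parE (a e) U V x x' z := by
  refine PF.sum _ fun i => PF.add (PF.add ?_ ?_) ?_ <;> refine PF.mul (PF.mul ?_ ?_) (PF.const _)
  · exact PF.entry ((LinearMap.fst ℂ _ _).comp a) i x
  · exact PF.entry ((LinearMap.fst ℂ _ _).comp a) i x'
  · exact PF.entry ((LinearMap.fst ℂ _ _).comp a) i x'
  · exact PF.entry ((LinearMap.snd ℂ _ _).comp a) i z
  · exact PF.entry ((LinearMap.fst ℂ _ _).comp a) i x
  · exact PF.entry ((LinearMap.snd ℂ _ _).comp a) i z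

theorem PF.parE' {p α β : ℕ} (a : E →ₗ[ℂ] Fam p α β) (U : Fin p → Fin β → ℂ) (V : Fin p → Fin α → ℂ)
    (x x' : Fin β) (z : Fin α) : PF (M := ℂ) fun e => _root_.parE (a e).swap U V x x' z :=
  PF.parE ((LinearMap.prod (LinearMap.snd ℂ _ _) (LinearMap.fst ℂ _ _)).comp a) U V x x' z

theorem PF.addE {p α β : ℕ} (a : E →ₗ[ℂ] (Fin p → Fin α → ℂ)) (W : Fin p → Fin β → ℂ) (x x' : Fin α) (y : Fin β) :
    PF (M := ℂ) fun e => addE (a e) W x x' y :=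
  PF.sum _ fun i => PF.mul (PF.mul (PF.entry a i x) (PF.entry a i x')) (PF.const _)

end

theorem triE_add {p q s α β γ : ℕ} (a : Fam p α β) (b : Fam q α γ) (c : Fam s β γ)
    (X X' : Fin p → Fin γ → ℂ) (Y Y' : Fin q → Fin β → ℂ) (Z Z' : Fin s → Fin α → ℂ)
    (x : Fin α) (y : Fin β) (z : Fin γ) :
    triE a b c (X + X') (Y + Y') (Z + Z') x y z = triE a b c X Y Z x y z + triE a b c X' Y' Z' x y z := by
  simp only [triE, Pi.add_apply, mul_add, Finset.sum_add_distrib]; ring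

theorem triE_smul {p q s α β γ : ℕ} (a : Fam p α β) (b : Fam q α γ) (c : Fam s β γ) (t : ℂ)
    (X : Fin p → Fin γ → ℂ) (Y : Fin q → Fin β → ℂ) (Z : Fin s → Fin α → ℂ)
    (x : Fin α) (y : Fin β) (z : Fin γ) :
    triE a b c (t • X) (t • Y) (t • Z) x y z = t * triE a b c X Y Z x y z := by
  simp only [triE, Pi.smul_apply, smul_eq_mul, mul_add, Finset.mul_sum]
  congr 1; congr 1
  all_goals exact Finset.sum_congr rfl fun i _ => by ring

theorem parE_add {p α β : ℕ} (a : Fam p α β) (U U' : Fin p → Fin α → ℂ) (V V' : Fin p → Fin β → ℂ)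
    (x x' : Fin α) (z : Fin β) :
    parE a (U + U') (V + V') x x' z = parE a U V x x' z + parE a U' V' x x' z := by
  simp only [parE, ← Finset.sum_add_distrib, Pi.add_apply]
  exact Finset.sum_congr rfl fun i _ => by ring

theorem parE_smul {p α β : ℕ} (a : Fam p α β) (t : ℂ) (U : Fin p → Fin α → ℂ) (V : Fin p → Fin β → ℂ)
    (x x' : Fin α) (z : Fin β) : parE a (t • U) (t • V) x x' z = t * parE a U V x x' z := by
  simp only [parE, Finset.mul_sum, Pi.smul_apply, smul_eq_mul]
  exact Finset.sum_congr rfl fun i _ => by ring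

theorem addE_add {p α β : ℕ} (a : Fin p → Fin α → ℂ) (W W' : Fin p → Fin β → ℂ) (x x' : Fin α) (y : Fin β) :
    addE a (W + W') x x' y = addE a W x x' y + addE a W' x x' y := by
  simp only [addE, ← Finset.sum_add_distrib, Pi.add_apply, mul_add]

theorem addE_smul {p α β : ℕ} (a : Fin p → Fin α → ℂ) (t : ℂ) (W : Fin p → Fin β → ℂ) (x x' : Fin α) (y : Fin β) :
    addE a (t • W) x x' y = t * addE a W x x' y := by
  simp only [addE, Finset.mul_sum, Pi.smul_apply, smul_eq_mul]
  exact Finset.sum_congr rfl fun i _ => by ring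

theorem lo_tri {p q s α β γ : ℕ} :
    LO fun e : Fam p α β × Fam q α γ × Fam s β γ => TriC e.1 e.2.1 e.2.2 := by
  let A : (Fam p α β × Fam q α γ × Fam s β γ) →ₗ[ℂ] Fam p α β := LinearMap.fst ℂ _ _
  let B : (Fam p α β × Fam q α γ × Fam s β γ) →ₗ[ℂ] Fam q α γ := (LinearMap.fst ℂ _ _).comp (LinearMap.snd ℂ _ _)
  let C : (Fam p α β × Fam q α γ × Fam s β γ) →ₗ[ℂ] Fam s β γ := (LinearMap.snd ℂ _ _).comp (LinearMap.snd ℂ _ _)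
  have := LO.inj (E := Fam p α β × Fam q α γ × Fam s β γ)
    (U := (Fin p → Fin γ → ℂ) × (Fin q → Fin β → ℂ) × (Fin s → Fin α → ℂ)) (R := Fin α × Fin β × Fin γ)
    (f := fun e r u => triE e.1 e.2.1 e.2.2 u.1 u.2.1 u.2.2 r.1 r.2.1 r.2.2)
    (fun e r => ⟨fun u v => by simp only [Prod.fst_add, Prod.snd_add, triE_add],
      fun t u => by simp only [Prod.smul_fst, Prod.smul_snd, triE_smul, smul_eq_mul]⟩)
    (fun r u => PF.triE A B C _ _ _ _ _ _)
  convert this using 2 with e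
  simp [TriC, Prod.forall]

theorem lo_pair {p α β : ℕ} (S : Fin β → Prop) : LO fun e : Fam p α β => PairC S e := by
  classical
  have := LO.inj (E := Fam p α β)
    (U := (Fin p → Fin α → ℂ) × (Fin p → Fin β → ℂ)) (R := (Fin α × Fin α × Fin β) ⊕ (Fin β × Fin β × Fin α))
    (f := fun e r u => Sum.elim
      (fun r => if r.1 ≠ r.2.1 then parE e u.1 u.2 r.1 r.2.1 r.2.2 else 0)
      (fun r => if (r.1 = r.2.1 → ¬ S r.1) then parE e.swap u.2 u.1 r.1 r.2.1 r.2.2 else 0) r)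
    (fun e r => by
      rcases r with r | r <;> constructor <;> intros <;> simp only [Sum.elim_inl, Sum.elim_inr] <;> split_ifs <;>
        simp [parE_add, parE_smul])
    (fun r u => by
      rcases r with r | r <;> simp only [Sum.elim_inl, Sum.elim_inr] <;> split_ifs
      · exact PF.parE LinearMap.id _ _ _ _ _
      · exact PF.const _
      · exact PF.parE' LinearMap.id _ _ _ _ _
      · exact PF.const _)
  convert this using 2 with e
  simp only [PairC, Prod.forall, Sum.forall, Sum.elim_inl, Sum.elim_inr, ite_eq_right_iff, Prod.mk_eq_zero, and_imp, ne_eq]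

set_option synthInstance.maxHeartbeats 400000 in
set_option maxHeartbeats 1000000 in
theorem lo_loc {w : ℕ} (S : Fin w → Prop) (z₀ : Fin w) :
    LO fun e : Fam 3 3 3 × Fam w 3 w × Fam w 3 w => LocC S z₀ e.1 e.2.1 e.2.2 := by
  classical
  let A : (Fam 3 3 3 × Fam w 3 w × Fam w 3 w) →ₗ[ℂ] Fam 3 3 3 := LinearMap.fst ℂ _ _
  let B : (Fam 3 3 3 × Fam w 3 w × Fam w 3 w) →ₗ[ℂ] Fam w 3 w := (LinearMap.fst ℂ _ _).comp (LinearMap.snd ℂ _ _)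
  let C : (Fam 3 3 3 × Fam w 3 w × Fam w 3 w) →ₗ[ℂ] Fam w 3 w := (LinearMap.snd ℂ _ _).comp (LinearMap.snd ℂ _ _)
  have := LO.inj (E := Fam 3 3 3 × Fam w 3 w × Fam w 3 w)
    (U := (Fin 3 → ℂ) × (Fin 3 → Fin 3 → Fin w → ℂ) × (Fin 3 → Fin w → Fin 3 → ℂ) × (Fin 3 → Fin w → Fin 3 → ℂ) ×
      (Fin 3 → Fin 3 → Fin 3 → ℂ) × (Fin 3 → Fin 3 → Fin 3 → ℂ) × (Fin 3 → Fin w → Fin 3 → ℂ) × (Fin 3 → Fin w → Fin w → ℂ))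
    (R := Fin 3 × ((Fin 3 × Fin 3 × Fin w) ⊕ (Fin 3 × Fin 3 × Fin 3) ⊕ (Fin 3 × Fin 3 × Fin 3) ⊕
      (Fin 3 × Fin 3 × Fin w) ⊕ (Fin w × Fin w × Fin 3) ⊕ Unit))
    (f := fun e r' u => let k := r'.1; Sum.elim
      (fun r => triE e.1 e.2.1 e.2.2 (u.2.1 k) (u.2.2.1 k) (u.2.2.2.1 k) r.1 r.2.1 r.2.2 +
        if r.2.1 = k ∧ r.2.2 = z₀ then -u.1 r.1 else 0)
      (Sum.elim
      (fun r => if r.1 ≠ r.2.1 then parE e.1 (u.2.2.2.2.1 k) (u.2.2.2.2.2.1 k) r.1 r.2.1 r.2.2 +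
        addE e.2.1.1 (u.2.2.1 k) r.1 r.2.1 r.2.2 else 0)
      (Sum.elim
      (fun r => if r.1 ≠ r.2.1 then parE e.1.swap (u.2.2.2.2.2.1 k) (u.2.2.2.2.1 k) r.1 r.2.1 r.2.2 +
        addE e.2.2.1 (u.2.2.2.1 k) r.1 r.2.1 r.2.2 else 0)
      (Sum.elim
      (fun r => if r.1 ≠ r.2.1 then parE e.2.1 (u.2.2.2.2.2.2.1 k) (u.2.2.2.2.2.2.2 k) r.1 r.2.1 r.2.2 +
        addE e.1.1 (u.2.1 k) r.1 r.2.1 r.2.2 else 0)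
      (Sum.elim
      (fun r => if (r.1 = r.2.1 → ¬ S r.1) then parE e.2.1.swap (u.2.2.2.2.2.2.2 k) (u.2.2.2.2.2.2.1 k) r.1 r.2.1 r.2.2 +
        addE e.2.2.2 (u.2.2.2.1 k) r.1 r.2.1 r.2.2 else 0)
      (fun _ => addE e.1.1 (u.2.2.2.2.1 k) 0 1 2 + addE e.1.1 (u.2.2.2.2.1 k) 1 2 0 + addE e.1.1 (u.2.2.2.2.1 k) 2 0 1 +
        (addE e.2.1.1 (u.2.2.2.2.2.2.1 k) 0 1 2 + addE e.2.1.1 (u.2.2.2.2.2.2.1 k) 1 2 0 +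
          addE e.2.1.1 (u.2.2.2.2.2.2.1 k) 2 0 1)))))) r'.2)
    (fun e r => by
      obtain ⟨k, r⟩ := r
      rcases r with r | r | r | r | r | r <;> constructor <;> intros <;>
        simp only [Sum.elim_inl, Sum.elim_inr, Prod.fst_add, Prod.snd_add, Prod.smul_fst, Prod.smul_snd, Pi.add_apply,
          Pi.smul_apply, triE_add, triE_smul, parE_add, parE_smul, addE_add, addE_smul, smul_eq_mul] <;> (try split_ifs) <;>
        ring)
    (fun r u => by
      obtain ⟨k, r⟩ := r
      rcases r with r | r | r | r | r | r <;> simp only [Sum.elim_inl, Sum.elim_inr]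
      · exact PF.add (PF.triE A B C _ _ _ _ _ _) (PF.const _)
      · split_ifs
        · exact PF.add (PF.parE A _ _ _ _ _) (PF.addE ((LinearMap.fst ℂ _ _).comp B) _ _ _ _)
        · exact PF.const _
      · split_ifs
        · exact PF.add (PF.parE' A _ _ _ _ _) (PF.addE ((LinearMap.fst ℂ _ _).comp C) _ _ _ _)
        · exact PF.const _
      · split_ifs
        · exact PF.add (PF.parE B _ _ _ _ _) (PF.addE ((LinearMap.fst ℂ _ _).comp A) _ _ _ _)
        · exact PF.const _
      · split_ifs
        · exact PF.add (PF.parE' B _ _ _ _ _) (PF.addE ((LinearMap.snd ℂ _ _).comp C) _ _ _ _)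
        · exact PF.const _
      · refine PF.add (PF.add (PF.add ?_ ?_) ?_) (PF.add (PF.add ?_ ?_) ?_)
        iterate 3 exact PF.addE ((LinearMap.fst ℂ _ _).comp A) _ _ _ _
        iterate 3 exact PF.addE ((LinearMap.fst ℂ _ _).comp B) _ _ _ _)
  convert this using 2 with e
  rw [LocC]
  constructor
  · rintro h ⟨v, X, Y, Z, U, V, G, H⟩ hu
    have := h v X Y Z U V G H fun k => by
      refine ⟨fun x y z => ?_, fun x y z hxy => ?_, fun x y z hxy => ?_, fun x y z hxy => ?_, fun x y z hxy => ?_, ?_⟩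
      · have := hu (k, .inl (x, y, z))
        simp only [Sum.elim_inl] at this
        split_ifs at this ⊢ <;> linear_combination this
      · simpa [hxy] using hu (k, .inr (.inl (x, y, z)))
      · simpa [hxy] using hu (k, .inr (.inr (.inl (x, y, z))))
      · simpa [hxy] using hu (k, .inr (.inr (.inr (.inl (x, y, z)))))
      · have := hu (k, .inr (.inr (.inr (.inr (.inl (x, y, z))))))
        simp only [Sum.elim_inl, Sum.elim_inr] at this
        rwa [if_pos hxy] at this
      · exact hu (k, .inr (.inr (.inr (.inr (.inr ())))))
    obtain ⟨h1, h2, h3, h4, h5, h6, h7, h8⟩ := this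
    simp [h1, h2, h3, h4, h5, h6, h7, h8]
  · intro h v X Y Z U V G H hk
    have := h (v, X, Y, Z, U, V, G, H) (by
      rintro ⟨k, r⟩
      obtain ⟨h1, h2, h3, h4, h5, h6⟩ := hk k
      rcases r with r | r | r | r | r | r <;> simp only [Sum.elim_inl, Sum.elim_inr]
      · rw [h1]
        split_ifs <;> simp
      · split_ifs with hh
        · exact h2 _ _ _ hh
        · rfl
      · split_ifs with hh
        · exact h3 _ _ _ hh
        · rfl
      · split_ifs with hh
        · exact h4 _ _ _ hh
        · rfl
      · split_ifs with hh
        · exact h5 _ _ _ hh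
        · rfl
      · exact h6)
    simpa using this

/-! ### Matrices of the local equations -/

/-- Integral version of `Fam`. -/
abbrev FamZ (w β γ : ℕ) := (Fin w → Fin β → ℤ) × (Fin w → Fin γ → ℤ)

/-- The complex family underlying an integral one. -/
def FamZ.cast {w β γ : ℕ} (a : FamZ w β γ) : Fam w β γ := (fun i x => (a.1 i x : ℂ), fun i x => (a.2 i x : ℂ))

/-- The matrix of the system `triE`. -/
def triM {p q s α β γ : ℕ} (a : FamZ p α β) (b : FamZ q α γ) (c : FamZ s β γ) (r : Fin α × Fin β × Fin γ) :
    ((Fin p × Fin γ) ⊕ (Fin q × Fin β)) ⊕ (Fin s × Fin α) → ℤ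
  | .inl (.inl k) => if r.2.2 = k.2 then a.1 k.1 r.1 * a.2 k.1 r.2.1 else 0
  | .inl (.inr k) => if r.2.1 = k.2 then b.1 k.1 r.1 * b.2 k.1 r.2.2 else 0
  | .inr k => if r.1 = k.2 then c.1 k.1 r.2.1 * c.2 k.1 r.2.2 else 0

/-- The matrix of the equations `parE` of multidegrees `(2,1)` and `(1,2)`. -/
def parM {p α β : ℕ} (a : FamZ p α β) :
    ((Fin α × Fin α × Fin β) ⊕ (Fin β × Fin β × Fin α)) → (Fin p × Fin α) ⊕ (Fin p × Fin β) → ℤ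
  | .inl r, .inl k => (if r.1 = k.2 then a.1 k.1 r.2.1 * a.2 k.1 r.2.2 else 0) +
      if r.2.1 = k.2 then a.1 k.1 r.1 * a.2 k.1 r.2.2 else 0
  | .inl r, .inr k => if r.2.2 = k.2 then a.1 k.1 r.1 * a.1 k.1 r.2.1 else 0
  | .inr r, .inl k => if r.2.2 = k.2 then a.2 k.1 r.1 * a.2 k.1 r.2.1 else 0
  | .inr r, .inr k => (if r.1 = k.2 then a.2 k.1 r.2.1 * a.1 k.1 r.2.2 else 0) +
      if r.2.1 = k.2 then a.2 k.1 r.1 * a.1 k.1 r.2.2 else 0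

/-- All pairs of indices. -/
def l2 (p q : ℕ) : List (Fin p × Fin q) := (List.finRange p).flatMap fun i => (List.finRange q).map fun j => (i, j)

/-- All triples of indices. -/
def l3 (p q s : ℕ) : List (Fin p × Fin q × Fin s) := (List.finRange p).flatMap fun i => (l2 q s).map fun j => (i, j)

/-- All the columns of `triM`. -/
def triK (p q s α β γ : ℕ) : List (((Fin p × Fin γ) ⊕ (Fin q × Fin β)) ⊕ (Fin s × Fin α)) :=
  (l2 p γ).map (.inl <| .inl ·) ++ (l2 q β).map (.inl <| .inr ·) ++ (l2 s α).map .inr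

/-- All the columns of `parM`. -/
def parK (p α β : ℕ) : List ((Fin p × Fin α) ⊕ (Fin p × Fin β)) :=
  (l2 p α).map .inl ++ (l2 p β).map .inr

/-- The rows of `parM` that occur in `PairC`. -/
def parR (α β : ℕ) (S : Fin β → Bool) : List ((Fin α × Fin α × Fin β) ⊕ (Fin β × Fin β × Fin α)) :=
  ((l3 α α β).filter fun r => r.1 < r.2.1).map .inl ++
    ((l3 β β α).filter fun r => r.1 < r.2.1 || (r.1 == r.2.1 && !S r.1)).map .inr

instance fact_prime_97 : Fact (Nat.Prime 97) := ⟨by norm_num⟩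

theorem TriC.cert {p q s α β γ : ℕ} (a : FamZ p α β) (b : FamZ q α γ) (c : FamZ s β γ) (N : List (List ℕ))
    (hk : (triK p q s α β γ).Nodup)
    (h : chkL 97 N ((triK p q s α β γ).map fun k => (l3 α β γ).map fun r => (triM a b c r k % 97).toNat) = true) :
    TriC a.cast b.cast c.cast := by
  intro X Y Z hX
  have := _root_.cert 97 (triM a b c) (l3 α β γ) (triK p q s α β γ) hk (by
      rintro ((k | k) | k) <;> simp [triK, l2]) N h
    (Sum.elim (Sum.elim (fun k => X k.1 k.2) (fun k => Y k.1 k.2)) (fun k => Z k.1 k.2)) (by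
      rintro ⟨x, y, z⟩ -
      rw [← hX x y z]
      simp [Fintype.sum_sum_type, Fintype.sum_prod_type, triM, triE, FamZ.cast])
  refine ⟨?_, ?_, ?_⟩ <;> ext i j
  · exact congrFun this (.inl (.inl (i, j)))
  · exact congrFun this (.inl (.inr (i, j)))
  · exact congrFun this (.inr (i, j))

theorem PairC.cert {p α β : ℕ} (S : Fin β → Bool) (a : FamZ p α β) (N : List (List ℕ))
    (hk : (parK p α β).Nodup)
    (h : chkL 97 N ((parK p α β).map fun k => (parR α β S).map fun r => (parM a r k % 97).toNat) = true) :
    PairC (fun z => S z = true) a.cast := by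
  intro U V hU hV
  have := _root_.cert 97 (parM a) (parR α β S) (parK p α β) hk (by
      rintro (k | k) <;> simp [parK, l2]) N h
    (Sum.elim (fun k => U k.1 k.2) (fun k => V k.1 k.2)) (by
      rintro (⟨x, x', z⟩ | ⟨x, x', z⟩) hr
      · have hr' : x < x' := (by simpa [parR] using hr : _ ∧ x < x').2
        rw [← hU x x' z hr'.ne]
        simp [Fintype.sum_sum_type, Fintype.sum_prod_type, parM, parE, FamZ.cast, add_mul, Finset.sum_add_distrib]
        ring
      · have hr' : x < x' ∨ (x = x' ∧ S x = false) := by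
          have := (by simpa [parR] using hr : _ ∧ _)
          exact this.2
        rw [← hV x x' z (by rcases hr' with h | ⟨-, h⟩ <;> intro h'; exact absurd h' h.ne; simp [h])]
        simp [Fintype.sum_sum_type, Fintype.sum_prod_type, parM, parE, FamZ.cast, add_mul, Finset.sum_add_distrib]
        ring)
  refine ⟨?_, ?_⟩ <;> ext i j
  · exact congrFun this (.inl (i, j))
  · exact congrFun this (.inr (i, j))

/-! ### Witnesses for the local conditions -/

/-- The conclusion `v = 0` of `LocC` comes from a functional annihilating all the unknown
components; the rest from injectivity of the separate blocks. -/
theorem LocC.of {w : ℕ} {S : Fin w → Prop} {z₀ : Fin w} {a : Fam 3 3 3} {b c : Fam w 3 w}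
    (hT : TriC a b c) (hP : PairC (fun _ => True) a) (hB : PairC S b) (M : Fin 3 → Fin 3 → ℂ)
    (hM : ∀ v : Fin 3 → ℂ, (∀ k, ∑ x, M x k * v x = 0) → v = 0)
    (hφ : ∀ v k X Y Z U V G H, LocE S z₀ a b c v k X Y Z U V G H →
      ∑ x, ∑ y, M x y * (if y = k then v x else 0) = 0) : LocC S z₀ a b c := by
  intro v X Y Z U V G H h
  have hv : v = 0 := by
    refine hM v fun k => ?_
    have := hφ _ _ _ _ _ _ _ _ _ (h k)
    simpa using this
  subst hv
  have h1 : ∀ k, X k = 0 ∧ Y k = 0 ∧ Z k = 0 := fun k => hT _ _ _ fun x y z => by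
    rw [(h k).1]; simp
  have hX : X = 0 := funext fun k => (h1 k).1
  have hY : Y = 0 := funext fun k => (h1 k).2.1
  have hZ : Z = 0 := funext fun k => (h1 k).2.2
  subst hX hY hZ
  have e0 : ∀ {p α β : ℕ} (a : Fin p → Fin α → ℂ) (x x' : Fin α) (y : Fin β), addE a 0 x x' y = 0 := by
    intros; simp [addE]
  have h2 : ∀ k, U k = 0 ∧ V k = 0 := fun k => hP _ _
    (fun x x' z hx => by have := (h k).2.1 x x' z hx; rwa [Pi.zero_apply, e0, add_zero] at this)
    (fun x x' z hx => by
      have := (h k).2.2.1 x x' z (fun hh => hx hh trivial); rwa [Pi.zero_apply, e0, add_zero] at this)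
  have h3 : ∀ k, G k = 0 ∧ H k = 0 := fun k => hB _ _
    (fun x x' z hx => by have := (h k).2.2.2.1 x x' z hx; rwa [Pi.zero_apply, e0, add_zero] at this)
    (fun x x' z hx => by
      have := (h k).2.2.2.2.1 x x' z hx; rwa [Pi.zero_apply, e0, add_zero] at this)
  exact ⟨rfl, rfl, rfl, rfl, funext fun k => (h2 k).1, funext fun k => (h2 k).2, funext fun k => (h3 k).1,
    funext fun k => (h3 k).2⟩

/-- Witnesses `tA`, `tB`, `tC` for the local condition on three blocks of three coordinates. -/
def tA : FamZ 3 3 3 := (![![-1, 2, 0], ![0, 1, 0], ![1, 0, 0]], ![![1, 1, 0], ![1, 0, -1], ![0, 2, 0]])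
def tB : FamZ 3 3 3 := (![![0, 0, 1], ![0, 1, 2], ![1, 0, 1]], ![![0, 0, 1], ![1, 0, -1], ![1, 0, 2]])
def tC : FamZ 3 3 3 := (![![1, 0, 1], ![1, 2, 0], ![0, 0, 1]], ![![0, 1, 0], ![-1, 2, 0], ![0, 1, 2]])

theorem tri_three : TriC tA.cast tB.cast tC.cast :=
  TriC.cert tA tB tC
    [[17, 57, 16, 0, 0, 0, 89, 40, 77, 1, 0, 0, 8, 77, 8, 1, 0, 0, 48, 0, 0, 0, 12, 0, 48, 0, 0],
    [94, 47, 1, 0, 0, 0, 49, 50, 72, 95, 0, 0, 49, 24, 49, 95, 0, 0, 1, 0, 0, 0, 73, 0, 1, 0, 0],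
    [33, 65, 32, 0, 0, 0, 32, 32, 81, 0, 0, 0, 65, 81, 65, 0, 0, 0, 0, 0, 0, 0, 0, 0, 0, 0, 0],
    [0, 0, 0, 0, 0, 0, 48, 0, 0, 0, 0, 0, 0, 0, 0, 96, 0, 0, 0, 0, 0, 0, 0, 0, 49, 0, 0],
    [86, 43, 36, 0, 0, 0, 18, 54, 70, 1, 49, 73, 42, 21, 42, 1, 48, 73, 36, 0, 0, 0, 9, 0, 36, 0, 0],
    [47, 72, 49, 0, 0, 0, 25, 25, 36, 0, 0, 1, 72, 36, 72, 0, 0, 0, 49, 0, 0, 0, 85, 0, 0, 0, 0],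
    [73, 37, 24, 49, 0, 0, 84, 60, 67, 48, 0, 0, 13, 67, 12, 48, 0, 0, 73, 0, 0, 48, 18, 0, 73, 0, 0],
    [50, 24, 48, 0, 49, 0, 25, 73, 12, 1, 0, 0, 24, 85, 24, 1, 0, 0, 48, 0, 0, 0, 12, 0, 48, 0, 0],
    [3, 50, 47, 0, 0, 49, 47, 47, 25, 0, 0, 0, 50, 25, 48, 0, 0, 0, 0, 0, 0, 96, 48, 0, 0, 0, 0],
    [96, 48, 96, 0, 0, 0, 49, 49, 24, 0, 0, 0, 48, 24, 48, 0, 0, 0, 1, 0, 1, 0, 73, 0, 0, 0, 0],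
    [8, 4, 93, 0, 0, 0, 93, 93, 2, 0, 0, 0, 4, 2, 95, 0, 0, 0, 0, 0, 0, 95, 96, 1, 0, 0, 0],
    [0, 0, 0, 0, 0, 0, 94, 0, 0, 0, 0, 0, 0, 0, 0, 0, 0, 0, 0, 2, 0, 0, 96, 0, 1, 95, 1],
    [16, 8, 16, 0, 0, 0, 89, 89, 4, 0, 0, 0, 8, 4, 8, 0, 0, 0, 49, 0, 0, 0, 85, 0, 0, 0, 0],
    [66, 33, 64, 0, 0, 0, 64, 64, 65, 0, 0, 0, 33, 65, 32, 0, 0, 0, 0, 0, 0, 0, 0, 0, 0, 0, 0],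
    [0, 0, 0, 0, 0, 0, 48, 0, 0, 0, 0, 0, 0, 0, 0, 0, 0, 0, 0, 0, 0, 0, 0, 0, 49, 0, 0],
    [65, 81, 65, 0, 0, 0, 16, 16, 89, 0, 0, 0, 81, 89, 81, 0, 0, 0, 0, 0, 0, 0, 0, 0, 0, 0, 0],
    [62, 31, 66, 0, 0, 0, 66, 66, 64, 0, 0, 0, 31, 64, 33, 0, 0, 0, 0, 0, 0, 1, 49, 0, 0, 0, 0],
    [0, 0, 0, 0, 0, 0, 1, 0, 0, 0, 0, 0, 0, 0, 0, 0, 0, 0, 0, 0, 0, 0, 0, 0, 0, 0, 0],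
    [0, 0, 0, 0, 0, 0, 1, 1, 48, 0, 0, 0, 0, 0, 0, 0, 0, 0, 0, 0, 0, 0, 0, 0, 0, 0, 0],
    [14, 7, 60, 0, 0, 0, 30, 90, 52, 1, 49, 24, 6, 3, 6, 1, 49, 24, 60, 0, 0, 0, 15, 0, 60, 0, 0],
    [0, 0, 0, 0, 0, 0, 0, 0, 0, 0, 0, 0, 0, 0, 0, 0, 0, 0, 0, 1, 0, 0, 48, 0, 0, 0, 0],
    [47, 24, 49, 0, 0, 0, 24, 73, 12, 96, 0, 0, 73, 12, 73, 96, 0, 0, 49, 0, 0, 0, 85, 0, 49, 0, 0],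
    [50, 25, 48, 0, 0, 0, 24, 72, 61, 1, 0, 0, 24, 61, 24, 1, 0, 0, 48, 0, 0, 0, 12, 0, 48, 0, 0],
    [0, 0, 0, 0, 0, 0, 0, 0, 0, 0, 0, 0, 0, 0, 0, 0, 0, 0, 0, 0, 0, 0, 73, 0, 0, 0, 0],
    [0, 0, 0, 0, 0, 0, 96, 0, 49, 0, 0, 0, 0, 0, 0, 0, 0, 0, 0, 0, 0, 0, 0, 0, 0, 0, 0],
    [72, 36, 73, 0, 0, 0, 85, 61, 18, 0, 0, 49, 36, 18, 36, 0, 0, 49, 73, 0, 0, 0, 91, 0, 73, 0, 0],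
    [0, 0, 0, 0, 0, 0, 0, 0, 0, 0, 0, 0, 0, 0, 0, 0, 0, 0, 0, 96, 0, 0, 49, 0, 0, 1, 0]]
    (by decide +kernel) (by decide +kernel)

/-- Witnesses `lA2`, `lB2`, `lC2` for the local conditions involving a last block of two coordinates. -/
def lA2 : FamZ 3 3 3 := (![![0, 1, 2], ![2, 0, -1], ![1, 2, 0]], ![![2, 0, 2], ![0, 1, -1], ![1, 1, 1]])
def lB2 : FamZ 2 3 2 := (![![0, -1, 1], ![-1, 0, 1]], ![![1, 1], ![0, 1]])
def lC2 : FamZ 2 3 2 := (![![-1, -1, 0], ![2, 0, 0]], ![![-1, 1], ![-1, 1]])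

theorem tri_2 : TriC lA2.cast lB2.cast lC2.cast :=
  TriC.cert lA2 lB2 lC2
    [[0, 0, 75, 75, 89, 75, 0, 0, 75, 75, 37, 44, 0, 0, 75, 75, 6, 75],
    [65, 65, 38, 38, 24, 38, 65, 65, 38, 38, 76, 69, 65, 65, 38, 38, 10, 38],
    [0, 0, 7, 7, 48, 7, 0, 0, 7, 7, 14, 83, 0, 0, 7, 7, 90, 7],
    [1, 1, 90, 90, 48, 89, 1, 1, 90, 90, 82, 13, 1, 1, 90, 90, 6, 89],
    [0, 0, 14, 14, 0, 14, 0, 0, 14, 14, 28, 69, 0, 0, 14, 14, 83, 14],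
    [32, 32, 51, 51, 65, 51, 32, 32, 51, 51, 37, 93, 32, 32, 51, 51, 79, 51],
    [0, 0, 81, 81, 81, 81, 48, 48, 81, 81, 81, 81, 0, 0, 81, 81, 81, 81],
    [32, 32, 65, 65, 65, 65, 32, 32, 16, 16, 65, 65, 32, 32, 65, 65, 65, 65],
    [0, 0, 81, 81, 81, 81, 0, 0, 81, 81, 32, 32, 0, 0, 81, 81, 81, 81],
    [31, 31, 65, 65, 65, 65, 32, 32, 65, 65, 65, 65, 32, 32, 65, 65, 65, 65],
    [34, 34, 64, 64, 63, 63, 34, 34, 65, 65, 63, 63, 34, 34, 65, 65, 63, 63],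
    [30, 30, 65, 65, 66, 66, 30, 30, 65, 65, 67, 67, 30, 30, 65, 65, 67, 67],
    [0, 0, 70, 69, 1, 69, 0, 0, 69, 69, 41, 56, 0, 0, 69, 69, 28, 69],
    [32, 32, 37, 37, 65, 37, 32, 32, 86, 85, 9, 24, 32, 32, 37, 37, 93, 37],
    [65, 65, 39, 39, 80, 39, 65, 65, 88, 88, 46, 18, 65, 65, 40, 39, 25, 39],
    [48, 0, 42, 90, 49, 90, 0, 0, 90, 90, 83, 14, 0, 0, 90, 90, 7, 90],
    [16, 16, 67, 67, 81, 67, 40, 89, 43, 91, 29, 36, 16, 16, 67, 67, 95, 67],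
    [81, 81, 16, 16, 16, 16, 8, 8, 89, 89, 89, 89, 32, 81, 65, 16, 65, 16]]
    (by decide +kernel) (by decide +kernel)

theorem pairA_2 : PairC (fun z => (fun _ : Fin 3 => true) z = true) lA2.cast :=
  PairC.cert _ lA2
    [[11, 34, 52, 22, 0, 0, 0, 50, 0, 29, 86, 72, 68, 0, 0, 0, 11, 0],
    [84, 6, 7, 72, 0, 0, 89, 3, 89, 69, 21, 43, 28, 89, 8, 0, 84, 0],
    [94, 80, 20, 41, 0, 0, 81, 10, 81, 1, 68, 11, 96, 32, 89, 0, 94, 0],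
    [56, 12, 29, 14, 32, 65, 0, 23, 0, 41, 57, 6, 24, 0, 0, 32, 40, 31],
    [1, 0, 96, 0, 0, 0, 0, 0, 0, 0, 96, 0, 0, 0, 0, 0, 1, 0],
    [45, 91, 58, 90, 81, 16, 0, 37, 0, 77, 68, 95, 85, 0, 0, 32, 29, 32],
    [73, 53, 36, 50, 0, 0, 0, 42, 0, 24, 40, 60, 41, 0, 0, 0, 89, 0],
    [30, 37, 63, 58, 0, 0, 0, 80, 0, 87, 3, 73, 41, 0, 0, 0, 62, 0],
    [22, 36, 39, 43, 0, 0, 0, 69, 0, 25, 75, 14, 72, 0, 0, 0, 22, 0],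
    [7, 66, 24, 63, 0, 0, 81, 12, 32, 30, 9, 83, 67, 81, 89, 0, 7, 0],
    [27, 61, 9, 54, 0, 0, 0, 77, 0, 72, 70, 83, 25, 0, 0, 0, 27, 0],
    [55, 66, 73, 63, 0, 0, 32, 12, 81, 30, 58, 83, 67, 81, 89, 0, 55, 0],
    [33, 86, 75, 65, 0, 0, 0, 86, 0, 22, 64, 54, 75, 0, 0, 0, 33, 0],
    [28, 6, 63, 56, 16, 32, 0, 60, 0, 69, 77, 2, 12, 0, 0, 16, 20, 65],
    [16, 1, 80, 31, 32, 16, 0, 12, 0, 14, 73, 59, 2, 0, 0, 81, 24, 32],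
    [47, 40, 26, 93, 0, 0, 0, 62, 0, 49, 18, 74, 16, 0, 0, 0, 63, 0],
    [8, 26, 79, 18, 0, 0, 0, 15, 0, 78, 8, 49, 84, 0, 0, 0, 73, 0],
    [96, 40, 74, 93, 0, 0, 0, 62, 0, 49, 17, 74, 16, 0, 0, 0, 64, 0]]
    (by decide +kernel) (by decide +kernel)

theorem pairB_2 : PairC (fun z => (fun z : Fin 2 => z == 0) z = true) lB2.cast :=
  PairC.cert _ lB2
    [[96, 0, 0, 0, 0, 0, 0, 0, 0, 0, 0, 0],
    [65, 65, 0, 0, 65, 65, 33, 65, 33, 0, 0, 0],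
    [33, 32, 0, 0, 32, 32, 65, 33, 65, 0, 0, 0],
    [32, 33, 0, 33, 64, 33, 64, 0, 64, 65, 0, 33],
    [1, 96, 0, 0, 0, 0, 0, 0, 0, 0, 0, 0],
    [64, 65, 0, 64, 32, 65, 32, 0, 32, 33, 0, 65],
    [32, 33, 0, 0, 32, 33, 65, 32, 65, 0, 0, 0],
    [33, 32, 0, 0, 33, 32, 65, 32, 65, 0, 0, 0],
    [96, 0, 0, 0, 0, 0, 96, 0, 0, 0, 0, 0],
    [64, 65, 0, 65, 32, 65, 32, 0, 32, 32, 0, 65]]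
    (by decide +kernel) (by decide +kernel)

theorem loc_2 : LocC (fun z => (fun z : Fin 2 => z == 0) z = true) 0 lA2.cast lB2.cast lC2.cast := by
  refine LocC.of tri_2 (by simpa using pairA_2) pairB_2 ![![-1, 2, 5], ![0, -1, -2], ![0, -1, 1]] ?_ ?_
  · intro v h
    simp [Fin.forall_fin_succ, Fin.sum_univ_succ] at h
    ext i
    fin_cases i <;> simp <;> grind
  · intro v k X Y Z U V G H h
    have e0 := h.2.2.2.2.1 0 1 0 (by decide)
    have e1 := h.2.2.2.1 0 2 0 (by decide)
    have e2 := h.1 0 1 0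
    have e3 := h.1 0 0 0
    have e4 := h.1 0 2 0
    have e5 := h.1 2 1 0
    have e6 := h.1 1 1 0
    have e7 := h.1 1 2 1
    have e8 := h.1 1 2 0
    have e9 := h.1 1 1 1
    have e10 := h.1 2 2 0
    have e11 := h.1 2 2 1
    have e12 := h.1 0 2 1
    have e13 := h.1 2 1 1
    have e14 := h.1 0 1 1
    simp [triE, parE, addE, FamZ.cast, lA2, lB2, lC2, Fin.sum_univ_succ] at e0 e1 e2 e3 e4 e5 e6 e7 e8 e9 e10 e11 e12 e13 e14
    simp only [Fin.sum_univ_three, Matrix.cons_val]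
    linear_combination -((2) * e0 + (-2) * e1 + (2) * e2 + (-1) * e3 + (5) * e4 + (-1) * e5 + (-1) * e6 + (2) * e7 + (-2) * e8 + (-1) * e9 + (1) * e10 + (-1) * e11 + (-1) * e12 + (-1) * e13 + (-1) * e14)

/-- Witnesses `lA3`, `lB3`, `lC3` for the local conditions involving a last block of three coordinates. -/
def lA3 : FamZ 3 3 3 := (![![0, 1, 1], ![-1, 2, 0], ![1, 0, 1]], ![![1, -1, 1], ![1, 0, -1], ![0, 2, 2]])
def lB3 : FamZ 3 3 3 := (![![1, 1, 1], ![1, 0, 2], ![-1, 1, 1]], ![![1, 1, 2], ![-1, 0, 1], ![0, -1, 1]])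
def lC3 : FamZ 3 3 3 := (![![1, 0, 0], ![1, 2, 0], ![1, 0, 0]], ![![1, 2, 1], ![0, 0, -1], ![0, 0, -1]])

theorem tri_3 : TriC lA3.cast lB3.cast lC3.cast :=
  TriC.cert lA3 lB3 lC3
    [[0, 0, 0, 49, 73, 0, 48, 73, 0, 0, 0, 0, 72, 13, 0, 24, 85, 0, 0, 0, 0, 24, 60, 0, 73, 85, 0],
    [0, 0, 0, 1, 48, 0, 96, 49, 0, 0, 0, 0, 49, 24, 0, 48, 73, 0, 0, 0, 0, 48, 24, 0, 49, 73, 0],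
    [0, 0, 0, 45, 74, 0, 50, 71, 95, 0, 0, 0, 72, 15, 0, 25, 84, 96, 0, 0, 0, 26, 59, 0, 73, 87, 2],
    [0, 0, 0, 0, 73, 0, 0, 73, 0, 0, 0, 0, 48, 13, 0, 48, 85, 0, 0, 0, 0, 0, 60, 0, 0, 85, 0],
    [0, 0, 0, 0, 0, 0, 0, 0, 0, 0, 0, 0, 0, 49, 0, 0, 48, 0, 0, 0, 0, 0, 48, 0, 0, 49, 0],
    [0, 0, 0, 95, 25, 0, 1, 24, 96, 0, 0, 0, 48, 87, 0, 49, 12, 96, 0, 0, 0, 1, 35, 0, 0, 13, 1],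
    [0, 0, 0, 49, 24, 0, 49, 24, 0, 0, 0, 0, 73, 84, 0, 73, 12, 0, 0, 0, 0, 24, 37, 0, 24, 12, 0],
    [0, 0, 0, 0, 0, 0, 0, 0, 0, 0, 0, 0, 0, 48, 0, 0, 0, 0, 0, 0, 0, 0, 49, 0, 0, 0, 0],
    [0, 0, 0, 50, 72, 0, 47, 73, 1, 0, 0, 0, 25, 10, 0, 72, 85, 49, 0, 0, 0, 72, 62, 0, 25, 84, 48],
    [1, 48, 0, 0, 96, 0, 0, 48, 0, 50, 72, 0, 2, 22, 0, 1, 72, 0, 48, 73, 0, 0, 74, 0, 0, 73, 0],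
    [0, 0, 0, 49, 73, 0, 48, 73, 0, 0, 0, 0, 73, 13, 0, 24, 85, 0, 0, 0, 0, 24, 60, 0, 73, 85, 0],
    [0, 0, 0, 48, 73, 0, 49, 73, 0, 0, 0, 0, 24, 13, 0, 73, 85, 0, 0, 0, 0, 73, 60, 0, 24, 85, 0],
    [0, 0, 0, 0, 24, 0, 0, 24, 0, 49, 24, 0, 49, 60, 0, 49, 36, 0, 48, 73, 0, 0, 61, 0, 0, 85, 0],
    [0, 0, 0, 49, 24, 0, 49, 24, 0, 0, 0, 0, 25, 84, 0, 73, 12, 0, 0, 0, 0, 72, 37, 0, 24, 12, 0],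
    [0, 0, 0, 49, 0, 0, 49, 0, 0, 0, 0, 0, 24, 0, 0, 73, 0, 0, 0, 0, 0, 24, 0, 0, 72, 0, 0],
    [96, 49, 0, 0, 96, 0, 0, 48, 0, 49, 24, 0, 2, 22, 0, 1, 72, 0, 49, 24, 0, 0, 74, 0, 0, 73, 0],
    [0, 0, 0, 48, 25, 0, 49, 24, 0, 0, 0, 0, 24, 85, 0, 73, 12, 0, 0, 0, 0, 73, 36, 0, 24, 12, 0],
    [0, 0, 0, 49, 24, 0, 48, 25, 0, 0, 0, 0, 73, 36, 0, 24, 61, 0, 0, 0, 0, 24, 85, 0, 73, 60, 0],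
    [0, 49, 0, 0, 1, 0, 0, 49, 0, 96, 49, 0, 95, 51, 0, 96, 49, 0, 0, 0, 0, 0, 47, 0, 0, 0, 0],
    [96, 49, 0, 48, 73, 0, 49, 24, 0, 48, 25, 0, 24, 36, 0, 73, 61, 0, 49, 24, 0, 73, 37, 0, 24, 60, 0],
    [96, 49, 0, 48, 73, 0, 49, 24, 0, 48, 73, 0, 24, 85, 0, 73, 12, 0, 49, 73, 0, 73, 85, 0, 24, 12, 0],
    [0, 0, 0, 51, 96, 48, 95, 49, 1, 0, 0, 0, 50, 71, 0, 96, 73, 49, 0, 0, 0, 47, 74, 0, 1, 72, 48],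
    [0, 0, 0, 2, 0, 0, 96, 1, 1, 0, 0, 0, 49, 48, 48, 48, 49, 49, 0, 0, 0, 96, 0, 0, 0, 96, 96],
    [0, 0, 0, 4, 96, 0, 95, 1, 2, 0, 0, 0, 2, 45, 0, 96, 49, 1, 0, 0, 0, 46, 2, 48, 49, 95, 47],
    [3, 96, 96, 48, 0, 49, 1, 48, 0, 2, 96, 0, 48, 72, 0, 1, 72, 49, 95, 1, 0, 49, 73, 0, 96, 73, 48],
    [0, 0, 0, 87, 0, 0, 5, 92, 92, 3, 96, 96, 52, 49, 49, 54, 45, 45, 0, 0, 0, 5, 0, 0, 0, 5, 5],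
    [0, 0, 0, 89, 96, 0, 4, 92, 93, 4, 95, 0, 4, 47, 0, 6, 44, 95, 96, 1, 96, 53, 1, 49, 48, 5, 52]]
    (by decide +kernel) (by decide +kernel)

theorem pairA_3 : PairC (fun z => (fun _ : Fin 3 => true) z = true) lA3.cast :=
  PairC.cert _ lA3
    [[0, 1, 0, 66, 0, 0, 65, 0, 32, 64, 65, 0, 0, 0, 0, 0, 32, 0],
    [0, 42, 0, 53, 0, 0, 0, 43, 76, 11, 64, 22, 0, 0, 86, 0, 65, 0],
    [0, 11, 0, 86, 0, 0, 0, 10, 43, 75, 65, 54, 0, 0, 22, 0, 65, 0],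
    [81, 76, 16, 55, 0, 0, 49, 76, 27, 11, 81, 86, 32, 32, 86, 0, 48, 0],
    [32, 77, 65, 57, 0, 0, 1, 76, 75, 11, 33, 86, 31, 32, 86, 0, 96, 0],
    [0, 66, 0, 66, 0, 0, 33, 65, 32, 0, 33, 32, 0, 0, 32, 0, 64, 0],
    [0, 53, 0, 26, 81, 81, 32, 86, 54, 78, 48, 92, 0, 0, 11, 89, 49, 16],
    [0, 33, 0, 66, 0, 0, 49, 33, 81, 33, 49, 64, 0, 0, 64, 0, 48, 0],
    [0, 70, 0, 27, 81, 81, 0, 54, 54, 38, 89, 51, 0, 0, 43, 16, 8, 89],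
    [0, 9, 0, 20, 0, 0, 32, 11, 11, 11, 96, 54, 0, 0, 22, 0, 33, 0],
    [0, 84, 0, 7, 0, 0, 96, 85, 54, 20, 31, 45, 0, 0, 77, 0, 34, 0],
    [0, 13, 0, 55, 0, 0, 65, 11, 75, 42, 33, 54, 0, 0, 22, 0, 96, 0],
    [16, 38, 32, 11, 0, 0, 81, 38, 54, 86, 0, 43, 65, 16, 43, 0, 16, 0],
    [0, 32, 0, 33, 0, 0, 65, 33, 65, 1, 65, 64, 0, 0, 64, 0, 32, 0],
    [32, 93, 16, 24, 0, 0, 33, 92, 59, 11, 17, 21, 32, 81, 21, 0, 64, 0],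
    [0, 65, 0, 1, 0, 0, 65, 65, 0, 33, 65, 32, 0, 0, 32, 0, 32, 0],
    [0, 46, 0, 57, 65, 64, 1, 11, 10, 26, 82, 5, 0, 0, 86, 81, 15, 81],
    [0, 75, 0, 53, 64, 65, 32, 43, 11, 92, 16, 70, 0, 0, 54, 81, 81, 81]]
    (by decide +kernel) (by decide +kernel)

theorem pairB_3 : PairC (fun z => (fun _ : Fin 3 => true) z = true) lB3.cast :=
  PairC.cert _ lB3
    [[28, 76, 34, 0, 76, 0, 50, 55, 34, 86, 53, 29, 0, 71, 0, 76, 21, 55],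
    [25, 1, 51, 0, 25, 0, 43, 26, 51, 88, 56, 92, 0, 42, 0, 25, 72, 50],
    [25, 59, 51, 0, 64, 0, 43, 26, 51, 88, 75, 73, 0, 42, 0, 25, 33, 89],
    [50, 25, 75, 16, 17, 81, 2, 42, 59, 64, 80, 92, 32, 42, 65, 17, 64, 50],
    [92, 34, 34, 0, 5, 0, 82, 39, 34, 5, 34, 0, 0, 39, 0, 92, 92, 0],
    [87, 31, 24, 32, 34, 65, 74, 65, 89, 40, 6, 19, 66, 64, 32, 24, 31, 90],
    [56, 53, 57, 0, 27, 0, 9, 48, 89, 89, 19, 87, 0, 64, 0, 73, 37, 68],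
    [14, 90, 33, 0, 91, 0, 9, 19, 1, 35, 9, 24, 0, 3, 0, 46, 38, 73],
    [14, 70, 33, 0, 14, 0, 9, 19, 1, 35, 67, 63, 0, 3, 0, 46, 19, 92],
    [87, 31, 6, 0, 58, 0, 34, 89, 6, 75, 28, 51, 0, 57, 0, 14, 39, 72],
    [32, 42, 0, 0, 71, 0, 65, 16, 0, 81, 20, 29, 0, 32, 0, 81, 26, 55],
    [15, 90, 57, 0, 73, 0, 77, 66, 57, 17, 54, 27, 0, 2, 0, 88, 24, 64],
    [47, 43, 70, 81, 12, 65, 95, 55, 38, 33, 8, 14, 65, 6, 81, 80, 53, 27],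
    [0, 29, 0, 0, 68, 0, 0, 0, 0, 0, 10, 87, 0, 0, 0, 0, 29, 68],
    [1, 54, 75, 65, 85, 81, 2, 42, 59, 64, 41, 34, 32, 91, 16, 17, 93, 21],
    [47, 74, 57, 0, 57, 0, 45, 34, 57, 50, 6, 75, 0, 34, 0, 23, 40, 80],
    [43, 58, 61, 0, 42, 0, 61, 68, 94, 7, 22, 87, 0, 84, 0, 58, 23, 68],
    [61, 47, 90, 0, 22, 0, 54, 5, 58, 36, 25, 41, 0, 37, 0, 21, 10, 75]]
    (by decide +kernel) (by decide +kernel)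

theorem loc_3 : LocC (fun z => (fun _ : Fin 3 => true) z = true) 0 lA3.cast lB3.cast lC3.cast := by
  refine LocC.of tri_3 (by simpa using pairA_3) pairB_3 ![![0, 4, -2], ![-2, -5, -5], ![0, -2, 0]] ?_ ?_
  · intro v h
    simp [Fin.forall_fin_succ, Fin.sum_univ_succ] at h
    ext i
    fin_cases i <;> simp <;> grind
  · intro v k X Y Z U V G H h
    have e0 := h.2.2.2.2.2
    have e1 := h.2.1 0 1 1 (by decide)
    have e2 := h.2.2.1 1 2 1 (by decide)
    have e3 := h.2.2.1 0 1 1 (by decide)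
    have e4 := h.2.1 1 2 0 (by decide)
    have e5 := h.2.1 1 2 2 (by decide)
    have e6 := h.2.2.2.1 0 1 0 (by decide)
    have e7 := h.2.2.2.1 0 1 2 (by decide)
    have e8 := h.2.2.2.1 1 2 1 (by decide)
    have e9 := h.2.2.2.2.1 0 1 1 (by decide)
    have e10 := h.2.2.2.2.1 1 2 1 (by decide)
    have e11 := h.1 1 0 1
    have e12 := h.1 1 1 0
    have e13 := h.1 1 0 0
    have e14 := h.1 1 2 0
    have e15 := h.1 1 1 1
    have e16 := h.1 1 2 1
    have e17 := h.1 1 1 2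
    have e18 := h.1 1 2 2
    have e19 := h.1 2 2 1
    have e20 := h.1 0 2 1
    have e21 := h.1 0 1 0
    have e22 := h.1 2 1 0
    have e23 := h.1 0 2 2
    have e24 := h.1 0 2 0
    have e25 := h.1 2 2 2
    simp [triE, parE, addE, FamZ.cast, lA3, lB3, lC3, Fin.sum_univ_succ] at e0 e1 e2 e3 e4 e5 e6 e7 e8 e9 e10 e11 e12 e13 e14 e15 e16 e17 e18 e19 e20 e21 e22 e23 e24 e25
    simp only [Fin.sum_univ_three, Matrix.cons_val]
    linear_combination -((2) * e0 + (2) * e1 + (-1) * e2 + (1) * e3 + (1) * e4 + (-1) * e5 + (2) * e6 + (-2) * e7 + (-2) * e8 + (-2) * e9 + (2) * e10 + (1) * e11 + (-5) * e12 + (-2) * e13 + (-5) * e14 + (-1) * e15 + (2) * e16 + (1) * e17 + (3) * e18 + (-2) * e19 + (2) * e20 + (4) * e21 + (-2) * e22 + (2) * e23 + (-2) * e24 + (-2) * e25)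

/-- Witnesses `lA4`, `lB4`, `lC4` for the local conditions involving a last block of four coordinates. -/
def lA4 : FamZ 3 3 3 := (![![1, 1, 2], ![2, 2, 0], ![1, 0, -1]], ![![-1, 1, 0], ![-1, 0, 2], ![1, 1, 1]])
def lB4 : FamZ 4 3 4 := (![![2, 0, 2], ![-1, 0, 2], ![2, 1, 0], ![0, 1, 1]], ![![1, 1, 0, 1], ![0, 1, 2, -1], ![0, 1, 0, 1], ![-1, 1, 1, 0]])
def lC4 : FamZ 4 3 4 := (![![-1, 0, 1], ![0, -1, 0], ![-1, 1, -1], ![1, -1, 1]], ![![0, -1, 1, -1], ![1, 2, 0, 0], ![1, 0, 1, 1], ![2, 0, 1, 0]])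

theorem tri_4 : TriC lA4.cast lB4.cast lC4.cast :=
  TriC.cert lA4 lB4 lC4
    [[77, 19, 55, 60, 62, 66, 86, 96, 17, 20, 64, 68, 75, 79, 60, 54, 19, 39, 41, 25, 59, 29, 42, 86, 83, 41, 75, 11, 22, 86, 69, 56, 51, 75, 61, 60],
    [59, 95, 25, 11, 17, 40, 50, 80, 33, 6, 69, 47, 57, 79, 63, 0, 58, 68, 86, 80, 25, 81, 72, 7, 24, 17, 19, 85, 93, 2, 92, 59, 89, 25, 33, 91],
    [18, 68, 30, 2, 45, 26, 36, 16, 81, 64, 92, 68, 18, 50, 94, 4, 58, 68, 52, 42, 34, 92, 67, 32, 11, 72, 7, 23, 26, 84, 74, 94, 10, 2, 77, 66],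
    [45, 38, 46, 77, 83, 7, 7, 32, 0, 92, 37, 14, 92, 87, 33, 71, 0, 0, 17, 19, 20, 19, 51, 60, 55, 94, 30, 79, 82, 56, 9, 31, 88, 84, 51, 13],
    [8, 0, 0, 0, 0, 0, 0, 0, 89, 0, 0, 0, 8, 0, 0, 0, 0, 0, 0, 0, 89, 0, 0, 0, 89, 0, 0, 0, 0, 0, 0, 0, 8, 0, 0, 0],
    [43, 56, 65, 19, 29, 34, 63, 65, 32, 18, 3, 92, 19, 70, 5, 71, 77, 10, 16, 83, 96, 21, 32, 50, 42, 46, 37, 85, 20, 87, 81, 56, 42, 72, 13, 35],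
    [57, 35, 96, 33, 70, 62, 18, 57, 40, 80, 62, 51, 58, 24, 79, 34, 30, 82, 26, 68, 66, 95, 50, 31, 53, 85, 20, 28, 12, 91, 37, 96, 5, 1, 22, 17],
    [50, 4, 6, 18, 93, 2, 36, 89, 0, 7, 19, 28, 50, 82, 20, 68, 9, 44, 2, 65, 50, 36, 91, 88, 75, 40, 80, 7, 74, 60, 74, 70, 91, 10, 4, 58],
    [52, 70, 82, 93, 88, 53, 69, 43, 5, 17, 49, 16, 75, 59, 46, 3, 7, 45, 23, 54, 10, 96, 15, 32, 85, 31, 24, 57, 4, 95, 42, 8, 55, 14, 37, 87],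
    [53, 19, 27, 12, 51, 23, 26, 5, 16, 53, 60, 11, 68, 13, 39, 22, 57, 20, 26, 21, 93, 60, 70, 6, 20, 65, 68, 25, 75, 11, 75, 29, 25, 18, 67, 71],
    [55, 77, 27, 79, 4, 95, 62, 8, 89, 9, 46, 69, 6, 96, 11, 77, 87, 5, 93, 80, 87, 29, 70, 9, 38, 49, 82, 90, 23, 37, 72, 27, 87, 95, 77, 39],
    [24, 65, 48, 10, 47, 25, 49, 89, 91, 36, 59, 50, 78, 84, 71, 57, 24, 85, 51, 75, 57, 87, 49, 32, 92, 48, 64, 52, 59, 19, 25, 52, 11, 59, 67, 44],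
    [29, 12, 43, 68, 25, 36, 22, 73, 81, 47, 3, 90, 66, 41, 71, 90, 53, 22, 84, 51, 15, 28, 54, 86, 48, 47, 52, 39, 8, 93, 56, 56, 79, 52, 57, 39],
    [92, 29, 78, 63, 22, 86, 76, 16, 10, 13, 32, 33, 12, 67, 24, 40, 68, 63, 15, 24, 42, 35, 19, 67, 44, 1, 61, 62, 51, 23, 18, 45, 29, 7, 10, 5],
    [63, 51, 64, 38, 91, 3, 76, 25, 0, 37, 68, 56, 53, 50, 41, 63, 92, 51, 15, 87, 58, 62, 33, 43, 79, 75, 63, 82, 94, 50, 70, 28, 78, 63, 75, 9],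
    [25, 95, 55, 14, 64, 65, 59, 54, 65, 37, 49, 66, 18, 12, 30, 61, 87, 5, 41, 48, 5, 65, 42, 20, 68, 23, 21, 66, 14, 90, 62, 4, 72, 84, 80, 64],
    [70, 21, 41, 73, 26, 84, 42, 59, 8, 9, 91, 38, 4, 80, 59, 23, 10, 92, 64, 10, 29, 90, 56, 10, 8, 24, 43, 95, 27, 35, 40, 60, 69, 55, 91, 15],
    [11, 86, 76, 32, 33, 32, 16, 6, 32, 75, 17, 81, 53, 69, 0, 83, 29, 34, 69, 84, 0, 51, 21, 25, 2, 51, 32, 12, 3, 47, 76, 73, 71, 95, 1, 34],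
    [78, 10, 20, 47, 78, 58, 43, 73, 16, 83, 88, 42, 79, 88, 21, 90, 11, 43, 69, 83, 14, 63, 78, 75, 24, 21, 70, 14, 58, 68, 83, 53, 90, 62, 95, 95],
    [22, 1, 80, 22, 32, 81, 47, 41, 32, 19, 20, 41, 72, 67, 91, 81, 87, 5, 11, 43, 15, 15, 17, 59, 17, 31, 94, 4, 53, 22, 5, 62, 16, 48, 48, 38],
    [24, 39, 53, 87, 74, 60, 75, 23, 17, 64, 88, 0, 70, 12, 15, 27, 88, 53, 82, 72, 30, 10, 43, 57, 28, 34, 37, 79, 91, 3, 41, 40, 93, 29, 41, 88],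
    [67, 6, 29, 35, 18, 88, 54, 73, 32, 47, 57, 22, 67, 26, 27, 86, 87, 5, 28, 61, 35, 66, 68, 87, 72, 60, 27, 51, 38, 78, 14, 93, 7, 3, 2, 83],
    [47, 61, 75, 95, 4, 95, 61, 8, 0, 25, 94, 53, 95, 31, 60, 45, 87, 5, 46, 80, 71, 21, 22, 17, 46, 41, 9, 1, 23, 37, 23, 27, 79, 6, 4, 31],
    [95, 25, 84, 95, 80, 57, 43, 72, 1, 67, 24, 90, 94, 8, 87, 43, 9, 44, 69, 86, 45, 95, 13, 76, 10, 4, 5, 62, 60, 67, 83, 52, 9, 78, 63, 46],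
    [0, 46, 57, 15, 76, 59, 79, 64, 49, 57, 76, 22, 46, 57, 74, 15, 17, 40, 21, 5, 71, 43, 38, 90, 12, 28, 93, 93, 37, 30, 60, 25, 76, 7, 59, 80],
    [0, 94, 9, 64, 76, 59, 79, 64, 49, 9, 27, 70, 46, 9, 25, 63, 17, 40, 21, 5, 71, 91, 87, 42, 12, 28, 93, 93, 37, 30, 60, 25, 76, 7, 59, 80],
    [93, 86, 46, 29, 83, 7, 7, 32, 49, 44, 37, 62, 44, 39, 33, 22, 0, 0, 17, 19, 68, 67, 51, 12, 55, 94, 30, 31, 82, 56, 9, 31, 88, 84, 51, 61],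
    [38, 28, 18, 60, 75, 59, 43, 70, 14, 57, 71, 84, 96, 43, 88, 72, 62, 66, 50, 64, 53, 27, 79, 79, 79, 61, 80, 25, 29, 34, 38, 24, 19, 49, 14, 68],
    [64, 30, 90, 64, 75, 11, 79, 16, 81, 25, 43, 22, 15, 40, 10, 63, 19, 87, 23, 53, 7, 10, 7, 90, 92, 93, 61, 45, 36, 79, 60, 74, 92, 88, 91, 80],
    [24, 69, 71, 43, 90, 52, 40, 11, 43, 14, 15, 42, 38, 41, 11, 26, 54, 70, 78, 95, 85, 41, 26, 41, 89, 30, 45, 36, 48, 24, 27, 66, 20, 81, 54, 91],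
    [21, 10, 34, 58, 27, 35, 44, 95, 11, 90, 0, 41, 46, 63, 92, 92, 44, 75, 10, 53, 71, 92, 63, 34, 14, 61, 38, 30, 12, 91, 74, 31, 33, 80, 63, 36],
    [30, 58, 68, 95, 79, 9, 43, 24, 65, 83, 40, 42, 30, 40, 70, 42, 10, 92, 69, 36, 62, 63, 29, 75, 25, 69, 70, 14, 59, 19, 83, 4, 90, 62, 95, 46],
    [84, 70, 76, 70, 83, 7, 64, 14, 87, 38, 6, 32, 72, 33, 75, 75, 5, 46, 18, 9, 88, 62, 21, 89, 7, 3, 65, 57, 41, 28, 51, 21, 12, 84, 30, 38],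
    [51, 16, 9, 90, 24, 85, 57, 1, 68, 48, 53, 5, 62, 49, 79, 30, 72, 61, 27, 58, 37, 33, 88, 55, 47, 37, 41, 50, 7, 45, 43, 32, 89, 67, 35, 14],
    [95, 90, 76, 95, 31, 33, 43, 48, 49, 75, 32, 66, 46, 24, 30, 91, 58, 68, 69, 61, 70, 79, 21, 27, 82, 85, 86, 38, 11, 43, 83, 28, 82, 70, 79, 46],
    [4, 80, 57, 91, 83, 7, 12, 88, 95, 24, 20, 13, 19, 0, 63, 46, 64, 65, 40, 36, 62, 16, 40, 7, 69, 41, 81, 6, 7, 45, 18, 61, 9, 25, 87, 28]]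
    (by decide +kernel) (by decide +kernel)

theorem pairA_4 : PairC (fun z => (fun _ : Fin 3 => true) z = true) lA4.cast :=
  PairC.cert _ lA4
    [[0, 17, 0, 52, 51, 91, 61, 70, 88, 14, 35, 8, 0, 0, 51, 83, 70, 38],
    [0, 17, 0, 20, 51, 26, 93, 70, 56, 79, 67, 8, 0, 0, 51, 18, 38, 38],
    [0, 58, 0, 54, 10, 33, 75, 26, 85, 67, 57, 3, 0, 0, 10, 30, 71, 84],
    [16, 21, 89, 28, 28, 41, 61, 10, 74, 5, 0, 46, 16, 65, 44, 76, 51, 7],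
    [16, 21, 89, 44, 76, 74, 45, 59, 41, 69, 33, 46, 65, 16, 44, 60, 67, 7],
    [0, 55, 0, 36, 74, 84, 61, 44, 26, 34, 21, 21, 0, 0, 74, 63, 55, 2],
    [0, 40, 0, 94, 93, 71, 3, 81, 8, 38, 2, 77, 0, 0, 61, 27, 50, 89],
    [0, 68, 0, 27, 76, 91, 70, 84, 44, 69, 96, 63, 0, 0, 76, 28, 35, 55],
    [0, 83, 0, 50, 9, 71, 47, 95, 95, 1, 82, 7, 0, 0, 41, 32, 72, 17],
    [0, 38, 0, 48, 71, 75, 33, 72, 1, 84, 19, 62, 0, 0, 71, 13, 49, 61],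
    [0, 85, 0, 15, 79, 3, 50, 8, 69, 19, 1, 22, 0, 0, 79, 78, 41, 93],
    [0, 21, 0, 87, 84, 23, 10, 51, 19, 15, 6, 38, 0, 0, 84, 82, 53, 72],
    [89, 3, 89, 11, 65, 21, 90, 79, 58, 22, 86, 43, 89, 89, 57, 83, 65, 94],
    [0, 2, 0, 20, 57, 20, 77, 39, 57, 76, 23, 96, 0, 0, 57, 21, 51, 41],
    [65, 57, 89, 45, 50, 2, 68, 67, 39, 2, 87, 4, 16, 16, 66, 79, 54, 27],
    [0, 14, 0, 15, 89, 58, 82, 1, 67, 65, 46, 90, 0, 0, 56, 0, 90, 80],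
    [0, 14, 0, 47, 88, 27, 50, 2, 1, 96, 15, 90, 0, 0, 56, 66, 24, 80],
    [0, 14, 0, 80, 89, 90, 17, 1, 35, 32, 79, 90, 0, 0, 56, 33, 57, 80]]
    (by decide +kernel) (by decide +kernel)

theorem pairB_4 : PairC (fun z => (fun _ : Fin 4 => true) z = true) lB4.cast :=
  PairC.cert _ lB4
    [[48, 0, 33, 0, 38, 8, 54, 19, 33, 32, 1, 0, 39, 65, 31, 73, 35, 30, 26, 0, 22, 6, 3, 61, 0, 0, 11, 6, 4, 7],
    [0, 0, 0, 0, 0, 0, 0, 0, 49, 0, 49, 0, 49, 0, 48, 48, 48, 49, 48, 0, 49, 0, 48, 0, 0, 0, 0, 0, 49, 0],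
    [1, 0, 30, 0, 37, 58, 53, 67, 32, 32, 0, 0, 36, 64, 33, 90, 53, 12, 28, 0, 23, 23, 20, 45, 0, 0, 9, 23, 22, 89],
    [89, 0, 34, 0, 76, 72, 68, 46, 0, 0, 0, 0, 11, 16, 81, 83, 72, 25, 86, 0, 58, 85, 88, 9, 0, 0, 55, 4, 54, 46],
    [49, 0, 49, 0, 0, 0, 0, 0, 0, 0, 0, 0, 96, 96, 1, 1, 1, 96, 1, 0, 96, 0, 0, 0, 0, 0, 0, 0, 96, 0],
    [65, 0, 31, 0, 91, 25, 10, 78, 0, 0, 0, 0, 26, 64, 33, 94, 67, 30, 71, 0, 76, 16, 34, 63, 0, 0, 85, 80, 3, 85],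
    [25, 65, 30, 65, 64, 74, 88, 56, 64, 65, 96, 0, 94, 80, 18, 18, 50, 79, 35, 0, 16, 41, 33, 0, 65, 31, 63, 57, 2, 17],
    [72, 81, 18, 81, 33, 23, 9, 41, 81, 32, 49, 0, 51, 17, 31, 31, 96, 66, 14, 0, 32, 56, 16, 0, 32, 65, 34, 40, 47, 80],
    [0, 0, 3, 0, 1, 47, 1, 49, 96, 1, 95, 0, 96, 0, 2, 2, 1, 95, 1, 0, 93, 48, 1, 0, 0, 0, 2, 48, 92, 96],
    [1, 0, 93, 0, 95, 3, 95, 96, 0, 0, 0, 0, 93, 95, 2, 2, 2, 95, 4, 0, 2, 1, 0, 0, 0, 0, 93, 1, 4, 2],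
    [33, 0, 95, 0, 31, 2, 31, 64, 0, 0, 33, 0, 30, 31, 1, 45, 44, 21, 67, 0, 34, 11, 43, 86, 0, 0, 62, 11, 14, 55],
    [31, 0, 0, 0, 33, 96, 33, 65, 0, 0, 33, 0, 36, 35, 94, 72, 73, 89, 61, 0, 34, 43, 75, 54, 0, 0, 66, 43, 44, 21],
    [24, 0, 65, 0, 3, 40, 11, 62, 16, 65, 48, 0, 27, 81, 65, 18, 88, 41, 54, 0, 91, 53, 72, 9, 0, 0, 22, 53, 71, 95],
    [24, 0, 16, 0, 43, 4, 27, 58, 65, 16, 49, 0, 20, 81, 64, 44, 74, 7, 61, 0, 60, 84, 58, 71, 0, 0, 54, 84, 59, 44],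
    [0, 0, 96, 0, 32, 49, 32, 16, 0, 0, 0, 0, 32, 0, 0, 54, 70, 27, 65, 0, 33, 38, 70, 27, 0, 0, 64, 38, 71, 92],
    [24, 0, 17, 0, 11, 52, 92, 42, 65, 16, 49, 0, 36, 81, 64, 39, 4, 77, 45, 0, 27, 46, 85, 44, 0, 0, 87, 46, 85, 49],
    [48, 0, 1, 0, 33, 96, 33, 65, 0, 0, 0, 0, 34, 1, 96, 4, 69, 28, 63, 0, 32, 86, 70, 27, 0, 0, 66, 86, 69, 91],
    [57, 0, 66, 0, 46, 36, 30, 15, 0, 0, 0, 0, 13, 80, 17, 96, 34, 63, 84, 0, 85, 80, 17, 80, 0, 0, 92, 64, 48, 42],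
    [65, 0, 33, 0, 27, 73, 43, 94, 0, 0, 0, 0, 58, 64, 33, 84, 24, 73, 39, 0, 10, 85, 88, 9, 0, 0, 54, 53, 55, 95],
    [89, 0, 33, 0, 19, 12, 35, 66, 0, 0, 0, 0, 51, 16, 81, 13, 10, 87, 46, 0, 75, 92, 26, 71, 0, 0, 38, 11, 90, 44],
    [1, 0, 95, 0, 96, 50, 96, 48, 48, 0, 48, 0, 46, 96, 50, 50, 50, 47, 51, 0, 49, 49, 49, 0, 0, 0, 95, 49, 50, 1],
    [85, 81, 42, 32, 33, 84, 45, 77, 32, 81, 48, 0, 0, 89, 57, 57, 73, 40, 16, 0, 55, 20, 65, 0, 81, 65, 82, 28, 46, 56],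
    [0, 0, 3, 0, 1, 47, 1, 49, 0, 0, 0, 0, 1, 0, 0, 0, 0, 0, 96, 0, 95, 48, 0, 0, 0, 0, 2, 48, 94, 96],
    [85, 32, 88, 81, 32, 37, 44, 28, 32, 81, 48, 0, 96, 89, 57, 57, 73, 40, 17, 0, 57, 69, 65, 0, 81, 65, 80, 77, 49, 57],
    [64, 0, 95, 0, 64, 1, 64, 32, 0, 0, 65, 0, 65, 66, 96, 21, 21, 12, 32, 0, 67, 54, 22, 43, 0, 0, 31, 54, 57, 76],
    [32, 0, 95, 0, 32, 49, 32, 16, 0, 0, 32, 0, 33, 33, 96, 74, 75, 87, 64, 0, 34, 92, 76, 54, 0, 0, 64, 92, 45, 22],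
    [31, 0, 0, 0, 33, 96, 33, 65, 0, 0, 32, 0, 35, 35, 95, 73, 73, 88, 62, 0, 33, 43, 76, 54, 0, 0, 66, 43, 43, 21],
    [1, 0, 95, 0, 96, 50, 96, 48, 0, 0, 0, 0, 94, 95, 2, 2, 2, 95, 3, 0, 0, 49, 0, 0, 0, 0, 95, 49, 2, 1]]
    (by decide +kernel) (by decide +kernel)

theorem loc_4 : LocC (fun z => (fun _ : Fin 4 => true) z = true) 0 lA4.cast lB4.cast lC4.cast := by
  refine LocC.of tri_4 (by simpa using pairA_4) pairB_4 ![![-4, -6, -2], ![-10, -6, -5], ![-5, -6, -1]] ?_ ?_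
  · intro v h
    simp [Fin.forall_fin_succ, Fin.sum_univ_succ] at h
    ext i
    fin_cases i <;> simp <;> grind
  · intro v k X Y Z U V G H h
    have e0 := h.2.2.2.2.1 0 3 1 (by decide)
    have e1 := h.2.2.2.2.1 0 2 1 (by decide)
    have e2 := h.2.2.2.2.1 0 1 1 (by decide)
    have e3 := h.2.2.2.1 1 2 3 (by decide)
    have e4 := h.2.2.2.1 1 2 1 (by decide)
    have e5 := h.2.2.2.1 1 2 2 (by decide)
    have e6 := h.1 1 1 2
    have e7 := h.1 1 2 1
    have e8 := h.1 1 2 0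
    have e9 := h.1 1 0 0
    have e10 := h.1 1 1 0
    have e11 := h.1 1 0 3
    have e12 := h.1 1 0 1
    have e13 := h.1 2 1 3
    have e14 := h.1 0 1 0
    have e15 := h.1 0 1 1
    have e16 := h.1 1 1 1
    have e17 := h.1 2 0 1
    have e18 := h.1 2 0 2
    have e19 := h.1 2 1 0
    have e20 := h.1 1 1 3
    have e21 := h.1 0 1 3
    have e22 := h.1 0 0 1
    have e23 := h.1 1 2 2
    have e24 := h.1 1 0 2
    have e25 := h.1 0 2 3
    have e26 := h.1 0 2 1
    have e27 := h.1 0 0 2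
    have e28 := h.1 0 2 2
    have e29 := h.1 2 1 1
    have e30 := h.1 0 0 0
    have e31 := h.1 0 2 0
    have e32 := h.1 2 0 3
    have e33 := h.1 2 0 0
    have e34 := h.1 2 2 0
    have e35 := h.1 2 2 1
    have e36 := h.1 2 2 2
    simp [triE, parE, addE, FamZ.cast, lA4, lB4, lC4, Fin.sum_univ_succ] at e0 e1 e2 e3 e4 e5 e6 e7 e8 e9 e10 e11 e12 e13 e14 e15 e16 e17 e18 e19 e20 e21 e22 e23 e24 e25 e26 e27 e28 e29 e30 e31 e32 e33 e34 e35 e36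
    simp only [Fin.sum_univ_three, Matrix.cons_val]
    linear_combination -((6) * e0 + (6) * e1 + (-6) * e2 + (6) * e3 + (-6) * e4 + (6) * e5 + (-12) * e6 + (-4) * e7 + (-5) * e8 + (-10) * e9 + (-6) * e10 + (6) * e11 + (-14) * e12 + (3) * e13 + (-6) * e14 + (3) * e15 + (-3) * e16 + (2) * e17 + (2) * e18 + (-6) * e19 + (-9) * e20 + (3) * e21 + (4) * e22 + (-1) * e23 + (-5) * e24 + (3) * e25 + (-1) * e26 + (1) * e27 + (-1) * e28 + (3) * e29 + (-4) * e30 + (-2) * e31 + (3) * e32 + (-5) * e33 + (-1) * e34 + (1) * e35 + (-2) * e36)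

/-! ### Block decomposition of cubics -/

/-- Coordinates: `m` blocks of three coordinates, and a last block of `w` coordinates. -/
abbrev Ix (m w : ℕ) := (Fin m × Fin 3) ⊕ Fin w

section
variable {m w : ℕ}

/-- The `q`-th point attached to a pair `s` of blocks. -/
def vA (A : Fin m → Sym2 (Fin m) → Fin 3 → Fin 3 → ℂ) (s : Sym2 (Fin m)) (q : Fin 3) : Ix m w → ℂ :=
  Sum.elim (fun p => if p.1 ∈ s then A p.1 s q p.2 else 0) 0

/-- The `q`-th point attached to the block `i` and the last block. -/
def vB (B : Fin m → Fin w → Fin 3 → ℂ) (C : Fin m → Fin w → Fin w → ℂ) (i : Fin m) (q : Fin w) : Ix m w → ℂ :=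
  Sum.elim (fun p => if p.1 = i then B i q p.2 else 0) (C i q)

/-- The trilinear sum over all points of products of two coordinates of the point and one coordinate of
its unknown; `mE`, `P`, `Q` are the unknowns at the coordinate points, at the points of pairs of blocks
and at the points of a block with the last block. -/
def TT (A : Fin m → Sym2 (Fin m) → Fin 3 → Fin 3 → ℂ) (B : Fin m → Fin w → Fin 3 → ℂ) (C : Fin m → Fin w → Fin w → ℂ)
    (mE : Ix m w → Ix m w → ℂ) (P : Sym2 (Fin m) → Fin 3 → Ix m w → ℂ) (Q : Fin m → Fin w → Ix m w → ℂ)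
    (X Y Z : Ix m w) : ℂ :=
  (if X = Y then mE X Z else 0) + ∑ s, ∑ q, vA A s q X * vA A s q Y * P s q Z +
    ∑ i, ∑ q, vB B C i q X * vB B C i q Y * Q i q Z

variable {A : Fin m → Sym2 (Fin m) → Fin 3 → Fin 3 → ℂ} {B : Fin m → Fin w → Fin 3 → ℂ} {C : Fin m → Fin w → Fin w → ℂ}
  {mE : Ix m w → Ix m w → ℂ} {P : Sym2 (Fin m) → Fin 3 → Ix m w → ℂ} {Q : Fin m → Fin w → Ix m w → ℂ}
  {R : Ix m w → Ix m w → Ix m w → ℂ} {S : Fin w → Prop}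

theorem TT.comm (X Y Z : Ix m w) : TT A B C mE P Q X Y Z = TT A B C mE P Q Y X Z := by
  unfold TT
  congr 1
  · congr 1
    · by_cases h : X = Y
      · subst h; rfl
      · rw [if_neg h, if_neg (Ne.symm h)]
    · exact Finset.sum_congr rfl fun s _ => Finset.sum_congr rfl fun q _ => by ring
  · exact Finset.sum_congr rfl fun s _ => Finset.sum_congr rfl fun q _ => by ring

theorem TT.ij {i j : Fin m} (h : i ≠ j) (x y : Fin 3) (Z : Ix m w) :
    TT A B C mE P Q (.inl (i,x)) (.inl (j,y)) Z = ∑ q, A i s(i,j) q x * A j s(i,j) q y * P s(i,j) q Z := by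
  unfold TT
  rw [if_neg (by simp [h]), Finset.sum_eq_single s(i,j), Finset.sum_eq_zero (s := Finset.univ (α := Fin m))]
  · simp [vA]
  · intro l _
    refine Finset.sum_eq_zero fun q _ => ?_
    simp only [vB, Sum.elim_inl]
    by_cases h1 : i = l
    · rw [if_neg (fun h2 : j = l => h (h1.trans h2.symm))]; simp
    · rw [if_neg h1]; simp
  · intro s _ hs
    refine Finset.sum_eq_zero fun q _ => ?_
    simp only [vA, Sum.elim_inl]
    by_cases h1 : i ∈ s
    · rw [if_neg (fun h2 : j ∈ s => hs ((Sym2.mem_and_mem_iff h).1 ⟨h1, h2⟩))]; simp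
    · rw [if_neg h1]; simp
  · simp

theorem TT.iW (i : Fin m) (x : Fin 3) (z : Fin w) (Z : Ix m w) :
    TT A B C mE P Q (.inl (i,x)) (.inr z) Z = ∑ q, B i q x * C i q z * Q i q Z := by
  unfold TT
  rw [if_neg (by simp), Finset.sum_eq_zero (s := Finset.univ (α := Sym2 (Fin m))), Finset.sum_eq_single i]
  · simp [vB]
  · intro l _ hl
    refine Finset.sum_eq_zero fun q _ => ?_
    simp [vB, hl.symm]
  · simp
  · intro s _
    refine Finset.sum_eq_zero fun q _ => ?_
    simp [vA]

theorem TT.WW (z z' : Fin w) (Z : Ix m w) :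
    TT A B C mE P Q (.inr z) (.inr z') Z = (if z = z' then mE (.inr z) Z else 0) +
      ∑ i, ∑ q, C i q z * C i q z' * Q i q Z := by
  unfold TT
  rw [Finset.sum_eq_zero (s := Finset.univ (α := Sym2 (Fin m)))]
  · simp [vB]
  · intro s _
    refine Finset.sum_eq_zero fun q _ => ?_
    simp [vA]

theorem TT.ii (i : Fin m) (x x' : Fin 3) (Z : Ix m w) :
    TT A B C mE P Q (.inl (i,x)) (.inl (i,x')) Z = (if x = x' then mE (.inl (i,x)) Z else 0) +
      ∑ s, (if i ∈ s then ∑ q, A i s q x * A i s q x' * P s q Z else 0) + ∑ q, B i q x * B i q x' * Q i q Z := by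
  unfold TT
  congr 1
  · congr 1
    · simp
    · refine Finset.sum_congr rfl fun s _ => ?_
      split_ifs with h <;> simp [vA, h]
  · rw [Finset.sum_eq_single i]
    · simp [vB]
    · intro l _ hl
      refine Finset.sum_eq_zero fun q _ => ?_
      simp [vB, hl.symm]
    · simp

/-- The equations satisfied by the unknowns. -/
def EqT (A : Fin m → Sym2 (Fin m) → Fin 3 → Fin 3 → ℂ) (B : Fin m → Fin w → Fin 3 → ℂ) (C : Fin m → Fin w → Fin w → ℂ)
    (mE : Ix m w → Ix m w → ℂ) (P : Sym2 (Fin m) → Fin 3 → Ix m w → ℂ) (Q : Fin m → Fin w → Ix m w → ℂ)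
    (R : Ix m w → Ix m w → Ix m w → ℂ) : Prop :=
  ∀ X Y Z, TT A B C mE P Q X Y Z + TT A B C mE P Q X Z Y + TT A B C mE P Q Y Z X = R X Y Z

theorem eq_ijk (h : EqT A B C mE P Q R) {i j k : Fin m} (hij : i ≠ j) (hik : i ≠ k) (hjk : j ≠ k) (x y z : Fin 3) :
    triE (A i s(i,j), A j s(i,j)) (A i s(i,k), A k s(i,k)) (A j s(j,k), A k s(j,k))
      (fun q z => P s(i,j) q (.inl (k,z))) (fun q y => P s(i,k) q (.inl (j,y))) (fun q x => P s(j,k) q (.inl (i,x)))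
      x y z = R (.inl (i,x)) (.inl (j,y)) (.inl (k,z)) := by
  rw [← h, TT.ij hij, TT.ij hik, TT.ij hjk]; rfl

theorem eq_ijW (h : EqT A B C mE P Q R) {i j : Fin m} (hij : i ≠ j) (x y : Fin 3) (z : Fin w) :
    triE (A i s(i,j), A j s(i,j)) (B i, C i) (B j, C j)
      (fun q z => P s(i,j) q (.inr z)) (fun q y => Q i q (.inl (j,y))) (fun q x => Q j q (.inl (i,x)))
      x y z = R (.inl (i,x)) (.inl (j,y)) (.inr z) := by
  rw [← h, TT.ij hij, TT.iW, TT.iW]; rfl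

theorem eq_iij (h : EqT A B C mE P Q R) {i j : Fin m} (hij : i ≠ j) {x x' : Fin 3} (hx : x ≠ x') (y : Fin 3)
    (hP : ∀ s q, j ∉ s → P s q (.inl (j,y)) = 0) :
    parE (A i s(i,j), A j s(i,j)) (fun q x => P s(i,j) q (.inl (i,x))) (fun q x => P s(i,j) q (.inl (j,x))) x x' y
      + addE (B i) (fun q y => Q i q (.inl (j,y))) x x' y = R (.inl (i,x)) (.inl (i,x')) (.inl (j,y)) := by
  rw [← h, TT.ij hij, TT.ij hij, TT.ii, if_neg hx, Finset.sum_eq_single s(i,j)]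
  · simp only [parE, addE, Finset.sum_add_distrib, Sym2.mem_mk_left, if_true]
    ring
  · intro s _ hs
    split_ifs with hi
    · refine Finset.sum_eq_zero fun q _ => ?_
      rw [hP s q fun hj => hs ((Sym2.mem_and_mem_iff hij).1 ⟨hi, hj⟩), mul_zero]
    · rfl
  · simp

theorem eq_iiW (h : EqT A B C mE P Q R) {i : Fin m} {x x' : Fin 3} (hx : x ≠ x') (z : Fin w) :
    parE (B i, C i) (fun q x => Q i q (.inl (i,x))) (fun q x => Q i q (.inr x)) x x' z
      + ∑ s, (if i ∈ s then addE (A i s) (fun q z => P s q (.inr z)) x x' z else 0)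
        = R (.inl (i,x)) (.inl (i,x')) (.inr z) := by
  rw [← h, TT.iW, TT.iW, TT.ii, if_neg hx]
  simp only [parE, addE, Finset.sum_add_distrib]
  ring

theorem eq_iWW (h : EqT A B C mE P Q R) {i : Fin m} {z z' : Fin w} (hz : z = z' → ¬ S z) (x : Fin 3)
    (hm : ∀ z Z, ¬ S z → mE (.inr z) Z = 0) :
    parE (B i, C i).swap (fun q x => Q i q (.inr x)) (fun q x => Q i q (.inl (i,x))) z z' x
      + ∑ l, (if l = i then 0 else addE (C l) (fun q x => Q l q (.inl (i,x))) z z' x)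
        = R (.inl (i,x)) (.inr z) (.inr z') := by
  rw [← h, TT.iW, TT.iW, TT.WW]
  have h1 : (if z = z' then mE (.inr z) (.inl (i,x)) else 0) = 0 := by
    split_ifs with hzz
    · exact hm _ _ (hz hzz)
    · rfl
  rw [h1, ← Finset.add_sum_erase _ _ (Finset.mem_univ i), ← Finset.add_sum_erase _ _ (Finset.mem_univ i),
    Finset.sum_congr rfl (g := fun l => addE (C l) (fun q x => Q l q (.inl (i,x))) z z' x)
      (fun l hl => if_neg (Finset.ne_of_mem_erase hl))]
  simp only [parE, addE, Finset.sum_add_distrib, if_true, Prod.swap]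
  simp only [mul_comm (C i _ _) (B i _ _)]
  ring

theorem eq_iii (h : EqT A B C mE P Q R) {i : Fin m} :
    (∑ s, if i ∈ s then addE (A i s) (fun q x => P s q (.inl (i,x))) 0 1 2 +
        addE (A i s) (fun q x => P s q (.inl (i,x))) 1 2 0 + addE (A i s) (fun q x => P s q (.inl (i,x))) 2 0 1 else 0) +
      (addE (B i) (fun q x => Q i q (.inl (i,x))) 0 1 2 + addE (B i) (fun q x => Q i q (.inl (i,x))) 1 2 0 +
        addE (B i) (fun q x => Q i q (.inl (i,x))) 2 0 1) = R (.inl (i,0)) (.inl (i,1)) (.inl (i,2)) := by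
  rw [← h, TT.comm (.inl (i,0)) (.inl (i,2)), TT.ii, TT.ii, TT.ii]
  simp only [addE, show ((0 : Fin 3) = 1) = False by decide, show ((2 : Fin 3) = 0) = False by decide,
    show ((1 : Fin 3) = 2) = False by decide, if_false, zero_add, ← ite_add_zero, Finset.sum_add_distrib]
  simp only [ite_add_zero, Finset.sum_add_distrib]
  ring

end

/-! ### Global independence from local conditions -/

section
variable {m w : ℕ}

/-- All the local nondegeneracy conditions. -/
def Glob (S : Fin w → Prop) (z₀ : Fin w) (A : Fin m → Sym2 (Fin m) → Fin 3 → Fin 3 → ℂ) (B : Fin m → Fin w → Fin 3 → ℂ)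
    (C : Fin m → Fin w → Fin w → ℂ) : Prop :=
  (∀ i j k : Fin m, i ≠ j ∧ i ≠ k ∧ j ≠ k →
    TriC (A i s(i,j), A j s(i,j)) (A i s(i,k), A k s(i,k)) (A j s(j,k), A k s(j,k))) ∧
  (∀ i, PairC S (B i, C i)) ∧
  ∀ i j : Fin m, i ≠ j → TriC (A i s(i,j), A j s(i,j)) (B i, C i) (B j, C j) ∧
    PairC (fun _ => True) (A i s(i,j), A j s(i,j)) ∧ LocC S z₀ (A i s(i,j), A j s(i,j)) (B i, C i) (B j, C j)

variable {A : Fin m → Sym2 (Fin m) → Fin 3 → Fin 3 → ℂ} {B : Fin m → Fin w → Fin 3 → ℂ} {C : Fin m → Fin w → Fin w → ℂ}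
  {mE : Ix m w → Ix m w → ℂ} {P : Sym2 (Fin m) → Fin 3 → Ix m w → ℂ} {Q : Fin m → Fin w → Ix m w → ℂ}
  {R : Ix m w → Ix m w → Ix m w → ℂ} {S : Fin w → Prop} {z₀ : Fin w}

/-- The components of the unknowns of a pair of blocks in any third block vanish. -/
theorem far_block (hG : Glob S z₀ A B C) (h : EqT A B C mE P Q R) (hd : ∀ s, s.IsDiag → P s = 0)
    (hR : ∀ i j k : Fin m, i ≠ j → i ≠ k → j ≠ k → ∀ x y z, R (.inl (i,x)) (.inl (j,y)) (.inl (k,z)) = 0)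
    (k : Fin m) (z : Fin 3) (s : Sym2 (Fin m)) (q : Fin 3) (hk : k ∉ s) : P s q (.inl (k,z)) = 0 := by
  induction s using Sym2.ind with
  | _ i j =>
    by_cases hij : i = j
    · rw [hd _ (by simpa using hij)]; rfl
    · simp only [Sym2.mem_iff, not_or] at hk
      have hik : i ≠ k := fun h => hk.1 h.symm
      have hjk : j ≠ k := fun h => hk.2 h.symm
      have := (hG.1 i j k ⟨hij, hik, hjk⟩ _ _ _ fun x y z => (eq_ijk h hij hik hjk x y z).trans (hR i j k hij hik hjk _ _ _)).1
      exact congrFun (congrFun this q) z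

theorem far_last (hG : Glob S z₀ A B C) (h : EqT A B C mE P Q R) {i j : Fin m} (hij : i ≠ j)
    (hR : ∀ x y z, R (.inl (i,x)) (.inl (j,y)) (.inr z) = 0) :
    (∀ q z, P s(i,j) q (.inr z) = 0) ∧ (∀ q y, Q i q (.inl (j,y)) = 0) ∧ ∀ q x, Q j q (.inl (i,x)) = 0 := by
  have := (hG.2.2 i j hij).1 _ _ _ fun x y z => (eq_ijW h hij x y z).trans (hR _ _ _)
  exact ⟨fun q z => congrFun (congrFun this.1 q) z, fun q z => congrFun (congrFun this.2.1 q) z,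
    fun q z => congrFun (congrFun this.2.2 q) z⟩

theorem addE_zero {p α β : ℕ} (a : Fin p → Fin α → ℂ) {W : Fin p → Fin β → ℂ} {y : Fin β} (h : ∀ q, W q y = 0) (x x' : Fin α) :
    addE a W x x' y = 0 := by
  simp [addE, h]

/-- The components of the unknowns of a pair of blocks in these two blocks vanish. -/
theorem near_block (hG : Glob S z₀ A B C) (h : EqT A B C mE P Q R) {i j : Fin m} (hij : i ≠ j)
    (hP : ∀ (k : Fin m) (z : Fin 3) (s : Sym2 (Fin m)) (q : Fin 3), k ∉ s → P s q (.inl (k,z)) = 0)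
    (hQ : ∀ q y, Q i q (.inl (j,y)) = 0) (hQ' : ∀ q x, Q j q (.inl (i,x)) = 0)
    (hR : ∀ x x' y, R (.inl (i,x)) (.inl (i,x')) (.inl (j,y)) = 0)
    (hR' : ∀ x x' y, R (.inl (j,x)) (.inl (j,x')) (.inl (i,y)) = 0) :
    (∀ q x, P s(i,j) q (.inl (i,x)) = 0) ∧ ∀ q x, P s(i,j) q (.inl (j,x)) = 0 := by
  have := (hG.2.2 i j hij).2.1 (fun q x => P s(i,j) q (.inl (i,x))) (fun q x => P s(i,j) q (.inl (j,x)))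
    (fun x x' y hx => by
      have := eq_iij h hij hx y fun s q hs => hP _ _ _ _ hs
      rwa [addE_zero _ (fun q => hQ q y), add_zero, hR] at this)
    (fun x x' y hx => by
      have := eq_iij h hij.symm (fun hxx => hx hxx trivial) y fun s q hs => hP _ _ _ _ hs
      rw [addE_zero _ (fun q => hQ' q y), add_zero, hR', Sym2.eq_swap] at this
      exact this)
  exact ⟨fun q z => congrFun (congrFun this.1 q) z, fun q z => congrFun (congrFun this.2 q) z⟩

theorem near_last (hG : Glob S z₀ A B C) (h : EqT A B C mE P Q R) (hm : ∀ z Z, ¬ S z → mE (.inr z) Z = 0) {i : Fin m}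
    (hP : ∀ s q z, i ∈ s → P s q (.inr z) = 0) (hQ : ∀ l, l ≠ i → ∀ q x, Q l q (.inl (i,x)) = 0)
    (hR : ∀ x x' z, R (.inl (i,x)) (.inl (i,x')) (.inr z) = 0)
    (hR' : ∀ x z z', R (.inl (i,x)) (.inr z) (.inr z') = 0) :
    (∀ q x, Q i q (.inl (i,x)) = 0) ∧ ∀ q z, Q i q (.inr z) = 0 := by
  have := hG.2.1 i (fun q x => Q i q (.inl (i,x))) (fun q x => Q i q (.inr x))
    (fun x x' z hx => by
      have := eq_iiW h (i := i) hx z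
      rwa [Finset.sum_eq_zero, add_zero, hR] at this
      intro s _
      split_ifs with hs
      · exact addE_zero _ (fun q => hP _ _ _ hs) _ _
      · rfl)
    (fun z z' x hz => by
      have := eq_iWW h (i := i) hz x hm
      rwa [Finset.sum_eq_zero, add_zero, hR'] at this
      intro l _
      split_ifs with hl
      · rfl
      · exact addE_zero _ (fun q => hQ _ hl _ _) _ _)
  exact ⟨fun q z => congrFun (congrFun this.1 q) z, fun q z => congrFun (congrFun this.2 q) z⟩

/-- If the right hand side only involves the last block, then so do the unknowns. -/
theorem all_zero (hG : Glob S z₀ A B C) (h : EqT A B C mE P Q R) (hd : ∀ s, s.IsDiag → P s = 0)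
    (hm : ∀ z Z, ¬ S z → mE (.inr z) Z = 0)
    (hR : ∀ p Y Z, R (.inl p) Y Z = 0) : P = 0 ∧ Q = 0 := by
  have h1 := far_block hG h hd fun i j k _ _ _ x y z => hR _ _ _
  have h2 : ∀ i j : Fin m, i ≠ j → _ := fun i j hij => far_last hG h hij fun x y z => hR _ _ _
  have h3 : ∀ i j : Fin m, i ≠ j → _ := fun i j hij =>
    near_block hG h hij h1 (h2 i j hij).2.1 (h2 i j hij).2.2 (fun _ _ _ => hR _ _ _) (fun _ _ _ => hR _ _ _)
  have h5 : P = 0 := by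
    funext s q Z
    induction s using Sym2.ind with
    | _ i j =>
      by_cases hij : i = j
      · rw [hd _ (by simpa using hij)]; rfl
      rcases Z with ⟨k, z⟩ | z
      · by_cases hk : k ∈ s(i,j)
        · rcases Sym2.mem_iff.1 hk with rfl | rfl
          · exact (h3 _ _ hij).1 _ _
          · exact (h3 _ _ hij).2 _ _
        · exact h1 _ _ _ _ hk
      · exact (h2 i j hij).1 _ _
  have h4 : ∀ i : Fin m, _ := fun i => near_last hG h hm (i := i) (fun s q z _ => by rw [h5]; rfl)
    (fun l hl q x => (h2 l i hl).2.1 q x) (fun _ _ _ => hR _ _ _) (fun _ _ _ => hR _ _ _)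
  refine ⟨h5, ?_⟩
  funext i q Z
  rcases Z with ⟨k, z⟩ | z
  · by_cases hk : i = k
    · subst hk; exact (h4 _).1 _ _
    · exact (h2 i k hk).2.1 _ _
  · exact (h4 i).2 _ _

theorem ind_zero (hG : Glob S z₀ A B C) (h : EqT A B C mE P Q 0) (hd : ∀ s, s.IsDiag → P s = 0)
    (hm : ∀ z Z, ¬ S z → mE (.inr z) Z = 0) : P = 0 ∧ Q = 0 ∧ mE = 0 := by
  obtain ⟨rfl, rfl⟩ := all_zero hG h hd hm fun _ _ _ => rfl
  refine ⟨rfl, rfl, ?_⟩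
  funext X Z
  have := h X X Z
  by_cases hXZ : X = Z
  · subst hXZ
    simp only [TT, Pi.zero_apply, mul_zero, Finset.sum_const_zero, add_zero, if_true] at this
    have : mE X X * 3 = 0 := by rw [← this]; ring
    simpa using this
  · simpa [TT, hXZ] using this

/-- The symmetrisation of a product of three linear forms. -/
def sym6 (e v k : Ix m w → ℂ) (X Y Z : Ix m w) : ℂ :=
  e X * (v Y * k Z + v Z * k Y) + e Y * (v X * k Z + v Z * k X) + e Z * (v X * k Y + v Y * k X)

/-- The contact locus at the coordinate point `z₀` of the last block is that point. -/
theorem star_vanish (hG : Glob S z₀ A B C) (hz : ∀ z, z ≠ z₀ → ∃ k, k ≠ z₀ ∧ (k = z → ¬ S z)) (hm1 : m ≠ 1)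
    {v : Ix m w → ℂ} {mE : Ix m w → Ix m w → Ix m w → ℂ} {P : Ix m w → Sym2 (Fin m) → Fin 3 → Ix m w → ℂ}
    {Q : Ix m w → Fin m → Fin w → Ix m w → ℂ} (hd : ∀ K s, s.IsDiag → P K s = 0)
    (hm : ∀ K z Z, ¬ S z → mE K (.inr z) Z = 0)
    (h : ∀ K, EqT A B C (mE K) (P K) (Q K) (sym6 (Pi.single (.inr z₀) 1) v (Pi.single K 1))) :
    ∀ X, X ≠ .inr z₀ → v X = 0 := by
  have hv : ∀ i x, v (.inl (i,x)) = 0 := by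
    intro i
    have : ∃ j, j ≠ i := by
      have := i.2
      have : Nontrivial (Fin m) := Fin.nontrivial_iff_two_le.2 (by omega)
      exact exists_ne i
    obtain ⟨j, hj⟩ := this
    have hij := hj.symm
    suffices h0 : (fun x => v (.inl (i,x))) = 0 from fun x => congrFun h0 x
    refine ((hG.2.2 i j hij).2.2 _ (fun k q z => P (.inl (j,k)) s(i,j) q (.inr z)) (fun k q y => Q (.inl (j,k)) i q (.inl (j,y)))
      (fun k q y => Q (.inl (j,k)) j q (.inl (i,y))) (fun k q x => P (.inl (j,k)) s(i,j) q (.inl (i,x)))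
      (fun k q x => P (.inl (j,k)) s(i,j) q (.inl (j,x))) (fun k q x => Q (.inl (j,k)) i q (.inl (i,x)))
      (fun k q x => Q (.inl (j,k)) i q (.inr x)) ?_).1
    intro k
    have hK := h (.inl (j,k))
    have f1 := far_block hG hK (hd _) (by intros; simp [sym6])
    have f2 : ∀ l, l ≠ j → i ≠ l → _ := fun l hl hil => far_last hG hK hil (by intros; simp [sym6, hij, hl])
    have f3 : ∀ l, l ≠ j → ∀ hil : i ≠ l, _ := fun l hl hil => near_block hG hK hil f1 (f2 l hl hil).2.1 (f2 l hl hil).2.2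
      (by intros; simp [sym6]) (by intros; simp [sym6])
    refine ⟨?_, ?_, ?_, ?_, ?_, ?_⟩
    · intro x y z
      rw [eq_ijW hK hij]
      by_cases h1 : y = k <;> by_cases h2 : z = z₀ <;> simp [sym6, hij, h1, h2]
    · intro x x' y hx
      exact (eq_iij hK hij hx y fun s q hs => f1 _ _ _ _ hs).trans (by simp [sym6])
    · intro x x' y hx
      have := eq_iij hK hj hx y fun s q hs => f1 _ _ _ _ hs
      rw [Sym2.eq_swap] at this
      exact this.trans (by simp [sym6])
    · intro x x' z hx
      have := eq_iiW hK (i := i) hx z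
      rw [Finset.sum_eq_single s(i,j)] at this
      · simp only [Sym2.mem_mk_left, if_true] at this
        exact this.trans (by simp [sym6, hij])
      · intro s _ hs
        split_ifs with hi
        · obtain ⟨l, rfl⟩ := hi
          by_cases hil : i = l
          · rw [hd _ _ (by simpa using hil)]; simp [addE]
          · exact addE_zero _ (fun q => (f2 l (by rintro rfl; exact hs rfl) hil).1 _ _) _ _
        · rfl
      · simp
    · intro z z' x hzz
      have := eq_iWW hK (i := i) hzz x (hm _)
      rw [Finset.sum_eq_single j] at this
      · rw [if_neg hj] at this
        exact this.trans (by simp [sym6, hij])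
      · intro l _ hl
        split_ifs with hil
        · rfl
        · exact addE_zero _ (fun q => (f2 l hl (Ne.symm hil)).2.2 _ _) _ _
      · simp
    · have := eq_iii hK (i := i)
      rw [Finset.sum_eq_single s(i,j)] at this
      · simp only [Sym2.mem_mk_left, if_true] at this
        exact this.trans (by simp [sym6])
      · intro s _ hs
        split_ifs with hi
        · obtain ⟨l, rfl⟩ := hi
          by_cases hil : i = l
          · rw [hd _ _ (by simpa using hil)]; simp [addE]
          · have := (f3 l (by rintro rfl; exact hs rfl) hil).1
            rw [addE_zero _ (fun q => this _ _), addE_zero _ (fun q => this _ _), addE_zero _ (fun q => this _ _)]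
            simp
        · rfl
      · simp
  rintro (⟨i, x⟩ | z) hX
  · exact hv i x
  · have hzz : z ≠ z₀ := fun h => hX (by rw [h])
    obtain ⟨k, hk, hkz⟩ := hz z hzz
    have hK := h (.inr k)
    obtain ⟨hP, hQ⟩ := all_zero hG hK (hd _) (hm _) (by
      rintro ⟨i, x⟩ (⟨j, y⟩ | Y) (⟨l, y'⟩ | Z) <;> simp [sym6, hv])
    have := hK (.inr z) (.inr k) (.inr z₀)
    simp only [TT, hP, hQ, Pi.zero_apply, mul_zero, Finset.sum_const_zero, add_zero] at this
    by_cases hkz' : k = z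
    · subst hkz'
      rw [if_pos rfl, hm _ _ _ (hkz rfl), if_neg (by simpa using hk)] at this
      simp [sym6, hk, hk.symm] at this
      simpa using this.symm
    · rw [if_neg (by simpa using Ne.symm hkz'), if_neg (by simpa using hzz), if_neg (by simpa using hk)] at this
      simp [sym6, hk, hk.symm, hzz, hzz.symm, Ne.symm hkz'] at this
      simpa using this.symm

end

/-! ### Generic data and the points -/

section
variable {m w : ℕ}

/-- Coordinates of all the points: components in the blocks of three coordinates of the points of pairs of blocks, then both
components of the points of a block and the last block. -/
abbrev Dat (m w : ℕ) : Type :=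
  (Fin m → Sym2 (Fin m) → Fin 3 → Fin 3 → ℂ) × (Fin m → Fin w → Fin 3 → ℂ) × (Fin m → Fin w → Fin w → ℂ)

/-- Components in the block `i` of the points attached to the pair `s`. -/
def datA (i : Fin m) (s : Sym2 (Fin m)) : Dat m w →ₗ[ℂ] (Fin 3 → Fin 3 → ℂ) :=
  { toFun := fun e => e.1 i s, map_add' := fun _ _ => rfl, map_smul' := fun _ _ => rfl }

/-- The points attached to the block `i` and the last block. -/
def datB (i : Fin m) : Dat m w →ₗ[ℂ] Fam w 3 w :=
  { toFun := fun e => (e.2.1 i, e.2.2 i), map_add' := fun _ _ => rfl, map_smul' := fun _ _ => rfl }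

/-- The points attached to the pair of blocks `i`, `j`. -/
def datP (i j : Fin m) : Dat m w →ₗ[ℂ] Fam 3 3 3 := (datA i s(i,j)).prod (datA j s(i,j))

/-- The points attached to the pairs in three blocks. -/
def datT (i j k : Fin m) : Dat m w →ₗ[ℂ] Fam 3 3 3 × Fam 3 3 3 × Fam 3 3 3 :=
  (datP i j).prod ((datP i k).prod (datP j k))

/-- The points attached to two blocks and the last block. -/
def datL (i j : Fin m) : Dat m w →ₗ[ℂ] Fam 3 3 3 × Fam w 3 w × Fam w 3 w :=
  (datP i j).prod ((datB i).prod (datB j))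

theorem datT_surj {i j k : Fin m} (h : i ≠ j ∧ i ≠ k ∧ j ≠ k) : Function.Surjective (datT (w := w) i j k) := by
  obtain ⟨hij, hik, hjk⟩ := h
  rintro ⟨a, b, c⟩
  refine ⟨(fun l s => if l = i then (if s = s(i,j) then a.1 else b.1) else if l = j then (if s = s(i,j) then a.2 else c.1)
    else (if s = s(i,k) then b.2 else c.2), 0, 0), ?_⟩
  have h1 : s(i,k) ≠ s(i,j) := by simp [hjk.symm, hij]
  have h2 : s(j,k) ≠ s(i,j) := by simp [hij.symm, hik.symm]
  have h3 : s(j,k) ≠ s(i,k) := by simp [hij.symm, hjk]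
  exact Prod.ext (Prod.ext ((if_pos rfl).trans (if_pos rfl)) ((if_neg hij.symm).trans ((if_pos rfl).trans (if_pos rfl))))
    (Prod.ext (Prod.ext ((if_pos rfl).trans (if_neg h1)) ((if_neg hik.symm).trans ((if_neg hjk.symm).trans (if_pos rfl))))
      (Prod.ext ((if_neg hij.symm).trans ((if_pos rfl).trans (if_neg h2)))
        ((if_neg hik.symm).trans ((if_neg hjk.symm).trans (if_neg h3)))))

theorem datP_surj {i j : Fin m} (h : i ≠ j) : Function.Surjective (datP (w := w) i j) := by
  rintro ⟨a, b⟩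
  refine ⟨(fun l _ => if l = i then a else b, 0, 0), ?_⟩
  exact Prod.ext (if_pos rfl) (if_neg h.symm)

theorem datL_surj {i j : Fin m} (h : i ≠ j) : Function.Surjective (datL (w := w) i j) := by
  rintro ⟨a, b, c⟩
  refine ⟨(fun l _ => if l = i then a.1 else a.2, fun l => if l = i then b.1 else c.1,
          fun l => if l = i then b.2 else c.2), ?_⟩
  exact Prod.ext (Prod.ext (if_pos rfl) (if_neg h.symm))
    (Prod.ext (Prod.ext (if_pos rfl) (if_pos rfl)) (Prod.ext (if_neg h.symm) (if_neg h.symm)))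

/-- Generic families satisfy all the local conditions as soon as each type of condition has a witness. -/
theorem glob_exists (m : ℕ) {S : Fin w → Prop} {z₀ : Fin w} {tA tB tC lA : Fam 3 3 3} {lB lC : Fam w 3 w} 
    (hT : TriC tA tB tC) (hW : TriC lA lB lC) (hP : PairC (fun _ => True) lA) (hB : PairC S lB) (hL : LocC S z₀ lA lB lC) :
    ∃ (A : Fin m → Sym2 (Fin m) → Fin 3 → Fin 3 → ℂ) (B : Fin m → Fin w → Fin 3 → ℂ)
      (C : Fin m → Fin w → Fin w → ℂ), Glob S z₀ A B C := by
  have k1 : Gen fun e : Dat m w => ∀ i j k : Fin m, i ≠ j ∧ i ≠ k ∧ j ≠ k →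
      TriC (datT i j k e).1 (datT i j k e).2.1 (datT i j k e).2.2 :=
    Gen.all fun i => Gen.all fun j => Gen.all fun k => Gen.imp fun h =>
      Gen.comp (F := Fam 3 3 3 × Fam 3 3 3 × Fam 3 3 3) (P := fun e => TriC e.1 e.2.1 e.2.2)
        ⟨lo_tri, (tA, tB, tC), hT⟩ (datT i j k) (datT_surj h)
  have k2 : Gen fun e : Dat m w => ∀ i, PairC S (datB i e) :=
    Gen.all fun i => Gen.comp (F := Fam w 3 w) (P := fun b => PairC S b) ⟨lo_pair S, lB, hB⟩ (datB i)
      fun b => ⟨(0, fun _ => b.1, fun _ => b.2), rfl⟩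
  have k3 : Gen fun e : Dat m w => ∀ i j : Fin m, i ≠ j → TriC (datL i j e).1 (datL i j e).2.1 (datL i j e).2.2 :=
    Gen.all fun i => Gen.all fun j => Gen.imp fun h =>
      Gen.comp (F := Fam 3 3 3 × Fam w 3 w × Fam w 3 w) (P := fun e => TriC e.1 e.2.1 e.2.2) ⟨lo_tri, (lA, lB, lC), hW⟩ (datL i j) (datL_surj h)
  have k4 : Gen fun e : Dat m w => ∀ i j : Fin m, i ≠ j → PairC (fun _ => True) (datP i j e) :=
    Gen.all fun i => Gen.all fun j => Gen.imp fun h =>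
      Gen.comp (F := Fam 3 3 3) (P := fun e => PairC (fun _ => True) e) ⟨lo_pair _, lA, hP⟩ (datP i j) (datP_surj h)
  have k5 : Gen fun e : Dat m w => ∀ i j : Fin m, i ≠ j → LocC S z₀ (datL i j e).1 (datL i j e).2.1 (datL i j e).2.2 :=
    Gen.all fun i => Gen.all fun j => Gen.imp fun h =>
      Gen.comp (F := Fam 3 3 3 × Fam w 3 w × Fam w 3 w) (P := fun e => LocC S z₀ e.1 e.2.1 e.2.2) ⟨lo_loc S z₀, (lA, lB, lC), hL⟩ (datL i j) (datL_surj h)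
  obtain ⟨e, h1, h2, h3, h4, h5⟩ := (k1.and (k2.and (k3.and (k4.and k5)))).2
  exact ⟨e.1, e.2.1, e.2.2, h1, h2, fun i j h => ⟨h3 i j h, h4 i j h, h5 i j h⟩⟩

/-- The third derivative in the directions of three coordinates. -/
noncomputable def phi3 {n : ℕ} (p q r : Fin (n+1)) : Pol n →ₗ[ℂ] ℂ :=
  (evalAt 0).comp (((pderiv p).toLinearMap).comp (((pderiv q).toLinearMap).comp ((pderiv r).toLinearMap)))

theorem pderiv_linForm {n : ℕ} (p : Fin (n+1)) (a : Pt n) : pderiv p (linForm a) = C (a p) := by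
  simp [linForm, pderiv_X, Pi.single_apply]

theorem phi3_mul {n : ℕ} (p q r : Fin (n+1)) (a b c : Pt n) : phi3 p q r (linForm a * linForm b * linForm c) =
    a p * (b q * c r + b r * c q) + a q * (b p * c r + b r * c p) + a r * (b p * c q + b q * c p) := by
  simp [phi3, evalAt, pderiv_linForm, Derivation.leibniz]
  ring

theorem sum_dite_subtype {α : Type} [Fintype α] (p : α → Prop) [DecidablePred p] (f : {x // p x} → ℂ) :
    (∑ x, if h : p x then f ⟨x, h⟩ else 0) = ∑ x, f x := by
  rw [← Fintype.sum_subtype_add_sum_subtype p]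
  have h1 : ∀ x : {x // p x}, (if h : p x.1 then f ⟨x.1, h⟩ else 0) = f x := fun x => dif_pos x.2
  have h2 : ∀ x : {x // ¬ p x}, (if h : p x.1 then f ⟨x.1, h⟩ else 0) = 0 := fun x => dif_neg x.2
  simp [h1, h2]

/-- Indices of the points: coordinate points of the blocks of three coordinates and of the last block, points of pairs of
blocks, points of a block and the last block. -/
abbrev Jx (m : ℕ) {w : ℕ} (S : Fin w → Prop) : Type :=
  (Fin m × Fin 3) ⊕ {z // S z} ⊕ ({s : Sym2 (Fin m) // ¬ s.IsDiag} × Fin 3) ⊕ (Fin m × Fin w)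

/-- The points, as vectors indexed by `Ix m w`. -/
def ptI (S : Fin w → Prop) (A : Fin m → Sym2 (Fin m) → Fin 3 → Fin 3 → ℂ) (B : Fin m → Fin w → Fin 3 → ℂ)
    (C : Fin m → Fin w → Fin w → ℂ) : Jx m S → Ix m w → ℂ :=
  Sum.elim (fun p => Pi.single (.inl p) 1) (Sum.elim (fun z => Pi.single (.inr z.1) 1)
    (Sum.elim (fun p => vA A p.1 p.2) (fun p => vB B C p.1 p.2)))

open Classical in
theorem sum_ptI (S : Fin w → Prop) (A : Fin m → Sym2 (Fin m) → Fin 3 → Fin 3 → ℂ) (B : Fin m → Fin w → Fin 3 → ℂ)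
    (C : Fin m → Fin w → Fin w → ℂ) (u : Jx m S → Ix m w → ℂ) (X Y Z : Ix m w) :
    ∑ j, ptI S A B C j X * ptI S A B C j Y * u j Z = TT A B C
      (Sum.elim (fun p => u (.inl p)) (fun z => if h : S z then u (.inr (.inl ⟨z, h⟩)) else 0))
      (fun s q => if h : ¬ s.IsDiag then u (.inr (.inr (.inl (⟨s, h⟩, q)))) else 0)
      (fun i q => u (.inr (.inr (.inr (i, q))))) X Y Z := by
  unfold TT
  rw [Fintype.sum_sum_type, Fintype.sum_sum_type, Fintype.sum_sum_type, ← add_assoc, ← add_assoc]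
  congr 1
  · congr 1
    · rw [← sum_dite_subtype S (fun z => ptI S A B C (.inr (.inl z)) X * ptI S A B C (.inr (.inl z)) Y * u (.inr (.inl z)) Z)]
      rcases X with p | z
      · rw [Finset.sum_eq_single p, Finset.sum_eq_zero]
        · by_cases h : Sum.inl p = Y
          · subst h; simp [ptI]
          · simp [ptI, h, Pi.single_apply, Ne.symm h]
        · intro z _
          split_ifs <;> simp [ptI]
        · intro q _ hq; simp [ptI, hq.symm]
        · simp
      · rw [Finset.sum_eq_zero, Finset.sum_eq_single z]
        · by_cases h : Sum.inr z = Y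
          · subst h; by_cases hS : S z <;> simp [ptI, hS]
          · by_cases hS : S z <;> simp [ptI, h, Pi.single_apply, Ne.symm h, hS]
        · intro q _ hq; split_ifs <;> simp [ptI, hq.symm]
        · simp
        · intro p _; simp [ptI]
    · rw [Fintype.sum_prod_type, ← sum_dite_subtype (fun s : Sym2 (Fin m) => ¬ s.IsDiag)
        (fun s => ∑ q, ptI S A B C (.inr (.inr (.inl (s, q)))) X * ptI S A B C (.inr (.inr (.inl (s, q)))) Y *
          u (.inr (.inr (.inl (s, q)))) Z)]
      refine Finset.sum_congr rfl fun s _ => ?_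
      by_cases h : s.IsDiag
      · simp [h]
      · simp only [h, not_false_eq_true, dif_pos]; rfl
  · rw [Fintype.sum_prod_type]; rfl

/-- The equations for the unknowns `u` (up to the factor `2`). -/
theorem eqT_of {n : ℕ} (e : Ix m w ≃ Fin (n+1)) (S : Fin w → Prop) {A : Fin m → Sym2 (Fin m) → Fin 3 → Fin 3 → ℂ}
    {B : Fin m → Fin w → Fin 3 → ℂ} {C : Fin m → Fin w → Fin w → ℂ} [Fintype (Jx m S)] {u : Jx m S → Pt n} {R : Pol n}
    (h : ∑ j, linForm (ptI S A B C j ∘ e.symm) ^ 2 * linForm (u j) = R) :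
    ∃ mE P Q, EqT A B C mE P Q (fun X Y Z => phi3 (e X) (e Y) (e Z) R) ∧ (∀ s, s.IsDiag → P s = 0) ∧
      (∀ z Z, ¬ S z → mE (.inr z) Z = 0) ∧ (mE = 0 → P = 0 → Q = 0 → u = 0) := by
  classical
  let u' : Jx m S → Ix m w → ℂ := fun j => (2 • u j) ∘ e
  refine ⟨Sum.elim (fun p => u' (.inl p)) (fun z => if h : S z then u' (.inr (.inl ⟨z, h⟩)) else 0),
    fun s q => if h : ¬ s.IsDiag then u' (.inr (.inr (.inl (⟨s, h⟩, q)))) else 0,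
    fun i q => u' (.inr (.inr (.inr (i, q)))), fun X Y Z => ?_, ?_, ?_, ?_⟩
  · rw [← sum_ptI S A B C u', ← sum_ptI S A B C u', ← sum_ptI S A B C u', ← h, ← Finset.sum_add_distrib,
      ← Finset.sum_add_distrib]
    beta_reduce
    rw [map_sum]
    refine Finset.sum_congr (by ext; simp) fun j _ => ?_
    rw [sq, phi3_mul]
    simp [u']
    ring
  · intro s hs; simp [hs]; rfl
  · intro z Z hz; simp [hz]
  · intro h1 h2 h3
    have h0 : ∀ j, u' j = 0 → u j = 0 := by
      intro j hj
      funext k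
      have := congrFun hj (e.symm k)
      simpa [u'] using this
    funext j
    refine h0 j ?_
    rcases j with p | z | p | p
    · exact congrFun h1 (.inl p)
    · exact (dif_pos z.2).symm.trans (congrFun h1 (.inr z.1))
    · exact (dif_pos p.1.2).symm.trans (congrFun (congrFun h2 p.1.1) p.2)
    · exact congrFun (congrFun h3 p.1) p.2

end

/-! ### Cubics in all numbers of variables -/

section
variable {m w n : ℕ} {S : Fin w → Prop} {z₀ : Fin w} {A : Fin m → Sym2 (Fin m) → Fin 3 → Fin 3 → ℂ} {B : Fin m → Fin w → Fin 3 → ℂ}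
    {C : Fin m → Fin w → Fin w → ℂ}

theorem Glob.ind (hG : Glob S z₀ A B C) (e : Ix m w ≃ Fin (n+1)) [Fintype (Jx m S)] (u : Jx m S → Pt n)
    (h : ∑ j, linForm (ptI S A B C j ∘ e.symm) ^ 2 * linForm (u j) = 0) : u = 0 := by
  obtain ⟨mE, P, Q, h1, hd, hm, h2⟩ := eqT_of e S h
  simp only [map_zero] at h1
  obtain ⟨h3, h4, h5⟩ := ind_zero hG h1 hd hm
  exact h2 h5 h3 h4

theorem Glob.star (hG : Glob S z₀ A B C) (e : Ix m w ≃ Fin (n+1)) [Fintype (Jx m S)]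
    (hz : ∀ z, z ≠ z₀ → ∃ k, k ≠ z₀ ∧ (k = z → ¬ S z)) (hm1 : m ≠ 1) (v : Pt n)
    (h : ∀ k : Fin (n+1), ∃ u : Jx m S → Pt n, linForm ((Pi.single (.inr z₀) 1 : Ix m w → ℂ) ∘ e.symm) * linForm v * X k =
      ∑ j, linForm (ptI S A B C j ∘ e.symm) ^ 2 * linForm (u j)) :
    ∃ c : ℂ, v = c • ((Pi.single (.inr z₀) 1 : Ix m w → ℂ) ∘ e.symm) := by
  choose u hu using h
  have H := fun K : Ix m w => eqT_of e S (hu (e K)).symm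
  choose mE P Q h1 hd hm h2 using H
  have hv := star_vanish (v := v ∘ e) hG hz hm1 hd hm (by
    intro K
    convert h1 K using 1
    funext X Y Z
    have : (MvPolynomial.X (e K) : Pol n) = linForm (Pi.single (e K) 1) := by simp [linForm, Pi.single_apply]
    rw [this, phi3_mul]
    simp [sym6, Pi.single_apply])
  refine ⟨v (e (.inr z₀)), ?_⟩
  funext k
  obtain ⟨Y, rfl⟩ := e.surjective k
  by_cases hY : Y = .inr z₀
  · subst hY; simp
  · simpa [hY] using hv Y hY

theorem card_Jx (m : ℕ) {w : ℕ} (S : Fin w → Prop) [DecidablePred S] :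
    Fintype.card (Jx m S) = 3 * m + Fintype.card {z // S z} + 3 * m.choose 2 + m * w := by
  simp only [Fintype.card_sum, Fintype.card_prod, Fintype.card_fin, Sym2.card_subtype_not_diag]
  ring

theorem Ix.equiv (h : 3 * m + w = n + 1) : Nonempty (Ix m w ≃ Fin (n+1)) :=
  ⟨Fintype.equivFinOfCardEq (by simp; omega)⟩

theorem Glob.hasF (hG : Glob S z₀ A B C) [DecidablePred S] (h : 3 * m + w = n + 1) (hz₀ : S z₀) :
    HasF false n 3 (Fintype.card (Jx m S)) := by
  obtain ⟨e⟩ := Ix.equiv h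
  refine HasF.of (a := fun j => ptI S A B C j ∘ e.symm) (i := .inr (.inl ⟨z₀, hz₀⟩)) ?_ rfl
  rw [tnod_iff]
  exact ⟨fun u hu => hG.ind e u hu, by simp⟩

theorem Glob.hasG (hG : Glob S z₀ A B C) [DecidablePred S] (h : 3 * m + w = n + 1) (hz₀ : S z₀)
    (hz : ∀ z, z ≠ z₀ → ∃ k, k ≠ z₀ ∧ (k = z → ¬ S z)) (hm1 : m ≠ 1) :
    HasG n 3 (Fintype.card (Jx m S)) := by
  obtain ⟨e⟩ := Ix.equiv h
  let σ := (Fintype.equivFin (Jx m S)).symm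
  have tr : ∀ u : Fin (Fintype.card (Jx m S)) → Pt n,
      ∑ i, linForm (ptI S A B C (σ i) ∘ e.symm) ^ 2 * linForm (u i) =
        ∑ j, linForm (ptI S A B C j ∘ e.symm) ^ 2 * linForm (u (σ.symm j)) := fun u => by
    rw [← Equiv.sum_comp σ]; simp
  refine ⟨fun i => ptI S A B C (σ i) ∘ e.symm, σ.symm (.inr (.inl ⟨z₀, hz₀⟩)), fun u hu => ?_, fun v hv => ?_⟩
  · have := hG.ind e (fun j => u (σ.symm j)) ((tr u).symm.trans hu)
    funext i
    have := congrFun this (σ i)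
    simpa using this
  · have e0 : ptI S A B C (.inr (.inl ⟨z₀, hz₀⟩)) = Pi.single (.inr z₀) 1 := rfl
    have := hG.star e hz hm1 v fun k => by
      obtain ⟨u, hu⟩ := hv k
      refine ⟨fun j => u (σ.symm j), ?_⟩
      rw [← tr u]
      convert hu using 2
      simp [e0]
    simpa [e0] using this

end

theorem glob_2 (m : ℕ) : ∃ (A : Fin m → Sym2 (Fin m) → Fin 3 → Fin 3 → ℂ) (B : Fin m → Fin 2 → Fin 3 → ℂ)
      (C : Fin m → Fin 2 → Fin 2 → ℂ), Glob (fun z => (fun z : Fin 2 => z == 0) z = true) 0 A B C :=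
  glob_exists m tri_three tri_2 (by simpa using pairA_2) pairB_2 loc_2

theorem glob_3 (m : ℕ) : ∃ (A : Fin m → Sym2 (Fin m) → Fin 3 → Fin 3 → ℂ) (B : Fin m → Fin 3 → Fin 3 → ℂ)
      (C : Fin m → Fin 3 → Fin 3 → ℂ), Glob (fun z => (fun _ : Fin 3 => true) z = true) 0 A B C :=
  glob_exists m tri_three tri_3 (by simpa using pairA_3) pairB_3 loc_3

theorem glob_4 (m : ℕ) : ∃ (A : Fin m → Sym2 (Fin m) → Fin 3 → Fin 3 → ℂ) (B : Fin m → Fin 4 → Fin 3 → ℂ)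
      (C : Fin m → Fin 4 → Fin 4 → ℂ), Glob (fun z => (fun _ : Fin 4 => true) z = true) 0 A B C :=
  glob_exists m tri_three tri_4 (by simpa using pairA_4) pairB_4 loc_4

/-- The construction with a last block of two, three or four coordinates attains the largest subgeneric number of points. -/
theorem rm_cubic {m w n c : ℕ} (h : 3 * m + w = n + 1) (hw : w = 2 ∧ c = 1 ∨ w = 3 ∧ c = 3 ∨ w = 4 ∧ c = 4) :
    3 * m + c + 3 * m.choose 2 + m * w = rm n 3 := by
  have h6 : (n + 3).choose 3 * 6 = (n+3) * (n+2) * (n+1) := by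
    have := Nat.descFactorial_eq_factorial_mul_choose (n+3) 3
    simp [Nat.descFactorial, Nat.factorial] at this
    nlinarith
  have h2 : 2 * m.choose 2 = m * (m - 1) := by
    rw [Nat.choose_two_right, Nat.mul_div_cancel' (Nat.even_mul_pred_self m).two_dvd]
  have e2 : 2 * m.choose 2 + m = m * m := by
    rw [h2]; cases m
    · rfl
    · simp; ring
  unfold rm
  generalize (n+3).choose 3 = D at *
  generalize m.choose 2 = e at *
  have key : (3 * m + c + 3 * e + m * w) * (n+1) + 1 ≤ D ∧ D ≤ (3 * m + c + 3 * e + m * w + 1) * (n+1) := by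
    rcases hw with ⟨rfl, rfl⟩ | ⟨rfl, rfl⟩ | ⟨rfl, rfl⟩
    · obtain rfl : n = 3 * m + 1 := by omega
      constructor <;> nlinarith
    · obtain rfl : n = 3 * m + 2 := by omega
      constructor <;> nlinarith
    · obtain rfl : n = 3 * m + 3 := by omega
      constructor <;> nlinarith
  symm
  exact Nat.div_eq_of_lt_le (by omega) (by omega)

/-! ### Cubics through the coordinate points -/

/-- Coefficient of the unknown `c` in the equation of multidegree `r`. -/
def cubM {q n : ℕ} (p : Fin q → Fin (n+1) → ℤ) (r : Fin (n+1) × Fin (n+1) × Fin (n+1)) (c : Fin q × Fin (n+1)) : ℤ :=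
  (if r.2.2 = c.2 then p c.1 r.1 * p c.1 r.2.1 else 0) + (if r.2.1 = c.2 then p c.1 r.1 * p c.1 r.2.2 else 0) +
    (if r.1 = c.2 then p c.1 r.2.1 * p c.1 r.2.2 else 0)

/-- The Hessian, at the first coordinate point, of the cubic with table `F`, with a rank one correction in the direction of the
point itself. -/
def nodM {n : ℕ} (F : Fin (n+1) → Fin (n+1) → Fin (n+1) → ℤ) (k j : Fin (n+1)) : ℤ :=
  F 0 j k + if j = 0 ∧ k = 0 then 1 else 0

/-- The square-free multidegrees of cubics. -/
def cubR (n : ℕ) : List (Fin (n+1) × Fin (n+1) × Fin (n+1)) :=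
  (l3 (n+1) (n+1) (n+1)).filter fun r => r.1 < r.2.1 ∧ r.2.1 < r.2.2

/-- The cubic form attached to a symmetric table. -/
noncomputable def cubF {n : ℕ} (F : Fin (n+1) → Fin (n+1) → Fin (n+1) → ℤ) : Pol n →ₗ[ℂ] ℂ :=
  ∑ i, ∑ j, ∑ k, (F i j k : ℂ) • phi3 i j k

theorem cubF_apply {n : ℕ} {F : Fin (n+1) → Fin (n+1) → Fin (n+1) → ℤ} (h1 : ∀ i j k, F i j k = F j i k)
    (h2 : ∀ i j k, F i j k = F i k j) (a b c : Pt n) :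
    cubF F (linForm a * linForm b * linForm c) = 6 * ∑ k, (∑ i, ∑ j, (F i j k : ℂ) * a i * b j) * c k := by
  have s : ∀ f : Fin (n+1) → Fin (n+1) → Fin (n+1) → ℂ, ∑ i, ∑ j, ∑ k, f i j k = ∑ i, ∑ j, ∑ k, f j i k := fun f =>
    Finset.sum_comm
  have s' : ∀ f : Fin (n+1) → Fin (n+1) → Fin (n+1) → ℂ, ∑ i, ∑ j, ∑ k, f i j k = ∑ i, ∑ j, ∑ k, f i k j := fun f =>
    Finset.sum_congr rfl fun _ _ => Finset.sum_comm
  let G := fun i j k => (F i j k : ℂ) * (a i * b j * c k)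
  have e : cubF F (linForm a * linForm b * linForm c) = (∑ i, ∑ j, ∑ k, G i j k) + (∑ i, ∑ j, ∑ k, G i k j) +
      (∑ i, ∑ j, ∑ k, G j i k) + (∑ i, ∑ j, ∑ k, G j k i) + (∑ i, ∑ j, ∑ k, G k i j) + (∑ i, ∑ j, ∑ k, G k j i) := by
    simp only [cubF, LinearMap.sum_apply, LinearMap.smul_apply, phi3_mul, smul_eq_mul, ← Finset.sum_add_distrib, G]
    refine Finset.sum_congr rfl fun i _ => Finset.sum_congr rfl fun j _ => Finset.sum_congr rfl fun k _ => ?_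
    rw [h2 i k j, h1 j i k, h2 j k i, h1 j i k, h1 k i j, h2 i k j, h1 k j i, h2 j k i, h1 j i k]
    ring
  rw [e, ← s' G, ← s G, ← (s G).trans (s' _), ← (s' G).trans (s _), ← ((s G).trans (s' _)).trans (s _)]
  have e2 : ∑ k, (∑ i, ∑ j, (F i j k : ℂ) * a i * b j) * c k = ∑ i, ∑ j, ∑ k, G i j k := by
    simp_rw [Finset.sum_mul]
    refine (s _).trans ((s' _).trans ?_)
    exact Finset.sum_congr rfl fun i _ => Finset.sum_congr rfl fun j _ => Finset.sum_congr rfl fun k _ => by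
      simp only [G]; ring
  rw [e2]; ring

/-- The coordinate points together with the points `p`. -/
def cubP {n q : ℕ} (p : Fin q → Fin (n+1) → ℤ) : Fin (n+1) ⊕ Fin q → Pt n :=
  Sum.elim (fun i => Pi.single i 1) fun l i => p l i

/-- Once the coordinate points are taken out, only the square-free equations in the tangent vectors at the other
points remain, and those have full rank modulo `97`. -/
theorem cubic_ind {n q : ℕ} (p : Fin q → Fin (n+1) → ℤ) (N : List (List ℕ))
    (hN : chkL 97 N ((l2 q (n+1)).map fun c => (cubR n).map fun r => (cubM p r c % 97).toNat) = true)
    (hl : (l2 q (n+1)).Nodup) (m : Fin (n+1) ⊕ Fin q → Pt n)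
    (hm : ∑ j, linForm (cubP p j) ^ (3-1) * linForm (m j) = 0) : m = 0 := by
  let a := cubP p
  have hE : ∀ i j k, ∑ l, (a l i * a l j * m l k + a l i * a l k * m l j + a l j * a l k * m l i) = 0 := by
    intro i j k
    have := congrArg (phi3 i j k) hm
    simp only [map_sum, sq, phi3_mul, map_zero, show 3 - 1 = 2 from rfl] at this
    rw [← mul_eq_zero_iff_left (two_ne_zero (α := ℂ)), Finset.mul_sum, ← this]
    exact Finset.sum_congr rfl fun l _ => by ring
  have hq := _root_.cert 97 (cubM p) (cubR n) (l2 q (n+1)) hl (by simp [l2]) N hN (fun c => m (.inr c.1) c.2) (by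
    rintro ⟨i, j, k⟩ hr
    have hr' : i < j ∧ j < k := (by simpa [cubR] using hr : _ ∧ _).2
    have h3 := hE i j k
    rw [Fintype.sum_sum_type, Finset.sum_eq_zero, zero_add] at h3
    · rw [← h3, Fintype.sum_prod_type]
      refine Finset.sum_congr rfl fun l _ => ?_
      simp [cubM, add_mul, Finset.sum_add_distrib, a, cubP]
    · intro l _
      have e1 : (Pi.single l 1 : Pt n) i * (Pi.single l 1 : Pt n) j = 0 := by
        by_cases h : i = l
        · subst h; simp [hr'.1.ne']
        · simp [Pi.single_apply, h]
      have e2 : (Pi.single l 1 : Pt n) i * (Pi.single l 1 : Pt n) k = 0 := by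
        by_cases h : i = l
        · subst h; simp [(hr'.1.trans hr'.2).ne']
        · simp [Pi.single_apply, h]
      have e3 : (Pi.single l 1 : Pt n) j * (Pi.single l 1 : Pt n) k = 0 := by
        by_cases h : j = l
        · subst h; simp [hr'.2.ne']
        · simp [Pi.single_apply, h]
      simp only [a, cubP, Sum.elim_inl, e1, e2, e3]; simp)
  have hq' : ∀ l k, m (.inr l) k = 0 := fun l k => congrFun hq (l, k)
  have hc : ∀ l k, m (.inl l) k = 0 := by
    intro l k
    have h3 := hE l l k
    simp only [Fintype.sum_sum_type, hq', mul_zero, add_zero, Finset.sum_const_zero] at h3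
    rw [Finset.sum_eq_single l] at h3
    · by_cases hk : k = l
      · subst hk
        simp [a, cubP] at h3
        have : m (.inl k) k * 3 = 0 := by rw [← h3]; ring
        simpa using this
      · simpa [a, cubP, hk] using h3
    · intro j _ hj
      simp [a, cubP, Pi.single_apply, hj.symm]
    · simp
  funext l k
  rcases l with l | l
  · exact hc l k
  · exact hq' l k

/-- A cubic singular at the coordinate points and at the points `p`, with a node at the first coordinate point. -/
theorem node_cubic {n q : ℕ} (p : Fin q → Fin (n+1) → ℤ) (F : Fin (n+1) → Fin (n+1) → Fin (n+1) → ℤ)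
    (N N' : List (List ℕ))
    (hN : chkL 97 N ((l2 q (n+1)).map fun c => (cubR n).map fun r => (cubM p r c % 97).toNat) = true)
    (hN' : chkL 97 N' ((List.finRange (n+1)).map fun c => (List.finRange (n+1)).map fun r => (nodM F r c % 97).toNat) = true)
    (hl : (l2 q (n+1)).Nodup)
    (h1 : ∀ i j k, F i j k = F j i k) (h2 : ∀ i j k, F i j k = F i k j) (h0 : ∀ i k, F i i k = 0)
    (hp : ∀ l k, ∑ i, ∑ j, F i j k * p l i * p l j = 0) : HasF true n 3 (n+1+q) := by
  let a := cubP p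
  refine HasF.of (a := a) (i := .inl 0) ?_ (by simp)
  rw [tnod_iff]
  refine ⟨fun m hm => ?_, fun _ => ⟨cubF F, ?_, LinearMap.proj 0, 6 • LinearMap.proj 0, fun w hw => ?_⟩⟩
  · exact cubic_ind p N hN hl m hm
  · intro j m
    rw [show 3 - 1 = 2 from rfl, sq, cubF_apply h1 h2, Finset.sum_eq_zero, mul_zero]
    intro k _
    rcases j with j | l
    · have := h0 j k
      rw [Finset.sum_eq_single j, Finset.sum_eq_single j]
      · simp [a, cubP, this]
      · intro i _ hi; simp [a, cubP, hi]
      · simp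
      · intro i _ hi; simp [a, cubP, hi]
      · simp
    · have := hp l k
      have h5 : ∑ i, ∑ j, (F i j k : ℂ) * p l i * p l j = 0 := by exact_mod_cast this
      simp [a, cubP, h5]
  · refine _root_.cert 97 (nodM F) (List.finRange (n+1)) (List.finRange (n+1)) (List.nodup_finRange _) (by simp) N' hN' w
      fun k _ => ?_
    have h3 := hw (Pi.single k 1)
    rw [show 3 - 2 = 1 from rfl, pow_one, ← mul_assoc, cubF_apply h1 h2] at h3
    simp [a, cubP, Pi.single_apply] at h3
    have h4 : 6 * ∑ c, (nodM F k c : ℂ) * w c = 0 := by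
      rw [← h3]
      by_cases hk : k = 0
      · subst hk; simp [nodM, add_mul, Finset.sum_add_distrib]; ring
      · simp [nodM, hk, Ne.symm hk]
    simpa using h4

theorem HasF.of_cubic {n q : ℕ} (p : Fin q → Fin (n+1) → ℤ) (N : List (List ℕ))
    (hN : chkL 97 N ((l2 q (n+1)).map fun c => (cubR n).map fun r => (cubM p r c % 97).toNat) = true)
    (hl : (l2 q (n+1)).Nodup) : HasF false n 3 (n+1+q) := by
  refine HasF.of (a := cubP p) (i := .inl 0) ?_ (by simp)
  rw [tnod_iff]
  exact ⟨fun m hm => cubic_ind p N hN hl m hm, by simp⟩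

/-! ### Small cubics -/

/-- The symmetric table of the square-free cubic `6 ∑ v X_a X_b X_c`, `(a, b, c, v)` in the list. -/
def symT {n : ℕ} (L : List (ℕ × ℕ × ℕ × ℤ)) (i j k : Fin (n+1)) : ℤ :=
  L.foldr (fun t s => (if ([t.1, t.2.1, t.2.2.1] : List ℕ) ∈ [[i.1, j.1, k.1], [i.1, k.1, j.1], [j.1, i.1, k.1],
    [j.1, k.1, i.1], [k.1, i.1, j.1], [k.1, j.1, i.1]] then t.2.2.2 else 0) + s) 0

theorem node_cubic_4 : HasF true 4 3 (4+1+1) :=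
  node_cubic (n := 4) ![![0, 2, 1, 1, 1]]
    (symT [(0, 1, 3, -1), (0, 2, 3, 1), (0, 2, 4, 1)])
    [[49, 0, 0, 0, 0, 0, 0, 0, 0, 0],
    [0, 0, 0, 0, 0, 0, 65, 65, 65, 31],
    [0, 0, 0, 0, 0, 0, 81, 81, 32, 65],
    [0, 0, 0, 0, 0, 0, 81, 32, 81, 65],
    [0, 0, 0, 0, 0, 0, 32, 81, 81, 65]]
    [[1, 0, 0, 0, 0],
    [0, 0, 0, 96, 1],
    [0, 0, 0, 0, 1],
    [0, 96, 0, 0, 0],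
    [0, 1, 1, 0, 0]]
    (by decide +kernel) (by decide +kernel) (by decide +kernel) (by decide +kernel) (by decide +kernel)
    (by decide +kernel) (by decide +kernel)

theorem node_cubic_5 : HasF true 5 3 (5+1+2) :=
  node_cubic (n := 5) ![![1, 0, 1, 2, -1, 1], ![1, 1, 1, 1, 1, 1]]
    (symT [(0, 1, 2, -1), (0, 1, 3, -1), (0, 1, 4, 2), (0, 1, 5, 1), (0, 2, 3, 1), (0, 2, 4, -2), (0, 3, 4, 1), (0, 3, 5, -1), (1, 2, 3, -1), (1, 3, 5, 2), (1, 4, 5, -2), (2, 3, 4, 1), (2, 4, 5, 2), (3, 4, 5, -2)])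
    [[16, 0, 49, 0, 81, 32, 0, 16, 0, 0, 0, 0, 0, 32, 0, 0, 65, 0, 0, 0],
    [48, 0, 49, 0, 0, 0, 0, 0, 0, 0, 49, 0, 0, 48, 0, 0, 0, 0, 0, 0],
    [16, 48, 49, 0, 81, 32, 0, 65, 0, 0, 49, 0, 0, 32, 0, 0, 16, 0, 0, 0],
    [33, 96, 0, 0, 81, 0, 96, 81, 33, 65, 49, 0, 0, 16, 0, 0, 32, 0, 0, 0],
    [82, 47, 49, 0, 81, 96, 96, 33, 33, 65, 49, 0, 0, 64, 0, 0, 81, 0, 0, 0],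
    [16, 48, 49, 0, 16, 0, 0, 65, 65, 32, 49, 0, 0, 32, 0, 0, 16, 0, 0, 0],
    [81, 1, 48, 0, 27, 22, 65, 16, 86, 43, 96, 0, 0, 65, 0, 0, 0, 0, 0, 0],
    [82, 96, 49, 0, 43, 53, 64, 65, 22, 11, 49, 0, 0, 16, 0, 0, 0, 0, 0, 0],
    [81, 0, 48, 0, 27, 22, 65, 16, 86, 43, 0, 0, 0, 65, 0, 0, 0, 0, 0, 0],
    [32, 1, 96, 0, 27, 22, 65, 16, 86, 43, 48, 0, 0, 17, 0, 0, 0, 0, 0, 0],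
    [79, 0, 50, 0, 27, 22, 65, 16, 86, 43, 1, 0, 0, 64, 0, 0, 0, 0, 0, 0],
    [81, 0, 48, 0, 59, 86, 65, 16, 54, 76, 0, 0, 0, 65, 0, 0, 0, 0, 0, 0]]
    [[1, 0, 0, 0, 0, 0],
    [0, 48, 72, 48, 0, 24],
    [0, 72, 11, 72, 48, 84],
    [0, 48, 72, 48, 0, 23],
    [0, 0, 48, 0, 0, 48],
    [0, 24, 84, 23, 48, 11]]
    (by decide +kernel) (by decide +kernel) (by decide +kernel) (by decide +kernel) (by decide +kernel)
    (by decide +kernel) (by decide +kernel)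

theorem node_cubic_6 : HasF true 6 3 (6+1+4) :=
  node_cubic (n := 6) ![![1, 2, 1, 0, 0, 1, -1], ![0, -1, 1, 1, -1, 0, 1], ![0, 0, 1, 1, 0, 1, 1], ![1, -1, 1, -1, 1, 2, -1]]
    (symT [(0, 1, 2, -1), (0, 1, 3, 3), (0, 1, 4, 4), (0, 1, 5, 1), (0, 2, 3, -3), (0, 2, 4, -4), (0, 3, 4, 3), (0, 3, 5, 2), (0, 3, 6, 1), (0, 4, 5, 5), (0, 4, 6, 1), (1, 2, 4, -2), (1, 2, 6, -1), (1, 3, 4, 1), (1, 3, 5, -1), (1, 3, 6, 1), (1, 4, 6, 1), (1, 5, 6, 1), (2, 3, 4, -1), (2, 4, 5, -1), (3, 4, 6, 1), (4, 5, 6, 1)])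
    [[70, 49, 0, 81, 86, 17, 59, 54, 80, 0, 64, 70, 0, 0, 6, 21, 78, 0, 57, 19, 89, 19, 0, 0, 8, 76, 0, 0, 0, 21, 0, 0, 0, 0, 0],
    [43, 3, 2, 65, 75, 28, 21, 11, 69, 0, 35, 43, 0, 0, 8, 44, 58, 0, 14, 39, 79, 39, 0, 0, 18, 53, 0, 0, 0, 44, 0, 0, 0, 0, 0],
    [70, 49, 49, 81, 38, 65, 59, 54, 32, 0, 16, 70, 0, 0, 54, 70, 5, 0, 32, 92, 16, 92, 0, 0, 81, 27, 0, 0, 0, 70, 0, 0, 0, 0, 0],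
    [16, 81, 0, 81, 0, 81, 81, 0, 81, 0, 0, 16, 0, 0, 16, 65, 89, 0, 24, 8, 24, 8, 0, 0, 73, 32, 0, 0, 0, 65, 0, 0, 0, 0, 0],
    [0, 33, 33, 0, 0, 0, 0, 0, 0, 0, 0, 0, 0, 0, 0, 32, 32, 0, 0, 65, 0, 65, 0, 0, 0, 65, 0, 0, 0, 32, 0, 0, 0, 0, 0],
    [70, 81, 81, 81, 38, 65, 59, 54, 32, 0, 16, 70, 0, 0, 54, 5, 86, 0, 81, 11, 65, 11, 0, 0, 32, 92, 0, 0, 0, 5, 0, 0, 0, 0, 0],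
    [59, 50, 17, 49, 27, 64, 5, 11, 1, 0, 81, 59, 0, 0, 75, 27, 91, 0, 64, 6, 80, 6, 0, 0, 17, 70, 0, 0, 0, 27, 0, 0, 0, 0, 0],
    [64, 26, 82, 41, 8, 16, 56, 81, 41, 0, 0, 16, 0, 0, 40, 0, 84, 0, 84, 13, 84, 13, 0, 0, 13, 0, 0, 0, 0, 0, 0, 0, 0, 0, 0],
    [33, 39, 81, 53, 86, 54, 79, 70, 21, 0, 16, 81, 0, 0, 49, 15, 64, 73, 82, 0, 65, 65, 65, 0, 88, 17, 0, 0, 33, 47, 0, 0, 0, 0, 0],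
    [64, 62, 17, 44, 11, 43, 15, 27, 76, 0, 81, 16, 0, 0, 48, 80, 31, 24, 15, 1, 32, 34, 33, 0, 9, 81, 0, 0, 65, 48, 0, 0, 0, 0, 0],
    [65, 11, 16, 91, 59, 43, 64, 27, 27, 0, 81, 16, 0, 0, 0, 80, 56, 73, 41, 73, 57, 8, 33, 0, 32, 81, 0, 0, 65, 48, 0, 0, 0, 0, 0],
    [64, 22, 49, 71, 38, 22, 1, 70, 38, 0, 16, 16, 0, 0, 32, 16, 88, 24, 7, 73, 89, 41, 65, 0, 17, 16, 0, 0, 32, 49, 0, 0, 0, 0, 0],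
    [32, 82, 65, 17, 49, 65, 16, 0, 17, 0, 0, 32, 0, 0, 80, 0, 23, 48, 23, 74, 24, 74, 1, 0, 25, 0, 0, 0, 0, 0, 0, 0, 0, 0, 0],
    [65, 10, 15, 91, 59, 44, 64, 27, 26, 0, 80, 16, 0, 0, 1, 80, 8, 73, 90, 24, 9, 56, 33, 0, 80, 82, 0, 0, 65, 47, 0, 0, 0, 0, 0],
    [49, 47, 96, 48, 0, 49, 49, 0, 48, 0, 0, 49, 0, 0, 49, 0, 25, 0, 25, 72, 25, 72, 0, 0, 72, 0, 0, 0, 0, 0, 0, 0, 0, 0, 0],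
    [32, 32, 64, 65, 0, 65, 65, 0, 65, 0, 0, 32, 0, 0, 32, 0, 48, 0, 48, 49, 49, 49, 1, 0, 49, 0, 0, 0, 0, 0, 0, 0, 0, 0, 0],
    [28, 65, 4, 16, 28, 32, 40, 75, 0, 0, 49, 28, 0, 0, 10, 83, 83, 64, 0, 79, 82, 79, 64, 0, 80, 79, 65, 65, 32, 83, 65, 0, 0, 64, 0],
    [91, 72, 87, 81, 10, 49, 70, 11, 16, 0, 96, 91, 0, 0, 28, 32, 8, 65, 73, 57, 7, 57, 64, 0, 57, 33, 65, 65, 32, 32, 64, 0, 0, 65, 0],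
    [0, 2, 0, 0, 0, 0, 95, 0, 0, 0, 0, 0, 0, 0, 0, 96, 96, 0, 0, 1, 0, 1, 1, 0, 0, 1, 0, 0, 1, 96, 0, 0, 0, 0, 0],
    [92, 69, 37, 80, 59, 96, 69, 11, 64, 0, 49, 92, 0, 0, 76, 80, 81, 65, 1, 80, 82, 80, 65, 0, 80, 81, 65, 64, 33, 80, 65, 0, 0, 65, 0],
    [91, 72, 39, 81, 59, 0, 70, 11, 65, 0, 49, 91, 0, 0, 75, 81, 32, 65, 48, 33, 31, 33, 64, 0, 33, 81, 64, 65, 32, 81, 65, 0, 0, 65, 0],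
    [86, 9, 38, 35, 24, 59, 51, 81, 3, 0, 0, 70, 0, 0, 78, 43, 55, 81, 12, 42, 44, 42, 0, 0, 69, 54, 0, 0, 0, 43, 0, 0, 0, 0, 0],
    [11, 14, 58, 86, 0, 87, 71, 16, 21, 0, 48, 27, 0, 0, 92, 6, 55, 89, 49, 42, 65, 42, 0, 0, 40, 91, 0, 0, 0, 6, 0, 0, 0, 0, 0],
    [86, 81, 38, 11, 0, 10, 27, 81, 76, 0, 49, 70, 0, 0, 5, 92, 43, 8, 48, 54, 32, 54, 0, 0, 57, 5, 0, 0, 0, 92, 0, 0, 0, 0, 0],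
    [43, 33, 92, 70, 16, 21, 86, 81, 6, 0, 49, 59, 0, 0, 75, 70, 94, 89, 24, 3, 40, 3, 0, 0, 65, 27, 0, 0, 0, 70, 0, 0, 0, 0, 0],
    [86, 0, 70, 92, 81, 44, 76, 16, 59, 0, 48, 70, 0, 0, 54, 27, 51, 8, 24, 46, 8, 46, 0, 0, 81, 70, 0, 0, 0, 27, 0, 0, 0, 0, 0],
    [76, 79, 10, 5, 81, 54, 6, 0, 38, 0, 0, 43, 0, 0, 59, 22, 95, 16, 73, 2, 41, 2, 0, 0, 40, 75, 0, 0, 0, 22, 0, 0, 0, 0, 0],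
    [43, 65, 27, 70, 16, 22, 86, 81, 5, 0, 48, 59, 0, 0, 76, 5, 78, 89, 73, 19, 89, 19, 0, 0, 16, 92, 0, 0, 0, 5, 0, 0, 0, 0, 0]]
    [[1, 0, 0, 0, 0, 0, 0],
    [0, 0, 47, 0, 0, 48, 45],
    [0, 47, 3, 48, 49, 51, 7],
    [0, 0, 48, 0, 0, 48, 49],
    [0, 0, 49, 0, 0, 49, 49],
    [0, 48, 51, 48, 49, 2, 52],
    [0, 45, 7, 49, 49, 52, 23]]
    (by decide +kernel) (by decide +kernel) (by decide +kernel) (by decide +kernel) (by decide +kernel)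
    (by decide +kernel) (by decide +kernel)

/-- The perfect case: the `4` coordinate points and the unit point account for all `20` cubic monomials. -/
theorem full_cubic : HasF false 3 3 5 :=
  HasF.of_cubic (n := 3) ![![1, 1, 1, 1]]
    [[65, 65, 65, 64],
    [65, 65, 64, 65],
    [65, 64, 65, 65],
    [64, 65, 65, 65]]
    (by decide +kernel) (by decide +kernel)

theorem cubic_lt (n : ℕ) (hn : 1 ≤ n) : ∃ m w, 3 * m + w = n + 1 ∧ (w = 2 ∨ w = 3 ∨ w = 4) := by
  refine ⟨(n-1)/3, n + 1 - 3 * ((n-1)/3), by omega, by omega⟩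

theorem hasF_cubic {n : ℕ} (hn : 1 ≤ n) : HasF false n 3 (rm n 3) := by
  obtain ⟨m, w, h, hw⟩ := cubic_lt n hn
  rcases hw with rfl | rfl | rfl
  · obtain ⟨A, B, C, hG⟩ := glob_2 m
    have := hG.hasF h (by decide)
    rwa [card_Jx, show Fintype.card {z : Fin 2 // (z == 0) = true} = 1 from by decide, rm_cubic h (by omega)] at this
  · obtain ⟨A, B, C, hG⟩ := glob_3 m
    have := hG.hasF h (by decide)
    rwa [card_Jx, show Fintype.card {z : Fin 3 // true = true} = 3 from by decide, rm_cubic h (by omega)] at this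
  · obtain ⟨A, B, C, hG⟩ := glob_4 m
    have := hG.hasF h (by decide)
    rwa [card_Jx, show Fintype.card {z : Fin 4 // true = true} = 4 from by decide, rm_cubic h (by omega)] at this

theorem hasG_cubic {n : ℕ} (hn : 1 ≤ n) (h5 : n ≠ 5) : HasG n 3 (rm n 3) := by
  obtain ⟨m, w, h, hw⟩ := cubic_lt n hn
  by_cases hm : m = 1
  · subst hm
    obtain rfl | rfl : n = 4 ∨ n = 6 := by omega
    · exact node_cubic_4.hasG (by norm_num)
    · exact node_cubic_6.hasG (by norm_num)
  rcases hw with rfl | rfl | rfl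
  · obtain ⟨A, B, C, hG⟩ := glob_2 m
    have := hG.hasG h (by decide) (by decide) hm
    rwa [card_Jx, show Fintype.card {z : Fin 2 // (z == 0) = true} = 1 from by decide, rm_cubic h (by omega)] at this
  · obtain ⟨A, B, C, hG⟩ := glob_3 m
    have := hG.hasG h (by decide) (by decide) hm
    rwa [card_Jx, show Fintype.card {z : Fin 3 // true = true} = 3 from by decide, rm_cubic h (by omega)] at this
  · obtain ⟨A, B, C, hG⟩ := glob_4 m
    have := hG.hasG h (by decide) (by decide) hm
    rwa [card_Jx, show Fintype.card {z : Fin 4 // true = true} = 4 from by decide, rm_cubic h (by omega)] at this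

/-! ### Quartics through the coordinate points -/

/-- The fourth derivative in the directions of four coordinates. -/
noncomputable def phi4 {n : ℕ} (p q r s : Fin (n+1)) : Pol n →ₗ[ℂ] ℂ := (phi3 p q r).comp (pderiv s).toLinearMap

theorem phi4_cube {n : ℕ} (p q r s : Fin (n+1)) (a b : Pt n) : phi4 p q r s (linForm a ^ 3 * linForm b) =
    6 * (a p * a q * a r * b s + a p * a q * a s * b r + a p * a r * a s * b q + a q * a r * a s * b p) := by
  have h : phi4 p q r s (linForm a ^ 3 * linForm b) =
      (3 * a s) * phi3 p q r (linForm a * linForm a * linForm b) + b s * phi3 p q r (linForm a * linForm a * linForm a) := by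
    rw [← smul_eq_mul (3 * a s), ← smul_eq_mul (b s), ← map_smul, ← map_smul, ← map_add, phi4, LinearMap.comp_apply]
    congr 1
    simp [Derivation.leibniz, Derivation.leibniz_pow, pderiv_linForm, smul_eq_C_mul]
    rw [show (C (3:ℂ) : Pol n) = 3 from map_ofNat C 3]
    ring
  rw [h, phi3_mul, phi3_mul]
  ring

/-- Coefficient of the unknown `c` in the quartic equation of multidegree `r`. -/
def quaM {q n : ℕ} (p : Fin q → Fin (n+1) → ℤ) (r : (Fin (n+1) × Fin (n+1)) × Fin (n+1) × Fin (n+1)) (c : Fin q × Fin (n+1)) : ℤ :=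
  (if r.2.2 = c.2 then p c.1 r.1.1 * p c.1 r.1.2 * p c.1 r.2.1 else 0) +
  (if r.2.1 = c.2 then p c.1 r.1.1 * p c.1 r.1.2 * p c.1 r.2.2 else 0) +
  (if r.1.2 = c.2 then p c.1 r.1.1 * p c.1 r.2.1 * p c.1 r.2.2 else 0) +
  (if r.1.1 = c.2 then p c.1 r.1.2 * p c.1 r.2.1 * p c.1 r.2.2 else 0)

theorem quaM_sum {q n : ℕ} (p : Fin q → Fin (n+1) → ℤ) (r : (Fin (n+1) × Fin (n+1)) × Fin (n+1) × Fin (n+1)) (m : Fin q → Pt n) :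
    phi4 r.1.1 r.1.2 r.2.1 r.2.2 (∑ l, linForm (fun i => (p l i : ℂ)) ^ 3 * linForm (m l)) =
      6 * ∑ c : Fin q × Fin (n+1), (quaM p r c : ℂ) * m c.1 c.2 := by
  simp only [map_sum, phi4_cube, Finset.mul_sum, Fintype.sum_prod_type]
  refine Finset.sum_congr rfl fun l _ => ?_
  simp [quaM, add_mul, Finset.sum_add_distrib, mul_add]

/-- All quadruples of indices. -/
def l4 (n : ℕ) : List ((Fin (n+1) × Fin (n+1)) × Fin (n+1) × Fin (n+1)) :=
  (l2 (n+1) (n+1)).flatMap fun x => (l2 (n+1) (n+1)).map fun y => (x, y)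

/-- Multidegrees of quartic monomials that are not divisible by a cube. -/
def quaR (n : ℕ) : List ((Fin (n+1) × Fin (n+1)) × Fin (n+1) × Fin (n+1)) :=
  (l4 n).filter fun r => r.1.1 ≤ r.1.2 ∧ r.1.2 ≤ r.2.1 ∧ r.2.1 ≤ r.2.2 ∧ r.1.1 ≠ r.2.1 ∧ r.1.2 ≠ r.2.2

instance fact_prime_7 : Fact (Nat.Prime 7) := ⟨by norm_num⟩

theorem HasF.of_quartic {n q : ℕ} (p : Fin q → Fin (n+1) → ℤ) (N : List (List ℕ))
    (hN : chkL 7 N ((l2 q (n+1)).map fun c => (quaR n).map fun r => (quaM p r c % 7).toNat) = true)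
    (hl : (l2 q (n+1)).Nodup) : HasF false n 4 (n+1+q) := by
  refine HasF.of (a := cubP p) (i := .inl 0) (tnod_iff.2 ⟨fun m hm => ?_, by simp⟩) (by simp)
  rw [show 4 - 1 = 3 from rfl, Fintype.sum_sum_type] at hm
  have hc1 : ∀ i, cubP p (.inl i) = Pi.single i 1 := fun i => rfl
  have hc2 : ∀ l, cubP p (.inr l) = fun i => (p l i : ℂ) := fun i => rfl
  simp only [hc1, hc2] at hm
  have hq := _root_.cert 7 (quaM p) (quaR n) (l2 q (n+1)) hl (by simp [l2]) N hN (fun c => m (.inr c.1) c.2) (by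
    rintro ⟨⟨i, j⟩, k, l⟩ hr
    have hr' : i ≤ j ∧ j ≤ k ∧ k ≤ l ∧ i ≠ k ∧ j ≠ l := (by simpa [quaR] using hr : _ ∧ _).2
    obtain ⟨h1, h2, h3, h4, h5⟩ := hr'
    have e := congrArg (phi4 i j k l) hm
    rw [map_add, map_zero, quaM_sum p ((i, j), k, l), map_sum, Finset.sum_eq_zero, zero_add] at e
    · simpa using e
    · intro x _
      have hz : ∀ a b c : Fin (n+1), ¬ (a = b ∧ b = c) → (Pi.single x 1 : Pt n) a * (Pi.single x 1 : Pt n) b *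
          (Pi.single x 1 : Pt n) c = 0 := by
        intro a b c h
        simp only [Pi.single_apply]
        split_ifs <;> simp_all
      rw [phi4_cube, hz i j k (by omega), hz i j l (by omega), hz i k l (by omega), hz j k l (by omega)]
      simp)
  have hq' : ∀ l, m (.inr l) = 0 := fun l => funext fun k => congrFun hq (l, k)
  have hc : ∀ l k, m (.inl l) k = 0 := by
    intro l k
    have e := congrArg (phi4 l l l k) hm
    simp only [hq', map_add, map_sum, phi4_cube, map_zero] at e
    rw [Finset.sum_eq_single l] at e
    · by_cases hk : k = l
      · subst hk
        have : m (.inl k) k * 24 = 0 := by rw [← e]; simp; ring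
        simpa using this
      · simpa [hk] using e
    · intro j _ hj; simp [hj.symm]
    · simp
  funext l
  rcases l with l | l
  · exact funext (hc l)
  · have e := hq' l
    exact e

/-! ### Quartics in six variables -/

/-- The first `k` digits of `x` in base `7`, lowest first. -/
def unp : ℕ → ℕ → List ℕ
  | 0, _ => []
  | k+1, x => (x % 7) :: unp k (x / 7)

set_option maxHeartbeats 0 in
set_option maxRecDepth 20000 in
/-- The `126` quartic monomials in six variables are spanned by the tangent spaces at `21` points. -/
theorem full_quartic : HasF false 5 4 21 :=
  HasF.of_quartic (n := 5) ![![1, 0, 2, 0, 1, 1], ![-1, -1, 2, 2, 1, 0], ![1, -1, -1, -1, 0, 1], ![1, 0, 0, 1, -1, -1], ![1, -1, 2, 1, 1, -1], ![2, 2, 2, 0, 2, -1], ![-1, 0, 1, 2, 1, 2], ![0, 2, 2, 2, 1, 1], ![-1, 1, 2, 2, 2, -1], ![2, -1, 1, 0, 0, -1], ![0, 0, 1, 1, -1, 1], ![-1, 0, 1, -1, -1, 2], ![0, -1, 2, 1, 2, -1], ![2, 2, -1, -1, -1, -1], ![0, -1, 1, -1, 1, -1]]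
  ([4067301201233793434961554694968669402761489387737699940682907160923940479255,
    9168891524338101683001577927944338955539538237644219530078870448578453284992,
    461744620940416098705128500676597118329271210012630386322529318929736062699,
    8773395174332172178660207503115497958509760619537756831574046544862298119760,
    7844594365017495722393238251185730377058941049095341980212845843408393402470,
    7239934415378028278049038381138510017102653037976051617833240608404330476686,
    7179798693596117207041827886028585326475956565913073990688362631186046516878,
    8355322673635375141020126797490388282957296500024583671332934198672337721154,
    3708050395791501904124347313927920561577534686447380771057895412495759099239,
    2510032169614505183274255207323492106470326102287627416898725364455930186844,
    10295263359096323595589312625741225171695076192029689018411192574372967679855,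
    1815312946969071135296234965765157205278405470789724368141035509462244977927,
    4909497653390295436185181641005662769329831631273448769387706192316718268819,
    3712858244825560673878623686921002157333196771112252572553549687360275604651,
    1489863309338484122128098852695939682840923682053054666834367555977173982483,
    2309152389673838989728556630275342162552471097501669013794774247440235696785,
    2652819826771909641093087444085165066269773510671731072781205039228458544691,
    6430008030564159489104703320930669068421291307382414160397877808074971330815,
    5240061855221960871158329477788121320409731424496637453965637213812365791216,
    3070350109758476670409859275109792747369397957145371430062658621639885388216,
    4171710242679499249640700227624392517399625790945475397337937816165350368786,
    4852075513364927162238148971582804102408853865767838253528535260982157425464,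
    9840115511626741022808743521472290949305812495873847435243504308856877464468,
    7471421240060665579079418281784072734268032549791633635648729708015714907672,
    2524333582491391609332125662200396371654457243571387385877999582439620658868,
    3556900728139674924843978104698525482595604129239565444671072513138724283785,
    728334602554681562885411945264308553183019881474497452584197551785828089939,
    6671711379798353728569907351814236849250357227390055159607572260205028604547,
    2581529477114546661758111093876878165427050232942564153439722625893852856294,
    4431535867539803781922156982820802955026923441654251866542672972357646215000,
    4931919667793576720337770835756363920075827430593767377078692163724154482203,
    5688529119409480759666764115453149077044228371211700880454646187271847589880,
    5204830582956585349097995966954620647708099277255866443642468076541268440129,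
    11232663306462489545374788225470712043212711720700405221537322025949401683855,
    4920318723191187156514983135710587244704694518874681529026790297363517754613,
    5933986827575332755430555618212533237482201985316973999026810879666773672334,
    6637926899516666793430771262025364898229597451024341790656399493278967434102,
    600130835856407425313110744733176334189780244815473033171810933267392437869,
    10931175962419975428597858444058280995378254261304755977105559381752727163425,
    4049624473382716443013872407358141090445499628113508057945657404391736906580,
    8037653544322858895373769806081450115308645899734115158516202648556452003681,
    5545198281979182620847823525627244260229310108312987414148843195424461873464,
    4170385976134173816083300795761642088231628945308507195623006212683068673577,
    6636756657442006046440644447778861083278729601781236862891105094388390366068,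
    7398176953875067995754388383418431117973472737581196997768825903638356352624,
    1822909475402509707685471022746994211905437833588534728483933117199391293069,
    10925180784110226259691661506606627325172893597072695206424580349978429573768,
    8398824689450719891974315588702590782420450635259773084609585297517103239785,
    3030775241762824619870939809252342843468730882585571049470556571393924390779,
    6503156178718904884771573766113130282286565919969578413604345637576557882763,
    132113854428529570196293325046706579188932668154419883458284872570537196012,
    1876613920509857419487646008475570116125610342216297061343765811111227190517,
    7529646705978450705901205548275266288231896654898244179361233787563763945588,
    5040867358802649274034660174746613389909410635367541200846785203057748740371,
    8246589862020331488117406851640316525117104035172445937178380016279998860947,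
    5692382449028229855324136389052436092174460132808116248229680218683013107916,
    2865259019266542605333879121306238396197512637005692011128276167182355705832,
    3336119661812882192314053525399954163218029976395089687670195930684674081876,
    11243746225998315730220148614564934370393323028996979123241028715737565445865,
    9338653184192726695834328258851264002817434184543935695713798436914965045147,
    3031651800170723533609277342566507265930216035445213075387721142577874474729,
    2047109750178569051314432927947973138033381114361933533216297574552397990184,
    7148580147037281943243515995632677153857600232271568983865821080362720410204,
    9865739669193868602105910790043301205251506000425018427218332704635424090198,
    3160948004078122965966237281258003253179366770787835580528563247432160609541,
    5941162236919973063961259051376172690802010794976372713344989782135836533788,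
    11447352192338380711064027294541562052923681683941092751113795546025367072375,
    1350746797488147951785949599986213631033686877664870347242568278818635286021,
    10759638661958572867783435046900226193513242570592650062680481906427100378405,
    10425949317015587311031292524965728732092128538888955429019762086663288806226,
    5884792919109020349845454177365563291469658437587615732906413054412274070182,
    6777797349398756531358934678116429476790119001958502460428830597511230376207,
    2023209347776142380312309718034790351557837530980568417994588240136274644367,
    5731206857611313806749298276436059236675807290500114508406959923281858399842,
    3835634001521425182032231925876939443520538902255772721081097038589539011988,
    4643492931140062677124941869676699358182956505783974165439284810538062923938,
    1280141620657614829329494372836898297545392647817632479015781054370585951140,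
    8654852071679622708809633513874642891014654427010814401185936764928172810541,
    7639967670330249457592305722004305608983553773718151665824663014404495171667,
    11125641927447887832354887938387758429203292928698663657448342364000856273745,
    4795269094356842595216348772568831208204499935840636427690987964500944386689,
    3773574181562166466949991306062073313160283242121247483296785253518645385789,
    7031627332069041009370984948801802587191197970982075914979326219062192316558,
    1464818254339690877815655866368667276516154901452205076459520770751647876059,
    9056551319431002546061347932859249726458370761374533740917784309019902287564,
    4146286764838680799608920599534604703883364680726042837901769263423530271280,
    2204036124762682987041918597091777656442113488454594699754307193270813245581,
    1962062472334336604556897185152362736313375288584536577425737705069412632277,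
    4095868030013524928776254468009970412691609018526797229345269442819463086658,
    10431868121649922201835405927490067689225899256543235058577994908443264789661].map (unp 90))
  (by decide +kernel) (by decide +kernel)

/-! ### Low degree configurations -/

theorem HasF.sp {b : Bool} {n c q P K : ℕ} (hc : 1 ≤ c) (h : HasF b n c q) (hq : q ≤ P) (hK : K ≤ q * (n+1) + (P - q))
    (hK' : K ≤ (n+c).choose c) : HasSp n c P K := by
  by_cases hK0 : K ≤ q * (n+1)
  · exact h.hasSp.mono hq hK0
  · exact (h.hasSp.add hc (K - q * (n+1)) (by omega)).mono (by omega) (by omega)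

theorem hasSp_one (n : ℕ) : HasSp n 1 1 (n+1) := by
  refine ⟨fun _ => 0, fun k => (0, k), ?_⟩
  have h : (tan 1 (fun _ : Fin 1 => (0 : Pt n)) ∘ fun k : Fin (n+1) => ((0 : Fin 1), k)) = X := by
    funext k
    simp [tan]
  rw [h]
  exact MvPolynomial.linearIndependent_X _ _

/-- Two points span all quadrics but the square of the last coordinate. -/
theorem hasSp_plane_two : HasSp 2 2 2 5 := by
  refine ⟨![Pi.single 0 1, Pi.single 1 1], ![(0, 0), (0, 1), (0, 2), (1, 1), (1, 2)], ?_⟩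
  rw [Fintype.linearIndependent_iff]
  intro g hg
  have h : ∀ x : Pt 2, g 0 * (x 0 * x 0) + g 1 * (x 0 * x 1) + g 2 * (x 0 * x 2) + g 3 * (x 1 * x 1) + g 4 * (x 1 * x 2) = 0 := by
    intro x
    have := congrArg (MvPolynomial.eval x) hg
    simpa [Fin.sum_univ_succ, tan, linForm_single, add_assoc, smul_eval] using this
  have h0 := h ![1, 0, 0]
  have h3 := h ![0, 1, 0]
  have h1 := h ![1, 1, 0]
  have h2 := h ![1, 0, 1]
  have h4 := h ![0, 1, 1]
  simp at h0 h1 h2 h3 h4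
  intro i
  fin_cases i <;> simp_all

/-- A quadratic cone. -/
theorem quad_node (n : ℕ) : HasF true n 2 1 := by
  refine HasF.of (J := Fin 1) (a := fun _ => Pi.single 0 1) (i := 0) (tnod_iff.2 ⟨fun m hm => ?_, fun _ => ?_⟩) rfl
  · have h : ∀ k, (X 0 * linForm (m 0) : Pol n) = 0 → m 0 k = 0 := by
      intro k h
      have h' := (mul_eq_zero.1 h).resolve_left (X_ne_zero 0)
      have := congrArg (pderiv k) h'
      rw [pderiv_linForm, map_zero] at this
      simpa using this
    simp [linForm_single] at hm
    funext i k
    rw [Subsingleton.elim i 0]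
    exact h k (by simpa using hm)
  · let h : Pol n →ₗ[ℂ] ℂ := (evalAt 0).comp (∑ i ∈ Finset.univ.erase 0, (pderiv i).toLinearMap.comp (pderiv i).toLinearMap)
    have hv : ∀ a b : Pt n, h (linForm a * linForm b) = ∑ i ∈ Finset.univ.erase 0, 2 * (a i * b i) := by
      intro a b
      simp only [h, LinearMap.comp_apply, LinearMap.sum_apply, map_sum]
      refine Finset.sum_congr rfl fun i _ => ?_
      simp [evalAt, pderiv_linForm, Derivation.leibniz]
      ring
    refine ⟨h, fun j m => ?_, LinearMap.proj 0, LinearMap.proj 0, fun w hw => funext fun k => ?_⟩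
    · rw [show 2 - 1 = 1 from rfl, pow_one, hv]
      refine Finset.sum_eq_zero fun i hi => ?_
      simp [Finset.ne_of_mem_erase hi]
    · have := hw (Pi.single k 1)
      rw [show 2 - 2 = 0 from rfl, pow_zero, one_mul, hv] at this
      by_cases hk : k = 0
      · subst hk
        rw [Finset.sum_eq_zero fun i hi => by simp [Finset.ne_of_mem_erase hi]] at this
        simpa using this
      · rw [Finset.sum_eq_single k (fun i _ hi => by simp [hi]) (fun h => by simp [hk] at h)] at this
        simpa [Ne.symm hk] using this

/-- A cubic singular at `s` points of a hyperplane and with a node outside: the hyperplane together with the cone over a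
quadric of the hyperplane through the `s` points. The node is the vertex. -/
theorem node_three {m s : ℕ} (hm : 1 ≤ m) (hs : 1 ≤ s) (h : s ≤ rm m 3) : HasF true (m+1) 3 (s+1) := by
  have h1 := rm_le.1 h
  have h6 : (m + 3).choose 3 * 6 = (m+3) * (m+2) * (m+1) := by
    have := Nat.descFactorial_eq_factorial_mul_choose (m+3) 3
    simp [Nat.descFactorial, Nat.factorial] at this
    nlinarith
  have h2 : (m+2).choose 2 * 2 = (m+2) * (m+1) := by
    have := Nat.descFactorial_eq_factorial_mul_choose (m+2) 2
    simp [Nat.descFactorial, Nat.factorial] at this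
    nlinarith
  have h3 : s * 6 < (m+3) * (m+2) := by
    by_contra hc
    push Not at hc
    nlinarith
  have := horace (b := true) (m := m) (P := 1) (s := s) (e := 0) (c := 2) le_rfl le_rfl (by omega) (quad_node _)
    ((hasF_cubic hm).mono hs h) (by rw [show 2 + 1 = 3 from rfl]; omega) (hasSp_one (m+1)) (by
      simp
      nlinarith)
  rwa [show 1 + s + 0 = s + 1 by omega] at this

/-! ### Inductive steps -/

section
variable {b : Bool} {m c P s e : ℕ}

theorem pascal (m c : ℕ) : (m+1+(c+1)).choose (c+1) = (m+1+c).choose c + (m+(c+1)).choose (c+1) := by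
  rw [show m+1+(c+1) = (m+1+c)+1 by ring, Nat.choose_succ_succ, show m+(c+1) = m+1+c by ring]

/-- The degeneration with a trace of exactly the right size. -/
theorem horace_exact (hc : 2 ≤ c) (hP : 1 ≤ P) (he : e ≤ m+1) (hT : HasF false m (c+1) s)
    (hs : s * (m+1) + e = (m+(c+1)).choose (c+1)) (hr : P+s+e ≤ rm (m+1) (c+1)) (hF : HasF b (m+1) c (P+e))
    (hS : HasSp (m+1) (c-1) P ((m+c).choose (c-1))) : HasF b (m+1) (c+1) (P+s+e) := by
  refine horace hc hP he hF hT hs.le hS ?_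
  have h1 := rm_le.1 hr
  rw [pascal, ← hs] at h1
  have h2 : (m+1+c).choose c = (m+c).choose (c-1) + (m+c).choose c := by
    have := pascal m (c-1)
    rwa [show c-1+1 = c by omega, show m+1+(c-1) = m+c by omega] at this
  have h3 : b.toNat ≤ 1 := b.toNat_le
  nlinarith

theorem resid_le (hs : s * (m+1) + e = (m+(c+1)).choose (c+1)) (hes : e ≤ s) (hr : P+s+e ≤ rm (m+1) (c+1)) :
    P + e ≤ rm (m+1) c := by
  have h1 := rm_le.1 hr
  rw [pascal, ← hs] at h1
  rw [rm_le]
  nlinarith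

theorem trace_split (m d : ℕ) : ∃ e, rm m d * (m+1) + e = (m+d).choose d ∧ 1 ≤ e ∧ e ≤ m+1 := by
  have h : 0 < (m+d).choose d := Nat.choose_pos (by omega)
  have h2 := Nat.div_add_mod' ((m+d).choose d - 1) (m+1)
  have h3 := Nat.mod_lt ((m+d).choose d - 1) (show 0 < m+1 by omega)
  refine ⟨((m+d).choose d - 1) % (m+1) + 1, ?_, by omega, by omega⟩
  rw [rm]; omega

theorem lt_rm (n d : ℕ) : (n+d).choose d ≤ rm n d * (n+1) + (n+1) := by
  obtain ⟨e, h, -, h2⟩ := trace_split n d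
  omega

/-- The numerical condition for the degeneration with the largest possible trace to work in degree `c+1` and `m+2` variables. -/
def Big (m c : ℕ) : Prop := (m+1)*(c+1)*(2*m^2+7*m+7) ≤ (m+c).choose c * (m*c)

theorem Big.succ (h : Big m c) (hc : 1 ≤ c) : Big m (c+1) := by
  unfold Big at *
  have h1 : (m+c).choose c ≤ (m+(c+1)).choose (c+1) := by
    rw [← add_assoc, Nat.choose_succ_succ]; omega
  refine le_trans ?_ (Nat.mul_le_mul_right _ h1)
  refine Nat.le_of_mul_le_mul_right ?_ hc
  have h2 : (c+1+1) * c ≤ (c+1)*(c+1) := by ring_nf; omega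
  calc (m+1)*(c+1+1)*(2*m^2+7*m+7) * c = ((c+1+1)*c) * ((m+1)*(2*m^2+7*m+7)) := by ring
    _ ≤ ((c+1)*(c+1)) * ((m+1)*(2*m^2+7*m+7)) := Nat.mul_le_mul_right _ h2
    _ = ((m+1)*(c+1)*(2*m^2+7*m+7)) * (c+1) := by ring
    _ ≤ ((m+c).choose c * (m*c)) * (c+1) := Nat.mul_le_mul_right _ h
    _ = _ := by ring

theorem Big.mono {c c' : ℕ} (h : Big m c) (hc : 1 ≤ c) (hcc : c ≤ c') : Big m c' := by
  induction c', hcc using Nat.le_induction with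
  | base => exact h
  | succ k hk ih => exact ih.succ (by omega)

theorem Big.four (hm : 6 ≤ m) : Big m 4 := by
  unfold Big
  have h : (m + 4).choose 4 * 24 = (m+4) * (m+3) * (m+2) * (m+1) := by
    have := Nat.descFactorial_eq_factorial_mul_choose (m+4) 4
    simp [Nat.descFactorial, Nat.factorial] at this
    nlinarith
  obtain ⟨k, rfl⟩ := Nat.exists_eq_add_of_le hm
  have h2 : 24 * (((6+k)+1)*(4+1)*(2*(6+k)^2+7*(6+k)+7)) ≤ ((6+k)+4) * ((6+k)+3) * ((6+k)+2) * ((6+k)+1) * ((6+k)*4) := by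
    ring_nf
    nlinarith [Nat.zero_le (k^2), Nat.zero_le (k^3), Nat.zero_le (k^4), Nat.zero_le (k^5), Nat.zero_le k]
  rw [← h] at h2
  nlinarith

theorem Big.step (hB : Big m c) (hm : 1 ≤ m) (hc : 2 ≤ c) (hT : HasF false m (c+1) (rm m (c+1)))
    (hF : HasF b (m+1) c (rm (m+1) c)) (hS : HasF false (m+1) (c-1) (rm (m+1) (c-1))) :
    HasF b (m+1) (c+1) (rm (m+1) (c+1)) := by
  obtain ⟨e, hs, he1, he⟩ := trace_split m (c+1)
  unfold Big at hB
  set s := rm m (c+1) with hs'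
  set r := rm (m+1) (c+1) with hr'
  set q := rm (m+1) (c-1) with hq'
  have hr := lt_rm (m+1) (c+1)
  have hq : q * (m+1+1) < _ := rm_le.1 le_rfl
  rw [show m+1+(c-1) = m+c by omega] at hq
  have hq2 := lt_rm (m+1) (c-1)
  rw [show m+1+(c-1) = m+c by omega] at hq2
  rw [← hr'] at hr
  rw [← hq'] at hq2
  rw [pascal] at hr
  have h2 : (m+1+c).choose c = (m+c).choose (c-1) + (m+c).choose c := by
    have := pascal m (c-1)
    rwa [show c-1+1 = c by omega, show m+1+(c-1) = m+c by omega] at this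
  have hD : (c+1) * (m+(c+1)).choose (c+1) = (m+c+1) * (m+c).choose c := by
    have := Nat.add_one_mul_choose_eq (m+c) c
    rw [show m+(c+1) = m+c+1 by ring, this]; ring
  rw [h2] at hr
  generalize hS' : (m+c).choose (c-1) = S at *
  generalize hB' : (m+c).choose c = B at *
  generalize hD' : (m+(c+1)).choose (c+1) = D at *
  -- the trace accounts for less than what is gained from degree `c - 1` to degree `c + 1`
  have k1 : s + (2*m^2+7*m+7) ≤ B := by
    have : (s * (m+1) + (m+1) * (2*m^2+7*m+7)) * (c+1) ≤ (B * (m+1)) * (c+1) := by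
      have : s * (m+1) * (c+1) ≤ D * (c+1) := Nat.mul_le_mul_right _ (by omega)
      nlinarith
    have := Nat.le_of_mul_le_mul_right this (by omega)
    refine Nat.le_of_mul_le_mul_right ?_ (show 0 < m+1 by omega)
    linarith
  have k2 : (s + e + q + m + 2) * (m+2) ≤ r * (m+2) := by
    have : e * (m+1) ≤ (m+1) * (m+1) := Nat.mul_le_mul_right _ he
    nlinarith
  have k3 := Nat.le_of_mul_le_mul_right k2 (by omega)
  have k4 : e ≤ s := by
    by_contra hlt
    push Not at hlt
    have : (s+1) * (m+1) ≤ (m+1) * (m+1) := Nat.mul_le_mul_right _ (by omega)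
    have : B * (c+1) ≤ D * (c+1) := by nlinarith
    have := Nat.le_of_mul_le_mul_right this (by omega)
    nlinarith
  obtain ⟨P, hP⟩ := Nat.exists_eq_add_of_le (show s + e ≤ r by omega)
  have hP' : r = P + s + e := by omega
  rw [hP']
  have hres := resid_le (by rw [hD']; exact hs) k4 (show P + s + e ≤ _ by rw [← hP'])
  refine horace_exact hc (by omega) he hT (by rw [hD']; exact hs) (by rw [← hP']) (hF.mono (by omega) hres) ?_
  rw [hS']
  refine hS.sp (by omega) (show q ≤ P by omega) ?_ ?_
  · have : q * (m+1+1) + (m+1+1) ≤ q * (m+1+1) + (P - q) := by omega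
    omega
  · rw [← hS', show m+1+(c-1) = m+c by omega]

/-- Quartics in many variables: any `n+1` general points span all quadrics. -/
theorem quartic_step (hm : 11 ≤ m) (hT : HasF false m 4 (rm m 4)) : HasF true (m+1) 4 (rm (m+1) 4) := by
  obtain ⟨e, hs, he1, he⟩ := trace_split m 4
  have hr := lt_rm (m+1) 4
  have hr2 : rm (m+1) 4 * (m+1+1) < _ := rm_le.1 le_rfl
  have hq := lt_rm m 3
  set s := rm m 4 with hs'
  set r := rm (m+1) 4 with hr'
  rw [pascal m 3] at hr hr2
  have h3 : (m + 3).choose 3 * 6 = (m+3) * (m+2) * (m+1) := by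
    have := Nat.descFactorial_eq_factorial_mul_choose (m+3) 3
    simp [Nat.descFactorial, Nat.factorial] at this
    nlinarith
  have h3' : (m + 1 + 3).choose 3 * 6 = (m+4) * (m+3) * (m+2) := by
    have := Nat.descFactorial_eq_factorial_mul_choose (m+1+3) 3
    simp [Nat.descFactorial, Nat.factorial] at this
    nlinarith
  have h4 : (m + 4).choose 4 * 24 = (m+4) * (m+3) * (m+2) * (m+1) := by
    have := Nat.descFactorial_eq_factorial_mul_choose (m+4) 4
    simp [Nat.descFactorial, Nat.factorial] at this
    nlinarith
  have hsu : 24 * s ≤ (m+4) * (m+3) * (m+2) := by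
    refine Nat.le_of_mul_le_mul_right (?_ : _ * (m+1) ≤ _ * (m+1)) (by omega)
    nlinarith
  have hsl : (m+4) * (m+3) * (m+2) ≤ 24 * (s+1) := by
    refine Nat.le_of_mul_le_mul_right (?_ : _ * (m+1) ≤ _ * (m+1)) (by omega)
    nlinarith
  have hql : (m+3) * (m+2) ≤ 6 * (rm m 3 + 1) := by
    refine Nat.le_of_mul_le_mul_right (?_ : _ * (m+1) ≤ _ * (m+1)) (by omega)
    nlinarith
  rw [← hs] at hr hr2
  have k0 : e * (m+1) ≤ (m+1) * (m+1) := Nat.mul_le_mul_right _ he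
  have k3 : s + e + m + 2 ≤ r := by
    refine Nat.le_of_mul_le_mul_right (?_ : _ * (m+2) ≤ _ * (m+2)) (by omega)
    have : 8 * ((m+2)^2 + (m+2) + (m+1)^2) ≤ (m+4) * (m+3) * (m+2) := by
      obtain ⟨k, rfl⟩ := Nat.exists_eq_add_of_le hm
      ring_nf
      nlinarith [Nat.zero_le (k^2), Nat.zero_le (k^3), Nat.zero_le k]
    nlinarith
  obtain ⟨P, hP⟩ := Nat.exists_eq_add_of_le (show s + e ≤ r by omega)
  have hP' : r = P + s + e := by omega
  have k4 : P + e ≤ rm m 3 + 1 := by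
    rw [hP'] at hr2
    have h5 : (P + e) * (m+2) + s < (m+1+3).choose 3 + e := by
      have : (P + s + e) * (m+1+1) = (P + e) * (m+2) + s + s * (m+1) := by ring
      omega
    have h6 : (8 * (P + e)) * (m+2) < ((m+4) * (m+3) + 8) * (m+2) := by
      have e1 : (8 * (P + e)) * (m+2) = 8 * ((P + e) * (m+2)) := by ring
      have e2 : ((m+4) * (m+3) + 8) * (m+2) = (m+4) * (m+3) * (m+2) + 8 * (m+2) := by ring
      rw [e1, e2]
      omega
    have h7 := Nat.lt_of_mul_lt_mul_right h6
    have h8 : 6 * ((m+4) * (m+3) + 8) ≤ 8 * ((m+3) * (m+2)) := by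
      obtain ⟨k, rfl⟩ := Nat.exists_eq_add_of_le hm
      ring_nf
      omega
    omega
  rw [hP']
  refine horace_exact (c := 3) (by omega) (by omega) he hT hs (by rw [← hP'])
    ((node_three (s := rm m 3) (by omega) (rm_le.2 (by nlinarith)) le_rfl).mono (by omega) k4)
    ((hasSp_two (m+1)).mono (by omega) (by rw [show m+1+2 = m+3 by omega]))

/-- Plane curves of large degree. -/
theorem plane_step {d : ℕ} (hd : 22 ≤ d) (hF : HasF b 2 (d-1) (rm 2 (d-1))) (hS : HasF false 2 (d-2) (rm 2 (d-2))) :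
    HasF b 2 d (rm 2 d) := by
  obtain ⟨c, rfl⟩ : ∃ c, d = c + 1 := ⟨d - 1, by omega⟩
  have hD : (1 + (c+1)).choose (c+1) = c + 2 := by
    rw [add_comm 1, Nat.choose_symm_add, Nat.choose_one_right]
  have hr := lt_rm 2 (c+1)
  have hq2 := lt_rm 2 (c+1-2)
  have hq : rm 2 (c+1-2) * (2+1) < _ := rm_le.1 le_rfl
  set r := rm 2 (c+1) with hr'
  set q := rm 2 (c+1-2) with hq'
  have e1 : (2 + (c+1)).choose (c+1) = (2 + (c+1-2)).choose (c+1-2) + (2*c+3) := by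
    have h1 := pascal 1 c
    have h2 := pascal 1 (c-1)
    rw [hD] at h1
    have h3 : (1 + (c-1+1)).choose (c-1+1) = c + 1 := by
      rw [add_comm 1, Nat.choose_symm_add, Nat.choose_one_right]; omega
    rw [h3, show c-1+1 = c by omega] at h2
    rw [show c+1-2 = c-1 by omega]
    norm_num at h1 h2
    omega
  rw [e1] at hr
  obtain ⟨s, e, hse, he⟩ : ∃ s e, s * 2 + e = c + 2 ∧ e ≤ 1 := ⟨(c+2)/2, (c+2)%2, by omega, by omega⟩
  obtain ⟨P, hP⟩ := Nat.exists_eq_add_of_le (show s + e ≤ r by omega)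
  have hP' : r = P + s + e := by omega
  have hs1 : s * (1+1) + e = (1 + (c+1)).choose (c+1) := by rw [hD]; omega
  have hres := resid_le (m := 1) hs1 (by omega) (show P + s + e ≤ _ by rw [← hP'])
  rw [hP']
  refine horace_exact (m := 1) (by omega) (by omega) (by omega) (binary_ind (by omega) (by omega)) hs1 (by rw [← hP'])
    (hF.mono (by omega) hres) ?_
  have hS2 : (1 + c).choose (c-1) = (2 + (c+1-2)).choose (c+1-2) := by
    rw [show c+1-2 = c-1 by omega, show 2 + (c-1) = 1 + c by omega]
  rw [hS2]
  exact hS.sp (by omega) (show q ≤ P by omega) (by omega) le_rfl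

end

/-! ### Spans for plane quartics -/

/-- Five general points of the plane span a hyperplane of quartics: the tangent spaces fail to be independent because
of the double conic through the points. -/
theorem hasSp_plane_quartic : HasSp 2 4 5 14 := by
  refine ⟨![![1, 0, 0], ![0, 1, 0], ![0, 0, 1], ![1, 1, 1], ![1, -1, 2]], ![(0, 0), (0, 1), (0, 2), (1, 0), (1, 1), (1, 2), (2, 0), (2, 1), (2, 2), (3, 0), (3, 1), (3, 2), (4, 0), (4, 1)], ?_⟩
  rw [Fintype.linearIndependent_iff]
  intro g hg
  have h : ∀ x : Pt 2, g 0 * ((1 * x 0 + 0 * x 1 + 0 * x 2)^3 * x 0) + g 1 * ((1 * x 0 + 0 * x 1 + 0 * x 2)^3 * x 1) + g 2 * ((1 * x 0 + 0 * x 1 + 0 * x 2)^3 * x 2) + g 3 * ((0 * x 0 + 1 * x 1 + 0 * x 2)^3 * x 0) + g 4 * ((0 * x 0 + 1 * x 1 + 0 * x 2)^3 * x 1) + g 5 * ((0 * x 0 + 1 * x 1 + 0 * x 2)^3 * x 2) + g 6 * ((0 * x 0 + 0 * x 1 + 1 * x 2)^3 * x 0) + g 7 * ((0 * x 0 + 0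 * x 1 + 1 * x 2)^3 * x 1) + g 8 * ((0 * x 0 + 0 * x 1 + 1 * x 2)^3 * x 2) + g 9 * ((1 * x 0 + 1 * x 1 + 1 * x 2)^3 * x 0) + g 10 * ((1 * x 0 + 1 * x 1 + 1 * x 2)^3 * x 1) + g 11 * ((1 * x 0 + 1 * x 1 + 1 * x 2)^3 * x 2) + g 12 * ((1 * x 0 - 1 * x 1 + 2 * x 2)^3 * x 0) + g 13 * ((1 * x 0 - 1 * x 1 + 2 * x 2)^3 * x 1) = 0 := by
    intro x
    have := congrArg (MvPolynomial.eval x) hg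
    simp [Fin.sum_univ_succ, tan, linForm, smul_eval] at this
    linear_combination this
  have h0 := h ![0, 0, 1]
  have h1 := h ![0, 1, 0]
  have h2 := h ![1, 0, 0]
  have h3 := h ![0, 1, 1]
  have h4 := h ![0, 1, -1]
  have h5 := h ![1, 0, 1]
  have h6 := h ![1, 0, -1]
  have h7 := h ![1, 1, 0]
  have h8 := h ![1, -1, 0]
  have h9 := h ![1, 1, 1]
  have h10 := h ![1, 1, -1]
  have h11 := h ![0, 1, 2]
  have h12 := h ![1, 0, 2]
  have h13 := h ![1, 2, 0]
  simp at h0 h1 h2 h3 h4 h5 h6 h7 h8 h9 h10 h11 h12 h13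
  intro i
  fin_cases i
  · show g 0 = 0
    linear_combination (1/16) * h0 + (-3/8) * h1 + (23/24) * h2 + (7/48) * h3 + (-5/48) * h4 + (-1/48) * h5 + (-13/48) * h6 + (-1/48) * h7 + (1/6) * h8 + (-1/32) * h9 + (7/32) * h10
  · show g 1 = 0
    linear_combination (-7/24) * h0 + (3/4) * h1 + (-13/12) * h2 + (13/24) * h3 + (-7/24) * h4 + (5/24) * h5 + (-5/8) * h6 + (25/24) * h7 + (1/6) * h8 + (-3/16) * h9 + (31/48) * h10 + (-1/6) * h13
  · show g 2 = 0
    linear_combination (59/24) * h0 + (-3/4) * h1 + (-1/4) * h2 + (7/24) * h3 + (-5/24) * h4 + (19/24) * h5 + (-25/24) * h6 + (-1/24) * h7 + (1/3) * h8 + (-1/16) * h9 + (7/16) * h10 + (-1/6) * h12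
  · show g 3 = 0
    linear_combination (-17/24) * h0 + (-1/12) * h1 + (7/4) * h2 + (-5/24) * h3 + (5/8) * h4 + (1/8) * h5 + (23/24) * h6 + (-7/8) * h7 + (-4/3) * h8 + (1/48) * h9 + (-13/16) * h10 + (1/6) * h13
  · show g 4 = 0
    linear_combination (-1/16) * h0 + (41/24) * h1 + (3/8) * h2 + (-7/48) * h3 + (5/48) * h4 + (1/48) * h5 + (13/48) * h6 + (-7/48) * h7 + (-1/3) * h8 + (1/32) * h9 + (-7/32) * h10
  · show g 5 = 0
    linear_combination (29/24) * h0 + (9/4) * h1 + (7/4) * h2 + (13/24) * h3 + (17/24) * h4 + (1/24) * h5 + (37/24) * h6 + (-7/24) * h7 + (-5/3) * h8 + (1/16) * h9 + (-23/16) * h10 + (-1/6) * h11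
  · show g 6 = 0
    linear_combination (-29/24) * h0 + (5/12) * h1 + (5/4) * h2 + (-5/24) * h3 + (1/8) * h4 + (-7/8) * h5 + (-5/24) * h6 + (1/8) * h7 + (-1/6) * h8 + (1/48) * h9 + (-5/16) * h10 + (1/6) * h12
  · show g 7 = 0
    linear_combination (-19/8) * h0 + (19/12) * h1 + (3/4) * h2 + (-17/24) * h3 + (5/8) * h4 + (-1/24) * h5 + (23/24) * h6 + (7/24) * h7 + (-5/6) * h8 + (-1/16) * h9 + (-17/16) * h10 + (1/6) * h11
  · show g 8 = 0
    linear_combination (55/48) * h0 + (-1/8) * h1 + (-1/8) * h2 + (-1/48) * h3 + (-1/48) * h4 + (-1/48) * h5 + (-1/48) * h6 + (7/48) * h7 + (1/12) * h8 + (-1/32) * h9 + (-1/32) * h10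
  · show g 9 = 0
    linear_combination (-1/48) * h0 + (13/24) * h1 + (5/24) * h2 + (-3/16) * h3 + (7/48) * h4 + (-1/48) * h5 + (5/16) * h6 + (-1/48) * h7 + (-1/4) * h8 + (5/96) * h9 + (-9/32) * h10
  · show g 10 = 0
    linear_combination (7/48) * h0 + (-19/24) * h1 + (-11/24) * h2 + (7/48) * h3 + (-3/16) * h4 + (-1/48) * h5 + (-17/48) * h6 + (7/48) * h7 + (5/12) * h8 + (-1/32) * h9 + (29/96) * h10
  · show g 11 = 0
    linear_combination (-7/48) * h0 + (1/8) * h1 + (1/8) * h2 + (1/48) * h3 + (1/48) * h4 + (1/48) * h5 + (1/48) * h6 + (-7/48) * h7 + (-1/12) * h8 + (1/32) * h9 + (1/32) * h10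
  · show g 12 = 0
    linear_combination (-1/24) * h0 + (-1/6) * h1 + (-1/6) * h2 + (1/24) * h3 + (-1/24) * h4 + (1/24) * h5 + (-1/24) * h6 + (1/24) * h7 + (1/12) * h8 + (-1/48) * h9 + (1/16) * h10
  · show g 13 = 0
    linear_combination (1/12) * h0 + (-1/12) * h1 + (-1/12) * h2 + (-1/12) * h4 + (-1/12) * h6 + (1/12) * h8 + (1/12) * h10

/-! ### Small cases of the degeneration -/

/-- The simplest instance of the degeneration: two points outside the hyperplane and two on it. In each such instance `P`,
`s` and `e` count the points outside, on, and moving to the hyperplane, and the tangent spaces at the `P` points span at least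
`K` dimensions two degrees below. -/
theorem node_2_4_4 : HasF true 2 4 4 :=
  horace (m := 1) (c := 3) (P := 2) (s := 2) (e := 0) (K := 5) (by omega) (by omega) (by omega)
    (node_three (m := 1) (s := 1) (by omega) (by omega) (by decide +kernel))
    (binary_ind (d := 4) (by omega) (by omega))
    (by decide +kernel)
    hasSp_plane_two
    (by decide +kernel)

theorem node_2_5_6 : HasF true 2 5 6 :=
  horace (m := 1) (c := 4) (P := 4) (s := 2) (e := 0) (K := 10) (by omega) (by omega) (by omega)
    node_2_4_4
    (binary_ind (d := 5) (by omega) (by omega))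
    (by decide +kernel)
    (((hasF_cubic (n := 2) (by omega)).mono (s := 3) (by omega) (by decide +kernel)).sp (by omega) (by omega : 3 ≤ 4) (by omega) (by decide +kernel))
    (by decide +kernel)

theorem node_2_6_8 : HasF true 2 6 8 :=
  horace (m := 1) (c := 5) (P := 5) (s := 3) (e := 0) (K := 13) (by omega) (by omega) (by omega)
    (node_2_5_6.mono (by omega) (by omega : 5 ≤ 6))
    (binary_ind (d := 6) (by omega) (by omega))
    (by decide +kernel)
    ((node_2_4_4).weaken.sp (by omega) (by omega : 4 ≤ 5) (by omega) (by decide +kernel))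
    (by decide +kernel)

theorem indep_2_6_9 : HasF false 2 6 9 :=
  horace (m := 1) (c := 5) (P := 6) (s := 3) (e := 0) (K := 15) (by omega) (by omega) (by omega)
    (node_2_5_6).weaken
    (binary_ind (d := 6) (by omega) (by omega))
    (by decide +kernel)
    ((hasSp_plane_quartic.add (by omega) 1 (by decide +kernel)).mono (by omega) (by omega))
    (by decide +kernel)

theorem full_2_5_7 : HasF false 2 5 7 :=
  horace (m := 1) (c := 4) (P := 4) (s := 3) (e := 0) (K := 10) (by omega) (by omega) (by omega)
    (node_2_4_4).weaken
    (binary_ind (d := 5) (by omega) (by omega))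
    (by decide +kernel)
    (((hasF_cubic (n := 2) (by omega)).mono (s := 3) (by omega) (by decide +kernel)).sp (by omega) (by omega : 3 ≤ 4) (by omega) (by decide +kernel))
    (by decide +kernel)

theorem node_2_7_11 : HasF true 2 7 11 :=
  horace (m := 1) (c := 6) (P := 8) (s := 3) (e := 0) (K := 21) (by omega) (by omega) (by omega)
    node_2_6_8
    (binary_ind (d := 7) (by omega) (by omega))
    (by decide +kernel)
    (full_2_5_7.sp (by omega) (by omega : 7 ≤ 8) (by omega) (by decide +kernel))
    (by decide +kernel)

theorem node_2_8_14 : HasF true 2 8 14 :=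
  horace (m := 1) (c := 7) (P := 10) (s := 4) (e := 0) (K := 27) (by omega) (by omega) (by omega)
    (node_2_7_11.mono (by omega) (by omega : 10 ≤ 11))
    (binary_ind (d := 8) (by omega) (by omega))
    (by decide +kernel)
    (indep_2_6_9.sp (by omega) (by omega : 9 ≤ 10) (by omega) (by decide +kernel))
    (by decide +kernel)

theorem full_2_7_12 : HasF false 2 7 12 :=
  horace (m := 1) (c := 6) (P := 7) (s := 3) (e := 2) (K := 21) (by omega) (by omega) (by omega)
    indep_2_6_9
    (binary_ind (d := 7) (by omega) (by omega))
    (by decide +kernel)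
    (full_2_5_7.sp (by omega) (by omega : 7 ≤ 7) (by omega) (by decide +kernel))
    (by decide +kernel)

theorem node_2_9_18 : HasF true 2 9 18 :=
  horace (m := 1) (c := 8) (P := 12) (s := 4) (e := 2) (K := 36) (by omega) (by omega) (by omega)
    node_2_8_14
    (binary_ind (d := 9) (by omega) (by omega))
    (by decide +kernel)
    (full_2_7_12.sp (by omega) (by omega : 12 ≤ 12) (by omega) (by decide +kernel))
    (by decide +kernel)

theorem full_2_8_15 : HasF false 2 8 15 :=
  horace (m := 1) (c := 7) (P := 10) (s := 4) (e := 1) (K := 28) (by omega) (by omega) (by omega)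
    (node_2_7_11).weaken
    (binary_ind (d := 8) (by omega) (by omega))
    (by decide +kernel)
    (indep_2_6_9.sp (by omega) (by omega : 9 ≤ 10) (by omega) (by decide +kernel))
    (by decide +kernel)

theorem node_2_10_21 : HasF true 2 10 21 :=
  horace (m := 1) (c := 9) (P := 16) (s := 5) (e := 0) (K := 44) (by omega) (by omega) (by omega)
    (node_2_9_18.mono (by omega) (by omega : 16 ≤ 18))
    (binary_ind (d := 10) (by omega) (by omega))
    (by decide +kernel)
    (full_2_8_15.sp (by omega) (by omega : 15 ≤ 16) (by omega) (by decide +kernel))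
    (by decide +kernel)

theorem node_2_11_25 : HasF true 2 11 25 :=
  horace (m := 1) (c := 10) (P := 20) (s := 5) (e := 0) (K := 55) (by omega) (by omega) (by omega)
    (node_2_10_21.mono (by omega) (by omega : 20 ≤ 21))
    (binary_ind (d := 11) (by omega) (by omega))
    (by decide +kernel)
    ((node_2_9_18).weaken.sp (by omega) (by omega : 18 ≤ 20) (by omega) (by decide +kernel))
    (by decide +kernel)

theorem full_2_10_22 : HasF false 2 10 22 :=
  horace (m := 1) (c := 9) (P := 16) (s := 5) (e := 1) (K := 45) (by omega) (by omega) (by omega)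
    ((node_2_9_18.mono (by omega) (by omega : 17 ≤ 18))).weaken
    (binary_ind (d := 10) (by omega) (by omega))
    (by decide +kernel)
    (full_2_8_15.sp (by omega) (by omega : 15 ≤ 16) (by omega) (by decide +kernel))
    (by decide +kernel)

theorem node_2_12_30 : HasF true 2 12 30 :=
  horace (m := 1) (c := 11) (P := 23) (s := 6) (e := 1) (K := 66) (by omega) (by omega) (by omega)
    (node_2_11_25.mono (by omega) (by omega : 24 ≤ 25))
    (binary_ind (d := 12) (by omega) (by omega))
    (by decide +kernel)
    (full_2_10_22.sp (by omega) (by omega : 22 ≤ 23) (by omega) (by decide +kernel))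
    (by decide +kernel)

theorem full_2_11_26 : HasF false 2 11 26 :=
  horace (m := 1) (c := 10) (P := 19) (s := 5) (e := 2) (K := 55) (by omega) (by omega) (by omega)
    (node_2_10_21).weaken
    (binary_ind (d := 11) (by omega) (by omega))
    (by decide +kernel)
    ((node_2_9_18).weaken.sp (by omega) (by omega : 18 ≤ 19) (by omega) (by decide +kernel))
    (by decide +kernel)

theorem node_2_13_34 : HasF true 2 13 34 :=
  horace (m := 1) (c := 12) (P := 28) (s := 6) (e := 0) (K := 78) (by omega) (by omega) (by omega)
    (node_2_12_30.mono (by omega) (by omega : 28 ≤ 30))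
    (binary_ind (d := 13) (by omega) (by omega))
    (by decide +kernel)
    (full_2_11_26.sp (by omega) (by omega : 26 ≤ 28) (by omega) (by decide +kernel))
    (by decide +kernel)

theorem node_2_14_39 : HasF true 2 14 39 :=
  horace (m := 1) (c := 13) (P := 32) (s := 7) (e := 0) (K := 90) (by omega) (by omega) (by omega)
    (node_2_13_34.mono (by omega) (by omega : 32 ≤ 34))
    (binary_ind (d := 14) (by omega) (by omega))
    (by decide +kernel)
    ((node_2_12_30).weaken.sp (by omega) (by omega : 30 ≤ 32) (by omega) (by decide +kernel))
    (by decide +kernel)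

theorem full_2_13_35 : HasF false 2 13 35 :=
  horace (m := 1) (c := 12) (P := 27) (s := 6) (e := 2) (K := 78) (by omega) (by omega) (by omega)
    ((node_2_12_30.mono (by omega) (by omega : 29 ≤ 30))).weaken
    (binary_ind (d := 13) (by omega) (by omega))
    (by decide +kernel)
    (full_2_11_26.sp (by omega) (by omega : 26 ≤ 27) (by omega) (by decide +kernel))
    (by decide +kernel)

theorem node_2_15_45 : HasF true 2 15 45 :=
  horace (m := 1) (c := 14) (P := 36) (s := 7) (e := 2) (K := 105) (by omega) (by omega) (by omega)
    (node_2_14_39.mono (by omega) (by omega : 38 ≤ 39))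
    (binary_ind (d := 15) (by omega) (by omega))
    (by decide +kernel)
    (full_2_13_35.sp (by omega) (by omega : 35 ≤ 36) (by omega) (by decide +kernel))
    (by decide +kernel)

theorem full_2_14_40 : HasF false 2 14 40 :=
  horace (m := 1) (c := 13) (P := 32) (s := 7) (e := 1) (K := 91) (by omega) (by omega) (by omega)
    ((node_2_13_34.mono (by omega) (by omega : 33 ≤ 34))).weaken
    (binary_ind (d := 14) (by omega) (by omega))
    (by decide +kernel)
    ((node_2_12_30).weaken.sp (by omega) (by omega : 30 ≤ 32) (by omega) (by decide +kernel))
    (by decide +kernel)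

theorem node_2_16_50 : HasF true 2 16 50 :=
  horace (m := 1) (c := 15) (P := 42) (s := 8) (e := 0) (K := 119) (by omega) (by omega) (by omega)
    (node_2_15_45.mono (by omega) (by omega : 42 ≤ 45))
    (binary_ind (d := 16) (by omega) (by omega))
    (by decide +kernel)
    (full_2_14_40.sp (by omega) (by omega : 40 ≤ 42) (by omega) (by decide +kernel))
    (by decide +kernel)

theorem node_2_17_56 : HasF true 2 17 56 :=
  horace (m := 1) (c := 16) (P := 48) (s := 8) (e := 0) (K := 136) (by omega) (by omega) (by omega)
    (node_2_16_50.mono (by omega) (by omega : 48 ≤ 50))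
    (binary_ind (d := 17) (by omega) (by omega))
    (by decide +kernel)
    ((node_2_15_45).weaken.sp (by omega) (by omega : 45 ≤ 48) (by omega) (by decide +kernel))
    (by decide +kernel)

theorem full_2_16_51 : HasF false 2 16 51 :=
  horace (m := 1) (c := 15) (P := 42) (s := 8) (e := 1) (K := 120) (by omega) (by omega) (by omega)
    ((node_2_15_45.mono (by omega) (by omega : 43 ≤ 45))).weaken
    (binary_ind (d := 16) (by omega) (by omega))
    (by decide +kernel)
    (full_2_14_40.sp (by omega) (by omega : 40 ≤ 42) (by omega) (by decide +kernel))
    (by decide +kernel)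

theorem node_2_18_63 : HasF true 2 18 63 :=
  horace (m := 1) (c := 17) (P := 53) (s := 9) (e := 1) (K := 153) (by omega) (by omega) (by omega)
    (node_2_17_56.mono (by omega) (by omega : 54 ≤ 56))
    (binary_ind (d := 18) (by omega) (by omega))
    (by decide +kernel)
    (full_2_16_51.sp (by omega) (by omega : 51 ≤ 53) (by omega) (by decide +kernel))
    (by decide +kernel)

theorem full_2_17_57 : HasF false 2 17 57 :=
  horace (m := 1) (c := 16) (P := 47) (s := 8) (e := 2) (K := 136) (by omega) (by omega) (by omega)
    ((node_2_16_50.mono (by omega) (by omega : 49 ≤ 50))).weaken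
    (binary_ind (d := 17) (by omega) (by omega))
    (by decide +kernel)
    ((node_2_15_45).weaken.sp (by omega) (by omega : 45 ≤ 47) (by omega) (by decide +kernel))
    (by decide +kernel)

theorem node_2_19_69 : HasF true 2 19 69 :=
  horace (m := 1) (c := 18) (P := 60) (s := 9) (e := 0) (K := 171) (by omega) (by omega) (by omega)
    (node_2_18_63.mono (by omega) (by omega : 60 ≤ 63))
    (binary_ind (d := 19) (by omega) (by omega))
    (by decide +kernel)
    (full_2_17_57.sp (by omega) (by omega : 57 ≤ 60) (by omega) (by decide +kernel))
    (by decide +kernel)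

theorem node_2_20_76 : HasF true 2 20 76 :=
  horace (m := 1) (c := 19) (P := 66) (s := 10) (e := 0) (K := 189) (by omega) (by omega) (by omega)
    (node_2_19_69.mono (by omega) (by omega : 66 ≤ 69))
    (binary_ind (d := 20) (by omega) (by omega))
    (by decide +kernel)
    ((node_2_18_63).weaken.sp (by omega) (by omega : 63 ≤ 66) (by omega) (by decide +kernel))
    (by decide +kernel)

theorem full_2_19_70 : HasF false 2 19 70 :=
  horace (m := 1) (c := 18) (P := 59) (s := 9) (e := 2) (K := 171) (by omega) (by omega) (by omega)
    ((node_2_18_63.mono (by omega) (by omega : 61 ≤ 63))).weaken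
    (binary_ind (d := 19) (by omega) (by omega))
    (by decide +kernel)
    (full_2_17_57.sp (by omega) (by omega : 57 ≤ 59) (by omega) (by decide +kernel))
    (by decide +kernel)

theorem node_2_21_84 : HasF true 2 21 84 :=
  horace (m := 1) (c := 20) (P := 72) (s := 10) (e := 2) (K := 210) (by omega) (by omega) (by omega)
    (node_2_20_76.mono (by omega) (by omega : 74 ≤ 76))
    (binary_ind (d := 21) (by omega) (by omega))
    (by decide +kernel)
    (full_2_19_70.sp (by omega) (by omega : 70 ≤ 72) (by omega) (by decide +kernel))
    (by decide +kernel)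

theorem node_3_4_7 : HasF true 3 4 7 :=
  horace (m := 2) (c := 3) (P := 4) (s := 3) (e := 0) (K := 10) (by omega) (by omega) (by omega)
    (node_three (m := 2) (s := 3) (by omega) (by omega) (by decide +kernel))
    ((node_2_4_4.mono (by omega) (by omega : 3 ≤ 4))).weaken
    (by decide +kernel)
    ((hasSp_two 3).mono (by omega) (by decide +kernel))
    (by decide +kernel)

theorem indep_3_4_8 : HasF false 3 4 8 :=
  horace (m := 2) (c := 3) (P := 4) (s := 4) (e := 0) (K := 10) (by omega) (by omega) (by omega)
    ((hasF_cubic (n := 3) (by omega)).mono (s := 4) (by omega) (by decide +kernel))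
    (node_2_4_4).weaken
    (by decide +kernel)
    ((hasSp_two 3).mono (by omega) (by decide +kernel))
    (by decide +kernel)

theorem node_3_5_13 : HasF true 3 5 13 :=
  horace (m := 2) (c := 4) (P := 7) (s := 6) (e := 0) (K := 20) (by omega) (by omega) (by omega)
    node_3_4_7
    (node_2_5_6).weaken
    (by decide +kernel)
    (full_cubic.sp (by omega) (by omega : 5 ≤ 7) (by omega) (by decide +kernel))
    (by decide +kernel)

theorem node_3_6_20 : HasF true 3 6 20 :=
  horace (m := 2) (c := 5) (P := 11) (s := 9) (e := 0) (K := 33) (by omega) (by omega) (by omega)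
    (node_3_5_13.mono (by omega) (by omega : 11 ≤ 13))
    indep_2_6_9
    (by decide +kernel)
    (indep_3_4_8.sp (by omega) (by omega : 8 ≤ 11) (by omega) (by decide +kernel))
    (by decide +kernel)

theorem full_3_5_14 : HasF false 3 5 14 :=
  horace (m := 2) (c := 4) (P := 5) (s := 6) (e := 3) (K := 20) (by omega) (by omega) (by omega)
    indep_3_4_8
    (node_2_5_6).weaken
    (by decide +kernel)
    (full_cubic.sp (by omega) (by omega : 5 ≤ 5) (by omega) (by decide +kernel))
    (by decide +kernel)

theorem node_3_7_29 : HasF true 3 7 29 :=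
  horace (m := 2) (c := 6) (P := 18) (s := 11) (e := 0) (K := 56) (by omega) (by omega) (by omega)
    (node_3_6_20.mono (by omega) (by omega : 18 ≤ 20))
    (node_2_7_11).weaken
    (by decide +kernel)
    (full_3_5_14.sp (by omega) (by omega : 14 ≤ 18) (by omega) (by decide +kernel))
    (by decide +kernel)

theorem full_3_6_21 : HasF false 3 6 21 :=
  horace (m := 2) (c := 5) (P := 11) (s := 9) (e := 1) (K := 35) (by omega) (by omega) (by omega)
    ((node_3_5_13.mono (by omega) (by omega : 12 ≤ 13))).weaken
    indep_2_6_9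
    (by decide +kernel)
    (indep_3_4_8.sp (by omega) (by omega : 8 ≤ 11) (by omega) (by decide +kernel))
    (by decide +kernel)

theorem node_3_8_41 : HasF true 3 8 41 :=
  horace (m := 2) (c := 7) (P := 24) (s := 14) (e := 3) (K := 84) (by omega) (by omega) (by omega)
    (node_3_7_29.mono (by omega) (by omega : 27 ≤ 29))
    (node_2_8_14).weaken
    (by decide +kernel)
    (full_3_6_21.sp (by omega) (by omega : 21 ≤ 24) (by omega) (by decide +kernel))
    (by decide +kernel)

theorem full_3_7_30 : HasF false 3 7 30 :=
  horace (m := 2) (c := 6) (P := 16) (s := 11) (e := 3) (K := 56) (by omega) (by omega) (by omega)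
    ((node_3_6_20.mono (by omega) (by omega : 19 ≤ 20))).weaken
    (node_2_7_11).weaken
    (by decide +kernel)
    (full_3_5_14.sp (by omega) (by omega : 14 ≤ 16) (by omega) (by decide +kernel))
    (by decide +kernel)

theorem node_3_9_54 : HasF true 3 9 54 :=
  horace (m := 2) (c := 8) (P := 36) (s := 18) (e := 0) (K := 118) (by omega) (by omega) (by omega)
    (node_3_8_41.mono (by omega) (by omega : 36 ≤ 41))
    (node_2_9_18).weaken
    (by decide +kernel)
    (full_3_7_30.sp (by omega) (by omega : 30 ≤ 36) (by omega) (by decide +kernel))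
    (by decide +kernel)

theorem node_4_4_13 : HasF true 4 4 13 :=
  horace (m := 3) (c := 3) (P := 5) (s := 8) (e := 0) (K := 14) (by omega) (by omega) (by omega)
    (node_three (m := 3) (s := 4) (by omega) (by omega) (by decide +kernel))
    indep_3_4_8
    (by decide +kernel)
    ((hasSp_two 4).mono (by omega) (by decide +kernel))
    (by decide +kernel)

theorem node_4_5_25 : HasF true 4 5 25 :=
  horace (m := 3) (c := 4) (P := 11) (s := 14) (e := 0) (K := 35) (by omega) (by omega) (by omega)
    (node_4_4_13.mono (by omega) (by omega : 11 ≤ 13))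
    full_3_5_14
    (by decide +kernel)
    (((hasF_cubic (n := 4) (by omega)).mono (s := 6) (by omega) (by decide +kernel)).sp (by omega) (by omega : 6 ≤ 11) (by omega) (by decide +kernel))
    (by decide +kernel)

theorem node_4_6_41 : HasF true 4 6 41 :=
  horace (m := 3) (c := 5) (P := 21) (s := 20) (e := 0) (K := 70) (by omega) (by omega) (by omega)
    (node_4_5_25.mono (by omega) (by omega : 21 ≤ 25))
    (node_3_6_20).weaken
    (by decide +kernel)
    ((node_4_4_13).weaken.sp (by omega) (by omega : 13 ≤ 21) (by omega) (by decide +kernel))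
    (by decide +kernel)

theorem node_5_4_20 : HasF true 5 4 20 :=
  horace (m := 4) (c := 3) (P := 7) (s := 13) (e := 0) (K := 21) (by omega) (by omega) (by omega)
    (node_three (m := 4) (s := 6) (by omega) (by omega) (by decide +kernel))
    (node_4_4_13).weaken
    (by decide +kernel)
    ((hasSp_two 5).mono (by omega) (by decide +kernel))
    (by decide +kernel)

theorem node_5_5_41 : HasF true 5 5 41 :=
  horace (m := 4) (c := 4) (P := 16) (s := 25) (e := 0) (K := 52) (by omega) (by omega) (by omega)
    (node_5_4_20.mono (by omega) (by omega : 16 ≤ 20))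
    (node_4_5_25).weaken
    (by decide +kernel)
    (((hasF_cubic (n := 5) (by omega)).mono (s := 9) (by omega) (by decide +kernel)).sp (by omega) (by omega : 9 ≤ 16) (by omega) (by decide +kernel))
    (by decide +kernel)

theorem node_6_4_29 : HasF true 6 4 29 :=
  horace (m := 5) (c := 3) (P := 9) (s := 20) (e := 0) (K := 28) (by omega) (by omega) (by omega)
    (node_three (m := 5) (s := 8) (by omega) (by omega) (by decide +kernel))
    (node_5_4_20).weaken
    (by decide +kernel)
    ((hasSp_two 6).mono (by omega) (by decide +kernel))
    (by decide +kernel)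

theorem node_6_5_65 : HasF true 6 5 65 :=
  horace (m := 5) (c := 4) (P := 24) (s := 41) (e := 0) (K := 84) (by omega) (by omega) (by omega)
    (node_6_4_29.mono (by omega) (by omega : 24 ≤ 29))
    (node_5_5_41).weaken
    (by decide +kernel)
    (((hasF_cubic (n := 6) (by omega)).mono (s := 11) (by omega) (by decide +kernel)).sp (by omega) (by omega : 11 ≤ 24) (by omega) (by decide +kernel))
    (by decide +kernel)

theorem full_6_4_30 : HasF false 6 4 30 :=
  horace (m := 5) (c := 3) (P := 9) (s := 21) (e := 0) (K := 28) (by omega) (by omega) (by omega)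
    ((hasF_cubic (n := 6) (by omega)).mono (s := 9) (by omega) (by decide +kernel))
    full_quartic
    (by decide +kernel)
    ((hasSp_two 6).mono (by omega) (by decide +kernel))
    (by decide +kernel)

theorem node_7_4_41 : HasF true 7 4 41 :=
  horace (m := 6) (c := 3) (P := 11) (s := 30) (e := 0) (K := 35) (by omega) (by omega) (by omega)
    (node_three (m := 6) (s := 10) (by omega) (by omega) (by decide +kernel))
    full_6_4_30
    (by decide +kernel)
    ((hasSp_two 7).mono (by omega) (by decide +kernel))
    (by decide +kernel)

theorem node_8_4_54 : HasF true 8 4 54 :=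
  horace (m := 7) (c := 3) (P := 13) (s := 41) (e := 0) (K := 39) (by omega) (by omega) (by omega)
    (node_three (m := 7) (s := 12) (by omega) (by omega) (by decide +kernel))
    (node_7_4_41).weaken
    (by decide +kernel)
    ((hasSp_two 8).mono (by omega) (by decide +kernel))
    (by decide +kernel)

theorem node_9_4_71 : HasF true 9 4 71 :=
  horace (m := 8) (c := 3) (P := 12) (s := 54) (e := 5) (K := 55) (by omega) (by omega) (by omega)
    (node_three (m := 8) (s := 16) (by omega) (by omega) (by decide +kernel))
    (node_8_4_54).weaken
    (by decide +kernel)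
    ((hasSp_two 9).mono (by omega) (by decide +kernel))
    (by decide +kernel)

theorem node_10_4_90 : HasF true 10 4 90 :=
  horace (m := 9) (c := 3) (P := 19) (s := 71) (e := 0) (K := 61) (by omega) (by omega) (by omega)
    (node_three (m := 9) (s := 18) (by omega) (by omega) (by decide +kernel))
    (node_9_4_71).weaken
    (by decide +kernel)
    ((hasSp_two 10).mono (by omega) (by decide +kernel))
    (by decide +kernel)

theorem node_11_4_113 : HasF true 11 4 113 :=
  horace (m := 10) (c := 3) (P := 20) (s := 90) (e := 3) (K := 78) (by omega) (by omega) (by omega)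
    (node_three (m := 10) (s := 22) (by omega) (by omega) (by decide +kernel))
    (node_10_4_90).weaken
    (by decide +kernel)
    ((hasSp_two 11).mono (by omega) (by decide +kernel))
    (by decide +kernel)

/-! ### The induction -/

/-- All numbers of points below the expected bound behave as expected in degree `d` and `n+1` variables, with the two
exceptions in degree at least four for which no nondegenerate node exists. -/
def Good (n d : ℕ) : Prop := HasF false n d (rm n d) ∧ (4 ≤ d → (n, d) ≠ (2, 6) → (n, d) ≠ (3, 4) → HasF true n d (rm n d))

theorem Good.of {n d k : ℕ} (h : HasF true n d k) (hk : rm n d = k) : Good n d := by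
  subst hk; exact ⟨h.weaken, fun _ _ _ => h⟩

theorem Good.node {n d : ℕ} (h : Good n d) (hd : 4 ≤ d) (h1 : n ≠ 2 ∨ d ≠ 6) (h2 : n ≠ 3 ∨ d ≠ 4) : HasF true n d (rm n d) := by
  refine h.2 hd ?_ ?_ <;> simp only [ne_eq, Prod.mk.injEq] <;> omega

theorem good_2_6 : Good 2 6 := ⟨indep_2_6_9.mono (by decide +kernel) (by decide +kernel), fun _ h => absurd rfl h⟩

theorem good_3_4 : Good 3 4 := ⟨indep_3_4_8.mono (by decide +kernel) (by decide +kernel), fun _ _ h => absurd rfl h⟩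

theorem good_2 {d : ℕ} (h : 4 ≤ d) (h' : d ≤ 21) : Good 2 d := by
  interval_cases d
  · exact .of node_2_4_4 (by decide +kernel)
  · exact .of node_2_5_6 (by decide +kernel)
  · exact good_2_6
  · exact .of node_2_7_11 (by decide +kernel)
  · exact .of node_2_8_14 (by decide +kernel)
  · exact .of node_2_9_18 (by decide +kernel)
  · exact .of node_2_10_21 (by decide +kernel)
  · exact .of node_2_11_25 (by decide +kernel)
  · exact .of node_2_12_30 (by decide +kernel)
  · exact .of node_2_13_34 (by decide +kernel)
  · exact .of node_2_14_39 (by decide +kernel)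
  · exact .of node_2_15_45 (by decide +kernel)
  · exact .of node_2_16_50 (by decide +kernel)
  · exact .of node_2_17_56 (by decide +kernel)
  · exact .of node_2_18_63 (by decide +kernel)
  · exact .of node_2_19_69 (by decide +kernel)
  · exact .of node_2_20_76 (by decide +kernel)
  · exact .of node_2_21_84 (by decide +kernel)

theorem good_3 {d : ℕ} (h : 4 ≤ d) (h' : d ≤ 9) : Good 3 d := by
  interval_cases d
  · exact good_3_4
  · exact .of node_3_5_13 (by decide +kernel)
  · exact .of node_3_6_20 (by decide +kernel)
  · exact .of node_3_7_29 (by decide +kernel)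
  · exact .of node_3_8_41 (by decide +kernel)
  · exact .of node_3_9_54 (by decide +kernel)

theorem good_4 {d : ℕ} (h : 4 ≤ d) (h' : d ≤ 6) : Good 4 d := by
  interval_cases d
  · exact .of node_4_4_13 (by decide +kernel)
  · exact .of node_4_5_25 (by decide +kernel)
  · exact .of node_4_6_41 (by decide +kernel)

theorem good_5 {d : ℕ} (h : 4 ≤ d) (h' : d ≤ 5) : Good 5 d := by
  interval_cases d
  · exact .of node_5_4_20 (by decide +kernel)
  · exact .of node_5_5_41 (by decide +kernel)

theorem good_6 {d : ℕ} (h : 4 ≤ d) (h' : d ≤ 5) : Good 6 d := by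
  interval_cases d
  · exact .of node_6_4_29 (by decide +kernel)
  · exact .of node_6_5_65 (by decide +kernel)

theorem good_quartic {n : ℕ} (h : 7 ≤ n) (h' : n ≤ 11) : Good n 4 := by
  interval_cases n
  · exact .of node_7_4_41 (by decide +kernel)
  · exact .of node_8_4_54 (by decide +kernel)
  · exact .of node_9_4_71 (by decide +kernel)
  · exact .of node_10_4_90 (by decide +kernel)
  · exact .of node_11_4_113 (by decide +kernel)

theorem good_three {n : ℕ} (hn : 1 ≤ n) : Good n 3 := ⟨hasF_cubic hn, fun h => by omega⟩

theorem good_one {d : ℕ} (hd : 3 ≤ d) : Good 1 d := by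
  have h : rm 1 d * 2 < d + 1 := by
    have := rm_le.1 (le_refl (rm 1 d))
    rwa [add_comm 1 d, Nat.choose_symm_add, Nat.choose_one_right] at this
  have h' : 1 ≤ rm 1 d := by
    rw [rm_le, add_comm 1 d, Nat.choose_symm_add, Nat.choose_one_right]; omega
  exact .of (binary_node h' (by omega)) rfl

/-- The inductive step by the degeneration with the largest possible trace. -/
theorem Good.step {m d : ℕ} (hB : Big m (d-1)) (hm : 2 ≤ m) (hd : 5 ≤ d) (h1 : m ≠ 2 ∨ d ≠ 5) (hT : Good m d)
    (hF : Good (m+1) (d-1)) (hS : Good (m+1) (d-2)) : Good (m+1) d := by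
  obtain ⟨c, rfl⟩ : ∃ c, d = c + 1 := ⟨d - 1, by omega⟩
  exact .of (hB.step (by omega) (by omega) hT.1 (hF.node (by omega) (by omega) (by omega)) hS.1) rfl

theorem big_of {m d : ℕ} (hm : 2 ≤ m) (hd : 5 ≤ d) (h2 : m = 2 → 10 ≤ d) (h3 : m = 3 → 7 ≤ d) (h4 : m = 4 → 6 ≤ d)
    (h5 : m = 5 → 6 ≤ d) : Big m (d-1) := by
  have b2 : Big 2 9 := by unfold Big; decide +kernel
  have b3 : Big 3 6 := by unfold Big; decide +kernel
  have b4 : Big 4 5 := by unfold Big; decide +kernel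
  have b5 : Big 5 5 := by unfold Big; decide +kernel
  rcases (by omega : m = 2 ∨ m = 3 ∨ m = 4 ∨ m = 5 ∨ 6 ≤ m) with rfl | rfl | rfl | rfl | h
  · exact b2.mono (by omega) (by omega)
  · exact b3.mono (by omega) (by omega)
  · exact b4.mono (by omega) (by omega)
  · exact b5.mono (by omega) (by omega)
  · exact (Big.four h).mono (by omega) (by omega)

/-- `Good` by induction on the number of variables and the degree, with the small cases as base. -/
theorem good {n d : ℕ} (hn : 1 ≤ n) (hd : 3 ≤ d) : Good n d := by
  induction n, hn using Nat.le_induction generalizing d with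
  | base => exact good_one hd
  | succ m hm ihm =>
    induction d using Nat.strong_induction_on with
    | _ d ihd =>
    rcases (by omega : d = 3 ∨ 4 ≤ d) with rfl | hd4
    · exact good_three (by omega)
    rcases (by omega : m = 1 ∨ 2 ≤ m) with rfl | hm2
    · rcases (by omega : d ≤ 21 ∨ 22 ≤ d) with h | h
      · exact good_2 hd4 h
      · exact .of (plane_step h ((ihd (d-1) (by omega) (by omega)).node (by omega) (by omega) (by omega))
          (ihd (d-2) (by omega) (by omega)).1) rfl
    by_cases ht : (m = 2 ∧ d ≤ 9) ∨ (m = 3 ∧ d ≤ 6) ∨ (m = 4 ∧ d ≤ 5) ∨ (m = 5 ∧ d ≤ 5)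
    · rcases ht with ⟨rfl, h⟩ | ⟨rfl, h⟩ | ⟨rfl, h⟩ | ⟨rfl, h⟩
      · exact good_3 hd4 h
      · exact good_4 hd4 h
      · exact good_5 hd4 h
      · exact good_6 hd4 h
    rcases (by omega : d = 4 ∨ 5 ≤ d) with rfl | hd5
    · rcases (by omega : m ≤ 10 ∨ 11 ≤ m) with h | h
      · exact good_quartic (by omega) (by omega)
      · exact .of (quartic_step h (ihm (by omega)).1) rfl
    · exact .step (big_of hm2 hd5 (by omega) (by omega) (by omega) (by omega)) hm2 hd5 (by omega) (ihm hd)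
        (ihd (d-1) (by omega) (by omega)) (ihd (d-2) (by omega) (by omega))

/-- Configurations with the second order condition exist in every subgeneric case outside the three exceptions. For the two
exceptional pairs `(n, d)` of degree at least four, and for cubics in six variables, one point less than the maximum is used. -/
theorem hasG_all {n d r : ℕ} (hd : 3 ≤ d) (hn : 1 ≤ n) (hr : 1 ≤ r) (hsub : r * (n+1) < (n+d).choose d)
    (h1 : (d, n, r) ≠ (6, 2, 9)) (h2 : (d, n, r) ≠ (4, 3, 8)) (h3 : (d, n, r) ≠ (3, 5, 9)) : HasG n d r := by
  have hr' := rm_le.2 hsub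
  simp only [ne_eq, Prod.mk.injEq, not_and] at h1 h2 h3
  rcases (by omega : d = 3 ∨ 4 ≤ d) with rfl | hd4
  · by_cases h5 : n = 5
    · subst h5
      have : rm 5 3 = 9 := by decide +kernel
      exact (node_cubic_5.hasG (by omega)).mono hr (by have := h3 rfl rfl; omega)
    · exact (hasG_cubic hn h5).mono hr hr'
  by_cases e1 : n = 2 ∧ d = 6
  · obtain ⟨rfl, rfl⟩ := e1
    have : rm 2 6 = 9 := by decide +kernel
    exact (node_2_6_8.hasG (by omega)).mono hr (by have := h1 rfl rfl; omega)
  by_cases e2 : n = 3 ∧ d = 4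
  · obtain ⟨rfl, rfl⟩ := e2
    have : rm 3 4 = 8 := by decide +kernel
    exact (node_3_4_7.hasG (by omega)).mono hr (by have := h2 rfl rfl; omega)
  exact (((good hn hd).node hd4 (by omega) (by omega)).hasG (by omega)).mono hr hr'

theorem waring_generic_identifiability (d n r : ℕ) (hd : 3 ≤ d) (hn : 1 ≤ n) (hr : 1 ≤ r)
    (hsub : r * (n + 1) < Nat.choose (n + d) d)
    (h1 : (d, n, r) ≠ (6, 2, 9)) (h2 : (d, n, r) ≠ (4, 3, 8)) (h3 : (d, n, r) ≠ (3, 5, 9)) :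
    Generic (ι := Fin r × Fin (n + 1)) fun t =>
      let a : Fin r → Fin (n + 1) → ℂ := fun i j => t (i, j)
      let f : MvPolynomial (Fin (n + 1)) ℂ := ∑ i, linForm (a i) ^ d
      (∀ s : ℕ, s < r → ∀ b : Fin s → Fin (n + 1) → ℂ, f ≠ ∑ i, linForm (b i) ^ d) ∧
      ∀ b : Fin r → Fin (n + 1) → ℂ, f = ∑ i, linForm (b i) ^ d →
        (Finset.univ.val.map fun i => linForm (b i) ^ d) =
          (Finset.univ.val.map fun i => linForm (a i) ^ d) := by
  obtain ⟨a, i, hT, hS⟩ := hasG_all hd hn hr hsub h1 h2 h3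
  exact stepA hd hn hr hT hS
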